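/- Let d ∈ {2,3}. There exists a measurable set E ⊆ (0, √2) whose complement in (0, √2) has Lebesgue measure zero such that for every c ∈ E there exist a constant M(c) > 0, a strictly increasing function k : ℕ → ℕ, and for every N ∈ ℕ a nontrivial finite energy solution ψ_N of the slab problem on Ω_{k(N)} with speed c, such that ∫_{Ω_{k(N)}} (1/2)|∇ψ_N|² + (1/4)(1 − |ψ_N|²)² ≤ M(c) for all N, and each ψ_N has Morse index at most 1 (computed with test functions in C_c^∞(Ω_{k(N)}, ℂ)). -/

import Mathlib

/-!
The solutions are found as `ψ = 1 + u`, where the perturbation `u` lies in the space `slabV` of test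
functions supported in the slab, with the `H¹` norm `pN`; the equation is the Euler-Lagrange
equation of the Lagrangian `II c = EE - c MM` (energy minus `c` times momentum). The argument
combines a mountain pass construction, the monotonicity trick in the speed, a compactness argument
modulo translations orthogonal to `x₁`, and regularity up to the boundary. Only test functions are
used as competitors, so that no Sobolev space has to be set up: weak limits appear as functions in
a weighted `L²` space that solve the equation in very weak form.

*Mountain pass geometry.* For `c < √2` the constant state is a strict local minimum, by the Poincaré
inequality in the slab (`SobC.II_pos`). For every `c > 0` there is a fixed `e` with `II c e < 0`
(`exists_trial`): a profile which rotates slowly once around the unit circle as `x₁` varies and is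
cut off far away in the other variables. The mountain pass level `lev` of `EE / c - MM` is
nonincreasing in `c` and bounded uniformly in the slab. By Fatou's lemma, at almost every
speed infinitely many slabs have left difference quotients of `lev` below a common constant
(`ae_frequently_slope_le`). Where the difference quotient is bounded, nearly optimal chains for a
slightly smaller speed have bounded energy at their high points (`SobC.hasPS`); this is the only
source of the energy bound that does not depend on the slab.

*Second order information.* Paths are replaced by polygonal chains in sublevel sets (`PolyConn`),
and deformations by a local statement (`polyConn_of_local`): if near each high point of the chain
the sublevel set is nonempty and its points are connected to each other, then the chain can be
replaced by one in the sublevel set, which is impossible at the mountain pass level. This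
local property holds near a point with a steep direction (`TaylorData.grad_case`), and near an
almost critical point where the second variation is negative on a plane
(`TaylorData.plane_case`): the plane provides an arc connecting the two ways down. Hence there are
almost critical points at the mountain pass level without uniformly negative plane
(`mountain_pass`).

*Limit.* A positive level bounds the `L⁴` norm of the almost critical points below (`L4_lower`), so
some mollification does not vanish uniformly, and after a translation orthogonal to `x₁` mass
remains near the origin (`HasPS.seq`). The Poincaré inequality and the energy bound make the
sequence bounded in `H¹`, hence precompact in a weighted `L²` space (`weight_compact`). Its limit
solves the equation in the very weak form tested with functions that vanish on the boundary only
(`PSeq.weakGP`), which also encodes the boundary condition. A negative plane of compactly supported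
test functions at the limit would be negative along the sequence (`PSeq.no_plane`). The energy is
lower semicontinuous by convexity (`PSeq.cut_energy`), and the mass near the origin survives
(`PSeq.nontriv`).

*Regularity.* Multiplication by `exp(icx₁/2)` removes the first order term (`WeakGP.dirEq`), and
the odd reflection across the boundary turns the very weak Dirichlet problem into a distributional
Poisson equation across the boundary, with coefficients that depend on `x₁` only and may jump at the
boundary. Interior regularity comes from mollification with kernels whose derivative in the scale
is a Laplacian: the equation then controls this derivative (`mol_hasDeriv`), and integration in the
scale gives continuity (`reg0`) and continuous differentiability (`reg1`). Derivatives in the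
directions other than `x₁` commute with the coefficients and can be bootstrapped (`reg_tan`); the
normal derivatives are then read off from the equation (`bdry_step`).
-/


open MeasureTheory Filter Complex Metric Topology

noncomputable section

abbrev Ed (d : ℕ) := EuclideanSpace ℝ (Fin d)

/-- Partial derivative of `ψ` in the `i`-th coordinate direction. -/
def pd {d : ℕ} (ψ : Ed d → ℂ) (i : Fin d) (x : Ed d) : ℂ :=
  fderiv ℝ ψ x (EuclideanSpace.single i 1)

/-- Laplacian of `ψ`. -/
def lap {d : ℕ} (ψ : Ed d → ℂ) (x : Ed d) : ℂ :=
  ∑ i : Fin d, fderiv ℝ (fun y => fderiv ℝ ψ y (EuclideanSpace.single i 1)) x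
      (EuclideanSpace.single i 1)

/-- The Gross–Pitaevskii traveling wave equation with speed `c` on `ℝ^d`:
`ic ∂_{x₁}ψ + Δψ + (1 - |ψ|²)ψ = 0`. -/
def GPeq {d : ℕ} [NeZero d] (c : ℝ) (ψ : Ed d → ℂ) : Prop :=
  ∀ x, Complex.I * (c : ℂ) * pd ψ 0 x + lap ψ x + (1 - (‖ψ x‖ : ℂ) ^ 2) * ψ x = 0

/-- `|∇ψ|²`. -/
def gradSq {d : ℕ} (ψ : Ed d → ℂ) (x : Ed d) : ℝ := ∑ i : Fin d, ‖pd ψ i x‖ ^ 2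

/-- Energy density `(1/2)|∇ψ|² + (1/4)(1 - |ψ|²)²`. -/
def eDen {d : ℕ} (ψ : Ed d → ℂ) (x : Ed d) : ℝ :=
  1 / 2 * gradSq ψ x + 1 / 4 * (1 - ‖ψ x‖ ^ 2) ^ 2

/-- Energy `E(ψ)`. -/
def energy {d : ℕ} (ψ : Ed d → ℂ) : ℝ := ∫ x, eDen ψ x

/-- Finite energy. -/
def FiniteEnergy {d : ℕ} (ψ : Ed d → ℂ) : Prop := Integrable (eDen ψ)

/-- Momentum `P(ψ) = -∫ ∂_{x₁}(Im ψ)(Re ψ - 1)`. -/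
def mom {d : ℕ} [NeZero d] (ψ : Ed d → ℂ) : ℝ :=
  -∫ x, (pd ψ 0 x).im * ((ψ x).re - 1)

/-- Lagrangian `I^c(ψ) = E(ψ) - c P(ψ)`. -/
def lagr {d : ℕ} [NeZero d] (c : ℝ) (ψ : Ed d → ℂ) : ℝ := energy ψ - c * mom ψ

/-- `ψ` is not a constant of modulus 1. -/
def Nontriv {d : ℕ} (ψ : Ed d → ℂ) : Prop := ¬∃ z : ℂ, ‖z‖ = 1 ∧ ψ = fun _ => z

/-- The quadratic form `Q` of the second variation of `I^c` at `ψ`: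
`Q(φ) = ∫ |∇φ|² - c⟨φ, i∂₁φ⟩ - (1-|ψ|²)|φ|² + 2⟨φ,ψ⟩²` with `⟨z₁,z₂⟩ = Re (z₁ conj z₂)`. -/
def Qform {d : ℕ} [NeZero d] (c : ℝ) (ψ φ : Ed d → ℂ) : ℝ :=
  ∫ x, (gradSq φ x - c * (φ x * (starRingEnd ℂ) (Complex.I * pd φ 0 x)).re
    - (1 - ‖ψ x‖ ^ 2) * ‖φ x‖ ^ 2 + 2 * ((φ x * (starRingEnd ℂ) (ψ x)).re) ^ 2)

/-- The Morse index of `ψ` is at most `m`: every subspace of smooth compactly supported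
functions on which `Q` is negative definite has dimension at most `m`. -/
def MorseIndexLE {d : ℕ} [NeZero d] (c : ℝ) (ψ : Ed d → ℂ) (m : ℕ) : Prop :=
  ∀ Y : Submodule ℝ (Ed d → ℂ),
    (∀ φ ∈ Y, ContDiff ℝ (⊤ : ℕ∞) φ ∧ HasCompactSupport φ) →
    (∀ φ ∈ Y, φ ≠ 0 → Qform c ψ φ < 0) → Module.rank ℝ Y ≤ m

/-- `C^k_loc` convergence: uniform convergence of all iterated derivatives on every
compact set. -/
def LocCk {d : ℕ} (ψn : ℕ → Ed d → ℂ) (ψ : Ed d → ℂ) : Prop :=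
  ∀ (k : ℕ) (K : Set (Ed d)), IsCompact K →
    TendstoUniformlyOn (fun n => iteratedFDeriv ℝ k (ψn n)) (iteratedFDeriv ℝ k ψ) atTop K

/-- The open slab `Ω_N = {x : -N < x₁ < N}`. -/
def slab (d N : ℕ) [NeZero d] : Set (Ed d) := {x | -(N : ℝ) < x 0 ∧ x 0 < N}

/-- The closed slab. -/
def slabCl (d N : ℕ) [NeZero d] : Set (Ed d) := {x | -(N : ℝ) ≤ x 0 ∧ x 0 ≤ N}

/-- The boundary of the slab `Ω_N`. -/
def slabBdry (d N : ℕ) [NeZero d] : Set (Ed d) := {x | x 0 = -(N : ℝ) ∨ x 0 = (N : ℝ)}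

/-- A finite energy solution of the slab problem on `Ω_N` with speed `c`. -/
def SlabSolution (d N : ℕ) [NeZero d] (c : ℝ) (ψ : Ed d → ℂ) : Prop :=
  ContDiffOn ℝ (⊤ : ℕ∞) ψ (slabCl d N) ∧
  (∀ x ∈ slab d N,
    Complex.I * (c : ℂ) * pd ψ 0 x + lap ψ x + (1 - (‖ψ x‖ : ℂ) ^ 2) * ψ x = 0) ∧
  (∀ x ∈ slabBdry d N, ψ x = 1) ∧
  IntegrableOn (eDen ψ) (slab d N)

/-- `ψ` is not a constant of modulus 1 on `Ω_N`. -/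
def SlabNontriv (d N : ℕ) [NeZero d] (ψ : Ed d → ℂ) : Prop :=
  ¬∃ z : ℂ, ‖z‖ = 1 ∧ ∀ x ∈ slab d N, ψ x = z

/-- The quadratic form of the second variation on the slab `Ω_N`. -/
def QformOn (d N : ℕ) [NeZero d] (c : ℝ) (ψ φ : Ed d → ℂ) : ℝ :=
  ∫ x in slab d N, (gradSq φ x - c * (φ x * (starRingEnd ℂ) (Complex.I * pd φ 0 x)).re
    - (1 - ‖ψ x‖ ^ 2) * ‖φ x‖ ^ 2 + 2 * ((φ x * (starRingEnd ℂ) (ψ x)).re) ^ 2)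

/-- The Morse index of a solution `ψ` on the slab `Ω_N`, computed with smooth test
functions compactly supported in `Ω_N`, is at most `m`. -/
def SlabMorseIndexLE (d N : ℕ) [NeZero d] (c : ℝ) (ψ : Ed d → ℂ) (m : ℕ) : Prop :=
  ∀ Y : Submodule ℝ (Ed d → ℂ),
    (∀ φ ∈ Y, ContDiff ℝ (⊤ : ℕ∞) φ ∧ HasCompactSupport φ ∧ tsupport φ ⊆ slab d N) →
    (∀ φ ∈ Y, φ ≠ 0 → QformOn d N c ψ φ < 0) → Module.rank ℝ Y ≤ m

/-! ### Polygonal chains in sublevel sets -/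

/-- Polygonal connectedness of two points inside `S`. -/
def PolyConn {V : Type*} [AddCommGroup V] [Module ℝ V] (S : Set V) : V → V → Prop :=
  Relation.ReflTransGen (fun x y => segment ℝ x y ⊆ S)

section MountainPass
variable {V : Type*} [AddCommGroup V] [Module ℝ V]

lemma PolyConn.symm {S : Set V} {x y : V} (h : PolyConn S x y) : PolyConn S y x := by
  have : Std.Symm (fun x y : V => segment ℝ x y ⊆ S) := ⟨fun a b hab => by rwa [segment_symm]⟩
  exact (Relation.ReflTransGen.stdSymm (r := fun x y : V => segment ℝ x y ⊆ S)).symm _ _ h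

lemma PolyConn.trans {S : Set V} {x y z : V} (h : PolyConn S x y) (h' : PolyConn S y z) :
    PolyConn S x z := Relation.ReflTransGen.trans h h'

lemma PolyConn.of_segment {S : Set V} {x y : V} (h : segment ℝ x y ⊆ S) : PolyConn S x y :=
  Relation.ReflTransGen.single h

lemma PolyConn.of_line {S : Set V} {x v : V} (h : ∀ t ∈ Set.Icc (0:ℝ) 1, x + t • v ∈ S) :
    PolyConn S x (x + v) := by
  apply PolyConn.of_segment
  rw [segment_eq_image']
  rintro _ ⟨t, ht, rfl⟩
  simpa using h t ht

lemma PolyConn.mono {S T : Set V} (hST : S ⊆ T) {x y : V} (h : PolyConn S x y) :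
    PolyConn T x y :=
  Relation.ReflTransGen.mono (fun _ _ (hab : segment ℝ _ _ ⊆ S) => hab.trans hST) _ _ h

/-- If every point of `O \ S` is `ρ`-close to `S` and all points of `S` that are `2ρ`-close to it
lie in the same polygonal component of `S`, then points of `S` connected in `O` are
connected in `S`. -/
lemma polyConn_of_local (p : Seminorm ℝ V) {S O : Set V} {ρ : ℝ} (hρ : 0 < ρ)
    (hloc : ∀ z ∈ O, z ∉ S → (∃ n ∈ S, p (n - z) < ρ) ∧
      ∃ m, ∀ x ∈ S, p (x - z) < 2 * ρ → PolyConn S x m)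
    {x y : V} (hx : x ∈ S) (hy : y ∈ S) (h : PolyConn O x y) : PolyConn S x y := by
  classical
  -- `R z s`: the point `s` of `S` stands in for `z`; a point of `S` is its own substitute
  let R : V → V → Prop := fun z s => s ∈ S ∧ p (s - z) < ρ ∧ (z ∈ S → s = z)
  have hRex : ∀ z ∈ O, ∃ s, R z s := by
    intro z hz
    by_cases hzS : z ∈ S
    · exact ⟨z, hzS, by simpa using hρ, fun _ => rfl⟩
    · obtain ⟨⟨n, hn, hn'⟩, -⟩ := hloc z hz hzS
      exact ⟨n, hn, hn', fun h => absurd h hzS⟩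
  have hstep : ∀ a b s s', segment ℝ a b ⊆ O → p (a - b) < ρ → R a s → R b s' →
      PolyConn S s s' := by
    intro a b s s' hab hd hs hs'
    have ha : a ∈ O := hab (left_mem_segment ℝ a b)
    have hb : b ∈ O := hab (right_mem_segment ℝ a b)
    by_cases hbS : b ∈ S
    · by_cases haS : a ∈ S
      · rw [hs.2.2 haS, hs'.2.2 hbS]
        by_cases hseg : segment ℝ a b ⊆ S
        · exact PolyConn.of_segment hseg
        · obtain ⟨z, hz, hzS⟩ := Set.not_subset.1 hseg
          obtain ⟨-, m, hm⟩ := hloc z (hab hz) hzS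
          rw [segment_eq_image'] at hz
          obtain ⟨t, ht, rfl⟩ := hz
          have h1 : p (a - (a + t • (b - a))) < 2 * ρ := by
            have : a - (a + t • (b - a)) = t • (a - b) := by module
            rw [this, map_smul_eq_mul, Real.norm_of_nonneg ht.1]
            nlinarith [ht.1, ht.2, apply_nonneg p (a - b)]
          have h2 : p (b - (a + t • (b - a))) < 2 * ρ := by
            have : b - (a + t • (b - a)) = (t - 1) • (a - b) := by module
            rw [this, map_smul_eq_mul, Real.norm_of_nonpos (by linarith [ht.2])]
            nlinarith [ht.1, ht.2, apply_nonneg p (a - b)]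
          exact (hm a haS h1).trans (hm b hbS h2).symm
      · obtain ⟨-, m, hm⟩ := hloc a ha haS
        refine (hm s hs.1 (by linarith [hs.2.1])).trans (hm s' hs'.1 ?_).symm
        have : s' - a = (s' - b) - (a - b) := by abel
        rw [this]
        linarith [map_sub_le_add p (s' - b) (a - b), hs'.2.1]
    · obtain ⟨-, m, hm⟩ := hloc b hb hbS
      refine (hm s hs.1 ?_).trans (hm s' hs'.1 (by linarith [hs'.2.1])).symm
      have : s - b = (s - a) + (a - b) := by abel
      rw [this]
      linarith [map_add_le_add p (s - a) (a - b), hs.2.1]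
  have hseg : ∀ a b s s', segment ℝ a b ⊆ O → R a s → R b s' → PolyConn S s s' := by
    intro a b s s' hab hs hs'
    -- the segment is divided into pieces of length less than `ρ`
    obtain ⟨n, hn⟩ := exists_nat_gt (p (b - a) / ρ)
    have hn0 : (0:ℝ) < n := lt_of_le_of_lt (div_nonneg (apply_nonneg p _) hρ.le) hn
    let q : ℕ → V := fun k => a + ((k:ℝ) / n) • (b - a)
    have hq : ∀ k ≤ n, q k ∈ segment ℝ a b := by
      intro k hk
      rw [segment_eq_image']
      refine ⟨(k:ℝ) / n, ⟨by positivity, ?_⟩, rfl⟩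
      rw [div_le_one hn0]; exact_mod_cast hk
    have key : ∀ k ≤ n, ∀ s'', R (q k) s'' → PolyConn S s s'' := by
      intro k
      induction k with
      | zero =>
        intro _ s'' hs''
        have h0 : q 0 = a := by simp [q]
        rw [h0] at hs''
        refine hstep a a s s'' ?_ (by simpa using hρ) hs hs''
        rw [segment_same]
        simpa using hab (left_mem_segment ℝ a b)
      | succ k ih =>
        intro hk s'' hs''
        obtain ⟨s₁, hs₁⟩ := hRex (q k) (hab (hq k (by omega)))
        refine (ih (by omega) s₁ hs₁).trans (hstep (q k) (q (k+1)) s₁ s'' ?_ ?_ hs₁ hs'')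
        · exact ((convex_segment a b).segment_subset (hq k (by omega)) (hq _ hk)).trans hab
        · have : q k - q (k+1) = (-(1 / (n:ℝ))) • (b - a) := by
            simp only [q]; push_cast
            rw [show ((k:ℝ)+1)/n = (k:ℝ)/n + 1/n by ring]; module
          rw [this, map_smul_eq_mul, norm_neg, Real.norm_of_nonneg (by positivity)]
          rw [div_lt_iff₀ hρ] at hn
          rw [one_div, inv_mul_lt_iff₀ hn0]; linarith
    have hqn : q n = b := by
      simp only [q]; rw [div_self hn0.ne']; simp
    exact key n le_rfl s' (by rwa [hqn])
  have main : ∀ b, PolyConn O x b → ∀ s, (b = x ∨ b ∈ O) ∧ (R b s → PolyConn S x s) := by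
    intro b hb
    induction hb with
    | refl => exact fun s => ⟨Or.inl rfl, fun hs => by rw [hs.2.2 hx]; exact Relation.ReflTransGen.refl⟩
    | @tail b c hb hbc ih =>
      intro s
      refine ⟨Or.inr (hbc (right_mem_segment ℝ b c)), fun hs => ?_⟩
      obtain ⟨s₁, hs₁⟩ := hRex b (hbc (left_mem_segment ℝ b c))
      exact ((ih s₁).2 hs₁).trans (hseg b c s₁ s hbc hs₁ hs)
  exact ((main y h y).2 ⟨hy, by simpa using hρ, fun _ => rfl⟩)

end MountainPass

/-! ### The mountain pass principle with second order information -/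

section MountainPass
variable {V : Type*} [AddCommGroup V] [Module ℝ V]

/-- Uniform second order Taylor data of `f` on the `p`-unit neighbourhood of `K`:
`D` and `Q` play the roles of the differential and of the second variation. -/
structure TaylorData (p : Seminorm ℝ V) (f : V → ℝ) (D Q : V → V → ℝ) (K : Set V) (C : ℝ) :
    Prop where
  pos : 0 < C
  taylor : ∀ z ∈ K, ∀ x, p (x - z) ≤ 1 → ∀ e, p e ≤ 1 → ∀ t ∈ Set.Icc (0:ℝ) 1,
    |f (x + t • e) - f x - t * D x e - t ^ 2 / 2 * Q x e| ≤ C * t ^ 3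
  lip : ∀ z ∈ K, ∀ x, p (x - z) ≤ 1 → |f x - f z| ≤ C * p (x - z)
  lipD : ∀ z ∈ K, ∀ x, p (x - z) ≤ 1 → ∀ e, p e ≤ 1 → |D x e - D z e| ≤ C * p (x - z)
  lipQ : ∀ z ∈ K, ∀ x, p (x - z) ≤ 1 → ∀ e, p e ≤ 1 → |Q x e - Q z e| ≤ C * p (x - z)
  bddD : ∀ z ∈ K, ∀ e, |D z e| ≤ C * p e
  bddQ : ∀ z ∈ K, ∀ x, p (x - z) ≤ 1 → ∀ e, p e ≤ 1 → |Q x e| ≤ C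
  homD : ∀ x e (s : ℝ), D x (s • e) = s * D x e
  homQ : ∀ x e (s : ℝ), Q x (s • e) = s ^ 2 * Q x e

variable {p : Seminorm ℝ V} {f : V → ℝ} {D Q : V → V → ℝ} {K : Set V} {C : ℝ}

/-- At a point with a steep direction `e`, moving along `e` lowers `f` on a neighbourhood: it pushes
`z` itself below level `g`, and joins all nearby points of the sublevel set to `z + r • e`. -/
lemma TaylorData.grad_case (H : TaylorData p f D Q K C) {g ε ε₁ ρ r : ℝ} {z e : V} (hz : z ∈ K)
    (hfz : f z < g + ε) (he : p e ≤ 1) (hDe : D z e ≤ -ε₁) (hρ : 0 < ρ) (hr : 0 < r)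
    (hr1 : r ≤ 1 / 2) (hρr : ρ ≤ r)
    (h1 : 8 * C * ρ ≤ ε₁) (h2 : 6 * C * r ≤ ε₁) (h3 : ε + 2 * C * ρ ≤ r * ε₁ / 2)
    (h4 : ε ≤ ρ * ε₁ / 4) :
    (∃ n ∈ {v | f v < g}, p (n - z) < ρ) ∧
      ∃ m, ∀ x ∈ {v | f v < g}, p (x - z) < 2 * ρ → PolyConn {v | f v < g} x m := by
  have hC := H.pos
  have key : ∀ x, p (x - z) ≤ 2 * ρ → ∀ t ∈ Set.Icc (0:ℝ) r,
      f (x + t • e) ≤ f x - t * ε₁ / 2 := by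
    intro x hx t ht
    have hx1 : p (x - z) ≤ 1 := by linarith
    have hT := (abs_le.1 (H.taylor z hz x hx1 e he t ⟨ht.1, by linarith [ht.2]⟩)).2
    have hD := (abs_le.1 (H.lipD z hz x hx1 e he)).2
    have hQ := (abs_le.1 (H.bddQ z hz x hx1 e he)).2
    have a1 : D x e ≤ -ε₁ + 2 * C * ρ := by nlinarith
    have a2 : t * D x e ≤ t * (-ε₁ + 2 * C * ρ) := mul_le_mul_of_nonneg_left a1 ht.1
    have a3 : t ^ 2 / 2 * Q x e ≤ t ^ 2 / 2 * C := mul_le_mul_of_nonneg_left hQ (by positivity)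
    have a4 : C * t ^ 3 ≤ C * t ^ 2 := by
      have : t ^ 3 ≤ t ^ 2 := by
        have := ht.2; nlinarith [sq_nonneg t, ht.1]
      exact mul_le_mul_of_nonneg_left this hC.le
    have a5 : t ^ 2 * C ≤ t * (C * r) := by nlinarith [mul_nonneg ht.1 hC.le, ht.2]
    have a6 : t * (8 * C * ρ) ≤ t * ε₁ := mul_le_mul_of_nonneg_left h1 ht.1
    have a7 : t * (6 * C * r) ≤ t * ε₁ := mul_le_mul_of_nonneg_left h2 ht.1
    nlinarith
  refine ⟨⟨z + (ρ / 2) • e, ?_, ?_⟩, z + r • e, ?_⟩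
  · have := key z (by simpa using by positivity) (ρ / 2) ⟨by positivity, by linarith⟩
    show f _ < g
    have : ρ / 2 * ε₁ / 2 = ρ * ε₁ / 4 := by ring
    linarith
  · simp only [add_sub_cancel_left, map_smul_eq_mul]
    rw [Real.norm_of_nonneg (by positivity)]
    nlinarith
  · intro x hx hxz
    have hε₁ : 0 ≤ ε₁ := by nlinarith
    have s1 : PolyConn {v | f v < g} x (x + r • e) := by
      apply PolyConn.of_line
      intro t ht
      have := key x hxz.le (t * r) ⟨mul_nonneg ht.1 hr.le, by nlinarith [ht.2]⟩
      rw [smul_smul]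
      have hh : 0 ≤ t * r * ε₁ := mul_nonneg (mul_nonneg ht.1 hr.le) hε₁
      have hx' : f x < g := hx
      show f _ < g
      linarith
    refine s1.trans ?_
    have : z + r • e = (x + r • e) + (z - x) := by abel
    rw [this]
    apply PolyConn.of_line
    intro t ht
    have e1 : x + r • e + t • (z - x) = (x + t • (z - x)) + r • e := by abel
    have e2 : p (x + t • (z - x) - z) ≤ p (x - z) := by
      have : x + t • (z - x) - z = (1 - t) • (x - z) := by module
      rw [this, map_smul_eq_mul, Real.norm_of_nonneg (by linarith [ht.2])]
      nlinarith [ht.1, apply_nonneg p (x - z)]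
    rw [e1]
    show f _ < g
    have k1 := key (x + t • (z - x)) (by linarith) r ⟨hr.le, le_rfl⟩
    have k2 := (abs_le.1 (H.lip z hz (x + t • (z - x)) (by linarith))).2
    nlinarith

set_option maxHeartbeats 800000 in
/-- At an almost critical point where the second variation is negative on the plane of `e₁, e₂`,
each nearby point of the sublevel set descends along `e₁` or `-e₁`, whichever has nonpositive
derivative; the two end points `z ± r • e₁` are joined within the sublevel set by two chords through
`z + r • e₂`. -/
lemma TaylorData.plane_case (H : TaylorData p f D Q K C) {g ε ε₂ β ρ r : ℝ} {z e₁ e₂ : V}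
    (hz : z ∈ K) (hfz : f z < g + ε) (he₁ : p e₁ ≤ 1) (he₂ : p e₂ ≤ 1)
    (hD : ∀ φ, |D z φ| ≤ ε₂ * p φ) (hQ : ∀ a b : ℝ, Q z (a • e₁ + b • e₂) ≤ -β * (a ^ 2 + b ^ 2))
    (hβ : 0 < β) (hε₂ : 0 ≤ ε₂) (hρ : 0 < ρ) (hr : 0 < r)
    (hr1 : r ≤ 1 / 2) (hρr : ρ ≤ r)
    (h1 : 8 * C * ρ ≤ β) (h2 : 64 * C * r ≤ β) (h3 : 2 * C * ρ ≤ r ^ 2 * β / 32)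
    (h4 : ε ≤ ρ ^ 2 * β / 16) (h5 : 64 * ε₂ ≤ r * β) (h6 : ε ≤ r ^ 2 * β / 32) :
    (∃ n ∈ {v | f v < g}, p (n - z) < ρ) ∧
      ∃ m, ∀ x ∈ {v | f v < g}, p (x - z) < 2 * ρ → PolyConn {v | f v < g} x m := by
  have hC := H.pos
  have hQe : ∀ σ : ℝ, σ ^ 2 = 1 → Q z (σ • e₁) ≤ -β := by
    intro σ hσ
    have := hQ σ 0
    simpa [hσ] using this
  have hpe : ∀ σ : ℝ, σ ^ 2 = 1 → p (σ • e₁) ≤ 1 := by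
    intro σ hσ
    rw [map_smul_eq_mul]
    rcases mul_self_eq_one_iff.1 ((sq σ).symm.trans hσ) with h | h <;> simp [h, he₁]
  have key : ∀ x, p (x - z) ≤ 2 * ρ → ∀ σ : ℝ, σ ^ 2 = 1 → ∀ t ∈ Set.Icc (0:ℝ) r,
      f (x + t • σ • e₁) ≤ f x + t * D x (σ • e₁) - t ^ 2 * β / 4 := by
    intro x hx σ hσ t ht
    have hx1 : p (x - z) ≤ 1 := by linarith
    have hT := (abs_le.1 (H.taylor z hz x hx1 _ (hpe σ hσ) t ⟨ht.1, by linarith [ht.2]⟩)).2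
    have hQ' := (abs_le.1 (H.lipQ z hz x hx1 _ (hpe σ hσ))).2
    have a1 : Q x (σ • e₁) ≤ -β + 2 * C * ρ := by nlinarith [hQe σ hσ]
    have a3 : t ^ 2 / 2 * Q x (σ • e₁) ≤ t ^ 2 / 2 * (-β + 2 * C * ρ) :=
      mul_le_mul_of_nonneg_left a1 (by positivity)
    have a4 : C * t ^ 3 ≤ t ^ 2 * (C * r) := by
      nlinarith [mul_nonneg (sq_nonneg t) hC.le, ht.2]
    have a6 : t ^ 2 * (8 * C * ρ) ≤ t ^ 2 * β := mul_le_mul_of_nonneg_left h1 (sq_nonneg t)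
    have a7 : t ^ 2 * (64 * C * r) ≤ t ^ 2 * β := mul_le_mul_of_nonneg_left h2 (sq_nonneg t)
    nlinarith
  have conn : ∀ x ∈ {v | f v < g}, p (x - z) < 2 * ρ → ∀ σ : ℝ, σ ^ 2 = 1 → D x (σ • e₁) ≤ 0 →
      PolyConn {v | f v < g} x (z + r • σ • e₁) := by
    intro x hx hxz σ hσ hDx
    have s1 : PolyConn {v | f v < g} x (x + r • σ • e₁) := by
      apply PolyConn.of_line
      intro t ht
      have := key x hxz.le σ hσ (t * r) ⟨mul_nonneg ht.1 hr.le, by nlinarith [ht.2]⟩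
      rw [smul_smul]
      have hh : 0 ≤ (t * r) ^ 2 * β := by positivity
      have hx' : f x < g := hx
      have : t * r * D x (σ • e₁) ≤ 0 :=
        mul_nonpos_of_nonneg_of_nonpos (mul_nonneg ht.1 hr.le) hDx
      show f _ < g
      linarith
    refine s1.trans ?_
    have : z + r • σ • e₁ = (x + r • σ • e₁) + (z - x) := by abel
    rw [this]
    apply PolyConn.of_line
    intro t ht
    have e1 : x + r • σ • e₁ + t • (z - x) = (x + t • (z - x)) + r • σ • e₁ := by abel
    have e2 : p (x + t • (z - x) - z) ≤ p (x - z) := by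
      have : x + t • (z - x) - z = (1 - t) • (x - z) := by module
      rw [this, map_smul_eq_mul, Real.norm_of_nonneg (by linarith [ht.2])]
      nlinarith [ht.1, apply_nonneg p (x - z)]
    rw [e1]
    show f _ < g
    have k1 := key (x + t • (z - x)) (by linarith) σ hσ r ⟨hr.le, le_rfl⟩
    have k2 := (abs_le.1 (H.lip z hz (x + t • (z - x)) (by linarith))).2
    have k3 := (abs_le.1 (H.lipD z hz (x + t • (z - x)) (by linarith) _ (hpe σ hσ))).2
    have k4 := (abs_le.1 (hD (σ • e₁))).2
    have k5 : ε₂ * p (σ • e₁) ≤ ε₂ := by nlinarith [hpe σ hσ]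
    have k6 : D (x + t • (z - x)) (σ • e₁) ≤ ε₂ + 2 * C * ρ := by nlinarith
    have k7 : r * D (x + t • (z - x)) (σ • e₁) ≤ r * (ε₂ + 2 * C * ρ) :=
      mul_le_mul_of_nonneg_left k6 hr.le
    have k8 : r * (64 * ε₂) ≤ r * (r * β) := mul_le_mul_of_nonneg_left h5 hr.le
    have k9 : r * (2 * C * ρ) ≤ 1 * (2 * C * ρ) := by
      apply mul_le_mul_of_nonneg_right (by linarith) (by positivity)
    have k10 : 0 < r ^ 2 * β := by positivity
    nlinarith
  -- `a • e₁ + b • e₂` may have norm `2`: the Taylor bound is applied to its half, at time `2 * r`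
  have chord : ∀ a b : ℝ, |a| ≤ 1 → |b| ≤ 1 → 1 / 2 ≤ a ^ 2 + b ^ 2 →
      f (z + r • (a • e₁ + b • e₂)) < g := by
    intro a b ha hb hab
    have hp : p ((1 / 2 : ℝ) • (a • e₁ + b • e₂)) ≤ 1 := by
      rw [map_smul_eq_mul]
      have h := map_add_le_add p (a • e₁) (b • e₂)
      rw [map_smul_eq_mul, map_smul_eq_mul, Real.norm_eq_abs, Real.norm_eq_abs] at h
      rw [Real.norm_of_nonneg (by norm_num)]
      nlinarith [apply_nonneg p e₁, apply_nonneg p e₂, abs_nonneg a, abs_nonneg b]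
    have hT := (abs_le.1 (H.taylor z hz z (by simp) _ hp (2 * r) ⟨by positivity, by linarith⟩)).2
    rw [smul_smul, show 2 * r * (1 / 2) = r by ring] at hT
    have hD' := (abs_le.1 (hD ((1 / 2 : ℝ) • (a • e₁ + b • e₂)))).2
    rw [H.homQ] at hT
    have hQ' := hQ a b
    have k1 : D z ((1 / 2 : ℝ) • (a • e₁ + b • e₂)) ≤ ε₂ :=
      hD'.trans (mul_le_of_le_one_right hε₂ hp)
    have k2 : Q z (a • e₁ + b • e₂) ≤ - β / 2 := by nlinarith
    have k3 : r ^ 2 * Q z (a • e₁ + b • e₂) ≤ r ^ 2 * (-β / 2) :=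
      mul_le_mul_of_nonneg_left k2 (by positivity)
    have k4 : r * D z ((1 / 2 : ℝ) • (a • e₁ + b • e₂)) ≤ r * ε₂ :=
      mul_le_mul_of_nonneg_left k1 hr.le
    have k5 : r ^ 2 * (64 * C * r) ≤ r ^ 2 * β := mul_le_mul_of_nonneg_left h2 (by positivity)
    have k8 : r * (64 * ε₂) ≤ r * (r * β) := mul_le_mul_of_nonneg_left h5 hr.le
    have k10 : 0 < r ^ 2 * β := by positivity
    linarith
  have hchord : ∀ σ : ℝ, σ ^ 2 = 1 →
      PolyConn {v | f v < g} (z + r • σ • e₁) (z + r • e₂) := by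
    intro σ hσ
    have : z + r • e₂ = (z + r • σ • e₁) + r • (e₂ - σ • e₁) := by module
    rw [this]
    apply PolyConn.of_line
    intro t ht
    have : z + r • σ • e₁ + t • r • (e₂ - σ • e₁) = z + r • (((1 - t) * σ) • e₁ + t • e₂) := by
      module
    rw [this]
    have hσ' : |σ| = 1 := by
      rcases mul_self_eq_one_iff.1 ((sq σ).symm.trans hσ) with h | h <;> simp [h]
    apply chord
    · rw [abs_mul, hσ', abs_of_nonneg (by linarith [ht.2])]; linarith [ht.1]
    · rw [abs_of_nonneg ht.1]; exact ht.2
    · rw [mul_pow, hσ]; nlinarith [sq_nonneg (2 * t - 1)]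
  have hneg : ∀ x, D x ((-1:ℝ) • e₁) = - D x ((1:ℝ) • e₁) := by
    intro x; rw [H.homD, H.homD]; ring
  refine ⟨?_, z + r • e₂, ?_⟩
  · have : ∃ σ : ℝ, σ ^ 2 = 1 ∧ D z (σ • e₁) ≤ 0 := by
      rcases le_total (D z ((1:ℝ) • e₁)) 0 with h | h
      · exact ⟨1, by norm_num, h⟩
      · exact ⟨-1, by norm_num, by rw [hneg]; linarith⟩
    obtain ⟨σ, hσ, hDσ⟩ := this
    refine ⟨z + (ρ / 2) • σ • e₁, ?_, ?_⟩
    · have := key z (by simpa using by positivity) σ hσ (ρ / 2) ⟨by positivity, by linarith⟩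
      show f _ < g
      have h' : ρ / 2 * D z (σ • e₁) ≤ 0 :=
        mul_nonpos_of_nonneg_of_nonpos (by positivity) hDσ
      nlinarith
    · rw [add_sub_cancel_left, map_smul_eq_mul]
      rw [Real.norm_of_nonneg (by positivity)]
      nlinarith [hpe σ hσ]
  · intro x hx hxz
    rcases le_total (D x ((1:ℝ) • e₁)) 0 with h | h
    · exact (conn x hx hxz 1 (by norm_num) h).trans (hchord 1 (by norm_num))
    · exact (conn x hx hxz (-1) (by norm_num) (by rw [hneg]; linarith)).trans
        (hchord (-1) (by norm_num))

/-- Abstract mountain pass principle with second order information: if `g` separates `0` from `e`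
on the sublevel set, but `0` and `e` can be joined by staying in `{f < g}` or in `K` slightly
above level `g`, then `K` contains almost critical points at level about `g` that have no
uniformly negative plane for the second variation. -/
theorem mountain_pass (H : TaylorData p f D Q K C) {g : ℝ} {e : V} (h0 : f 0 < g) (he : f e < g)
    (hg : ¬ PolyConn {v | f v < g} 0 e)
    (hO : ∀ ε > 0, PolyConn ({v | f v < g} ∪ {v | f v < g + ε ∧ v ∈ K}) 0 e)
    {ε ε₁ β : ℝ} (hε : 0 < ε) (hε₁ : 0 < ε₁) (hβ : 0 < β) :
    ∃ z ∈ K, g ≤ f z ∧ f z < g + ε ∧ (∀ φ, |D z φ| ≤ ε₁ * p φ) ∧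
      ¬ ∃ e₁ e₂, p e₁ ≤ 1 ∧ p e₂ ≤ 1 ∧ ∀ a b : ℝ, Q z (a • e₁ + b • e₂) ≤ -β * (a ^ 2 + b ^ 2) := by
  by_contra! hcon
  have hC := H.pos
  -- the length `r₂` of descent along a negative plane is fixed by `β`; the slope threshold `ε₂`
  -- between the two cases is then small relative to `r₂`, the length `r₁` of descent along a steep
  -- direction small relative to `ε₂`, and finally the mesh `ρ` and the excess level `δ` are small
  -- relative to all of these
  set r₂ := min (1 / 2) (β / (64 * C)) with hr₂
  have hr₂0 : 0 < r₂ := lt_min (by norm_num) (by positivity)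
  have hr₂1 : r₂ ≤ 1 / 2 := min_le_left _ _
  have hr₂2 : 64 * C * r₂ ≤ β := by
    have := min_le_right (1 / 2) (β / (64 * C)); rw [← hr₂] at this
    rwa [le_div_iff₀ (by positivity), mul_comm] at this
  set ε₂ := min ε₁ (r₂ * β / 64) with hε₂
  have hε₂0 : 0 < ε₂ := lt_min hε₁ (by positivity)
  have hε₂1 : ε₂ ≤ ε₁ := min_le_left _ _
  have hε₂2 : 64 * ε₂ ≤ r₂ * β := by
    have := min_le_right ε₁ (r₂ * β / 64); rw [← hε₂] at this; linarith
  set r₁ := min (1 / 2) (ε₂ / (6 * C)) with hr₁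
  have hr₁0 : 0 < r₁ := lt_min (by norm_num) (by positivity)
  have hr₁1 : r₁ ≤ 1 / 2 := min_le_left _ _
  have hr₁2 : 6 * C * r₁ ≤ ε₂ := by
    have := min_le_right (1 / 2) (ε₂ / (6 * C)); rw [← hr₁] at this
    rwa [le_div_iff₀ (by positivity), mul_comm] at this
  obtain ⟨ρ, hρ0, hρ⟩ : ∃ ρ : ℝ, 0 < ρ ∧ ρ < min (min r₁ r₂) (min (min (ε₂ / (8 * C)) (β / (8 * C)))
      (min (r₁ * ε₂ / (8 * C)) (r₂ ^ 2 * β / (64 * C)))) :=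
    exists_between (by positivity)
  simp only [lt_min_iff] at hρ
  obtain ⟨⟨a1, a2⟩, ⟨a3, a4⟩, a5, a6⟩ := hρ
  rw [lt_div_iff₀ (by positivity)] at a3 a4 a5 a6
  obtain ⟨δ, hδ0, hδ⟩ : ∃ δ : ℝ, 0 < δ ∧ δ < min (min ε (r₁ * ε₂ / 4)) (min (r₂ ^ 2 * β / 32)
      (min (ρ * ε₂ / 4) (ρ ^ 2 * β / 16))) := exists_between (by positivity)
  simp only [lt_min_iff] at hδ
  obtain ⟨⟨b1, b2⟩, b3, b4, b5⟩ := hδ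
  refine hg (polyConn_of_local p hρ0 ?_ h0 he (hO δ hδ0))
  intro z hz hzS
  have hz' : f z < g + δ ∧ z ∈ K := hz.resolve_left hzS
  have hgz : g ≤ f z := not_lt.1 hzS
  by_cases hDz : ∀ φ, |D z φ| ≤ ε₂ * p φ
  · obtain ⟨e₁, e₂, h1, h2, h3⟩ := hcon z hz'.2 hgz (by linarith [hz'.1])
      (fun φ => (hDz φ).trans (mul_le_mul_of_nonneg_right hε₂1 (apply_nonneg p φ)))
    exact H.plane_case hz'.2 hz'.1 h1 h2 hDz h3 hβ hε₂0.le hρ0 hr₂0 hr₂1 a2.le (by linarith)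
      hr₂2 (by linarith) b5.le hε₂2 b3.le
  · push Not at hDz
    obtain ⟨φ, hφ⟩ := hDz
    have hpφ : 0 < p φ := by
      by_contra hneg
      have h0' : p φ = 0 := le_antisymm (not_lt.1 hneg) (apply_nonneg p φ)
      have := H.bddD z hz'.2 φ
      rw [h0'] at this hφ
      linarith
    have : ∃ e, p e ≤ 1 ∧ D z e ≤ -ε₂ := by
      rcases le_total (D z φ) 0 with h | h
      · refine ⟨(p φ)⁻¹ • φ, ?_, ?_⟩
        · rw [map_smul_eq_mul, Real.norm_of_nonneg (by positivity), inv_mul_cancel₀ hpφ.ne']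
        · rw [abs_of_nonpos h] at hφ
          rw [H.homD, inv_mul_le_iff₀ hpφ]; linarith
      · refine ⟨(-(p φ)⁻¹) • φ, ?_, ?_⟩
        · rw [map_smul_eq_mul, norm_neg, Real.norm_of_nonneg (by positivity),
            inv_mul_cancel₀ hpφ.ne']
        · rw [abs_of_nonneg h] at hφ
          rw [H.homD, neg_mul, neg_le_neg_iff, le_inv_mul_iff₀ hpφ]; linarith
    obtain ⟨e', he', hDe'⟩ := this
    exact H.grad_case hz'.2 hz'.1 he' hDe' hρ0 hr₁0 hr₁1 a1.le (by linarith) (by linarith)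
      (by linarith) b4.le

end MountainPass

/-! ### Test functions and the `L²` norm -/

/-- Smooth compactly supported functions `ℝ^d → ℂ`. -/
structure TF {d : ℕ} (u : Ed d → ℂ) : Prop where
  smooth : ContDiff ℝ (⊤ : ℕ∞) u
  supp : HasCompactSupport u

/-- The `L²` norm. -/
def n2 {d : ℕ} {F : Type*} [NormedAddCommGroup F] (f : Ed d → F) : ℝ := Real.sqrt (∫ x, ‖f x‖ ^ 2)

section Basic
variable {d : ℕ} {u v w φ : Ed d → ℂ}

/-- The `i`-th standard basis vector. -/
abbrev bv (i : Fin d) : Ed d := EuclideanSpace.single i 1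

lemma TF.cont (h : TF u) : Continuous u := h.smooth.continuous
lemma TF.diff (h : TF u) : Differentiable ℝ u := h.smooth.differentiable (by simp)
lemma TF.pd_smooth (h : TF u) (i : Fin d) : ContDiff ℝ (⊤ : ℕ∞) (pd u i) :=
  (h.smooth.fderiv_right (m := (⊤ : ℕ∞)) (by simp)).clm_apply contDiff_const
lemma TF.pd (h : TF u) (i : Fin d) : TF (pd u i) :=
  ⟨h.pd_smooth i, h.supp.fderiv_apply ℝ (bv i)⟩
lemma TF.add (h : TF u) (h' : TF v) : TF (u + v) := ⟨h.smooth.add h'.smooth, h.supp.add h'.supp⟩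
lemma TF.smul (h : TF u) (s : ℝ) : TF (s • u) :=
  ⟨h.smooth.const_smul s, h.supp.mono (by
    intro x hx; simp only [Function.mem_support, Pi.smul_apply] at *; intro h0; simp [h0] at hx)⟩
lemma TF.neg (h : TF u) : TF (-u) := by simpa using h.smul (-1)
lemma TF.sub (h : TF u) (h' : TF v) : TF (u - v) := by
  rw [sub_eq_add_neg]; exact h.add h'.neg
lemma TF.zero : TF (0 : Ed d → ℂ) := ⟨contDiff_const, HasCompactSupport.zero⟩
lemma TF.mul (h : TF u) (h' : TF v) : TF (u * v) :=
  ⟨h.smooth.mul h'.smooth, h.supp.mul_right⟩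

lemma pd_add (h : Differentiable ℝ u) (h' : Differentiable ℝ v) (i : Fin d) :
    pd (u + v) i = pd u i + pd v i := by
  ext x; simp [_root_.pd, fderiv_add (h x) (h' x)]
lemma pd_smul (h : Differentiable ℝ u) (s : ℝ) (i : Fin d) :
    pd (s • u) i = s • pd u i := by
  ext x; simp [_root_.pd, fderiv_const_smul (h x)]
lemma pd_sub (h : Differentiable ℝ u) (h' : Differentiable ℝ v) (i : Fin d) :
    pd (u - v) i = pd u i - pd v i := by
  ext x; simp [_root_.pd, fderiv_sub (h x) (h' x)]
lemma pd_mul (h : Differentiable ℝ u) (h' : Differentiable ℝ v) (i : Fin d) :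
    pd (u * v) i = u * pd v i + pd u i * v := by
  ext x; simp [_root_.pd, fderiv_mul (h x) (h' x)]; ring
lemma pd_const_add (c : ℂ) (i : Fin d) : pd (fun x => c + u x) i = pd u i := by
  ext x; simp [_root_.pd]

lemma fderiv_eq_sum (x y : Ed d) : fderiv ℝ u x y = ∑ i, y i • pd u i x := by
  have : y = ∑ i, y i • bv i := by
    ext j
    simp [bv, Finset.sum_apply, Pi.single_apply]
  conv_lhs => rw [this]
  simp [map_sum, _root_.pd]

lemma norm_fderiv_le (x : Ed d) : ‖fderiv ℝ u x‖ ≤ ∑ i, ‖pd u i x‖ := by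
  refine ContinuousLinearMap.opNorm_le_bound _ (by positivity) fun y => ?_
  rw [fderiv_eq_sum, Finset.sum_mul]
  refine (norm_sum_le _ _).trans (Finset.sum_le_sum fun i _ => ?_)
  rw [norm_smul, mul_comm]
  exact mul_le_mul_of_nonneg_left (PiLp.norm_apply_le y i) (norm_nonneg _)

lemma norm_pd_le (x : Ed d) (i : Fin d) : ‖pd u i x‖ ≤ ‖fderiv ℝ u x‖ := by
  have := (fderiv ℝ u x).le_opNorm (bv i)
  simpa [bv, _root_.pd] using this

lemma zero_off {u : Ed d → ℂ} {x : Ed d} (hx : x ∉ tsupport u) : u x = 0 :=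
  image_eq_zero_of_notMem_tsupport hx
lemma pd_zero_off {u : Ed d → ℂ} (i : Fin d) {x : Ed d} (hx : x ∉ tsupport u) : _root_.pd u i x = 0 := by
  have : fderiv ℝ u x = 0 := image_eq_zero_of_notMem_tsupport
    (fun h => hx (tsupport_fderiv_subset ℝ h))
  simp [_root_.pd, this]

lemma integ_of_zero_off {F : Type*} [NormedAddCommGroup F] {g : Ed d → F} (hg : Continuous g)
    {K : Set (Ed d)} (hK : IsCompact K) (h : ∀ x ∉ K, g x = 0) : Integrable g :=
  hg.integrable_of_hasCompactSupport (HasCompactSupport.intro hK h)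

/-! Cauchy–Schwarz and the triangle inequality for `n2`. -/

lemma n2_nonneg {F : Type*} [NormedAddCommGroup F] (f : Ed d → F) : 0 ≤ n2 f := Real.sqrt_nonneg _

lemma n2_sq {F : Type*} [NormedAddCommGroup F] (f : Ed d → F) : n2 f ^ 2 = ∫ x, ‖f x‖ ^ 2 :=
  Real.sq_sqrt (integral_nonneg fun _ => by positivity)

lemma n2_eq {F : Type*} [NormedAddCommGroup F] {f : Ed d → F} (hf : MemLp f 2) :
    n2 f = (eLpNorm f 2).toReal := by
  rw [hf.eLpNorm_eq_integral_rpow_norm (by norm_num) (by norm_num),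
    ENNReal.toReal_ofReal (by positivity), n2, Real.sqrt_eq_rpow]
  simp

lemma n2_smul {F : Type*} [NormedAddCommGroup F] [NormedSpace ℝ F] (s : ℝ) (f : Ed d → F) :
    n2 (s • f) = |s| * n2 f := by
  simp only [n2, Pi.smul_apply, norm_smul, mul_pow, integral_const_mul]
  rw [Real.sqrt_mul (by positivity), Real.norm_eq_abs, Real.sqrt_sq (abs_nonneg s)]

lemma n2_add_le {F : Type*} [NormedAddCommGroup F] {f g : Ed d → F} (hf : MemLp f 2)
    (hg : MemLp g 2) : n2 (f + g) ≤ n2 f + n2 g := by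
  rw [n2_eq hf, n2_eq hg, n2_eq (hf.add hg), ← ENNReal.toReal_add hf.eLpNorm_ne_top
    hg.eLpNorm_ne_top]
  exact ENNReal.toReal_mono (by simp [hf.eLpNorm_ne_top, hg.eLpNorm_ne_top])
    (eLpNorm_add_le hf.1 hg.1 (by norm_num))

lemma n2_mono {F G : Type*} [NormedAddCommGroup F] [NormedAddCommGroup G] {f : Ed d → F}
    {g : Ed d → G} (hg : MemLp g 2) (h : ∀ x, ‖f x‖ ≤ ‖g x‖) : n2 f ≤ n2 g := by
  apply Real.sqrt_le_sqrt
  apply integral_mono_of_nonneg (Eventually.of_forall fun _ => by positivity)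
  · simpa using hg.integrable_norm_pow (by norm_num)
  · exact Eventually.of_forall fun x => pow_le_pow_left₀ (norm_nonneg _) (h x) 2

lemma cauchy_schwarz {F G : Type*} [NormedAddCommGroup F] [NormedAddCommGroup G] {f : Ed d → F}
    {g : Ed d → G} (hf : MemLp f 2) (hg : MemLp g 2) :
    ∫ x, ‖f x‖ * ‖g x‖ ≤ n2 f * n2 g := by
  have h := integral_mul_le_Lp_mul_Lq_of_nonneg (μ := (volume : Measure (Ed d)))
    Real.HolderConjugate.two_two (f := fun x => ‖f x‖) (g := fun x => ‖g x‖)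
    (Eventually.of_forall fun _ => norm_nonneg _) (Eventually.of_forall fun _ => norm_nonneg _)
    (by simpa using hf.norm) (by simpa using hg.norm)
  simpa [n2, Real.sqrt_eq_rpow] using h

lemma integrable_mul_norm {F G : Type*} [NormedAddCommGroup F] [NormedAddCommGroup G] {f : Ed d → F}
    {g : Ed d → G} (hf : MemLp f 2) (hg : MemLp g 2) :
    Integrable (fun x => ‖f x‖ * ‖g x‖) := by
  exact hf.norm.integrable_mul hg.norm

lemma TF.memLp (h : TF u) (p : ENNReal) : MemLp u p := h.cont.memLp_of_hasCompactSupport h.supp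

end Basic

/-! ### Sobolev inequalities -/

section Sobolev
variable {d : ℕ} {u v w φ : Ed d → ℂ}

/-- The `H¹` norm (as the sum of the `L²` norms of the function and of its partial derivatives). -/
def pN (u : Ed d → ℂ) : ℝ := n2 u + ∑ i, n2 (pd u i)

lemma pN_nonneg (u : Ed d → ℂ) : 0 ≤ pN u :=
  add_nonneg (n2_nonneg _) (Finset.sum_nonneg fun _ _ => n2_nonneg _)
lemma n2_le_pN (u : Ed d → ℂ) : n2 u ≤ pN u :=
  le_add_of_nonneg_right (Finset.sum_nonneg fun _ _ => n2_nonneg _)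
lemma n2_pd_le_pN (u : Ed d → ℂ) (i : Fin d) : n2 (pd u i) ≤ pN u := by
  have := Finset.single_le_sum (f := fun i => n2 (pd u i)) (fun i _ => n2_nonneg _)
    (Finset.mem_univ i)
  exact this.trans (le_add_of_nonneg_left (n2_nonneg _))

lemma TF.fderiv_memLp (h : TF u) (p : ENNReal) : MemLp (fderiv ℝ u) p :=
  (h.smooth.continuous_fderiv (by simp)).memLp_of_hasCompactSupport (h.supp.fderiv ℝ)

lemma TF.n2_fderiv_le (h : TF u) : n2 (fderiv ℝ u) ≤ ∑ i, n2 (_root_.pd u i) := by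
  have h1 : n2 (fderiv ℝ u) ≤ n2 (∑ i, fun x => ‖_root_.pd u i x‖) := by
    apply n2_mono
    · exact memLp_finsetSum' _ fun i _ => ((h.pd i).memLp 2).norm
    · intro x
      rw [Finset.sum_apply, Real.norm_of_nonneg (by positivity)]
      exact norm_fderiv_le x
  refine h1.trans ?_
  have : ∀ s : Finset (Fin d), n2 (∑ i ∈ s, fun x => ‖_root_.pd u i x‖) ≤ ∑ i ∈ s, n2 (_root_.pd u i) := by
    intro s
    induction s using Finset.induction_on with
    | empty => simp [n2]
    | insert a s ha ih =>
      rw [Finset.sum_insert ha, Finset.sum_insert ha]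
      refine (n2_add_le ((h.pd a).memLp 2).norm
        (memLp_finsetSum' _ fun i _ => ((h.pd i).memLp 2).norm)).trans ?_
      have : n2 (fun x => ‖_root_.pd u a x‖) = n2 (_root_.pd u a) := by simp [n2]
      rw [this]; linarith
  exact this _

lemma TF.n2_fderiv_le_pN (h : TF u) : n2 (fderiv ℝ u) ≤ pN u :=
  h.n2_fderiv_le.trans (le_add_of_nonneg_left (n2_nonneg _))

/-- The `L²` norm of a planar test function is controlled by the `L¹` norm of its gradient. -/
lemma sobolev_two_one : ∃ C : ℝ, 0 ≤ C ∧ ∀ u : Ed 2 → ℂ, TF u →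
    n2 u ≤ C * ∫ x, ‖fderiv ℝ u x‖ := by
  refine ⟨eLpNormLESNormFDerivOneConst (volume : Measure (Ed 2)) 2, NNReal.coe_nonneg _, ?_⟩
  intro u hu
  have h := eLpNorm_le_eLpNorm_fderiv_one (volume : Measure (Ed 2)) (hu.smooth.of_le (by simp)) hu.supp
    (p := 2) (by simpa using NNReal.HolderConjugate.two_two)
  rw [n2_eq (hu.memLp 2)]
  have h1 := ENNReal.toReal_mono (ENNReal.mul_ne_top ENNReal.coe_ne_top
    (hu.fderiv_memLp 1).eLpNorm_ne_top) h
  rw [ENNReal.toReal_mul] at h1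
  have h2 : (eLpNorm (fderiv ℝ u) 1 volume).toReal = ∫ x, ‖fderiv ℝ u x‖ := by
    rw [eLpNorm_one_eq_lintegral_enorm,
      integral_norm_eq_lintegral_enorm (hu.fderiv_memLp 1).1]
  rw [h2] at h1
  exact h1

lemma TF.fderiv_pow_le (hu : TF u) (k : ℕ) (x : Ed d) :
    ‖fderiv ℝ (u ^ (k + 1)) x‖ ≤ (k + 1) * (‖u x‖ ^ k * ‖fderiv ℝ u x‖) := by
  have : HasFDerivAt (u ^ (k+1)) (((k + 1 : ℕ) • u x ^ k) • fderiv ℝ u x) x := by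
    have := (hu.diff x).hasFDerivAt.pow (k + 1)
    rw [Nat.add_sub_cancel] at this
    exact this
  rw [this.fderiv, norm_smul]
  simp only [nsmul_eq_mul, norm_mul, norm_pow]
  have : ‖((k + 1 : ℕ) : ℂ)‖ = k + 1 := by
    rw [Complex.norm_natCast]; push_cast; ring
  rw [this, mul_assoc]

lemma TF.pow (hu : TF u) (k : ℕ) : TF (u ^ (k + 1)) := by
  induction k with
  | zero => simpa using hu
  | succ k ih => rw [pow_succ]; exact ih.mul hu

lemma TF.pow_memLp (h : TF u) (k : ℕ) : MemLp (fun x => ‖u x‖ ^ (k+1)) 2 := by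
  have := ((h.pow k).memLp 2).norm
  simpa using this

lemma n2_pow (k : ℕ) : n2 (fun x => ‖u x‖ ^ k) = Real.sqrt (∫ x, ‖u x‖ ^ (2 * k)) := by
  simp only [n2, norm_pow, norm_norm, ← pow_mul, mul_comm k 2]

/-- Sobolev: the sixth power of the `L⁶` norm is controlled by the `H¹` norm for `d = 2, 3`. -/
lemma sobolev_six (hd : d = 2 ∨ d = 3) : ∃ S : ℝ, 0 ≤ S ∧ ∀ u : Ed d → ℂ, TF u →
    n2 (fun x => ‖u x‖ ^ 3) ≤ S * pN u ^ 3 := by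
  rcases hd with rfl | rfl
  · obtain ⟨C, hC, h⟩ := sobolev_two_one
    refine ⟨C * 3 * (C * 2), by positivity, fun u hu => ?_⟩
    have hF := hu.n2_fderiv_le_pN
    have key : ∀ k : ℕ, n2 (fun x => ‖u x‖ ^ (k + 2)) ≤
        C * (k + 2) * (n2 (fun x => ‖u x‖ ^ (k + 1)) * pN u) := by
      intro k
      have h1 := h _ (hu.pow (k + 1))
      have e1 : n2 (u ^ (k + 1 + 1)) = n2 (fun x => ‖u x‖ ^ (k + 2)) := by simp [n2]
      rw [e1] at h1
      have h2 : ∫ x, ‖fderiv ℝ (u ^ (k + 1 + 1)) x‖ ≤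
          (k + 2) * ∫ x, ‖‖u x‖ ^ (k + 1)‖ * ‖fderiv ℝ u x‖ := by
        rw [← integral_const_mul]
        apply integral_mono_of_nonneg (Eventually.of_forall fun _ => norm_nonneg _)
        · exact (integrable_mul_norm (hu.pow_memLp k) (hu.fderiv_memLp 2)).const_mul _
        · refine Eventually.of_forall fun x => (hu.fderiv_pow_le (k + 1) x).trans (le_of_eq ?_)
          simp only [norm_pow, norm_norm]; push_cast; ring
      have h3 := cauchy_schwarz (hu.pow_memLp k) (hu.fderiv_memLp 2)
      calc _ ≤ C * ((k + 2) * (n2 (fun x => ‖u x‖ ^ (k + 1)) * n2 (fderiv ℝ u))) :=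
            h1.trans (mul_le_mul_of_nonneg_left (h2.trans
              (mul_le_mul_of_nonneg_left h3 (by positivity))) hC)
        _ ≤ _ := by
            rw [mul_assoc]
            have := n2_nonneg (fun x => ‖u x‖ ^ (k + 1))
            gcongr
    have k0 := key 0
    have k1 := key 1
    have hp := pN_nonneg u
    norm_num at k0 k1
    have e : n2 (fun x => ‖u x‖) = n2 u := by simp [n2]
    rw [e] at k0
    calc _ ≤ C * 3 * (n2 (fun x => ‖u x‖ ^ 2) * pN u) := k1
      _ ≤ C * 3 * (C * 2 * (pN u * pN u) * pN u) := by
          gcongr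
          refine k0.trans ?_
          gcongr
          exact n2_le_pN u
      _ = _ := by ring
  · refine ⟨(eLpNormLESNormFDerivOfEqInnerConst (volume : Measure (Ed 3)) 2 : ℝ) ^ 3,
      by positivity, fun u hu => ?_⟩
    have h := eLpNorm_le_eLpNorm_fderiv_of_eq_inner (volume : Measure (Ed 3))
      (hu.smooth.of_le (by simp)) hu.supp (p := 2) (p' := 6) (by norm_num) (by simp)
      (by simp; norm_num)
    have h1 := ENNReal.toReal_mono (ENNReal.mul_ne_top ENNReal.coe_ne_top
      (hu.fderiv_memLp 2).eLpNorm_ne_top) h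
    rw [ENNReal.toReal_mul] at h1
    have e1 : (eLpNorm (fderiv ℝ u) 2 volume).toReal = n2 (fderiv ℝ u) :=
      (n2_eq (hu.fderiv_memLp 2)).symm
    have e2 : (eLpNorm u ((6 : NNReal) : ENNReal) volume).toReal ^ 3
        = n2 (fun x => ‖u x‖ ^ 3) := by
      have : ((6 : NNReal) : ENNReal) = 6 := rfl
      rw [this, (hu.memLp 6).eLpNorm_eq_integral_rpow_norm (by norm_num) (by norm_num),
        ENNReal.toReal_ofReal (by positivity), n2_pow, Real.sqrt_eq_rpow]
      simp only [ENNReal.toReal_ofNat]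
      have e3 : ∀ x, ‖u x‖ ^ (6 : ℝ) = ‖u x‖ ^ (2 * 3) := fun x => by
        rw [← Real.rpow_natCast]; norm_num
      simp_rw [e3]
      rw [← Real.rpow_natCast, ← Real.rpow_mul (integral_nonneg fun _ => by positivity)]
      norm_num
    change _ ≤ (eLpNormLESNormFDerivOfEqInnerConst volume 2 : ℝ) *
      (eLpNorm (fderiv ℝ u) 2 volume).toReal at h1
    rw [e1] at h1
    rw [← e2, ← mul_pow]
    apply pow_le_pow_left₀ ENNReal.toReal_nonneg
    refine h1.trans ?_
    exact mul_le_mul_of_nonneg_left hu.n2_fderiv_le_pN (NNReal.coe_nonneg _)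

lemma sobolev_four (hd : d = 2 ∨ d = 3) : ∃ S : ℝ, 1 ≤ S ∧ ∀ u : Ed d → ℂ, TF u →
    n2 (fun x => ‖u x‖ ^ 2) ≤ S * pN u ^ 2 := by
  obtain ⟨S, hS, h⟩ := sobolev_six hd
  refine ⟨1 + S, by linarith, fun u hu => ?_⟩
  have h1 := cauchy_schwarz (hu.memLp 2) (hu.pow_memLp 2)
  have h2 := h u hu
  have hp := pN_nonneg u
  apply Real.sqrt_le_iff.2 ⟨by positivity, ?_⟩
  have e : ∀ x, ‖‖u x‖ ^ 2‖ ^ 2 = ‖u x‖ * ‖‖u x‖ ^ 3‖ := by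
    intro x; simp only [norm_pow, norm_norm]; ring
  simp_rw [e]
  calc _ ≤ n2 u * n2 (fun x => ‖u x‖ ^ 3) := h1
    _ ≤ pN u * (S * pN u ^ 3) := mul_le_mul (n2_le_pN u) h2 (n2_nonneg _) hp
    _ ≤ _ := by
      have : 0 ≤ pN u ^ 4 := by positivity
      nlinarith [mul_nonneg hS this]

/-- A constant in the embedding `H¹ ⊆ L⁴ ∩ L⁶`. -/
lemma sobolev_const (hd : d = 2 ∨ d = 3) : ∃ S : ℝ, 1 ≤ S ∧ ∀ u : Ed d → ℂ, TF u →
    n2 (fun x => ‖u x‖ ^ 2) ≤ S * pN u ^ 2 ∧ n2 (fun x => ‖u x‖ ^ 3) ≤ S * pN u ^ 3 := by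
  obtain ⟨S, hS, h⟩ := sobolev_six hd
  obtain ⟨S', hS', h'⟩ := sobolev_four hd
  refine ⟨S' + S, by linarith, fun u hu => ⟨(h' u hu).trans ?_, (h u hu).trans ?_⟩⟩
  · exact mul_le_mul_of_nonneg_right (by linarith) (by positivity)
  · exact mul_le_mul_of_nonneg_right (by linarith) (pow_nonneg (pN_nonneg u) 3)

lemma TF.mul_memLp (hu : TF u) (hv : TF v) : MemLp (fun x => ‖u x‖ * ‖v x‖) 2 := by
  have := ((hu.mul hv).memLp 2).norm
  simpa using this

end Sobolev

/-! ### Energy, momentum and their variations -/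

section Functional
variable {d : ℕ} {u v w φ a b e : Ed d → ℂ}

/-- The real inner product of `ℂ`. -/
def rip (z w : ℂ) : ℝ := z.re * w.re + z.im * w.im

/-- `kk z = |1 + z|² - 1`. -/
def kk (z : ℂ) : ℝ := 2 * z.re + (z.re ^ 2 + z.im ^ 2)

lemma rip_eq (z w : ℂ) : rip z w = (z * (starRingEnd ℂ) w).re := by simp [rip]
lemma normsq_eq (z : ℂ) : ‖z‖ ^ 2 = z.re ^ 2 + z.im ^ 2 := by
  rw [← Complex.normSq_eq_norm_sq, Complex.normSq_apply]; ring
lemma kk_eq (z : ℂ) : ‖1 + z‖ ^ 2 = 1 + kk z := by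
  rw [normsq_eq, kk]; simp; ring
lemma abs_rip_le (z w : ℂ) : |rip z w| ≤ ‖z‖ * ‖w‖ := by
  rw [rip_eq]
  refine (Complex.abs_re_le_norm _).trans ?_
  simp
@[fun_prop] lemma continuous_rip : Continuous fun q : ℂ × ℂ => rip q.1 q.2 := by
  unfold rip; fun_prop
@[fun_prop] lemma Continuous.rip {X : Type*} [TopologicalSpace X] {f g : X → ℂ} (hf : Continuous f)
    (hg : Continuous g) : Continuous fun x => rip (f x) (g x) :=
  continuous_rip.comp (hf.prodMk hg)
@[fun_prop] lemma Continuous.kk {X : Type*} [TopologicalSpace X] {f : X → ℂ} (hf : Continuous f) :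
    Continuous fun x => kk (f x) := by
  unfold _root_.kk; fun_prop

lemma rip_add_left (z z' w : ℂ) : rip (z + z') w = rip z w + rip z' w := by simp [rip]; ring
lemma rip_add_right (z w w' : ℂ) : rip z (w + w') = rip z w + rip z w' := by simp [rip]; ring
lemma rip_sub_left (z z' w : ℂ) : rip (z - z') w = rip z w - rip z' w := by simp [rip]; ring
lemma rip_smul_left (s : ℝ) (z w : ℂ) : rip (s • z) w = s * rip z w := by simp [rip]; ring
lemma rip_smul_right (s : ℝ) (z w : ℂ) : rip z (s • w) = s * rip z w := by simp [rip]; ring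
lemma rip_self (z : ℂ) : rip z z = ‖z‖ ^ 2 := by rw [normsq_eq, rip]; ring
lemma rip_comm (z w : ℂ) : rip z w = rip w z := by simp [rip]; ring

lemma integ2 (hu : TF u) (hφ : TF φ) (G : ℂ → ℂ → (Fin d → ℂ) → (Fin d → ℂ) → ℝ)
    (hG : Continuous fun q : ℂ × ℂ × (Fin d → ℂ) × (Fin d → ℂ) => G q.1 q.2.1 q.2.2.1 q.2.2.2)
    (h0 : G 0 0 0 0 = 0) :
    Integrable fun x => G (u x) (φ x) (fun i => pd u i x) (fun i => pd φ i x) := by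
  refine integ_of_zero_off (K := tsupport u ∪ tsupport φ) ?_
    (hu.supp.isCompact.union hφ.supp.isCompact) ?_
  · have h1 : ∀ i, Continuous (pd u i) := fun i => (hu.pd i).cont
    have h2 : ∀ i, Continuous (pd φ i) := fun i => (hφ.pd i).cont
    have := hu.cont
    have := hφ.cont
    exact hG.comp (f := fun x => (u x, φ x, (fun i => pd u i x), fun i => pd φ i x)) (by fun_prop)
  · intro x hx
    rw [Set.mem_union, not_or] at hx
    simp only [zero_off hx.1, zero_off hx.2, pd_zero_off _ hx.1, pd_zero_off _ hx.2]
    exact h0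

/-- Energy of `1 + u`. -/
def EE (u : Ed d → ℂ) : ℝ := ∫ x, (1 / 2 * ∑ i, ‖pd u i x‖ ^ 2 + 1 / 4 * kk (u x) ^ 2)
/-- Momentum of `1 + u`, in symmetrized form. -/
def MM [NeZero d] (u : Ed d → ℂ) : ℝ := ∫ x, 1 / 2 * rip (I * pd u 0 x) (u x)
/-- The Lagrangian `E - cP` at `1 + u`. -/
def II [NeZero d] (c : ℝ) (u : Ed d → ℂ) : ℝ := EE u - c * MM u
/-- Differential of the Lagrangian. -/
def DD [NeZero d] (c : ℝ) (u φ : Ed d → ℂ) : ℝ :=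
  ∫ x, (∑ i, rip (pd u i x) (pd φ i x) + kk (u x) * rip (1 + u x) (φ x)
    - c / 2 * (rip (I * pd u 0 x) (φ x) + rip (I * pd φ 0 x) (u x)))
/-- Second variation of the Lagrangian. -/
def QQ [NeZero d] (c : ℝ) (u φ : Ed d → ℂ) : ℝ :=
  ∫ x, (∑ i, ‖pd φ i x‖ ^ 2 - c * rip (φ x) (I * pd φ 0 x) + kk (u x) * ‖φ x‖ ^ 2
    + 2 * rip (φ x) (1 + u x) ^ 2)
/-- Taylor remainder of the Lagrangian. -/
def RR (u φ : Ed d → ℂ) : ℝ :=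
  ∫ x, (rip (1 + u x) (φ x) * ‖φ x‖ ^ 2 + 1 / 4 * (‖φ x‖ ^ 2) ^ 2)

lemma QQ_eq_Qform [NeZero d] (c : ℝ) (u φ : Ed d → ℂ) :
    QQ c u φ = Qform c (fun x => 1 + u x) φ := by
  unfold QQ Qform gradSq
  congr 1; ext x
  rw [kk_eq, ← rip_eq, ← rip_eq]; ring

lemma int_comb {c : ℝ} {l₁ l₂ g₁ g₂ g₃ g₄ g₅ : Ed d → ℝ} (h1 : Integrable l₁) (h2 : Integrable l₂)
    (k1 : Integrable g₁) (k2 : Integrable g₂) (k3 : Integrable g₃) (k4 : Integrable g₄)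
    (k5 : Integrable g₅)
    (h : ∀ x, l₁ x - c * l₂ x = g₁ x - c * g₂ x + g₃ x + 1 / 2 * g₄ x + g₅ x) :
    (∫ x, l₁ x) - c * (∫ x, l₂ x) = (∫ x, g₁ x) - c * (∫ x, g₂ x) + (∫ x, g₃ x)
      + 1 / 2 * (∫ x, g₄ x) + ∫ x, g₅ x := by
  have hL := integral_sub h1 (h2.const_mul c)
  have a1 := integral_sub k1 (k2.const_mul c)
  have a2 := integral_add (k1.sub (k2.const_mul c)) k3
  have a3 := integral_add ((k1.sub (k2.const_mul c)).add k3) (k4.const_mul (1 / 2))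
  have a4 := integral_add (((k1.sub (k2.const_mul c)).add k3).add (k4.const_mul (1 / 2))) k5
  have e := integral_congr_ae (μ := (volume : Measure (Ed d))) (Eventually.of_forall h)
  simp only [Pi.add_apply, Pi.sub_apply, integral_const_mul] at *
  linarith

/-- The Lagrangian is a polynomial of degree four; `RR` collects the terms of order three and four.
-/
lemma II_expand [NeZero d] (c : ℝ) (hu : TF u) (hφ : TF φ) :
    II c (u + φ) = II c u + DD c u φ + 1 / 2 * QQ c u φ + RR u φ := by
  have i1 := integ2 hu hφ (fun a b A B => 1 / 2 * ∑ i, ‖A i + B i‖ ^ 2 + 1 / 4 * kk (a + b) ^ 2)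
    (by fun_prop) (by simp [kk])
  have i2 := integ2 hu hφ (fun a b A B => 1 / 2 * rip (I * (A 0 + B 0)) (a + b))
    (by fun_prop) (by simp [rip])
  have i3 := integ2 hu hφ (fun a b A B => 1 / 2 * ∑ i, ‖A i‖ ^ 2 + 1 / 4 * kk a ^ 2)
    (by fun_prop) (by simp [kk])
  have i4 := integ2 hu hφ (fun a b A B => 1 / 2 * rip (I * A 0) a)
    (by fun_prop) (by simp [rip])
  have i5 := integ2 hu hφ (fun a b A B => ∑ i, rip (A i) (B i) + kk a * rip (1 + a) b
    - c / 2 * (rip (I * A 0) b + rip (I * B 0) a)) (by fun_prop) (by simp [rip, kk])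
  have i6 := integ2 hu hφ (fun a b A B => ∑ i, ‖B i‖ ^ 2 - c * rip b (I * B 0) + kk a * ‖b‖ ^ 2
    + 2 * rip b (1 + a) ^ 2) (by fun_prop) (by simp [rip, kk])
  have i7 := integ2 hu hφ (fun a b A B => rip (1 + a) b * ‖b‖ ^ 2 + 1 / 4 * (‖b‖ ^ 2) ^ 2)
    (by fun_prop) (by simp [rip])
  have e1 : EE (u + φ) = ∫ x, (1 / 2 * ∑ i, ‖pd u i x + pd φ i x‖ ^ 2
      + 1 / 4 * kk (u x + φ x) ^ 2) := by
    unfold EE; simp only [pd_add hu.diff hφ.diff, Pi.add_apply]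
  have e2 : MM (u + φ) = ∫ x, 1 / 2 * rip (I * (pd u 0 x + pd φ 0 x)) (u x + φ x) := by
    unfold MM; simp only [pd_add hu.diff hφ.diff, Pi.add_apply]
  simp only [II]
  rw [e1, e2]
  unfold EE MM DD QQ RR
  refine int_comb i1 i2 i3 i4 i5 i6 i7 fun x => ?_
  have hs : ∑ i, ‖pd u i x + pd φ i x‖ ^ 2 = ∑ i, ‖pd u i x‖ ^ 2 + 2 * ∑ i, rip (pd u i x) (pd φ i x)
      + ∑ i, ‖pd φ i x‖ ^ 2 := by
    rw [Finset.mul_sum, ← Finset.sum_add_distrib, ← Finset.sum_add_distrib]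
    refine Finset.sum_congr rfl fun i _ => ?_
    simp only [normsq_eq, rip, add_re, add_im]; ring
  rw [hs]
  simp only [normsq_eq, rip, kk, add_re, add_im, mul_re, mul_im, I_re, I_im, one_re, one_im]
  ring

lemma DD_smul [NeZero d] (c : ℝ) (hφ : TF φ) (s : ℝ) : DD c u (s • φ) = s * DD c u φ := by
  unfold DD
  rw [← integral_const_mul]
  congr 1; ext x
  simp only [pd_smul hφ.diff, Pi.smul_apply, mul_smul_comm, rip_smul_right, rip_smul_left,
    mul_sub, mul_add, Finset.mul_sum]
  ring

lemma QQ_smul [NeZero d] (c : ℝ) (hφ : TF φ) (s : ℝ) : QQ c u (s • φ) = s ^ 2 * QQ c u φ := by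
  unfold QQ
  rw [← integral_const_mul]
  congr 1; ext x
  simp only [pd_smul hφ.diff, Pi.smul_apply, mul_smul_comm, rip_smul_right, rip_smul_left,
    mul_sub, mul_add, Finset.mul_sum, norm_smul, mul_pow, Real.norm_eq_abs, sq_abs]
  ring

/-- A constant `S` in the embedding of `H¹` into `L⁴` and `L⁶`. -/
def SobC (d : ℕ) (S : ℝ) : Prop := 1 ≤ S ∧ ∀ u : Ed d → ℂ, TF u →
    n2 (fun x => ‖u x‖ ^ 2) ≤ S * pN u ^ 2 ∧ n2 (fun x => ‖u x‖ ^ 3) ≤ S * pN u ^ 3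

variable {S : ℝ}

lemma SobC.n2_mul (hS : SobC d S) (ha : TF a) (hb : TF b) :
    n2 (fun x => ‖a x‖ * ‖b x‖) ≤ S * (pN a * pN b) := by
  have hS1 := hS.1
  have pa := pN_nonneg a
  have pb := pN_nonneg b
  apply Real.sqrt_le_iff.2 ⟨by positivity, ?_⟩
  have h := cauchy_schwarz (ha.pow_memLp 1) (hb.pow_memLp 1)
  have e : ∀ x, ‖‖a x‖ * ‖b x‖‖ ^ 2 = ‖‖a x‖ ^ 2‖ * ‖‖b x‖ ^ 2‖ := by
    intro x; simp only [norm_mul, norm_pow, norm_norm]; ring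
  simp_rw [e]
  calc _ ≤ _ := h
    _ ≤ (S * pN a ^ 2) * (S * pN b ^ 2) :=
      mul_le_mul (hS.2 a ha).1 (hS.2 b hb).1 (n2_nonneg _) (by positivity)
    _ = _ := by ring

lemma int_two (ha : TF a) (hb : TF b) :
    Integrable (fun x => ‖a x‖ * ‖b x‖) ∧ ∫ x, ‖a x‖ * ‖b x‖ ≤ pN a * pN b :=
  ⟨integrable_mul_norm (ha.memLp 2) (hb.memLp 2), (cauchy_schwarz (ha.memLp 2) (hb.memLp 2)).trans
    (mul_le_mul (n2_le_pN a) (n2_le_pN b) (n2_nonneg _) (pN_nonneg _))⟩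

lemma SobC.int_three (hS : SobC d S) (ha : TF a) (hb : TF b) (he : TF e) :
    Integrable (fun x => ‖a x‖ * (‖b x‖ * ‖e x‖)) ∧
      ∫ x, ‖a x‖ * (‖b x‖ * ‖e x‖) ≤ S * (pN a * pN b * pN e) := by
  have h1 := integrable_mul_norm (ha.memLp 2) (hb.mul_memLp he)
  have h2 := cauchy_schwarz (ha.memLp 2) (hb.mul_memLp he)
  simp only [norm_mul, norm_norm] at h1 h2
  refine ⟨h1, h2.trans ?_⟩
  have := hS.1
  calc _ ≤ pN a * (S * (pN b * pN e)) :=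
        mul_le_mul (n2_le_pN a) (hS.n2_mul hb he) (n2_nonneg _) (pN_nonneg _)
    _ = _ := by ring

lemma SobC.int_four (hS : SobC d S) (ha : TF a) (hb : TF b) (he : TF e) (hw : TF w) :
    Integrable (fun x => (‖a x‖ * ‖b x‖) * (‖e x‖ * ‖w x‖)) ∧
      ∫ x, (‖a x‖ * ‖b x‖) * (‖e x‖ * ‖w x‖) ≤ S ^ 2 * (pN a * pN b * pN e * pN w) := by
  have h1 := integrable_mul_norm (ha.mul_memLp hb) (he.mul_memLp hw)
  have h2 := cauchy_schwarz (ha.mul_memLp hb) (he.mul_memLp hw)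
  simp only [norm_mul, norm_norm] at h1 h2
  refine ⟨h1, h2.trans ?_⟩
  have := hS.1
  have pa := pN_nonneg a
  have pb := pN_nonneg b
  calc _ ≤ (S * (pN a * pN b)) * (S * (pN e * pN w)) :=
        mul_le_mul (hS.n2_mul ha hb) (hS.n2_mul he hw) (n2_nonneg _) (by positivity)
    _ = _ := by ring

end Functional

/-! ### Taylor estimates for the Lagrangian -/

section Taylor
variable {d : ℕ} {u v w φ a b e : Ed d → ℂ} {S c : ℝ}

lemma abs_int_sub_le {f g b : Ed d → ℝ} (hf : Integrable f) (hg : Integrable g)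
    (hb : Integrable b) (h : ∀ x, |f x - g x| ≤ b x) : |(∫ x, f x) - ∫ x, g x| ≤ ∫ x, b x := by
  rw [← integral_sub hf hg, ← Real.norm_eq_abs]
  exact norm_integral_le_of_norm_le hb (Eventually.of_forall h)

lemma kk_diff (v w : ℂ) : kk (v + w) - kk v = 2 * w.re + 2 * rip v w + ‖w‖ ^ 2 := by
  rw [normsq_eq]; simp only [kk, rip, add_re, add_im]; ring

lemma abs_kk_diff (v w : ℂ) : |kk (v + w) - kk v| ≤ ‖w‖ * (2 + 2 * ‖v‖ + ‖w‖) := by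
  rw [kk_diff]
  have h1 := Complex.abs_re_le_norm w
  have h2 := abs_rip_le v w
  have h3 := abs_add_le (2 * w.re + 2 * rip v w) (‖w‖ ^ 2)
  have h4 := abs_add_le (2 * w.re) (2 * rip v w)
  rw [abs_mul, abs_mul, abs_two] at h4
  rw [abs_of_nonneg (sq_nonneg ‖w‖)] at h3
  nlinarith

lemma abs_kk_le (v : ℂ) : |kk v| ≤ ‖v‖ * (2 + ‖v‖) := by
  have := abs_kk_diff 0 v
  simpa [kk] using this

lemma norm_one_add_le (z : ℂ) : ‖1 + z‖ ≤ 1 + ‖z‖ := by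
  simpa using norm_add_le 1 z

lemma abs_nonlin_diff (v w φ : ℂ) :
    |kk (v + w) * rip (1 + (v + w)) φ - kk v * rip (1 + v) φ| ≤
      (‖w‖ * ‖φ‖) * (5 + 12 * ‖v‖ ^ 2 + 12 * ‖w‖ ^ 2) := by
  have e : kk (v + w) * rip (1 + (v + w)) φ - kk v * rip (1 + v) φ =
      (kk (v + w) - kk v) * rip (1 + (v + w)) φ + kk v * rip w φ := by
    simp [rip]; ring
  rw [e]
  have h1 := abs_kk_diff v w
  have h2 := abs_kk_le v
  have h3 : |rip (1 + (v + w)) φ| ≤ (1 + ‖v‖ + ‖w‖) * ‖φ‖ := by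
    refine (abs_rip_le _ _).trans (mul_le_mul_of_nonneg_right ?_ (norm_nonneg _))
    linarith [norm_one_add_le (v + w), norm_add_le v w]
  have h4 := abs_rip_le w φ
  have h5 := abs_add_le ((kk (v + w) - kk v) * rip (1 + (v + w)) φ) (kk v * rip w φ)
  rw [abs_mul, abs_mul] at h5
  have nv := norm_nonneg v
  have nw := norm_nonneg w
  have nφ := norm_nonneg φ
  have h6 := mul_le_mul h1 h3 (abs_nonneg _) (by positivity)
  have h7 := mul_le_mul h2 h4 (abs_nonneg _) (by positivity)
  have h8 : (2 + 2 * ‖v‖ + ‖w‖) * (1 + ‖v‖ + ‖w‖) + ‖v‖ * (2 + ‖v‖) ≤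
      5 + 12 * ‖v‖ ^ 2 + 12 * ‖w‖ ^ 2 := by
    nlinarith [sq_nonneg (‖v‖ - ‖w‖), sq_nonneg (1 - ‖v‖), sq_nonneg (1 - ‖w‖)]
  have h9 := mul_le_mul_of_nonneg_left h8 (mul_nonneg nw nφ)
  calc _ ≤ _ := h5
    _ ≤ _ := add_le_add h6 h7
    _ = (‖w‖ * ‖φ‖) * ((2 + 2 * ‖v‖ + ‖w‖) * (1 + ‖v‖ + ‖w‖) + ‖v‖ * (2 + ‖v‖)) := by ring
    _ ≤ _ := h9

variable [NeZero d]

lemma DD_integrable (c : ℝ) (hu : TF u) (hφ : TF φ) :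
    Integrable fun x => (∑ i, rip (pd u i x) (pd φ i x) + kk (u x) * rip (1 + u x) (φ x)
    - c / 2 * (rip (I * pd u 0 x) (φ x) + rip (I * pd φ 0 x) (u x))) :=
  integ2 hu hφ (fun a b A B => ∑ i, rip (A i) (B i) + kk a * rip (1 + a) b
    - c / 2 * (rip (I * A 0) b + rip (I * B 0) a)) (by fun_prop) (by simp [rip, kk])

lemma QQ_integrable (c : ℝ) (hu : TF u) (hφ : TF φ) :
    Integrable fun x => (∑ i, ‖pd φ i x‖ ^ 2 - c * rip (φ x) (I * pd φ 0 x) + kk (u x) * ‖φ x‖ ^ 2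
    + 2 * rip (φ x) (1 + u x) ^ 2) :=
  integ2 hu hφ (fun a b A B => ∑ i, ‖B i‖ ^ 2 - c * rip b (I * B 0) + kk a * ‖b‖ ^ 2
    + 2 * rip b (1 + a) ^ 2) (by fun_prop) (by simp [rip, kk])

lemma int_mono_eq {f : Ed d → ℝ} {B : ℝ} (h : Integrable f ∧ ∫ x, f x ≤ B) {k : ℝ} (hk : 0 ≤ k) :
    Integrable (fun x => k * f x) ∧ ∫ x, k * f x ≤ k * B :=
  ⟨h.1.const_mul k, by rw [integral_const_mul]; exact mul_le_mul_of_nonneg_left h.2 hk⟩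

lemma int_add_le {f g : Ed d → ℝ} {A B : ℝ} (h : Integrable f ∧ ∫ x, f x ≤ A)
    (h' : Integrable g ∧ ∫ x, g x ≤ B) :
    Integrable (fun x => f x + g x) ∧ ∫ x, (f x + g x) ≤ A + B :=
  ⟨h.1.add h'.1, by rw [integral_add h.1 h'.1]; exact add_le_add h.2 h'.2⟩

lemma int_pd_sum (ha : TF a) (hb : TF b) :
    Integrable (fun x => ∑ i, ‖pd a i x‖ * ‖pd b i x‖) ∧
      ∫ x, ∑ i, ‖pd a i x‖ * ‖pd b i x‖ ≤ d * (pN a * pN b) := by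
  have h : ∀ i, Integrable (fun x => ‖pd a i x‖ * ‖pd b i x‖) := fun i =>
    integrable_mul_norm ((ha.pd i).memLp 2) ((hb.pd i).memLp 2)
  refine ⟨integrable_finsetSum _ fun i _ => h i, ?_⟩
  rw [integral_finsetSum _ fun i _ => h i]
  refine (Finset.sum_le_card_nsmul _ _ (pN a * pN b) fun i _ => ?_).trans (by simp)
  exact (cauchy_schwarz ((ha.pd i).memLp 2) ((hb.pd i).memLp 2)).trans
    (mul_le_mul (n2_pd_le_pN a i) (n2_pd_le_pN b i) (n2_nonneg _) (pN_nonneg _))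

lemma int_mul_pd (ha : TF a) (hb : TF b) (i : Fin d) :
    Integrable (fun x => ‖a x‖ * ‖pd b i x‖) ∧
      ∫ x, ‖a x‖ * ‖pd b i x‖ ≤ pN a * pN b :=
  ⟨integrable_mul_norm (ha.memLp 2) ((hb.pd i).memLp 2),
    (cauchy_schwarz (ha.memLp 2) ((hb.pd i).memLp 2)).trans
    (mul_le_mul (n2_le_pN a) (n2_pd_le_pN b i) (n2_nonneg _) (pN_nonneg _))⟩

/-- The first variation is Lipschitz on bounded sets. -/
lemma SobC.DD_lip (hS : SobC d S) (hv : TF v) (hw : TF w) (hφ : TF φ) :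
    |DD c (v + w) φ - DD c v φ| ≤
      (d + |c| + 5 + 12 * S ^ 2 * (pN v ^ 2 + pN w ^ 2)) * (pN w * pN φ) := by
  have B := int_add_le (int_add_le (int_pd_sum hw hφ) (int_add_le (int_mono_eq (int_two hw hφ)
      (k := 5) (by norm_num)) (int_add_le (int_mono_eq (hS.int_four hw hφ hv hv) (k := 12) (by norm_num))
        (int_mono_eq (hS.int_four hw hφ hw hw) (k := 12) (by norm_num)))))
      (int_mono_eq (int_add_le (int_mul_pd hφ hw 0) (int_mul_pd hw hφ 0)) (k := |c| / 2) (by positivity))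
  refine (abs_int_sub_le (DD_integrable c (hv.add hw) hφ) (DD_integrable c hv hφ) B.1 ?_).trans
    (B.2.trans (le_of_eq (by ring)))
  intro x
  have e : (∑ i, rip (pd (v + w) i x) (pd φ i x) + kk ((v + w) x) * rip (1 + (v + w) x) (φ x)
      - c / 2 * (rip (I * pd (v + w) 0 x) (φ x) + rip (I * pd φ 0 x) ((v + w) x)))
      - (∑ i, rip (pd v i x) (pd φ i x) + kk (v x) * rip (1 + v x) (φ x)
      - c / 2 * (rip (I * pd v 0 x) (φ x) + rip (I * pd φ 0 x) (v x)))
      = ∑ i, rip (pd w i x) (pd φ i x) + (kk (v x + w x) * rip (1 + (v x + w x)) (φ x)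
      - kk (v x) * rip (1 + v x) (φ x))
      + -(c / 2) * (rip (I * pd w 0 x) (φ x) + rip (I * pd φ 0 x) (w x)) := by
    simp only [pd_add hv.diff hw.diff, Pi.add_apply, rip_add_left, rip_add_right, mul_add,
      Finset.sum_add_distrib]
    ring
  rw [e]
  have h1 : |∑ i, rip (pd w i x) (pd φ i x)| ≤ ∑ i, ‖pd w i x‖ * ‖pd φ i x‖ :=
    (Finset.abs_sum_le_sum_abs _ _).trans (Finset.sum_le_sum fun i _ => abs_rip_le _ _)
  have h2 := abs_nonlin_diff (v x) (w x) (φ x)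
  have h3 := abs_rip_le (I * pd w 0 x) (φ x)
  have h4 := abs_rip_le (I * pd φ 0 x) (w x)
  rw [norm_mul, norm_I, one_mul] at h3 h4
  have h5 : |-(c / 2) * (rip (I * pd w 0 x) (φ x) + rip (I * pd φ 0 x) (w x))| ≤
      |c| / 2 * (‖φ x‖ * ‖pd w 0 x‖ + ‖w x‖ * ‖pd φ 0 x‖) := by
    rw [abs_mul, abs_neg, abs_div, abs_two]
    refine mul_le_mul_of_nonneg_left ((abs_add_le _ _).trans ?_) (by positivity)
    linarith
  refine (abs_add_le _ _).trans (add_le_add ((abs_add_le _ _).trans (add_le_add h1 ?_)) h5)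
  refine h2.trans (le_of_eq ?_)
  ring

/-- The second variation is Lipschitz on bounded sets. -/
lemma SobC.QQ_lip (hS : SobC d S) (hv : TF v) (hw : TF w) (he : TF e) :
    |QQ c (v + w) e - QQ c v e| ≤
      (6 * S + 6 * S ^ 2 * (pN v + pN w)) * (pN w * pN e ^ 2) := by
  have B := int_add_le (int_mono_eq (hS.int_three hw he he) (k := 6) (by norm_num))
    (int_add_le (int_mono_eq (hS.int_four he he hv hw) (k := 6) (by norm_num))
    (int_mono_eq (hS.int_four he he hw hw) (k := 6) (by norm_num)))
  refine (abs_int_sub_le (QQ_integrable c (hv.add hw) he) (QQ_integrable c hv he) B.1 ?_).trans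
    (B.2.trans (le_of_eq (by ring)))
  intro x
  have e' : (∑ i, ‖pd e i x‖ ^ 2 - c * rip (e x) (I * pd e 0 x) + kk ((v + w) x) * ‖e x‖ ^ 2
    + 2 * rip (e x) (1 + (v + w) x) ^ 2) - (∑ i, ‖pd e i x‖ ^ 2 - c * rip (e x) (I * pd e 0 x)
    + kk (v x) * ‖e x‖ ^ 2 + 2 * rip (e x) (1 + v x) ^ 2)
    = (kk (v x + w x) - kk (v x)) * ‖e x‖ ^ 2 + 2 * (rip (e x) (w x) *
      (rip (e x) (w x) + 2 * rip (e x) (1 + v x))) := by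
    simp only [Pi.add_apply]
    simp only [rip_add_right]; ring
  rw [e']
  have h1 := abs_kk_diff (v x) (w x)
  have h2 := abs_rip_le (e x) (w x)
  have h3 : |rip (e x) (1 + v x)| ≤ ‖e x‖ * (1 + ‖v x‖) :=
    (abs_rip_le _ _).trans (mul_le_mul_of_nonneg_left (norm_one_add_le _) (norm_nonneg _))
  have h4 := abs_add_le (rip (e x) (w x)) (2 * rip (e x) (1 + v x))
  rw [abs_mul, abs_two] at h4
  have nv := norm_nonneg (v x)
  have nw := norm_nonneg (w x)
  have ne := norm_nonneg (e x)
  refine (abs_add_le _ _).trans ?_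
  rw [abs_mul, abs_mul, abs_mul, abs_two, abs_of_nonneg (sq_nonneg ‖e x‖)]
  have h5 := mul_le_mul_of_nonneg_right h1 (sq_nonneg ‖e x‖)
  have h6 : |rip (e x) (w x) + 2 * rip (e x) (1 + v x)| ≤ ‖e x‖ * (‖w x‖ + 2 + 2 * ‖v x‖) := by
    nlinarith
  have h7 := mul_le_mul h2 h6 (abs_nonneg _) (by positivity)
  have h8 : 0 ≤ ‖e x‖ ^ 2 * (‖w x‖ * ‖w x‖) := by positivity
  nlinarith

lemma QQ_zero_le (hφ : TF φ) : |QQ c 0 φ| ≤ (d + |c| + 2) * pN φ ^ 2 := by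
  have B := int_add_le (int_pd_sum hφ hφ) (int_add_le (int_mono_eq (int_mul_pd hφ hφ 0)
    (k := |c|) (abs_nonneg c)) (int_mono_eq (int_two hφ hφ) (k := 2) (by norm_num)))
  have := abs_int_sub_le (g := fun _ => (0:ℝ)) (QQ_integrable c TF.zero hφ) (integrable_zero _ _ _) B.1 ?_
  · simp only [integral_zero, sub_zero] at this
    exact this.trans (B.2.trans (le_of_eq (by ring)))
  intro x
  have h1 := abs_rip_le (φ x) (I * pd φ 0 x)
  rw [norm_mul, norm_I, one_mul] at h1
  have h2 : |rip (φ x) 1| ≤ ‖φ x‖ := by simpa using abs_rip_le (φ x) 1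
  have h3 : rip (φ x) 1 ^ 2 ≤ ‖φ x‖ ^ 2 := by
    rw [← sq_abs]; exact pow_le_pow_left₀ (abs_nonneg _) h2 2
  simp only [Pi.zero_apply, add_zero, sub_zero]
  have : kk 0 = 0 := by simp [kk]
  rw [this, zero_mul, add_zero]
  have h4 : |c * rip (φ x) (I * pd φ 0 x)| ≤ |c| * (‖φ x‖ * ‖pd φ 0 x‖) := by
    rw [abs_mul]; exact mul_le_mul_of_nonneg_left h1 (abs_nonneg c)
  have h5 : ∑ i, ‖pd φ i x‖ ^ 2 = ∑ i, ‖pd φ i x‖ * ‖pd φ i x‖ := by simp only [sq]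
  rw [h5]
  have h6 : 0 ≤ ∑ i, ‖pd φ i x‖ * ‖pd φ i x‖ := by positivity
  have h7 := abs_le.1 h4
  rw [abs_le]
  constructor <;> nlinarith [sq_nonneg (rip (φ x) 1)]

/-- The Taylor remainder is of third order. -/
lemma SobC.RR_le (hS : SobC d S) (hu : TF u) (hφ : TF φ) :
    |RR u φ| ≤ (S + S ^ 2 * pN u + S ^ 2 * pN φ) * pN φ ^ 3 := by
  have B := int_add_le (hS.int_three hφ hφ hφ) (int_add_le (hS.int_four hu hφ hφ hφ)
    (hS.int_four hφ hφ hφ hφ))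
  have i7 := integ2 hu hφ (fun a b A B => rip (1 + a) b * ‖b‖ ^ 2 + 1 / 4 * (‖b‖ ^ 2) ^ 2)
    (by fun_prop) (by simp [rip])
  have := abs_int_sub_le (g := fun _ => (0:ℝ)) i7 (integrable_zero _ _ _) B.1 ?_
  · simp only [integral_zero, sub_zero] at this
    exact this.trans (B.2.trans (le_of_eq (by ring)))
  intro x
  have h3 : |rip (1 + u x) (φ x)| ≤ (1 + ‖u x‖) * ‖φ x‖ :=
    (abs_rip_le _ _).trans (mul_le_mul_of_nonneg_right (norm_one_add_le _) (norm_nonneg _))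
  simp only [sub_zero]
  refine (abs_add_le _ _).trans ?_
  rw [abs_mul, abs_of_nonneg (sq_nonneg ‖φ x‖), abs_of_nonneg (by positivity : 0 ≤ 1 / 4 * (‖φ x‖ ^ 2) ^ 2)]
  have h4 := mul_le_mul_of_nonneg_right h3 (sq_nonneg ‖φ x‖)
  have h5 : 0 ≤ (‖φ x‖ ^ 2) ^ 2 := by positivity
  nlinarith

lemma DD_zero (φ : Ed d → ℂ) : DD c 0 φ = 0 := by
  have : ∀ i, pd (0 : Ed d → ℂ) i = 0 := by intro i; ext x; simp [pd]
  simp [DD, this, rip, kk]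

end Taylor

/-! ### The space of perturbations of a slab -/

section Slab
variable {d : ℕ} {u v w φ e : Ed d → ℂ} {S c : ℝ}

lemma pN_add_le (hu : TF u) (hv : TF v) : pN (u + v) ≤ pN u + pN v := by
  have h1 := n2_add_le (hu.memLp 2) (hv.memLp 2)
  have h2 : ∑ i, n2 (pd (u + v) i) ≤ ∑ i, (n2 (pd u i) + n2 (pd v i)) :=
    Finset.sum_le_sum fun i _ => by
      rw [pd_add hu.diff hv.diff]
      exact n2_add_le ((hu.pd i).memLp 2) ((hv.pd i).memLp 2)
  rw [Finset.sum_add_distrib] at h2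
  simp only [pN]; linarith

lemma pN_smul (hu : TF u) (s : ℝ) : pN (s • u) = |s| * pN u := by
  simp only [pN, n2_smul, pd_smul hu.diff, mul_add, Finset.mul_sum]

variable [NeZero d]

/-- Smooth perturbations compactly supported in the open slab. -/
def slabV (d N : ℕ) [NeZero d] : Submodule ℝ (Ed d → ℂ) where
  carrier := {u | TF u ∧ tsupport u ⊆ slab d N}
  add_mem' := fun {a b} ha hb => ⟨ha.1.add hb.1,
    (tsupport_add a b).trans (Set.union_subset ha.2 hb.2)⟩
  zero_mem' := ⟨TF.zero, by simp⟩
  smul_mem' := fun s a ha => ⟨ha.1.smul s,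
    (closure_mono (Function.support_const_smul_subset s a)).trans ha.2⟩

/-- The `H¹`-type norm as a seminorm on the slab space. -/
def slabP (d N : ℕ) [NeZero d] : Seminorm ℝ (slabV d N) :=
  Seminorm.of (fun v => pN v.1) (fun x y => pN_add_le x.2.1 y.2.1)
    (fun s x => pN_smul x.2.1 s)

@[simp] lemma slabP_apply {N : ℕ} (v : slabV d N) : slabP d N v = pN v.1 := rfl

lemma SobC.DD_le (hS : SobC d S) (hw : TF w) (hφ : TF φ) :
    |DD c w φ| ≤ (d + |c| + 5 + 12 * S ^ 2 * pN w ^ 2) * (pN w * pN φ) := by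
  have := hS.DD_lip (c := c) TF.zero hw hφ
  have h0 : pN (0 : Ed d → ℂ) = 0 := by
    have := pN_smul (TF.zero (d := d)) 0
    simpa using this
  rwa [zero_add, DD_zero, sub_zero, h0, zero_pow two_ne_zero, zero_add] at this

lemma SobC.QQ_le (hS : SobC d S) (hw : TF w) (hφ : TF φ) :
    |QQ c w φ| ≤ (d + |c| + 2 + (6 * S + 6 * S ^ 2 * pN w) * pN w) * pN φ ^ 2 := by
  have := hS.QQ_lip (c := c) TF.zero hw hφ
  have h0 : pN (0 : Ed d → ℂ) = 0 := by
    have := pN_smul (TF.zero (d := d)) 0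
    simpa using this
  rw [zero_add, h0, zero_add] at this
  have h1 := QQ_zero_le (c := c) hφ
  have h2 := abs_add_le (QQ c w φ - QQ c 0 φ) (QQ c 0 φ)
  rw [sub_add_cancel] at h2
  nlinarith

/-- On bounded sets the Lagrangian has the Taylor expansion required by the mountain pass
theorem. -/
lemma SobC.taylorData (hS : SobC d S) (c : ℝ) (N : ℕ) (B : ℝ) (hB : 0 ≤ B) :
    ∃ C, TaylorData (slabP d N) (fun v => II c v.1) (fun v φ => DD c v.1 φ.1)
      (fun v φ => QQ c v.1 φ.1) {v | pN v.1 ≤ B} C := by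
  have hS1 := hS.1
  set L₁ := d + |c| + 5 + 12 * S ^ 2 * (B ^ 2 + 1)
  set L₂ := 6 * S + 6 * S ^ 2 * (2 * B + 2)
  set L₃ := S + S ^ 2 * (B + 1) + S ^ 2
  set L₄ := (d + |c| + 5 + 12 * S ^ 2 * B ^ 2) * B
  set L₅ := d + |c| + 2 + (6 * S + 6 * S ^ 2 * (B + 1)) * (B + 1)
  have hd0 : (0:ℝ) ≤ d := d.cast_nonneg
  have l1 : 0 < L₁ := by positivity
  have l2 : 0 < L₂ := by positivity
  have l3 : 0 < L₃ := by positivity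
  have l4 : 0 ≤ L₄ := by positivity
  have l5 : 0 < L₅ := by positivity
  have near : ∀ z : slabV d N, pN z.1 ≤ B → ∀ x : slabV d N, slabP d N (x - z) ≤ 1 →
      pN x.1 ≤ B + 1 := by
    intro z hz x hx
    have := pN_add_le (x - z).2.1 z.2.1
    rw [slabP_apply] at hx
    rw [show (x - z).1 + z.1 = x.1 by simp] at this
    linarith
  have bQ : ∀ x : slabV d N, pN x.1 ≤ B + 1 → ∀ e : slabV d N, |QQ c x.1 e.1| ≤ L₅ * pN e.1 ^ 2 := by
    intro x hx e
    refine (hS.QQ_le x.2.1 e.2.1).trans (mul_le_mul_of_nonneg_right ?_ (sq_nonneg _))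
    have := pN_nonneg x.1
    simp only [L₅]; gcongr
  have bD : ∀ z : slabV d N, pN z.1 ≤ B → ∀ e : slabV d N, |DD c z.1 e.1| ≤ L₄ * pN e.1 := by
    intro x hx e
    refine (hS.DD_le x.2.1 e.2.1).trans ?_
    rw [← mul_assoc]
    refine mul_le_mul_of_nonneg_right ?_ (pN_nonneg _)
    have := pN_nonneg x.1
    simp only [L₄]; gcongr
  refine ⟨L₁ + L₂ + L₃ + L₄ + L₅, ⟨by positivity, ?_, ?_, ?_, ?_, ?_, ?_, ?_, ?_⟩⟩
  · intro z hz x hx e he t ht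
    have hx1 := near z hz x hx
    have h1 := II_expand c x.2.1 (e.2.1.smul t)
    rw [DD_smul c e.2.1, QQ_smul c e.2.1] at h1
    have h2 := hS.RR_le x.2.1 (e.2.1.smul t)
    have h3 : pN (t • e.1) ≤ t := by
      rw [pN_smul e.2.1, abs_of_nonneg ht.1]
      have := mul_le_mul_of_nonneg_left he ht.1
      simpa using this
    have h30 := pN_nonneg (t • e.1)
    have h4 : pN (t • e.1) ≤ 1 := h3.trans ht.2
    have h5 : (S + S ^ 2 * pN x.1 + S ^ 2 * pN (t • e.1)) * pN (t • e.1) ^ 3 ≤ L₃ * t ^ 3 := by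
      have := pN_nonneg x.1
      refine mul_le_mul ?_ (pow_le_pow_left₀ h30 h3 3) (by positivity) l3.le
      simp only [L₃]; nlinarith [sq_nonneg S]
    show |II c (x.1 + t • e.1) - II c x.1 - t * DD c x.1 e.1 - t ^ 2 / 2 * QQ c x.1 e.1| ≤ _
    rw [h1]
    have h6 : II c x.1 + t * DD c x.1 e.1 + 1 / 2 * (t ^ 2 * QQ c x.1 e.1) + RR x.1 (t • e.1)
        - II c x.1 - t * DD c x.1 e.1 - t ^ 2 / 2 * QQ c x.1 e.1 = RR x.1 (t • e.1) := by ring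
    rw [h6]
    have h7 : 0 ≤ t ^ 3 := pow_nonneg ht.1 3
    refine h2.trans (h5.trans (mul_le_mul_of_nonneg_right ?_ h7))
    linarith
  · intro z hz x hx
    have h1 := II_expand c z.2.1 (x - z).2.1
    rw [show z.1 + (x - z).1 = x.1 by simp] at h1
    have h2 := hS.RR_le z.2.1 (x - z).2.1
    have h3 := bD z hz (x - z)
    have h4 := bQ z (le_trans hz (by linarith)) (x - z)
    rw [slabP_apply] at hx ⊢
    set w := (x - z).1
    have w0 := pN_nonneg w
    have h5 : (S + S ^ 2 * pN z.1 + S ^ 2 * pN w) * pN w ^ 3 ≤ L₃ * pN w := by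
      have := pN_nonneg z.1
      have hz' : pN z.1 ≤ B := hz
      refine mul_le_mul ?_ ?_ (by positivity) l3.le
      · simp only [L₃]; nlinarith [sq_nonneg S]
      · nlinarith [mul_nonneg w0 w0]
    have h6 : L₅ * pN w ^ 2 ≤ L₅ * pN w := mul_le_mul_of_nonneg_left (by nlinarith) l5.le
    have h7 : |II c x.1 - II c z.1| ≤ |DD c z.1 w| + |QQ c z.1 w| + |RR z.1 w| := by
      rw [h1, abs_le]
      have a1 := abs_le.1 (le_refl |DD c z.1 w|)
      have a2 := abs_le.1 (le_refl |QQ c z.1 w|)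
      have a3 := abs_le.1 (le_refl |RR z.1 w|)
      have := abs_nonneg (QQ c z.1 w)
      constructor <;> linarith
    refine h7.trans ?_
    nlinarith
  · intro z hz x hx e he
    have h1 := hS.DD_lip (c := c) z.2.1 (x - z).2.1 e.2.1
    rw [show z.1 + (x - z).1 = x.1 by simp] at h1
    rw [slabP_apply] at *
    set w := (x - z).1
    have w0 := pN_nonneg w
    have z0 := pN_nonneg z.1
    have hz' : pN z.1 ≤ B := hz
    have h2 : pN w * pN e.1 ≤ pN w := mul_le_of_le_one_right w0 he
    have h3 : d + |c| + 5 + 12 * S ^ 2 * (pN z.1 ^ 2 + pN w ^ 2) ≤ L₁ := by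
      have : pN w ^ 2 ≤ 1 := pow_le_one₀ w0 hx
      simp only [L₁]; gcongr
    refine h1.trans ?_
    calc _ ≤ L₁ * pN w := mul_le_mul h3 h2 (mul_nonneg w0 (pN_nonneg _)) l1.le
      _ ≤ _ := mul_le_mul_of_nonneg_right (by linarith) w0
  · intro z hz x hx e he
    have h1 := hS.QQ_lip (c := c) z.2.1 (x - z).2.1 e.2.1
    rw [show z.1 + (x - z).1 = x.1 by simp] at h1
    rw [slabP_apply] at *
    set w := (x - z).1
    have w0 := pN_nonneg w
    have z0 := pN_nonneg z.1
    have hz' : pN z.1 ≤ B := hz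
    have h2 : pN w * pN e.1 ^ 2 ≤ pN w :=
      mul_le_of_le_one_right w0 (pow_le_one₀ (pN_nonneg _) he)
    have h3 : 6 * S + 6 * S ^ 2 * (pN z.1 + pN w) ≤ L₂ := by
      simp only [L₂]; nlinarith [sq_nonneg S]
    refine h1.trans ?_
    calc _ ≤ L₂ * pN w := mul_le_mul h3 h2 (mul_nonneg w0 (sq_nonneg _)) l2.le
      _ ≤ _ := mul_le_mul_of_nonneg_right (by linarith) w0
  · intro z hz e
    exact (bD z hz e).trans (mul_le_mul_of_nonneg_right (by linarith) (pN_nonneg _))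
  · intro z hz x hx e he
    refine (bQ x (near z hz x hx) e).trans ?_
    have : pN e.1 ^ 2 ≤ 1 := pow_le_one₀ (pN_nonneg _) he
    nlinarith
  · intro x e s
    exact DD_smul c e.2.1 s
  · intro x e s
    exact QQ_smul c e.2.1 s

end Slab

/-! ### Poincaré inequality and the local minimum -/

section Geometry
variable {d : ℕ} {u v w φ e : Ed d → ℂ} {S c : ℝ}

lemma TF.integ {F : Type*} [NormedAddCommGroup F] {g : Ed d → F} (hu : TF u) (hg : Continuous g)
    (h : ∀ x ∉ tsupport u, g x = 0) : Integrable g := integ_of_zero_off hg hu.supp h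

lemma rip_inner (z w : ℂ) : rip z w = inner ℝ z w := by
  rw [rip_comm, rip_eq, Complex.inner]

lemma rip_parts (hu : TF u) (hv : ContDiff ℝ 1 v) (i : Fin d) :
    ∫ x, rip (u x) (pd v i x) = -∫ x, rip (pd u i x) (v x) := by
  simp only [rip_inner]
  have hv' : Continuous (pd v i) := (hv.continuous_fderiv one_ne_zero).clm_apply continuous_const
  refine integral_bilinear_fderiv_right_eq_neg_left_of_integrable (B := innerSL ℝ) ?_ ?_ ?_
    (fun x _ => hu.diff x) (fun x _ => hv.differentiable one_ne_zero x)
  · exact hu.integ (((hu.pd i).cont.inner hv.continuous))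
      (fun x hx => by
        have := pd_zero_off i hx
        simp only [pd] at this
        simp [this])
  · exact hu.integ (hu.cont.inner hv')
      (fun x hx => by simp [zero_off hx])
  · exact hu.integ (hu.cont.inner hv.continuous)
      (fun x hx => by simp [zero_off hx])

lemma kk_sq_lower (z : ℂ) : z.re ^ 2 - ‖z‖ * ‖z‖ ^ 2 ≤ 1 / 4 * kk z ^ 2 := by
  have h1 := Complex.abs_re_le_norm z
  have h2 := (abs_le.1 h1).1
  have h3 : kk z = 2 * z.re + ‖z‖ ^ 2 := by rw [normsq_eq]; rfl
  rw [h3]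
  have := mul_le_mul_of_nonneg_right h2 (sq_nonneg ‖z‖)
  nlinarith [sq_nonneg (‖z‖ ^ 2)]

lemma grad_integrable (hu : TF u) : Integrable fun x => ∑ i, ‖pd u i x‖ ^ 2 :=
  integrable_finsetSum _ fun i _ => by
    simpa using ((hu.pd i).memLp 2).integrable_norm_pow (by norm_num)

lemma kk_integrable (hu : TF u) : Integrable fun x => kk (u x) ^ 2 :=
  hu.integ (hu.cont.kk.pow 2) (fun x hx => by simp [zero_off hx, kk])

lemma EE_split (hu : TF u) :
    EE u = 1 / 2 * ∑ i, n2 (pd u i) ^ 2 + 1 / 4 * ∫ x, kk (u x) ^ 2 := by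
  rw [EE, integral_add ((grad_integrable hu).const_mul _) ((kk_integrable hu).const_mul _),
    integral_const_mul, integral_const_mul, integral_finsetSum]
  · simp only [n2_sq]
  · intro i _
    simpa using ((hu.pd i).memLp 2).integrable_norm_pow (by norm_num)

lemma EE_nonneg (u : Ed d → ℂ) : 0 ≤ EE u := integral_nonneg fun x => by positivity

variable [NeZero d]

lemma slab_abs_le {N : ℕ} {x : Ed d} (h : x ∈ slab d N) : |x 0| ≤ N :=
  abs_le.2 ⟨h.1.le, h.2.le⟩

lemma pd_coord_mul (hu : TF u) (x : Ed d) :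
    pd (fun y => (y 0) • u y) 0 x = u x + (x 0) • pd u 0 x := by
  have h1 : HasFDerivAt (fun y : Ed d => y 0) (EuclideanSpace.proj 0 : Ed d →L[ℝ] ℝ) x :=
    (EuclideanSpace.proj (𝕜 := ℝ) (0 : Fin d)).hasFDerivAt
  have h2 := h1.smul (hu.diff x).hasFDerivAt
  have h3 : fderiv ℝ (fun y : Ed d => (y 0) • u y) x = _ := h2.fderiv
  rw [pd, h3]
  simp [pd, add_comm]

/-- Poincaré inequality on the slab. -/
lemma poincare {N : ℕ} (hu : TF u) (hs : tsupport u ⊆ slab d N) :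
    n2 u ≤ 2 * N * n2 (pd u 0) := by
  have hx : ContDiff ℝ 1 (fun y : Ed d => (y 0) • u y) :=
    (EuclideanSpace.proj (𝕜 := ℝ) (0 : Fin d)).contDiff.smul (hu.smooth.of_le (by simp))
  have h1 := rip_parts hu hx 0
  simp only [pd_coord_mul hu, rip_add_right, rip_smul_right, rip_self] at h1
  have c0 : Continuous fun x : Ed d => x 0 := by fun_prop
  have i1 : Integrable fun x => ‖u x‖ ^ 2 :=
    hu.integ (hu.cont.norm.pow 2) (fun x hx => by simp [zero_off hx])
  have i2 : Integrable fun x => x 0 * rip (u x) (pd u 0 x) :=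
    hu.integ (c0.mul (hu.cont.rip (hu.pd 0).cont))
      (fun x hx => by simp [zero_off hx, rip])
  have i3 : Integrable fun x => 2 * N * (‖u x‖ * ‖pd u 0 x‖) :=
    (integrable_mul_norm (hu.memLp 2) ((hu.pd 0).memLp 2)).const_mul _
  rw [integral_add i1 i2] at h1
  have h2 : ∀ x, rip (pd u 0 x) (u x) = rip (u x) (pd u 0 x) := fun x => rip_comm _ _
  simp only [h2] at h1
  have h3 : ∫ x, ‖u x‖ ^ 2 = ∫ x, -2 * (x 0 * rip (u x) (pd u 0 x)) := by
    rw [integral_const_mul]; linarith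
  have h4 : n2 u ^ 2 ≤ 2 * N * (n2 u * n2 (pd u 0)) := by
    rw [n2_sq, h3]
    refine (integral_mono (i2.const_mul _) i3 fun x => ?_).trans ?_
    · by_cases hx : x ∈ tsupport u
      · have a1 := slab_abs_le (hs hx)
        have a2 := abs_rip_le (u x) (pd u 0 x)
        have a3 := mul_le_mul a1 a2 (abs_nonneg _) (Nat.cast_nonneg N)
        rw [← abs_mul] at a3
        have := neg_abs_le (x 0 * rip (u x) (pd u 0 x))
        show -2 * (x 0 * rip (u x) (pd u 0 x)) ≤ 2 * N * (‖u x‖ * ‖pd u 0 x‖)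
        linarith
      · simp [zero_off hx, rip]
    · rw [integral_const_mul]
      exact mul_le_mul_of_nonneg_left (cauchy_schwarz (hu.memLp 2) ((hu.pd 0).memLp 2))
        (by positivity)
  rcases (n2_nonneg u).eq_or_lt with h | h
  · rw [← h]; exact mul_nonneg (by positivity) (n2_nonneg _)
  · nlinarith

/-- The momentum after integration by parts. -/
lemma MM_eq (hu : TF u) : MM u = -∫ x, (pd u 0 x).im * (u x).re := by
  have dr : ∀ x, HasFDerivAt (fun y => (u y).re) (Complex.reCLM.comp (fderiv ℝ u x)) x := fun x =>
    Complex.reCLM.hasFDerivAt.comp x (hu.diff x).hasFDerivAt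
  have di : ∀ x, HasFDerivAt (fun y => (u y).im) (Complex.imCLM.comp (fderiv ℝ u x)) x := fun x =>
    Complex.imCLM.hasFDerivAt.comp x (hu.diff x).hasFDerivAt
  have er : ∀ x, fderiv ℝ (fun y => (u y).re) x (bv 0) = (pd u 0 x).re := fun x => by
    rw [(dr x).fderiv]; rfl
  have ei : ∀ x, fderiv ℝ (fun y => (u y).im) x (bv 0) = (pd u 0 x).im := fun x => by
    rw [(di x).fderiv]; rfl
  have i1 : Integrable fun x => (pd u 0 x).re * (u x).im :=
    hu.integ ((continuous_re.comp (hu.pd 0).cont).mul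
      (continuous_im.comp hu.cont)) (fun x hx => by simp [zero_off hx])
  have i2 : Integrable fun x => (pd u 0 x).im * (u x).re :=
    hu.integ ((continuous_im.comp (hu.pd 0).cont).mul
      (continuous_re.comp hu.cont)) (fun x hx => by simp [zero_off hx])
  have i3 : Integrable fun x => (u x).re * (u x).im :=
    hu.integ ((continuous_re.comp hu.cont).mul
      (continuous_im.comp hu.cont)) (fun x hx => by simp [zero_off hx])
  have h := integral_mul_fderiv_eq_neg_fderiv_mul_of_integrable (μ := volume) (v := bv 0)
    (f := fun y => (u y).re) (g := fun y => (u y).im) (by simpa only [er] using i1)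
    (by simp only [ei, mul_comm (u _).re]; exact i2)
    i3 (fun x _ => (dr x).differentiableAt) (fun x _ => (di x).differentiableAt)
  simp only [er, ei] at h
  have e1 : ∀ x, 1 / 2 * rip (I * pd u 0 x) (u x) =
      1 / 2 * ((pd u 0 x).re * (u x).im) - 1 / 2 * ((pd u 0 x).im * (u x).re) := fun x => by
    simp [rip]; ring
  simp only [MM, e1]
  rw [integral_sub (i1.const_mul _) (i2.const_mul _), integral_const_mul, integral_const_mul]
  have e2 : ∫ x, (pd u 0 x).im * (u x).re = ∫ x, (u x).re * (pd u 0 x).im := by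
    simp only [mul_comm]
  rw [e2, h]; ring

/-- Subsonic speeds: the Lagrangian controls the Dirichlet energy up to a cubic term. -/
lemma SobC.II_lower (hS : SobC d S) (hu : TF u) (hc : 0 ≤ c) :
    1 / 2 * (1 - c / √2) * ∑ i, n2 (pd u i) ^ 2 - S * pN u ^ 3 ≤ II c u + (c / √2 - 1) *
      ∫ x, (u x).re ^ 2 := by
  have ir : MemLp (fun x => (u x).re) 2 := (hu.memLp 2).re
  have ii : MemLp (fun x => (pd u 0 x).im) 2 := ((hu.pd 0).memLp 2).im
  have i3 := hS.int_three hu hu hu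
  have i4 : Integrable fun x => (u x).re ^ 2 := by simpa using ir.integrable_norm_pow (by norm_num)
  have h1 : |MM u| ≤ n2 (pd u 0) * n2 (fun x => (u x).re) := by
    rw [MM_eq hu, abs_neg]
    refine (abs_integral_le_integral_abs).trans ?_
    simp only [abs_mul]
    refine (cauchy_schwarz ii ir).trans (mul_le_mul_of_nonneg_right ?_ (n2_nonneg _))
    exact n2_mono ((hu.pd 0).memLp 2) fun x => abs_im_le_norm _
  have h2 : n2 (fun x => (u x).re) ^ 2 = ∫ x, (u x).re ^ 2 := by
    rw [n2_sq]; simp only [Real.norm_eq_abs, sq_abs]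
  have h3 : (∫ x, (u x).re ^ 2) - ∫ x, ‖u x‖ * (‖u x‖ * ‖u x‖) ≤ 1 / 4 * ∫ x, kk (u x) ^ 2 := by
    rw [← integral_sub i4 i3.1, ← integral_const_mul]
    exact integral_mono (i4.sub i3.1) ((kk_integrable hu).const_mul _) fun x => by
      have := kk_sq_lower (u x); rwa [sq ‖u x‖] at this
  have h4 : n2 (pd u 0) ^ 2 ≤ ∑ i, n2 (pd u i) ^ 2 :=
    Finset.single_le_sum (f := fun i => n2 (pd u i) ^ 2) (fun i _ => sq_nonneg _) (Finset.mem_univ 0)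
  rw [← h2] at h3 ⊢
  have h5 := i3.2
  set y := n2 (pd u 0)
  set a := n2 (fun x => (u x).re)
  set X := ∑ i, n2 (pd u i) ^ 2
  have hq : (0:ℝ) < √2 := by positivity
  have hq2 : √2 * √2 = 2 := Real.mul_self_sqrt (by norm_num)
  have h6 : √2 * (y * a) ≤ 1 / 2 * y ^ 2 + a ^ 2 := by nlinarith [sq_nonneg (y - √2 * a)]
  have h7 : c * MM u ≤ c / √2 * (1 / 2 * X + a ^ 2) := by
    have e1 : c * MM u ≤ c * (y * a) :=
      mul_le_mul_of_nonneg_left ((le_abs_self _).trans h1) hc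
    have e2 : c / √2 * (√2 * (y * a)) ≤ c / √2 * (1 / 2 * X + a ^ 2) :=
      mul_le_mul_of_nonneg_left (by linarith) (by positivity)
    have e3 : c / √2 * (√2 * (y * a)) = c * (y * a) := by field_simp
    linarith
  rw [II, EE_split hu]
  linarith [h3, h5, h7]

lemma pN_sq_le {N : ℕ} (hu : TF u) (hs : tsupport u ⊆ slab d N) :
    pN u ^ 2 ≤ (2 * N + 1) ^ 2 * d * ∑ i, n2 (pd u i) ^ 2 := by
  have h1 := poincare hu hs
  have h2 : n2 (pd u 0) ≤ ∑ i, n2 (pd u i) :=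
    Finset.single_le_sum (f := fun i => n2 (pd u i)) (fun i _ => n2_nonneg _) (Finset.mem_univ 0)
  have h3 : pN u ≤ (2 * N + 1) * ∑ i, n2 (pd u i) := by
    have := mul_le_mul_of_nonneg_left h2 (by positivity : (0:ℝ) ≤ 2 * N)
    simp only [pN]; linarith
  have h4 : (∑ i, n2 (pd u i)) ^ 2 ≤ d * ∑ i, n2 (pd u i) ^ 2 := by
    have := sq_sum_le_card_mul_sum_sq (s := Finset.univ) (f := fun i => n2 (pd u i))
    simpa using this
  calc pN u ^ 2 ≤ ((2 * N + 1) * ∑ i, n2 (pd u i)) ^ 2 := pow_le_pow_left₀ (pN_nonneg _) h3 2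
    _ = (2 * N + 1) ^ 2 * (∑ i, n2 (pd u i)) ^ 2 := by ring
    _ ≤ (2 * N + 1) ^ 2 * (d * ∑ i, n2 (pd u i) ^ 2) := mul_le_mul_of_nonneg_left h4 (sq_nonneg _)
    _ = _ := by ring

/-- Bounded energy implies bounded norm on a fixed slab. -/
lemma pN_bdd (d N : ℕ) [NeZero d] (M : ℝ) : ∃ B, 0 ≤ B ∧ ∀ u : Ed d → ℂ, TF u →
    tsupport u ⊆ slab d N → EE u ≤ M → pN u ≤ B := by
  refine ⟨√((2 * N + 1) ^ 2 * d * (2 * M)), Real.sqrt_nonneg _, fun u hu hs hE => ?_⟩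
  apply Real.le_sqrt_of_sq_le
  refine (pN_sq_le hu hs).trans (mul_le_mul_of_nonneg_left ?_ (by positivity))
  rw [EE_split hu] at hE
  have : 0 ≤ ∫ x, kk (u x) ^ 2 := integral_nonneg fun x => sq_nonneg _
  linarith

/-- At subsonic speed the constant state is a strict local minimum in each slab. -/
lemma SobC.II_pos (hS : SobC d S) (hc : 0 ≤ c) (hc2 : c < √2) (N : ℕ) :
    ∃ r > 0, ∃ κ > 0, ∀ u : Ed d → ℂ, TF u → tsupport u ⊆ slab d N → pN u ≤ r →
      κ * pN u ^ 2 ≤ II c u := by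
  have hd0 : (0:ℝ) < d := Nat.cast_pos.2 (NeZero.pos d)
  have hS1 := hS.1
  have hq : (0:ℝ) < √2 := by positivity
  have hc3 : c / √2 < 1 := by rwa [div_lt_one hq]
  set δ := 1 / 2 * (1 - c / √2)
  have hδ : 0 < δ := by simp only [δ]; linarith
  set A : ℝ := (2 * N + 1) ^ 2 * d
  have hA : 0 < A := by positivity
  refine ⟨δ / A / (2 * S), by positivity, δ / A / 2, by positivity, fun u hu hs hr => ?_⟩
  have h1 : δ * ∑ i, n2 (pd u i) ^ 2 - S * pN u ^ 3 ≤ _ := hS.II_lower hu hc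
  have h2 := pN_sq_le hu hs
  have h3 : 0 ≤ ∫ x, (u x).re ^ 2 := integral_nonneg fun x => sq_nonneg _
  have h4 : (c / √2 - 1) * ∫ x, (u x).re ^ 2 ≤ 0 := mul_nonpos_of_nonpos_of_nonneg (by linarith) h3
  have h5 : δ / A * pN u ^ 2 ≤ δ * ∑ i, n2 (pd u i) ^ 2 := by
    have := mul_le_mul_of_nonneg_left h2 (by positivity : 0 ≤ δ / A)
    calc _ ≤ _ := this
      _ = _ := by simp only [A]; field_simp
  have h6 : S * pN u ^ 3 ≤ δ / A / 2 * pN u ^ 2 := by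
    have : S * pN u ≤ δ / A / 2 := by
      rw [le_div_iff₀ (by positivity)] at hr
      linarith
    nlinarith [mul_le_mul_of_nonneg_right this (sq_nonneg (pN u))]
  linarith

end Geometry

/-! ### Tensor products -/

section Products
variable {d : ℕ}

/-- Tensor product of functions of one variable. -/
def PP (g : Fin d → ℝ → ℂ) (x : Ed d) : ℂ := ∏ j, g j (x j)

lemma int_prod (g : Fin d → ℝ → ℝ) : ∫ x : Ed d, ∏ j, g j (x j) = ∏ j, ∫ t, g j t := by
  rw [← (PiLp.volume_preserving_toLp (Fin d)).integral_comp
    (MeasurableEquiv.toLp 2 _).measurableEmbedding]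
  exact integral_fintype_prod_volume_eq_prod g

lemma PP_TF {g : Fin d → ℝ → ℂ} (hg : ∀ j, ContDiff ℝ (⊤ : ℕ∞) (g j))
    (hs : ∀ j, HasCompactSupport (g j)) : TF (PP g) := by
  refine ⟨?_, ?_⟩
  · exact contDiff_prod fun j _ => (hg j).comp (EuclideanSpace.proj (𝕜 := ℝ) j).contDiff
  · refine HasCompactSupport.intro (K := (WithLp.toLp 2) '' (Set.univ.pi fun j => tsupport (g j)))
      ((isCompact_univ_pi fun j => (hs j).isCompact).image (PiLp.continuous_toLp 2 _)) fun x hx => ?_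
    by_contra h
    refine hx ⟨WithLp.ofLp x, fun j _ => ?_, rfl⟩
    by_contra h2
    exact h (Finset.prod_eq_zero (Finset.mem_univ j) (image_eq_zero_of_notMem_tsupport h2))

lemma PP_tsupport {g : Fin d → ℝ → ℂ} (i : Fin d) :
    tsupport (PP g) ⊆ {x | x i ∈ tsupport (g i)} := by
  refine closure_minimal (fun x hx => ?_)
    ((isClosed_tsupport (g i)).preimage (EuclideanSpace.proj (𝕜 := ℝ) i).continuous)
  refine subset_tsupport _ fun h => hx ?_
  exact Finset.prod_eq_zero (Finset.mem_univ i) h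

lemma pd_PP {g : Fin d → ℝ → ℂ} (hg : ∀ j, ContDiff ℝ (⊤ : ℕ∞) (g j))
    (hs : ∀ j, HasCompactSupport (g j)) (i : Fin d) :
    pd (PP g) i = PP (Function.update g i (deriv (g i))) := by
  funext x
  rw [pd, ← ((PP_TF hg hs).diff x).lineDeriv_eq_fderiv]
  apply HasLineDerivAt.lineDeriv
  have h1 : ∀ t : ℝ, PP g (x + t • bv i) = g i (x i + t) * ∏ j ∈ Finset.univ.erase i, g j (x j) := by
    intro t
    rw [PP, ← Finset.mul_prod_erase _ _ (Finset.mem_univ i)]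
    congr 1
    · simp
    · refine Finset.prod_congr rfl fun j hj => ?_
      simp [Finset.ne_of_mem_erase hj]
  have h2 : PP (Function.update g i (deriv (g i))) x =
      deriv (g i) (x i + 0) * ∏ j ∈ Finset.univ.erase i, g j (x j) := by
    rw [PP, ← Finset.mul_prod_erase _ _ (Finset.mem_univ i)]
    congr 1
    · simp
    · refine Finset.prod_congr rfl fun j hj => ?_
      simp [Finset.ne_of_mem_erase hj]
  have h3 : HasDerivAt (fun t : ℝ => g i (x i + t)) (deriv (g i) (x i + 0)) 0 :=
    HasDerivAt.comp_const_add (x i) 0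
      (((hg i).differentiable (by simp)) (x i + 0)).hasDerivAt
  rw [HasLineDerivAt, h2]
  simp only [h1]
  exact h3.mul_const _

lemma n2_PP_sq (g : Fin d → ℝ → ℂ) : n2 (PP g) ^ 2 = ∏ j, ∫ t, ‖g j t‖ ^ 2 := by
  rw [n2_sq, ← int_prod]
  simp only [PP, norm_prod, Finset.prod_pow]

variable [NeZero d]

/-- The tensor product of `f` in the first variable and `η` in all the others. -/
def fe (d : ℕ) [NeZero d] (f η : ℝ → ℂ) : Fin d → ℝ → ℂ := fun j => if j = 0 then f else η

lemma int_first (A η : ℝ → ℝ) (k : ℕ) :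
    ∫ x : Ed d, A (x 0) * (∏ j ∈ Finset.univ.erase 0, η (x j)) ^ k =
      (∫ t, A t) * (∫ t, η t ^ k) ^ (d - 1) := by
  have h := int_prod (d := d) (fun j => if j = 0 then A else fun t => η t ^ k)
  rw [← Finset.mul_prod_erase _ _ (Finset.mem_univ 0)] at h
  have h2 : ∏ j ∈ Finset.univ.erase (0 : Fin d), (∫ t, (if j = 0 then A else fun t => η t ^ k) t)
      = (∫ t, η t ^ k) ^ (d - 1) := by
    rw [Finset.prod_congr rfl (g := fun _ => ∫ t, η t ^ k)
      (fun j hj => by simp [Finset.ne_of_mem_erase hj])]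
    simp
  rw [h2] at h
  simp only [if_true] at h
  rw [← h]
  congr 1
  funext x
  rw [← Finset.mul_prod_erase _ _ (Finset.mem_univ 0)]
  simp only [if_true]
  rw [← Finset.prod_pow]
  congr 1
  exact Finset.prod_congr rfl (fun j hj => by simp [Finset.ne_of_mem_erase hj])

lemma PP_fe (f : ℝ → ℂ) (η : ℝ → ℝ) (x : Ed d) :
    PP (fe d f fun t => (η t : ℂ)) x =
      f (x 0) * ((∏ j ∈ Finset.univ.erase (0 : Fin d), η (x j) : ℝ) : ℂ) := by
  rw [PP, ← Finset.mul_prod_erase _ _ (Finset.mem_univ 0)]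
  congr 1
  push_cast
  exact Finset.prod_congr rfl (fun j hj => by simp [fe, Finset.ne_of_mem_erase hj])

end Products

/-! ### Energy and momentum of product profiles -/

section TestFn
variable {d : ℕ} [NeZero d] {f : ℝ → ℂ} {η : ℝ → ℝ}

/-- The trial perturbation `f(x₁) η(x₂) ⋯ η(x_d)`. -/
def trial (d : ℕ) [NeZero d] (f : ℝ → ℂ) (η : ℝ → ℝ) : Ed d → ℂ := PP (fe d f fun t => (η t : ℂ))

/-- Smooth compactly supported profiles of one variable. -/
structure Prof (f : ℝ → ℂ) (η : ℝ → ℝ) : Prop where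
  fs : ContDiff ℝ (⊤ : ℕ∞) f
  fc : HasCompactSupport f
  es : ContDiff ℝ (⊤ : ℕ∞) η
  ec : HasCompactSupport η

lemma Prof.fe_smooth (H : Prof f η) (j : Fin d) :
    ContDiff ℝ (⊤ : ℕ∞) (fe d f (fun t => (η t : ℂ)) j) := by
  unfold fe; split_ifs
  · exact H.fs
  · exact Complex.ofRealCLM.contDiff.comp H.es

lemma Prof.fe_supp (H : Prof f η) (j : Fin d) :
    HasCompactSupport (fe d f (fun t => (η t : ℂ)) j) := by
  unfold fe; split_ifs
  · exact H.fc
  · exact H.ec.comp_left (g := fun t : ℝ => (t : ℂ)) (by simp)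

lemma Prof.TF (H : Prof f η) : TF (trial d f η) := PP_TF H.fe_smooth H.fe_supp

lemma Prof.grad (H : Prof f η) : ∑ i, n2 (pd (trial d f η) i) ^ 2 =
    (∫ t, ‖deriv f t‖ ^ 2) * (∫ t, η t ^ 2) ^ (d - 1) +
    (d - 1 : ℕ) * ((∫ t, ‖f t‖ ^ 2) * (∫ t, deriv η t ^ 2) * (∫ t, η t ^ 2) ^ (d - 2)) := by
  have hη : ∀ t, deriv (fun t => (η t : ℂ)) t = (deriv η t : ℝ) := fun t =>
    (((H.es.differentiable (by simp)) t).hasDerivAt.ofReal_comp).deriv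
  have e1 : ∀ i, n2 (pd (trial d f η) i) ^ 2 = _ := fun i => by
    rw [trial, pd_PP H.fe_smooth H.fe_supp, n2_PP_sq]
  rw [Finset.sum_congr rfl fun i _ => e1 i, ← Finset.add_sum_erase _ _ (Finset.mem_univ 0)]
  congr 1
  · rw [← Finset.mul_prod_erase _ _ (Finset.mem_univ 0)]
    refine congrArg₂ (· * ·) (by simp [fe]) ?_
    rw [Finset.prod_congr rfl (g := fun _ => ∫ t, η t ^ 2)
      (fun j hj => by simp [fe, Finset.ne_of_mem_erase hj])]
    simp
  · rw [Finset.sum_congr rfl (g := fun _ => (∫ t, ‖f t‖ ^ 2) * (∫ t, deriv η t ^ 2) *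
      (∫ t, η t ^ 2) ^ (d - 2)) ?_]
    · simp
    intro i hi
    have hi0 := Finset.ne_of_mem_erase hi
    have h0i : (0 : Fin d) ∈ Finset.univ.erase i := Finset.mem_erase.2 ⟨hi0.symm, Finset.mem_univ _⟩
    rw [← Finset.mul_prod_erase _ _ (Finset.mem_univ i), ← Finset.mul_prod_erase _ _ h0i,
      Finset.prod_congr rfl (g := fun _ => ∫ t, η t ^ 2) ?_]
    · have hcard : ((Finset.univ.erase i).erase 0).card = d - 2 := by
        rw [Finset.card_erase_of_mem h0i, Finset.card_erase_of_mem (Finset.mem_univ _)]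
        simp; omega
      rw [Finset.prod_const, hcard]
      simp [fe, hi0, hi0.symm, hη]
      ring
    · intro j hj
      have hj0 := Finset.ne_of_mem_erase hj
      have hji := Finset.ne_of_mem_erase (Finset.mem_of_mem_erase hj)
      simp [fe, hj0, hji]

/-- The momentum of a product profile reduces to that of its first factor. -/
lemma Prof.MM (H : Prof f η) :
    MM (trial d f η) = 1 / 2 * (∫ t, rip (I * deriv f t) (f t)) * (∫ t, η t ^ 2) ^ (d - 1) := by
  have h := int_first (d := d) (fun t => rip (I * deriv f t) (f t)) η 2
  rw [mul_assoc, ← h, ← integral_const_mul, _root_.MM]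
  congr 1
  funext x
  congr 1
  have e1 : Function.update (fe d f fun t => (η t : ℂ)) 0
      (deriv (fe d f (fun t => (η t : ℂ)) 0)) = fe d (deriv f) fun t => (η t : ℂ) := by
    funext j
    by_cases hj : j = 0
    · subst hj; simp [fe]
    · simp [fe, hj]
  rw [trial, pd_PP H.fe_smooth H.fe_supp, e1, PP_fe, PP_fe]
  simp only [rip, mul_re, mul_im, I_re, I_im, ofReal_re, ofReal_im]
  ring

/-- The potential energy of a product profile whose first factor runs on the unit circle: it
vanishes where the product of the other factors is `0` or `1`. -/
lemma Prof.kk (H : Prof f η) (hf : ∀ t, 2 * (f t).re = -‖f t‖ ^ 2) :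
    ∫ x, kk (trial d f η x) ^ 2 = (∫ t, (‖f t‖ ^ 2) ^ 2) * ((∫ t, η t ^ 4) ^ (d - 1) -
      2 * (∫ t, η t ^ 3) ^ (d - 1) + (∫ t, η t ^ 2) ^ (d - 1)) := by
  have h := fun k => int_first (d := d) (fun t => (‖f t‖ ^ 2) ^ 2) η k
  have i : ∀ k, k ≠ 0 → Integrable fun x : Ed d =>
      (‖f (x 0)‖ ^ 2) ^ 2 * (∏ j ∈ Finset.univ.erase 0, η (x j)) ^ k := fun k hk => by
    refine (H.TF (d := d)).integ ?_ fun x hx => ?_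
    · have := H.fs.continuous
      have := H.es.continuous
      fun_prop
    · have := zero_off hx
      rw [trial, PP_fe] at this
      rcases mul_eq_zero.1 this with h | h
      · simp [h]
      · rw [ofReal_eq_zero.1 h]; simp [hk]
  have e : ∀ x, _root_.kk (trial d f η x) ^ 2 =
      (‖f (x 0)‖ ^ 2) ^ 2 * (∏ j ∈ Finset.univ.erase 0, η (x j)) ^ 4 -
      2 * ((‖f (x 0)‖ ^ 2) ^ 2 * (∏ j ∈ Finset.univ.erase 0, η (x j)) ^ 3) +
      (‖f (x 0)‖ ^ 2) ^ 2 * (∏ j ∈ Finset.univ.erase 0, η (x j)) ^ 2 := fun x => by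
    rw [trial, PP_fe]
    set χ := ∏ j ∈ Finset.univ.erase 0, η (x j)
    have h1 : _root_.kk (f (x 0) * (χ : ℂ)) = ‖f (x 0)‖ ^ 2 * (χ ^ 2 - χ) := by
      have : _root_.kk (f (x 0) * (χ : ℂ)) = χ * (2 * (f (x 0)).re) + χ ^ 2 * ‖f (x 0)‖ ^ 2 := by
        rw [normsq_eq]
        simp only [_root_.kk, mul_re, mul_im, ofReal_re, ofReal_im]; ring
      rw [this, hf]; ring
    rw [h1]; ring
  simp only [e]
  have i43 : Integrable fun x : Ed d =>
      (‖f (x 0)‖ ^ 2) ^ 2 * (∏ j ∈ Finset.univ.erase 0, η (x j)) ^ 4 -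
      2 * ((‖f (x 0)‖ ^ 2) ^ 2 * (∏ j ∈ Finset.univ.erase 0, η (x j)) ^ 3) :=
    (i 4 (by norm_num)).sub ((i 3 (by norm_num)).const_mul 2)
  rw [integral_add i43 (i 2 (by norm_num)),
    integral_sub (i 4 (by norm_num)) ((i 3 (by norm_num)).const_mul 2), integral_const_mul,
    h, h, h]
  ring

end TestFn

/-! ### A profile with negative Lagrangian -/

section Trial
local notation "sT" => Real.smoothTransition
local notation "π" => Real.pi

lemma sT_smooth : ContDiff ℝ (⊤ : ℕ∞) sT := Real.smoothTransition.contDiff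

lemma sT_hasDeriv (t : ℝ) : HasDerivAt sT (deriv sT t) t :=
  ((sT_smooth.differentiable (by simp)) t).hasDerivAt

lemma sT_deriv_zero {t : ℝ} (ht : t ∉ Set.Icc (0 : ℝ) 1) : deriv sT t = 0 := by
  rcases lt_or_ge t 0 with h | h
  · have : sT =ᶠ[𝓝 t] fun _ => (0 : ℝ) := by
      filter_upwards [eventually_lt_nhds h] with y hy
      exact Real.smoothTransition.zero_of_nonpos hy.le
    rw [this.deriv_eq]; simp
  · have h1 : 1 < t := by by_contra h2; exact ht ⟨h, not_lt.1 h2⟩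
    have : sT =ᶠ[𝓝 t] fun _ => (1 : ℝ) := by
      filter_upwards [eventually_gt_nhds h1] with y hy
      exact Real.smoothTransition.one_of_one_le hy.le
    rw [this.deriv_eq]; simp

lemma sT_deriv_cont : Continuous (deriv sT) := sT_smooth.continuous_deriv (by simp)

lemma sT_deriv_supp : HasCompactSupport (deriv sT) :=
  HasCompactSupport.intro isCompact_Icc fun _ h => sT_deriv_zero h

/-- A loop around the unit circle, based at `1` and recentred at the origin. -/
def loop (t : ℝ) : ℂ := Complex.exp (-(2 * π * sT t : ℝ) * I) - 1

lemma loop_smooth : ContDiff ℝ (⊤ : ℕ∞) loop := by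
  unfold loop
  have h : ContDiff ℝ (⊤ : ℕ∞) fun t : ℝ => ((2 * π * sT t : ℝ) : ℂ) :=
    Complex.ofRealCLM.contDiff.comp (contDiff_const.mul sT_smooth)
  exact ((h.neg.mul contDiff_const).cexp).sub contDiff_const

lemma loop_zero {t : ℝ} (ht : t ∉ Set.Icc (0 : ℝ) 1) : loop t = 0 := by
  rcases lt_or_ge t 0 with h | h
  · simp [loop, Real.smoothTransition.zero_of_nonpos h.le]
  · have h1 : 1 ≤ t := by by_contra h2; exact ht ⟨h, (not_le.1 h2).le⟩
    have : (-((2 * π : ℝ) : ℂ) * I) = -(2 * π * I) := by push_cast; ring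
    simp only [loop, Real.smoothTransition.one_of_one_le h1, mul_one]
    rw [this, Complex.exp_neg, Complex.exp_two_pi_mul_I]; simp

lemma loop_supp : HasCompactSupport loop :=
  HasCompactSupport.intro isCompact_Icc fun _ h => loop_zero h

lemma loop_eq (t : ℝ) : loop t = ((Real.cos (2 * π * sT t) - 1 : ℝ) : ℂ) -
    (Real.sin (2 * π * sT t) : ℝ) * I := by
  have : (-((2 * π * sT t : ℝ) : ℂ)) = ((-(2 * π * sT t) : ℝ) : ℂ) := by push_cast; ring
  rw [loop, this, Complex.exp_mul_I, ← Complex.ofReal_cos, ← Complex.ofReal_sin,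
    Real.cos_neg, Real.sin_neg]
  push_cast; ring

lemma loop_re (t : ℝ) : (loop t).re = Real.cos (2 * π * sT t) - 1 := by rw [loop_eq]; simp [-ofReal_sub, -ofReal_cos, -ofReal_sin]
lemma loop_im (t : ℝ) : (loop t).im = -Real.sin (2 * π * sT t) := by rw [loop_eq]; simp [-ofReal_sub, -ofReal_cos, -ofReal_sin]

lemma loop_circle (t : ℝ) : 2 * (loop t).re = -‖loop t‖ ^ 2 := by
  rw [normsq_eq, loop_re, loop_im]
  nlinarith [Real.sin_sq_add_cos_sq (2 * π * sT t)]

lemma loop_deriv (t : ℝ) : deriv loop t = -((2 * π * deriv sT t : ℝ) : ℂ) * I * (loop t + 1) := by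
  have h : HasDerivAt (fun t : ℝ => -((2 * π * sT t : ℝ) : ℂ) * I)
      (-((2 * π * deriv sT t : ℝ) : ℂ) * I) t :=
    (((sT_hasDeriv t).const_mul (2 * π)).ofReal_comp.neg).mul_const I
  have := (h.cexp.sub_const 1).deriv
  rw [show loop = fun t => Complex.exp (-(2 * π * sT t : ℝ) * I) - 1 from rfl, this]
  simp only [sub_add_cancel]; ring

/-- Twice the area enclosed by the loop. -/
lemma loop_momentum : ∫ t, rip (I * deriv loop t) (loop t) = 2 * π := by
  have e : ∀ t, rip (I * deriv loop t) (loop t) =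
      2 * π * deriv sT t - Real.cos (2 * π * sT t) * (2 * π * deriv sT t) := fun t => by
    have e2 : I * deriv loop t = ((2 * π * deriv sT t : ℝ) : ℂ) * (loop t + 1) := by
      rw [loop_deriv]; linear_combination (-((2 * π * deriv sT t : ℝ) : ℂ) * (loop t + 1)) * I_sq
    rw [e2]
    simp only [rip, mul_re, mul_im, add_re, add_im, ofReal_re, ofReal_im, one_re, one_im,
      loop_re, loop_im]
    linear_combination 2 * π * deriv sT t * Real.sin_sq_add_cos_sq (2 * π * sT t)
  simp only [e]
  have hc : Continuous fun t => 2 * π * deriv sT t - Real.cos (2 * π * sT t) *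
      (2 * π * deriv sT t) := by
    have := sT_deriv_cont
    have := sT_smooth.continuous
    fun_prop
  rw [integral_of_hasDerivAt_of_tendsto (f := fun t => 2 * π * sT t - Real.sin (2 * π * sT t))
    (m := 0) (n := 2 * π) ?_ ?_ ?_ ?_]
  · simp
  · exact fun t => ((sT_hasDeriv t).const_mul (2 * π)).sub (((sT_hasDeriv t).const_mul (2 * π)).sin)
  · refine hc.integrable_of_hasCompactSupport
      (HasCompactSupport.intro (isCompact_Icc (a := (0 : ℝ)) (b := 1)) fun t ht => ?_)
    simp [sT_deriv_zero ht]
  · refine tendsto_const_nhds.congr' ?_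
    filter_upwards [eventually_le_atBot 0] with t ht
    simp [Real.smoothTransition.zero_of_nonpos ht]
  · refine tendsto_const_nhds.congr' ?_
    filter_upwards [eventually_ge_atTop 1] with t ht
    simp [Real.smoothTransition.one_of_one_le ht]

/-- A plateau function equal to `1` on `[-R, R]` and vanishing outside `[-R-1, R+1]`. -/
def plateau (R t : ℝ) : ℝ := sT (t + (R + 1)) * sT (R + 1 - t)

lemma plateau_smooth (R : ℝ) : ContDiff ℝ (⊤ : ℕ∞) (plateau R) :=
  (sT_smooth.comp (contDiff_id.add contDiff_const)).mul
    (sT_smooth.comp (contDiff_const.sub contDiff_id))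

lemma plateau_nonneg (R t : ℝ) : 0 ≤ plateau R t :=
  mul_nonneg (Real.smoothTransition.nonneg _) (Real.smoothTransition.nonneg _)

lemma plateau_le_one (R t : ℝ) : plateau R t ≤ 1 :=
  mul_le_one₀ (Real.smoothTransition.le_one _) (Real.smoothTransition.nonneg _)
    (Real.smoothTransition.le_one _)

lemma plateau_one {R t : ℝ} (ht : t ∈ Set.Icc (-R) R) : plateau R t = 1 := by
  rw [plateau, Real.smoothTransition.one_of_one_le (by linarith [ht.1]),
    Real.smoothTransition.one_of_one_le (by linarith [ht.2]), one_mul]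

lemma plateau_zero {R t : ℝ} (ht : t ∉ Set.Icc (-(R + 1)) (R + 1)) : plateau R t = 0 := by
  rcases lt_or_ge t (-(R + 1)) with h | h
  · rw [plateau, Real.smoothTransition.zero_of_nonpos (by linarith), zero_mul]
  · have h1 : R + 1 < t := by by_contra h2; exact ht ⟨h, not_lt.1 h2⟩
    rw [plateau, Real.smoothTransition.zero_of_nonpos (x := R + 1 - t) (by linarith), mul_zero]

lemma plateau_supp (R : ℝ) : HasCompactSupport (plateau R) :=
  HasCompactSupport.intro isCompact_Icc fun _ h => plateau_zero h

lemma plateau_integrable (R : ℝ) {k : ℕ} (hk : k ≠ 0) : Integrable fun t => plateau R t ^ k :=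
  ((plateau_smooth R).continuous.pow k).integrable_of_hasCompactSupport
    (HasCompactSupport.intro (isCompact_Icc (a := -(R + 1)) (b := R + 1))
      fun t ht => by simp [plateau_zero ht, hk])

lemma plateau_int {R : ℝ} (hR : 0 ≤ R) {k : ℕ} (hk : k ≠ 0) :
    2 * R ≤ ∫ t, plateau R t ^ k ∧ ∫ t, plateau R t ^ k ≤ 2 * R + 2 := by
  constructor
  · have h : ∫ t, (Set.Icc (-R) R).indicator (fun _ => (1 : ℝ)) t = 2 * R := by
      rw [integral_indicator measurableSet_Icc]
      simp; rw [max_eq_left (by linarith)]; ring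
    rw [← h]
    refine integral_mono ((integrable_indicator_iff measurableSet_Icc).2 (by simp))
      (plateau_integrable R hk) fun t => ?_
    · by_cases ht : t ∈ Set.Icc (-R) R
      · simp [ht, plateau_one ht]
      · simp only [ht, not_false_eq_true, Set.indicator_of_notMem]
        exact pow_nonneg (plateau_nonneg _ _) _
  · have h : ∫ t, (Set.Icc (-(R + 1)) (R + 1)).indicator (fun _ => (1 : ℝ)) t = 2 * R + 2 := by
      rw [integral_indicator measurableSet_Icc]
      simp; rw [max_eq_left (by linarith)]; ring
    rw [← h]
    refine integral_mono (plateau_integrable R hk)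
      ((integrable_indicator_iff measurableSet_Icc).2 (by simp)) fun t => ?_
    by_cases ht : t ∈ Set.Icc (-(R + 1)) (R + 1)
    · simp only [ht, Set.indicator_of_mem]
      exact pow_le_one₀ (plateau_nonneg _ _) (plateau_le_one _ _)
    · simp only [ht, not_false_eq_true, Set.indicator_of_notMem]
      simp [plateau_zero ht, hk]

lemma plateau_deriv (R : ℝ) : ∫ t, deriv (plateau R) t ^ 2 ≤ 4 * ∫ t, deriv sT t ^ 2 := by
  have hd : ∀ t, deriv (plateau R) t = deriv sT (t + (R + 1)) * sT (R + 1 - t) -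
      sT (t + (R + 1)) * deriv sT (R + 1 - t) := fun t => by
    have h1 : HasDerivAt (fun t => sT (t + (R + 1))) (deriv sT (t + (R + 1))) t := by
      simpa using (sT_hasDeriv (t + (R + 1))).comp_add_const t (R + 1)
    have h2 : HasDerivAt (fun t => sT (R + 1 - t)) (-deriv sT (R + 1 - t)) t :=
      (sT_hasDeriv (R + 1 - t)).comp_const_sub (R + 1) t
    have := (h1.mul h2).deriv
    rw [show plateau R = (fun t => sT (t + (R + 1))) * fun t => sT (R + 1 - t) from rfl, this]
    ring
  have hi : Integrable fun t => deriv sT t ^ 2 :=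
    (sT_deriv_cont.pow 2).integrable_of_hasCompactSupport
      (HasCompactSupport.intro (isCompact_Icc (a := (0 : ℝ)) (b := 1))
        fun t ht => by simp [sT_deriv_zero ht])
  have h1 : Integrable fun t => deriv sT (t + (R + 1)) ^ 2 := hi.comp_add_right (R + 1)
  have h2 : Integrable fun t => deriv sT (R + 1 - t) ^ 2 := hi.comp_sub_left (R + 1)
  calc ∫ t, deriv (plateau R) t ^ 2
      ≤ ∫ t, (2 * deriv sT (t + (R + 1)) ^ 2 + 2 * deriv sT (R + 1 - t) ^ 2) := by
        refine integral_mono_of_nonneg (.of_forall fun t => sq_nonneg _)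
          ((h1.const_mul 2).add (h2.const_mul 2)) (.of_forall fun t => ?_)
        simp only [hd]
        set p := deriv sT (t + (R + 1))
        set q := deriv sT (R + 1 - t)
        have a1 := Real.smoothTransition.nonneg (R + 1 - t)
        have a2 := Real.smoothTransition.le_one (R + 1 - t)
        have b1 := Real.smoothTransition.nonneg (t + (R + 1))
        have b2 := Real.smoothTransition.le_one (t + (R + 1))
        set a := sT (R + 1 - t)
        set b := sT (t + (R + 1))
        have ha : a ^ 2 ≤ 1 := pow_le_one₀ a1 a2
        have hb : b ^ 2 ≤ 1 := pow_le_one₀ b1 b2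
        nlinarith [sq_nonneg (p * a + b * q), mul_le_mul_of_nonneg_left ha (sq_nonneg p),
          mul_le_mul_of_nonneg_left hb (sq_nonneg q)]
    _ = 4 * ∫ t, deriv sT t ^ 2 := by
        rw [integral_add (h1.const_mul 2) (h2.const_mul 2), integral_const_mul,
          integral_const_mul, integral_add_right_eq_self (fun t => deriv sT t ^ 2) (R + 1),
          integral_sub_left_eq_self (fun t => deriv sT t ^ 2) volume (R + 1)]
        ring

/-- For every positive speed, a wide slowly rotating profile has negative Lagrangian. -/
lemma exists_trial {d : ℕ} [NeZero d] (hd : d = 2 ∨ d = 3) {c : ℝ} (hc : 0 < c) :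
    ∃ e : Ed d → ℂ, ∃ N₀ : ℕ, TF e ∧ tsupport e ⊆ slab d N₀ ∧ II c e < 0 := by
  set A := ∫ t, ‖deriv loop t‖ ^ 2 with hA
  have hA0 : 0 ≤ A := integral_nonneg fun t => by positivity
  obtain ⟨L, hL⟩ := exists_nat_gt (A / (2 * c * π) + 1)
  have hcpi : 0 < 2 * c * π := by positivity
  have hL1 : (1 : ℝ) < L := by linarith [div_nonneg hA0 hcpi.le]
  have hL0 : (0 : ℝ) < L := by linarith
  have hAL : A / L < 2 * c * π := by
    rw [div_lt_iff₀ hL0]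
    have : A / (2 * c * π) < L := by linarith
    rw [div_lt_iff₀ hcpi] at this; linarith
  let f : ℝ → ℂ := fun t => loop (t / L)
  have hfs : ContDiff ℝ (⊤ : ℕ∞) f := loop_smooth.comp (contDiff_id.div_const _)
  have hfz : ∀ t, t ∉ Set.Icc (0 : ℝ) L → f t = 0 := fun t ht => by
    refine loop_zero fun h => ht ⟨?_, ?_⟩
    · have := h.1; rwa [le_div_iff₀ hL0, zero_mul] at this
    · have := h.2; rwa [div_le_iff₀ hL0, one_mul] at this
  have hfts : tsupport f ⊆ Set.Icc (0 : ℝ) L :=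
    closure_minimal (fun t ht => by by_contra h; exact ht (hfz t h)) isClosed_Icc
  have hfd : ∀ t, deriv f t = ((1 / L : ℝ) : ℂ) * deriv loop (t / L) := fun t => by
    have h1 : HasDerivAt loop (deriv loop (t / L)) (t / L) :=
      ((loop_smooth.differentiable (by simp)) _).hasDerivAt
    have := (h1.scomp t ((hasDerivAt_id t).div_const (L : ℝ))).deriv
    rw [show f = loop ∘ fun t => id t / (L : ℝ) from rfl, this]
    simp
  have P : ∀ R, Prof f (plateau R) := fun R =>
    ⟨hfs, HasCompactSupport.intro isCompact_Icc fun t => hfz t, plateau_smooth R, plateau_supp R⟩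
  have hmom : ∫ t, rip (I * deriv f t) (f t) = 2 * π := by
    rw [← loop_momentum]
    have : ∀ t, rip (I * deriv f t) (f t) =
        (1 / L) * (fun s => rip (I * deriv loop s) (loop s)) (t / L) := fun t => by
      rw [hfd]
      simp only [f, rip, mul_re, mul_im, I_re, I_im, ofReal_re, ofReal_im]; ring
    simp only [this]
    rw [integral_const_mul, Measure.integral_comp_div
      (fun s => rip (I * deriv loop s) (loop s)), abs_of_pos hL0, smul_eq_mul]
    field_simp
  have hgr : ∫ t, ‖deriv f t‖ ^ 2 = A / L := by
    have : ∀ t, ‖deriv f t‖ ^ 2 = (1 / L) ^ 2 * (fun s => ‖deriv loop s‖ ^ 2) (t / L) := fun t => by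
      rw [hfd, norm_mul, mul_pow, Complex.norm_real, Real.norm_of_nonneg (by positivity)]
    simp only [this]
    rw [integral_const_mul, Measure.integral_comp_div (fun s => ‖deriv loop s‖ ^ 2),
      abs_of_pos hL0, smul_eq_mul, ← hA]
    field_simp
  set F2 := ∫ t, ‖f t‖ ^ 2 with hF2
  set F4 := ∫ t, (‖f t‖ ^ 2) ^ 2 with hF4
  have hF20 : 0 ≤ F2 := integral_nonneg fun t => by positivity
  have hF40 : 0 ≤ F4 := integral_nonneg fun t => by positivity
  set D := 4 * ∫ t, deriv sT t ^ 2 with hD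
  have hD0 : 0 ≤ D := mul_nonneg (by norm_num) (integral_nonneg fun t => by positivity)
  set a := c * π - A / L / 2 with ha
  have ha0 : 0 < a := by rw [ha]; linarith
  obtain ⟨R, hR⟩ := exists_nat_gt ((2 * F2 * D + 4 * F4) / a + 1)
  have hF : 0 ≤ 2 * F2 * D + 4 * F4 := by positivity
  have hR1 : (1 : ℝ) ≤ R := by linarith [div_nonneg hF ha0.le]
  have hRa : 2 * F2 * D + 4 * F4 < a * R := by
    have : (2 * F2 * D + 4 * F4) / a < R := by linarith
    rw [div_lt_iff₀ ha0] at this; linarith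
  refine ⟨trial d f (plateau R), L + 1, (P R).TF, fun x hx => ?_, ?_⟩
  · have h1 := PP_tsupport (d := d) 0 hx
    simp only [Set.mem_ofPred_eq, fe, if_true] at h1
    have := hfts h1
    simp only [slab, Set.mem_ofPred_eq]
    push_cast
    exact ⟨by linarith [this.1], by linarith [this.2]⟩
  have hkk := (P R).kk (d := d) fun t => loop_circle _
  rw [II, EE_split (P R).TF, (P R).grad, (P R).MM, hkk, hmom, hgr]
  have hDR : ∫ t, deriv (plateau R) t ^ 2 ≤ D := plateau_deriv R
  have hDR0 : 0 ≤ ∫ t, deriv (plateau R) t ^ 2 := integral_nonneg fun t => by positivity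
  obtain ⟨l2, u2⟩ := plateau_int (R := R) (by linarith) (k := 2) (by norm_num)
  obtain ⟨l3, u3⟩ := plateau_int (R := R) (by linarith) (k := 3) (by norm_num)
  obtain ⟨l4, u4⟩ := plateau_int (R := R) (by linarith) (k := 4) (by norm_num)
  rw [← hF2, ← hF4]
  generalize (∫ t, deriv (plateau R) t ^ 2) = D' at *
  generalize (∫ t, plateau R t ^ 2) = J2 at *
  generalize (∫ t, plateau R t ^ 3) = J3 at *
  generalize (∫ t, plateau R t ^ 4) = J4 at *
  have hFD : F2 * D' ≤ F2 * D := mul_le_mul_of_nonneg_left hDR hF20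
  have hFD0 : 0 ≤ F2 * D' := mul_nonneg hF20 hDR0
  have haJ : a * (2 * R) ≤ a * J2 := mul_le_mul_of_nonneg_left l2 ha0.le
  rcases hd with rfl | rfl
  · have h4 : F4 * (J4 - 2 * J3 + J2) ≤ F4 * 4 := mul_le_mul_of_nonneg_left (by linarith) hF40
    norm_num
    have e : A / L / 2 = c * π - a := by rw [ha]; ring
    have e2 : 1 / 2 * (A / L * J2 + F2 * D') + 1 / 4 * (F4 * (J4 - 2 * J3 + J2)) - c * (π * J2) =
        -(a * J2) + 1 / 2 * (F2 * D') + 1 / 4 * (F4 * (J4 - 2 * J3 + J2)) := by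
      linear_combination J2 * e
    linarith [mul_nonneg hF20 hD0]
  · have h4 : F4 * (J4 ^ 2 - 2 * J3 ^ 2 + J2 ^ 2) ≤ F4 * (12 * J2) := by
      refine mul_le_mul_of_nonneg_left ?_ hF40
      nlinarith
    norm_num
    have hJ : 0 < J2 := by linarith
    have h5 : (a * J2 - F2 * D' - 3 * F4) * J2 > 0 := mul_pos (by linarith) hJ
    have e : A / L / 2 = c * π - a := by rw [ha]; ring
    have e2 : 1 / 2 * (A / L * J2 ^ 2 + 2 * (F2 * D' * J2)) +
        1 / 4 * (F4 * (J4 ^ 2 - 2 * J3 ^ 2 + J2 ^ 2)) - c * (π * J2 ^ 2) =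
        -((a * J2 - F2 * D' - 3 * F4) * J2) +
        (1 / 4 * (F4 * (J4 ^ 2 - 2 * J3 ^ 2 + J2 ^ 2)) - 1 / 4 * (F4 * (12 * J2))) := by
      linear_combination J2 ^ 2 * e
    linarith

end Trial

/-! ### Difference quotients of monotone functions -/

section Monotonicity

/-- For a sequence of monotone functions with uniformly bounded oscillation, at almost every point
infinitely many members have a common bound on their left difference quotients: by Fatou's lemma
the lower limit of the derivatives is integrable, hence finite almost everywhere. -/
lemma ae_frequently_slope_le {h : ℕ → ℝ → ℝ} (hm : ∀ N, Monotone (h N)) {G : ℝ}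
    (hG : ∀ N a b, h N b - h N a ≤ G) {a b : ℝ} (hab : a ≤ b) :
    ∀ᵐ c ∂volume.restrict (Set.Ioc a b), ∃ L : ℝ, ∃ᶠ N in atTop, ∀ δ > 0,
      ∃ c' ∈ Set.Ioo (c - δ) c, h N c - h N c' ≤ L * (c - c') := by
  have hd0 : ∀ N x, 0 ≤ deriv (h N) x := fun N x => (hm N).deriv_nonneg
  have hint : ∀ N, ∫⁻ x in Set.Ioc a b, ENNReal.ofReal (deriv (h N) x) ≤ ENNReal.ofReal G := by
    intro N
    have hmon : MonotoneOn (h N) (Set.uIcc a b) := (hm N).monotoneOn _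
    have hi := hmon.intervalIntegrable_deriv
    rw [intervalIntegrable_iff_integrableOn_Ioc_of_le hab] at hi
    rw [← ofReal_integral_eq_lintegral_ofReal hi (.of_forall fun x => hd0 N x)]
    refine ENNReal.ofReal_le_ofReal ?_
    have h1 := hmon.intervalIntegral_deriv_mem_uIcc
    rw [intervalIntegral.integral_of_le hab, Set.uIcc_of_le (sub_nonneg.2 (hm N hab))] at h1
    exact h1.2.trans (hG N a b)
  have hfat : ∫⁻ x in Set.Ioc a b, liminf (fun N => ENNReal.ofReal (deriv (h N) x)) atTop ≤
      ENNReal.ofReal G := by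
    refine (lintegral_liminf_le fun N => (measurable_deriv _).ennreal_ofReal).trans ?_
    refine liminf_le_of_frequently_le' (Frequently.of_forall fun N => hint N)
  have hfin := ae_lt_top' (μ := volume.restrict (Set.Ioc a b))
    (f := fun x => liminf (fun N => ENNReal.ofReal (deriv (h N) x)) atTop)
    (Measurable.liminf fun N => (measurable_deriv _).ennreal_ofReal).aemeasurable
    (hfat.trans_lt ENNReal.ofReal_lt_top).ne
  have hdiff : ∀ᵐ c ∂volume.restrict (Set.Ioc a b), ∀ N, DifferentiableAt ℝ (h N) c :=
    ae_restrict_of_ae (ae_all_iff.2 fun N => (hm N).ae_differentiableAt)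
  filter_upwards [hfin, hdiff] with c hc hdc
  obtain ⟨L, hL0, hL1, -⟩ := ENNReal.lt_iff_exists_real_btwn.1 hc
  refine ⟨L, (frequently_lt_of_liminf_lt (by isBoundedDefault) hL1).mono fun N hN δ hδ => ?_⟩
  have hlt : deriv (h N) c < L := by
    by_contra hle
    exact absurd (ENNReal.ofReal_le_ofReal (not_lt.1 hle)) (not_le.2 hN)
  have ht := (hasDerivAt_iff_tendsto_slope.1 (hdc N).hasDerivAt)
  have hev : ∀ᶠ y in 𝓝[<] c, slope (h N) c y < L :=
    (ht.mono_left (nhdsWithin_mono _ fun y (hy : y < c) => hy.ne)).eventually (eventually_lt_nhds hlt)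
  have hev2 : ∀ᶠ y in 𝓝[<] c, y ∈ Set.Ioo (c - δ) c :=
    Ioo_mem_nhdsLT (by linarith)
  obtain ⟨y, hy1, hy2⟩ := (hev.and hev2).exists
  refine ⟨y, hy2, ?_⟩
  rw [slope_def_field, div_lt_iff_of_neg (by linarith [hy2.2])] at hy1
  linarith

end Monotonicity

section Levels
variable {V : Type*} [AddCommGroup V] [Module ℝ V]

/-- A chain in an open sublevel set stays in a strictly smaller one. -/
lemma PolyConn.lt_level {f : V → ℝ} (hf : ∀ x v : V, Continuous fun t : ℝ => f (x + t • v)) {g : ℝ}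
    {x y : V} (h : PolyConn {v | f v < g} x y) : ∃ g' < g, PolyConn {v | f v < g'} x y := by
  induction h with
  | refl => exact ⟨g - 1, by linarith, .refl⟩
  | @tail y z h1 h2 ih =>
    obtain ⟨g', hg', hp⟩ := ih
    obtain ⟨t, ht, hmax⟩ := (isCompact_Icc (a := (0 : ℝ)) (b := 1)).exists_isMaxOn
      (Set.nonempty_Icc.2 zero_le_one) (hf y (z - y)).continuousOn
    have h2' : segment ℝ y z ⊆ {v | f v < g} := h2
    have hlt : f (y + t • (z - y)) < g := h2' (by
      rw [segment_eq_image']; exact ⟨t, ht, rfl⟩)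
    refine ⟨max g' ((f (y + t • (z - y)) + g) / 2), max_lt hg' (by linarith), ?_⟩
    refine (hp.mono fun v (hv : f v < g') => Set.mem_ofPred_eq ▸ lt_max_of_lt_left hv).trans (PolyConn.of_segment ?_)
    rw [segment_eq_image']
    rintro _ ⟨s, hs, rfl⟩
    have := hmax hs
    simp only [Set.mem_ofPred_eq] at this ⊢
    exact lt_max_of_lt_right (by linarith)

/-- A chain from inside to outside a sphere meets it. -/
lemma PolyConn.exists_sphere (p : Seminorm ℝ V) {S : Set V} {x y : V} (h : PolyConn S x y) {r : ℝ}
    (hx : p x ≤ r) (hy : r < p y) : ∃ v ∈ S, p v = r := by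
  induction h with
  | refl => exact absurd hx (not_le.2 hy)
  | @tail y z h1 h2 ih =>
    by_cases hr : r < p y
    · exact ih hr
    · have h2' : segment ℝ y z ⊆ S := h2
      have hc : Continuous fun t : ℝ => p (y + t • (z - y)) := by
        have hL : LipschitzWith ⟨p (z - y), apply_nonneg p _⟩ fun t : ℝ => p (y + t • (z - y)) := by
          refine LipschitzWith.of_dist_le_mul fun s t => ?_
          rw [Real.dist_eq, Real.dist_eq]
          refine (abs_sub_map_le_sub p _ _).trans ?_
          rw [add_sub_add_left_eq_sub, ← sub_smul, map_smul_eq_mul, Real.norm_eq_abs, mul_comm]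
          exact le_rfl
        exact hL.continuous
      have := intermediate_value_Icc (zero_le_one (α := ℝ)) hc.continuousOn
      obtain ⟨t, ht, htr⟩ := this (show r ∈ Set.Icc _ _ by
        simp only [zero_smul, add_zero, one_smul, add_sub_cancel]
        exact ⟨not_lt.1 hr, hy.le⟩)
      refine ⟨y + t • (z - y), h2' ?_, htr⟩
      rw [segment_eq_image']; exact ⟨t, ht, rfl⟩

end Levels

/-! ### Mountain pass levels and approximate critical points -/

section SlabLevels
variable {d : ℕ} [NeZero d] {N : ℕ} {S : ℝ}

/-- Sublevel sets of `E / c - P` on the space of perturbations supported in the slab. -/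
def SS (d N : ℕ) [NeZero d] (c g : ℝ) : Set (slabV d N) := {v | EE v.1 / c - MM v.1 < g}

lemma mem_SS {c g : ℝ} {v : slabV d N} : v ∈ SS d N c g ↔ EE v.1 / c - MM v.1 < g := Iff.rfl

lemma SS_mono {c c' g g' : ℝ} (hc : 0 < c) (hcc : c ≤ c') (hg : g ≤ g') :
    SS d N c g ⊆ SS d N c' g' := fun v hv => by
  rw [mem_SS] at hv ⊢
  have : EE v.1 / c' ≤ EE v.1 / c := div_le_div_of_nonneg_left (EE_nonneg _) hc hcc
  linarith

lemma SS_eq {c : ℝ} (hc : 0 < c) (g : ℝ) : SS d N c g = {v | II c v.1 < c * g} := by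
  ext v
  rw [mem_SS, Set.mem_ofPred_eq, II, ← mul_lt_mul_iff_right₀ hc]
  have : c * (EE v.1 / c - MM v.1) = EE v.1 - c * MM v.1 := by field_simp
  rw [this]

omit [NeZero d] in
lemma EE_zero : EE (0 : Ed d → ℂ) = 0 := by simp [EE, pd, kk]
lemma MM_zero : MM (0 : Ed d → ℂ) = 0 := by simp [MM, pd, rip]
lemma II_zero (c : ℝ) : II c (0 : Ed d → ℂ) = 0 := by simp [II, EE_zero, MM_zero]

/-- The mountain pass level of `E / c - P` between `0` and `e`. -/
def lev (d N : ℕ) [NeZero d] (e : slabV d N) (c : ℝ) : ℝ :=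
  sInf {g | PolyConn (SS d N c g) 0 e}

/-- A nontrivial chain starts in the sublevel set, where the value at `0` is `0`; hence all levels
are nonnegative. -/
lemma lev_bdd {e : slabV d N} (he : e ≠ 0) (c : ℝ) :
    BddBelow {g | PolyConn (SS d N c g) 0 e} := by
  refine ⟨0, fun g hg => ?_⟩
  rcases Relation.ReflTransGen.cases_head hg with h | ⟨v, hv, -⟩
  · exact absurd h.symm he
  · have h0 := hv (left_mem_segment ℝ 0 v)
    have h1 : EE (0 : Ed d → ℂ) / c - MM (0 : Ed d → ℂ) < g := h0
    rw [EE_zero, MM_zero] at h1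
    simpa using h1.le

lemma lev_nonneg {e : slabV d N} (he : e ≠ 0) (c : ℝ) : 0 ≤ lev d N e c := by
  refine Real.sInf_nonneg fun g hg => ?_
  rcases Relation.ReflTransGen.cases_head hg with h | ⟨v, hv, -⟩
  · exact absurd h.symm he
  · have h0 := hv (left_mem_segment ℝ 0 v)
    have h1 : EE (0 : Ed d → ℂ) / c - MM (0 : Ed d → ℂ) < g := h0
    rw [EE_zero, MM_zero] at h1
    simpa using h1.le

omit [NeZero d] in
lemma EE_smul_le {e : Ed d → ℂ} (he : TF e) {t : ℝ} (ht : t ∈ Set.Icc (0 : ℝ) 1) :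
    EE (t • e) ≤ 1 / 2 * ∑ i, n2 (pd e i) ^ 2 + 1 / 4 * ∫ x, (2 * ‖e x‖ + ‖e x‖ ^ 2) ^ 2 := by
  rw [EE_split (he.smul t)]
  have ht2 : t ^ 2 ≤ 1 := pow_le_one₀ ht.1 ht.2
  have h1 : ∀ i, n2 (pd (t • e) i) ^ 2 ≤ n2 (pd e i) ^ 2 := fun i => by
    rw [pd_smul he.diff, n2_smul, mul_pow, sq_abs]
    nlinarith [sq_nonneg (n2 (pd e i))]
  have h2 : ∫ x, kk ((t • e) x) ^ 2 ≤ ∫ x, (2 * ‖e x‖ + ‖e x‖ ^ 2) ^ 2 := by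
    refine integral_mono (kk_integrable (he.smul t))
      (he.integ (by have := he.cont; fun_prop) fun x hx => by simp [zero_off hx]) fun x => ?_
    have h3 : |kk ((t • e) x)| ≤ 2 * ‖e x‖ + ‖e x‖ ^ 2 := by
      have h4 : kk ((t • e) x) = 2 * ((t • e) x).re + ‖(t • e) x‖ ^ 2 := by rw [kk, normsq_eq]
      have h5 : ‖(t • e) x‖ ≤ ‖e x‖ := by
        rw [Pi.smul_apply, norm_smul, Real.norm_of_nonneg ht.1]
        exact mul_le_of_le_one_left (norm_nonneg _) ht.2
      rw [h4]
      refine (abs_add_le _ _).trans ?_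
      rw [abs_mul, abs_two, abs_of_nonneg (sq_nonneg ‖(t • e) x‖)]
      have := Complex.abs_re_le_norm ((t • e) x)
      have := pow_le_pow_left₀ (norm_nonneg _) h5 2
      linarith
    calc kk ((t • e) x) ^ 2 = |kk ((t • e) x)| ^ 2 := (sq_abs _).symm
      _ ≤ _ := pow_le_pow_left₀ (abs_nonneg _) h3 2
  have := Finset.sum_le_sum fun i (_ : i ∈ Finset.univ) => h1 i
  linarith

lemma MM_smul {e : Ed d → ℂ} (he : TF e) (t : ℝ) : MM (t • e) = t ^ 2 * MM e := by
  rw [MM, MM, ← integral_const_mul]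
  congr 1
  funext x
  rw [pd_smul he.diff]
  simp only [rip, Pi.smul_apply, real_smul, mul_re, mul_im, I_re, I_im, ofReal_re, ofReal_im]
  ring

/-- The level is bounded by the maximum along the segment from `0` to `e`, uniformly for speeds
above `c₀` and independently of the slab. -/
lemma seg_level {e : slabV d N} {c₀ : ℝ} (hc₀ : 0 < c₀) (heI : II c₀ e.1 < 0) {c : ℝ} (hc : c₀ ≤ c)
    {G : ℝ} (hG : (1 / 2 * ∑ i, n2 (pd e.1 i) ^ 2 +
      1 / 4 * ∫ x, (2 * ‖e.1 x‖ + ‖e.1 x‖ ^ 2) ^ 2) / c₀ < G) :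
    PolyConn (SS d N c G) 0 e := by
  have hM : 0 ≤ MM e.1 := by
    have := EE_nonneg e.1
    rw [II] at heI
    by_contra h
    nlinarith
  refine PolyConn.of_segment fun v hv => SS_mono hc₀ hc le_rfl ?_
  rw [segment_eq_image'] at hv
  obtain ⟨t, ht, rfl⟩ := hv
  simp only [zero_add, sub_zero]
  show EE (t • e.1) / c₀ - MM (t • e.1) < G
  have h1 := EE_smul_le e.2.1 ht
  have h2 : 0 ≤ MM (t • e.1) := by rw [MM_smul e.2.1]; positivity
  have h3 := div_le_div_of_nonneg_right h1 hc₀.le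
  linarith

/-- The Lagrangian divided by the speed, and with it the mountain pass level, is nonincreasing in
the speed. -/
lemma lev_anti {e : slabV d N} {c₀ : ℝ} (hc₀ : 0 < c₀) (heI : II c₀ e.1 < 0) {c c' : ℝ}
    (hc : c₀ ≤ c) (hcc : c ≤ c') : lev d N e c' ≤ lev d N e c := by
  have he : e ≠ 0 := by rintro rfl; simp [II_zero] at heI
  refine csInf_le_csInf (lev_bdd he _) ⟨_, seg_level hc₀ heI hc (lt_add_one _)⟩ fun g hg => ?_
  exact PolyConn.mono (SS_mono (hc₀.trans_le hc) hcc le_rfl) hg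

lemma SobC.II_cont (hS : SobC d S) (c : ℝ) (x v : slabV d N) :
    Continuous fun t : ℝ => II c (x + t • v).1 := by
  rw [continuous_iff_continuousAt]
  intro t
  obtain ⟨C, H⟩ := hS.taylorData c N (pN (x + t • v).1) (pN_nonneg _)
  have hp : ∀ s, slabP d N (x + s • v - (x + t • v)) = |s - t| * slabP d N v := fun s => by
    have : x + s • v - (x + t • v) = (s - t) • v := by module
    rw [this, map_smul_eq_mul, Real.norm_eq_abs]
  have ht0 : Tendsto (fun s => |s - t| * slabP d N v) (𝓝 t) (𝓝 0) := by
    have : Continuous fun s => |s - t| * slabP d N v := by fun_prop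
    simpa using this.tendsto t
  rw [ContinuousAt, tendsto_iff_dist_tendsto_zero]
  refine squeeze_zero' (.of_forall fun s => dist_nonneg)
    ?_ (by simpa using ht0.const_mul C)
  filter_upwards [ht0.eventually (eventually_le_nhds (zero_lt_one))] with s hs
  have := H.lip (x + t • v) (le_refl (pN (x + t • v).1)) (x + s • v) ((hp s).trans_le hs)
  rw [Real.dist_eq]
  rwa [hp] at this

/-- Approximate critical points at a positive level which satisfy an energy bound and have
at most one approximate negative direction. -/
def HasPS (d N : ℕ) [NeZero d] (c M : ℝ) : Prop := ∃ g > 0, ∀ ε > 0, ∃ z : slabV d N,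
  EE z.1 ≤ M ∧ g ≤ II c z.1 ∧ II c z.1 < g + ε ∧ (∀ φ : slabV d N, |DD c z.1 φ.1| ≤ ε * pN φ.1) ∧
  ¬ ∃ e₁ e₂ : slabV d N, pN e₁.1 ≤ 1 ∧ pN e₂.1 ≤ 1 ∧
    ∀ a b : ℝ, QQ c z.1 (a • e₁ + b • e₂ : slabV d N).1 ≤ -ε * (a ^ 2 + b ^ 2)

lemma TaylorData.mono {V : Type*} [AddCommGroup V] [Module ℝ V] {p : Seminorm ℝ V} {f : V → ℝ}
    {D Q : V → V → ℝ} {K K' : Set V} {C : ℝ} (H : TaylorData p f D Q K C) (h : K' ⊆ K) :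
    TaylorData p f D Q K' C :=
  ⟨H.pos, fun z hz => H.taylor z (h hz), fun z hz => H.lip z (h hz), fun z hz => H.lipD z (h hz),
    fun z hz => H.lipQ z (h hz), fun z hz => H.bddD z (h hz), fun z hz => H.bddQ z (h hz),
    H.homD, H.homQ⟩

/-- If the level has a bounded left difference quotient along speeds `c' ↑ c`, then nearly optimal
chains for `c'` have bounded energy wherever they are high for `c`; the mountain pass theorem
applies on this bounded set. -/
lemma SobC.hasPS (hS : SobC d S) {e : slabV d N} {c₀ c L : ℝ} (hc₀ : 0 < c₀) (heI : II c₀ e.1 < 0)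
    (hc : c₀ < c) (hc2 : c < √2) (hL : 0 ≤ L)
    (hslope : ∀ δ > 0, ∃ c' ∈ Set.Ioo (c - δ) c, lev d N e c' - lev d N e c ≤ L * (c - c')) :
    HasPS d N c ((L + 1) * c ^ 2) := by
  have hcp : 0 < c := hc₀.trans hc
  have he : e ≠ 0 := by rintro rfl; simp [II_zero] at heI
  have hcont := fun x v : slabV d N => hS.II_cont c x v
  set g := lev d N e c with hg
  have heIc : II c e.1 < 0 := by
    have := EE_nonneg e.1
    rw [II] at heI ⊢
    nlinarith
  -- the level is not attained
  have hnot : ¬ PolyConn {v : slabV d N | II c v.1 < c * g} 0 e := fun h => by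
    obtain ⟨g', hg', hp⟩ := h.lt_level hcont
    have : g' / c ∈ {g | PolyConn (SS d N c g) 0 e} := by
      show PolyConn _ _ _
      rw [SS_eq hcp, mul_div_cancel₀ _ hcp.ne']; exact hp
    have h2 := csInf_le (lev_bdd he c) this
    rw [le_div_iff₀ hcp] at h2
    have : lev d N e c * c ≤ g' := h2
    rw [← hg] at this
    linarith
  -- the level is positive
  have hgpos : 0 < c * g := by
    obtain ⟨r, hr, κ, hκ, hpos⟩ := hS.II_pos hcp.le hc2 N
    have her : r < slabP d N e := by
      by_contra h
      have := hpos e.1 e.2.1 e.2.2 (not_lt.1 h)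
      have : 0 ≤ κ * pN e.1 ^ 2 := by positivity
      linarith
    have hle : κ * r ^ 2 / c ≤ g := by
      refine le_csInf ⟨_, seg_level hc₀ heI hc.le (lt_add_one _)⟩ fun g' hg' => ?_
      obtain ⟨v, hv, hvr⟩ := PolyConn.exists_sphere (slabP d N) hg' (by rw [map_zero]; exact hr.le) her
      rw [slabP_apply] at hvr
      rw [SS_eq hcp] at hv
      have h1 := hpos v.1 v.2.1 v.2.2 hvr.le
      rw [hvr] at h1
      have h2 : II c v.1 < c * g' := hv
      rw [div_le_iff₀ hcp]; linarith
    have : 0 < κ * r ^ 2 / c := by positivity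
    exact mul_pos hcp (this.trans_le hle)
  obtain ⟨B, hB, hbdd⟩ := pN_bdd d N ((L + 1) * c ^ 2)
  obtain ⟨C, H⟩ := hS.taylorData c N B hB
  have hK : {v : slabV d N | EE v.1 ≤ (L + 1) * c ^ 2} ⊆ {v | pN v.1 ≤ B} :=
    fun v hv => hbdd v.1 v.2.1 v.2.2 hv
  have H' := H.mono hK
  refine ⟨c * g, hgpos, fun ε hε => ?_⟩
  refine (mountain_pass H' (g := c * g) (e := e) ?_ ?_ hnot ?_ hε hε hε)
  · show II c (0 : Ed d → ℂ) < _
    rwa [II_zero]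
  · exact heIc.trans hgpos
  intro ε hε
  obtain ⟨c', hc', hs⟩ := hslope (min (c - c₀) (ε / (c * (L + 1) + 1)))
    (lt_min (by linarith) (by positivity))
  have hc'1 : c₀ < c' := by have := hc'.1; have := min_le_left (c - c₀) (ε / (c * (L + 1) + 1)); linarith
  have hc'2 : (c * (L + 1)) * (c - c') < ε := by
    have h1 := hc'.1
    have h2 := min_le_right (c - c₀) (ε / (c * (L + 1) + 1))
    have h3 : c - c' < ε / (c * (L + 1) + 1) := by linarith
    rw [lt_div_iff₀ (by positivity)] at h3
    have : 0 < c - c' := by linarith [hc'.2]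
    nlinarith
  have hc'p : 0 < c' := hc₀.trans hc'1
  obtain ⟨g', hg', hlt⟩ := exists_lt_of_csInf_lt
    (⟨_, seg_level hc₀ heI hc'1.le (lt_add_one _)⟩ : {g | PolyConn (SS d N c' g) 0 e}.Nonempty)
    (show lev d N e c' < lev d N e c' + (c - c') by linarith [hc'.2])
  -- the sublevel set containing a nearly optimal chain for `c'` has bounded energy where `II c` is
  -- above the mountain pass level for `c`
  suffices hsub : SS d N c' g' ⊆ {v : slabV d N | II c v.1 < c * g} ∪
      {v | II c v.1 < c * g + ε ∧ v ∈ {v : slabV d N | EE v.1 ≤ (L + 1) * c ^ 2}} from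
    PolyConn.mono hsub hg'
  intro v hv
  rw [mem_SS] at hv
  have hv1 : EE v.1 / c' - MM v.1 < g + (L + 1) * (c - c') := by linarith
  by_cases hvg : II c v.1 < c * g
  · exact Or.inl hvg
  have hE := EE_nonneg v.1
  refine Or.inr ⟨?_, ?_⟩
  · have h1 : EE v.1 / c ≤ EE v.1 / c' := div_le_div_of_nonneg_left hE hc'p hc'.2.le
    have h2 : c * (EE v.1 / c - MM v.1) < c * (g + (L + 1) * (c - c')) :=
      mul_lt_mul_of_pos_left (by linarith) hcp
    have h3 : c * (EE v.1 / c - MM v.1) = EE v.1 - c * MM v.1 := by field_simp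
    rw [h3] at h2
    show EE v.1 - c * MM v.1 < _
    linarith
  · have h1 : g ≤ EE v.1 / c - MM v.1 := by
      have h2 := not_lt.1 hvg
      rw [II] at h2
      have h3 : c * (EE v.1 / c - MM v.1) = EE v.1 - c * MM v.1 := by field_simp
      rw [← h3] at h2
      exact le_of_mul_le_mul_left h2 hcp
    have h2 : EE v.1 / c' - EE v.1 / c < (L + 1) * (c - c') := by linarith
    have h3 : EE v.1 / c' - EE v.1 / c = (EE v.1 / (c * c')) * (c - c') := by field_simp
    rw [h3] at h2
    have h4 := lt_of_mul_lt_mul_right h2 (by linarith [hc'.2])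
    rw [div_lt_iff₀ (by positivity)] at h4
    show EE v.1 ≤ _
    have : c * c' ≤ c ^ 2 := by nlinarith [hc'.2]
    nlinarith

end SlabLevels

/-- For almost every speed, approximate critical points exist on infinitely many slabs with a
common energy bound. -/
lemma exists_speeds (d : ℕ) [NeZero d] (hd : d = 2 ∨ d = 3) :
    ∃ E : Set ℝ, MeasurableSet E ∧ E ⊆ Set.Ioo 0 (√2) ∧ volume (Set.Ioo 0 (√2) \ E) = 0 ∧
      ∀ c ∈ E, ∃ M > (0 : ℝ), ∃ᶠ N in atTop, HasPS d N c M := by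
  obtain ⟨S, hS⟩ := sobolev_const hd
  have hS : SobC d S := hS
  set T := {c : ℝ | ∃ M > (0 : ℝ), ∃ᶠ N in atTop, HasPS d N c M} with hT
  have key : ∀ j : ℕ, volume (Set.Ioo (1 / (j + 1 : ℝ)) (√2) \ T) = 0 := by
    intro j
    -- the trial function depends on a lower bound `c₀` for the speeds
    set c₀ : ℝ := 1 / (j + 1) with hc₀
    have hc₀p : 0 < c₀ := by positivity
    obtain ⟨e, N₀, heT, hes, heI⟩ := exists_trial hd hc₀p
    have hes' : ∀ N, tsupport e ⊆ slab d (N₀ + N) := fun N x hx => by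
      have := hes hx
      simp only [slab, Set.mem_ofPred_eq] at this ⊢
      push_cast
      have : (0 : ℝ) ≤ N := by positivity
      constructor <;> linarith
    obtain ⟨eN, heN⟩ : ∃ eN : ∀ N, slabV d (N₀ + N), ∀ N, (eN N).1 = e :=
      ⟨fun N => ⟨e, heT, hes' N⟩, fun N => rfl⟩
    have heI : ∀ N, II c₀ (eN N).1 < 0 := fun N => by rw [heN]; exact heI
    -- `max c c₀` makes the level monotone on all of `ℝ`
    obtain ⟨h, hh⟩ : ∃ h : ℕ → ℝ → ℝ, ∀ N c, h N c = -lev d (N₀ + N) (eN N) (max c c₀) :=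
      ⟨_, fun _ _ => rfl⟩
    set G := (1 / 2 * ∑ i, n2 (pd e i) ^ 2 + 1 / 4 * ∫ x, (2 * ‖e x‖ + ‖e x‖ ^ 2) ^ 2) / c₀ + 1
    have hne : ∀ N, eN N ≠ 0 := fun N h => by
      have := heI N
      rw [h] at this
      exact absurd this (by rw [show ((0 : slabV d (N₀ + N)) : Ed d → ℂ) = 0 from rfl, II_zero]
                            exact lt_irrefl _)
    have hm : ∀ N, Monotone (h N) := fun N a b hab => by
      rw [hh, hh]
      exact neg_le_neg (lev_anti hc₀p (heI N) (le_max_right _ _) (max_le_max_right c₀ hab))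
    have hG : ∀ N a b, h N b - h N a ≤ G := fun N a b => by
      have h1 : lev d (N₀ + N) (eN N) (max a c₀) ≤ G :=
        csInf_le (lev_bdd (hne N) _) (seg_level hc₀p (heI N) (le_max_right _ _) (by rw [heN]; exact lt_add_one _))
      have h2 := lev_nonneg (hne N) (max b c₀)
      rw [hh, hh]; linarith
    rcases le_total (√2) c₀ with hle | hle
    · rw [Set.Ioo_eq_empty (not_lt.2 hle)]; simp
    have hae := ae_frequently_slope_le hm hG hle
    rw [ae_restrict_iff' measurableSet_Ioc] at hae
    refine measure_mono_null (fun c hc => ?_) hae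
    intro himp
    obtain ⟨L, hL⟩ := himp ⟨hc.1.1, hc.1.2.le⟩
    refine hc.2 ⟨(max L 0 + 1) * c ^ 2, by have := hc₀p.trans hc.1.1; positivity, ?_⟩
    have h1 : ∃ᶠ N in atTop, HasPS d (N₀ + N) c ((max L 0 + 1) * c ^ 2) := by
      refine hL.mono fun N hN => hS.hasPS hc₀p (heI N) hc.1.1 hc.1.2 (le_max_right _ _) fun δ hδ => ?_
      obtain ⟨c', hc', hs⟩ := hN (min δ (c - c₀)) (lt_min hδ (by linarith [hc.1.1]))
      have a1 := min_le_left δ (c - c₀)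
      have a2 := min_le_right δ (c - c₀)
      refine ⟨c', ⟨by linarith [hc'.1], hc'.2⟩, ?_⟩
      rw [hh, hh] at hs
      rw [max_eq_left hc.1.1.le, max_eq_left (by linarith [hc'.1])] at hs
      have : L * (c - c') ≤ max L 0 * (c - c') :=
        mul_le_mul_of_nonneg_right (le_max_left _ _) (by linarith [hc'.2])
      linarith
    rw [frequently_atTop] at h1 ⊢
    intro a
    obtain ⟨b, hb, hb2⟩ := h1 a
    exact ⟨N₀ + b, by omega, hb2⟩
  have hnull : volume (Set.Ioo 0 (√2) \ T) = 0 := by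
    refine measure_mono_null (fun c hc => ?_) (measure_iUnion_null key)
    obtain ⟨j, hj⟩ := exists_nat_one_div_lt hc.1.1
    exact Set.mem_iUnion.2 ⟨j, ⟨hj, hc.1.2⟩, hc.2⟩
  -- the set of good speeds need not be measurable: a measurable null set is removed instead
  obtain ⟨U, hU1, hU2, hU3⟩ := exists_measurable_superset_of_null hnull
  refine ⟨Set.Ioo 0 (√2) \ U, measurableSet_Ioo.diff hU2, Set.sdiff_subset, ?_, fun c hc => ?_⟩
  · exact measure_mono_null (fun c hc => by by_contra h; exact hc.2 ⟨hc.1, h⟩) hU3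
  · by_contra h
    exact hc.2 (hU1 ⟨hc.1, h⟩)

/-! ### Kernels and their derivative in the scale -/

section Kernels
variable {d : ℕ}

/-- Partial derivative of a real function. -/
def dv (f : Ed d → ℝ) (i : Fin d) (x : Ed d) : ℝ := fderiv ℝ f x (bv i)

/-- Laplacian of a real function. -/
def lapR (f : Ed d → ℝ) (x : Ed d) : ℝ := ∑ i, dv (dv f i) i x

/-- The rescaled kernel `τ⁻ᵖ k(x/τ)`. -/
def sc (p : ℕ) (k : Ed d → ℝ) (τ : ℝ) (x : Ed d) : ℝ := (τ ^ p)⁻¹ * k (τ⁻¹ • x)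

/-- The profile of `∂_τ (τ⁻ᵖ k(x/τ))`, namely `-p k - z·∇k`. -/
def k1 (p : ℕ) (k : Ed d → ℝ) (z : Ed d) : ℝ := -p * k z - fderiv ℝ k z z

theorem fderivR_eq_sum (u : Ed d → ℝ) (x y : Ed d) : fderiv ℝ u x y = ∑ i, y i * dv u i x := by
  have hy : y = ∑ i, y i • (bv i : Ed d) := by
    ext j
    simp [bv, Pi.single_apply]
  conv_lhs => rw [hy]
  simp [map_sum, dv]

theorem dv_smooth {f : Ed d → ℝ} (hf : ContDiff ℝ (⊤ : ℕ∞) f) (i : Fin d) :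
    ContDiff ℝ (⊤ : ℕ∞) (dv f i) := by
  have h : ContDiff ℝ (⊤ : ℕ∞) (fderiv ℝ f) := hf.fderiv_right (by simp)
  exact h.clm_apply contDiff_const

theorem dv_supp (f : Ed d → ℝ) (i : Fin d) : tsupport (dv f i) ⊆ tsupport f := by
  refine closure_minimal (fun x hx => ?_) (isClosed_tsupport f)
  by_contra h
  apply hx
  have := image_eq_zero_of_notMem_tsupport (f := fderiv ℝ f) (x := x)
    (fun hh => h (tsupport_fderiv_subset ℝ hh))
  simp [dv, this]

theorem dv_comm {f : Ed d → ℝ} (hf : ContDiff ℝ (⊤ : ℕ∞) f) (i j : Fin d) :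
    dv (dv f i) j = dv (dv f j) i := by
  funext x
  have hd : DifferentiableAt ℝ (fderiv ℝ f) x :=
    ((hf.fderiv_right (m := (⊤ : ℕ∞)) (by simp)).differentiable (by simp)) x
  have key : ∀ a b : Fin d, dv (dv f a) b x = fderiv ℝ (fderiv ℝ f) x (bv b) (bv a) := by
    intro a b
    have : HasFDerivAt (dv f a) ((fderiv ℝ (fderiv ℝ f) x).flip (bv a)) x := by
      have := hd.hasFDerivAt.clm_apply (hasFDerivAt_const (bv a : Ed d) x)
      refine HasFDerivAt.congr_fderiv (f := dv f a) this ?_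
      ext v; simp
    rw [dv, this.fderiv]; rfl
  rw [key, key]
  have hs : IsSymmSndFDerivAt ℝ f x := by
    refine (hf.contDiffAt).isSymmSndFDerivAt ?_
    simp only [minSmoothness_of_isRCLikeNormedField]
    exact ENat.LEInfty.out
  exact hs _ _

theorem sc_smooth {k : Ed d → ℝ} (hk : ContDiff ℝ (⊤ : ℕ∞) k) (p : ℕ) (τ : ℝ) :
    ContDiff ℝ (⊤ : ℕ∞) (sc p k τ) :=
  contDiff_const.mul (hk.comp (contDiff_const_smul _))

theorem dv_sc {k : Ed d → ℝ} (hk : ContDiff ℝ (⊤ : ℕ∞) k) (p : ℕ) (τ : ℝ) (i : Fin d) :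
    dv (sc p k τ) i = sc (p + 1) (dv k i) τ := by
  funext x
  have h1 : HasFDerivAt (fun x : Ed d => τ⁻¹ • x) (τ⁻¹ • ContinuousLinearMap.id ℝ (Ed d)) x :=
    (hasFDerivAt_id x).const_smul τ⁻¹
  have h2 : HasFDerivAt k (fderiv ℝ k (τ⁻¹ • x)) (τ⁻¹ • x) :=
    (hk.differentiable (by simp) _).hasFDerivAt
  have h3 := (h2.comp x h1).const_mul ((τ ^ p)⁻¹)
  have h4 : fderiv ℝ (sc p k τ) x = _ := h3.fderiv
  rw [dv, h4]
  simp [sc, dv, pow_succ]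
  ring

theorem lapR_sc {k : Ed d → ℝ} (hk : ContDiff ℝ (⊤ : ℕ∞) k) (p : ℕ) (τ : ℝ) :
    lapR (sc p k τ) = sc (p + 2) (lapR k) τ := by
  funext x
  simp only [lapR, dv_sc hk, dv_sc (dv_smooth hk _)]
  simp only [sc, ← Finset.mul_sum]
  rfl

theorem sc_hasDeriv {k : Ed d → ℝ} (hk : ContDiff ℝ (⊤ : ℕ∞) k) (p : ℕ) {τ : ℝ} (hτ : 0 < τ)
    (x : Ed d) : HasDerivAt (fun τ => sc p k τ x) (sc (p + 1) (k1 p k) τ x) τ := by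
  have h0 : HasDerivAt (fun τ : ℝ => τ⁻¹) (-(τ ^ 2)⁻¹) τ := hasDerivAt_inv hτ.ne'
  have h1 : HasDerivAt (fun τ : ℝ => τ⁻¹ • x) ((-(τ ^ 2)⁻¹) • x) τ := h0.smul_const x
  have h2 : HasFDerivAt k (fderiv ℝ k (τ⁻¹ • x)) (τ⁻¹ • x) :=
    (hk.differentiable (by simp) _).hasFDerivAt
  have h3 := h2.comp_hasDerivAt τ h1
  have h4 : HasDerivAt (fun τ : ℝ => (τ ^ p)⁻¹) (-(p * τ ^ (p - 1)) / (τ ^ p) ^ 2) τ :=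
    (hasDerivAt_pow p τ).inv (by positivity)
  have h5 := h4.mul h3
  refine h5.congr_deriv ?_
  simp only [sc, k1, map_smul, smul_eq_mul, Function.comp]
  rcases p with _ | p
  · simp; field_simp
  · simp only [Nat.add_sub_cancel]
    field_simp
    push_cast
    ring

theorem sc_supp {k : Ed d → ℝ} (hk : ∀ z, 1 < ‖z‖ → k z = 0) (p : ℕ) {τ : ℝ} (hτ : 0 < τ) {z : Ed d}
    (hz : τ < ‖z‖) : sc p k τ z = 0 := by
  rw [sc, hk, mul_zero]
  rw [norm_smul, norm_inv, Real.norm_of_nonneg hτ.le, inv_mul_eq_div, lt_div_iff₀ hτ]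
  linarith

/-- A real kernel: smooth and supported in the closed unit ball. -/
structure KK (k : Ed d → ℝ) : Prop where
  smooth : ContDiff ℝ (⊤ : ℕ∞) k
  zero : ∀ z, 1 < ‖z‖ → k z = 0

theorem KK.compact {k : Ed d → ℝ} (hk : KK k) : HasCompactSupport k :=
  HasCompactSupport.intro (isCompact_closedBall (0 : Ed d) 1) (fun x hx => hk.zero x (by
    simpa using hx))

theorem KK.tsupp {k : Ed d → ℝ} (hk : KK k) : tsupport k ⊆ closedBall 0 1 := by
  refine closure_minimal (fun x hx => ?_) isClosed_closedBall
  by_contra h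
  exact hx (hk.zero x (by simpa using h))

theorem KK.bdd {k : Ed d → ℝ} (hk : KK k) : ∃ C, 0 ≤ C ∧ ∀ z, |k z| ≤ C := by
  obtain ⟨C, hC⟩ := hk.compact.exists_bound_of_continuous hk.smooth.continuous
  exact ⟨C, (norm_nonneg _).trans (hC 0), hC⟩

theorem KK.dv {k : Ed d → ℝ} (hk : KK k) (i : Fin d) : KK (dv k i) :=
  ⟨dv_smooth hk.smooth i, fun z hz => image_eq_zero_of_notMem_tsupport (fun h => by
    have := hk.tsupp (dv_supp k i h)
    simp at this; linarith)⟩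

theorem KK.lapR {k : Ed d → ℝ} (hk : KK k) : KK (lapR k) :=
  ⟨ContDiff.sum (fun i _ => ((hk.dv i).dv i).smooth), fun z hz =>
    Finset.sum_eq_zero (fun i _ => ((hk.dv i).dv i).zero z hz)⟩

theorem KK.sc_bdd {k : Ed d → ℝ} (hk : KK k) (p : ℕ) {a : ℝ} (ha : 0 < a) :
    ∃ C, 0 ≤ C ∧ ∀ τ ≥ a, ∀ z, |sc p k τ z| ≤ C := by
  obtain ⟨C, hC, h⟩ := hk.bdd
  refine ⟨(a ^ p)⁻¹ * C, by positivity, fun τ hτ z => ?_⟩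
  have hτ0 : 0 < τ := ha.trans_le hτ
  rw [sc, abs_mul, abs_of_pos (inv_pos.2 (pow_pos hτ0 p))]
  gcongr
  exact h _

/-- The kernel average `∫ k(x - y) f(x) dx`. -/
def mol (k : Ed d → ℝ) (f : Ed d → ℂ) (y : Ed d) : ℂ := ∫ x, k (x - y) • f x

/-- `Δf = -g` in the sense of distributions on `O`. -/
def DistEq (O : Set (Ed d)) (f g : Ed d → ℂ) : Prop :=
  ∀ φ : Ed d → ℝ, ContDiff ℝ (⊤ : ℕ∞) φ → HasCompactSupport φ → tsupport φ ⊆ O →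
    ∫ x, lapR φ x • f x = -∫ x, φ x • g x

theorem kf_integrable {f : Ed d → ℂ} (hf : LocallyIntegrable f) {k : Ed d → ℝ}
    (hk : Continuous k) (hs : HasCompactSupport k) (y : Ed d) :
    Integrable (fun x => k (x - y) • f x) := by
  refine hf.integrable_smul_left_of_hasCompactSupport (hk.comp (by fun_prop)) ?_
  exact hs.comp_homeomorph (Homeomorph.subRight y)

theorem dv_shift (q : Ed d → ℝ) (y : Ed d) (i : Fin d) :
    dv (fun x => q (x - y)) i = fun x => dv q i (x - y) := by
  funext x
  simp only [dv, sub_eq_add_neg]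
  rw [fderiv_comp_add_right (f := q)]

theorem lapR_shift (q : Ed d → ℝ) (y : Ed d) :
    lapR (fun x => q (x - y)) = fun x => lapR q (x - y) := by
  funext x
  simp [lapR, dv_shift]

theorem KK.sc_compact {k : Ed d → ℝ} (hk : KK k) (p : ℕ) {τ : ℝ} (hτ : 0 < τ) :
    HasCompactSupport (sc p k τ) :=
  HasCompactSupport.intro (isCompact_closedBall (0 : Ed d) τ)
    (fun x hx => sc_supp hk.zero p hτ (by simpa using hx))

/-- Differentiating the mollification in the scale: when `∂_τ` of the kernel is a Laplacian, the
equation `Δf = -g` turns the derivative into a kernel average of `g`. -/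
theorem mol_hasDeriv {O : Set (Ed d)} {f g : Ed d → ℂ} (hf : LocallyIntegrable f)
    (hfg : DistEq O f g) {k q : Ed d → ℝ} (hk : KK k) (hq : KK q) {p : ℕ}
    (hkq : k1 (p + 1) k = lapR q) {y : Ed d} {τ : ℝ} (hτ : 0 < τ) (hO : closedBall y τ ⊆ O) :
    HasDerivAt (fun t => mol (sc (p + 1) k t) f y) (-mol (sc p q τ) g y) τ := by
  have e1 : -mol (sc p q τ) g y = ∫ x, sc (p + 2) (lapR q) τ (x - y) • f x := by
    have := hfg (fun x => sc p q τ (x - y)) ((sc_smooth hq.smooth p τ).comp (by fun_prop))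
      ((hq.sc_compact p hτ).comp_homeomorph (Homeomorph.subRight y)) ?_
    · rw [mol, ← this, lapR_shift, lapR_sc hq.smooth]
    · refine (closure_minimal (fun x hx => ?_) isClosed_closedBall).trans hO
      by_contra h
      apply hx
      refine sc_supp hq.zero p hτ ?_
      simpa [dist_eq_norm] using h
  rw [e1]
  obtain ⟨C, hC, hb⟩ := hq.lapR.sc_bdd (p + 2) (half_pos hτ)
  have key := hasDerivAt_integral_of_dominated_loc_of_deriv_le (μ := volume) (𝕜 := ℝ)
    (F := fun t x => sc (p + 1) k t (x - y) • f x)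
    (F' := fun t x => sc (p + 2) (lapR q) t (x - y) • f x) (x₀ := τ)
    (bound := (closedBall y (2 * τ)).indicator (fun x => C * ‖f x‖))
    (s := Set.Ioo (τ / 2) (2 * τ)) (Ioo_mem_nhds (by linarith) (by linarith)) ?_ ?_ ?_ ?_ ?_ ?_
  · exact key.2
  · filter_upwards [lt_mem_nhds hτ] with t ht
    exact (kf_integrable hf (sc_smooth hk.smooth _ t).continuous
      (hk.sc_compact _ ht) y).aestronglyMeasurable
  · exact kf_integrable hf (sc_smooth hk.smooth _ τ).continuous (hk.sc_compact _ hτ) y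
  · exact (kf_integrable hf (sc_smooth hq.lapR.smooth _ τ).continuous
      (hq.lapR.sc_compact _ hτ) y).aestronglyMeasurable
  · refine Eventually.of_forall (fun x t ht => ?_)
    have ht0 : 0 < t := by linarith [ht.1]
    by_cases hx : x ∈ closedBall y (2 * τ)
    · rw [Set.indicator_of_mem hx, norm_smul]
      gcongr
      exact hb t ht.1.le _
    · rw [Set.indicator_of_notMem hx, sc_supp hq.lapR.zero _ ht0, zero_smul, norm_zero]
      rw [mem_closedBall, dist_eq_norm, not_le] at hx
      linarith [ht.2]
  · rw [integrable_indicator_iff measurableSet_closedBall]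
    exact ((hf.integrableOn_isCompact (isCompact_closedBall _ _)).norm).const_mul C
  · refine Eventually.of_forall (fun x t ht => ?_)
    have ht0 : 0 < t := by linarith [ht.1]
    have := (sc_hasDeriv hk.smooth (p + 1) ht0 (x - y)).smul_const (f x)
    rw [hkq] at this
    exact this

end Kernels

/-! ### Bounds for kernel averages -/

section Mollify
variable {d : ℕ}

theorem mol_eq_conv (k : Ed d → ℝ) (f : Ed d → ℂ) :
    mol k f = convolution f (fun z => k (-z)) (ContinuousLinearMap.lsmul ℝ ℝ).flip volume := by
  funext y
  simp [mol, convolution]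

theorem KKneg_compact {k : Ed d → ℝ} (hs : HasCompactSupport k) :
    HasCompactSupport (fun z => k (-z)) := hs.comp_homeomorph (Homeomorph.neg _)

theorem mol_smooth {f : Ed d → ℂ} (hf : LocallyIntegrable f) {k : Ed d → ℝ}
    (hk : ContDiff ℝ (⊤ : ℕ∞) k) (hs : HasCompactSupport k) : ContDiff ℝ (⊤ : ℕ∞) (mol k f) := by
  rw [mol_eq_conv]
  exact (KKneg_compact hs).contDiff_convolution_right _ hf (hk.comp contDiff_neg)

theorem pd_mol {f : Ed d → ℂ} (hf : LocallyIntegrable f) {k : Ed d → ℝ}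
    (hk : ContDiff ℝ (⊤ : ℕ∞) k) (hs : HasCompactSupport k) (i : Fin d) :
    pd (mol k f) i = fun y => -mol (dv k i) f y := by
  funext y
  have hk' : ContDiff ℝ 1 (fun z : Ed d => k (-z)) := (hk.of_le (by simp)).comp contDiff_neg
  have h := (KKneg_compact hs).hasFDerivAt_convolution_right
    ((ContinuousLinearMap.lsmul ℝ ℝ).flip : ℂ →L[ℝ] ℝ →L[ℝ] ℂ) hf hk' y
  rw [mol_eq_conv, pd, h.fderiv, convolution_precompR_apply _ hf ((KKneg_compact hs).fderiv ℝ)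
    (hk'.continuous_fderiv one_ne_zero), convolution, mol, ← integral_neg]
  refine integral_congr_ae (Eventually.of_forall fun x => ?_)
  have h2 : HasFDerivAt (fun z : Ed d => k (-z))
      ((fderiv ℝ k (-(y - x))).comp (-ContinuousLinearMap.id ℝ (Ed d))) (y - x) :=
    ((hk.differentiable (by simp) _).hasFDerivAt).comp (y - x) (hasFDerivAt_id (y - x)).neg
  simp only [h2.fderiv]
  simp [dv, bv]

/-- In dimension at most three the kernel `τ^(1-d) q(x/τ)` has `L²` norm of order `τ^(-1/2)`, which
is integrable in `τ`. -/
theorem n2_sc {q : Ed d → ℝ} (p : ℕ) (hp : p + 1 = d) (hd : d = 2 ∨ d = 3) {τ : ℝ} (hτ : 0 < τ)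
    (h1 : τ ≤ 1) (y : Ed d) : n2 (fun x => sc p q τ (x - y)) ≤ (√τ)⁻¹ * n2 q := by
  have e : ∫ x, ‖sc p q τ (x - y)‖ ^ 2 = ((τ ^ p)⁻¹) ^ 2 * τ ^ d * ∫ x, ‖q x‖ ^ 2 := by
    rw [integral_sub_right_eq_self (fun x => ‖sc p q τ x‖ ^ 2) y]
    simp only [sc, norm_mul, mul_pow, integral_const_mul]
    rw [Measure.integral_comp_inv_smul volume (fun x => ‖q x‖ ^ 2) τ]
    simp [abs_of_pos hτ]
    ring
  have e2 : ((τ ^ p)⁻¹) ^ 2 * τ ^ d ≤ ((√τ)⁻¹) ^ 2 := by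
    rw [inv_pow (√τ), Real.sq_sqrt hτ.le]
    rcases hd with h | h
    · have : p = 1 := by omega
      subst this; subst h
      have : ((τ ^ 1)⁻¹) ^ 2 * τ ^ 2 = 1 := by field_simp
      rw [this]
      exact (one_le_inv₀ hτ).2 h1
    · have : p = 2 := by omega
      subst this; subst h
      refine le_of_eq ?_
      field_simp
  simp only [n2]
  rw [e]
  calc √(((τ ^ p)⁻¹) ^ 2 * τ ^ d * ∫ x, ‖q x‖ ^ 2) ≤ √(((√τ)⁻¹) ^ 2 * ∫ x, ‖q x‖ ^ 2) := by
        gcongr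
    _ = _ := by
        rw [Real.sqrt_mul (by positivity), Real.sqrt_sq (by positivity)]

theorem mol_le_L2 {q : Ed d → ℝ} (hq : KK q) {g : Ed d → ℂ} (hg : MemLp g 2) (p : ℕ)
    (hp : p + 1 = d) (hd : d = 2 ∨ d = 3) {τ : ℝ} (hτ : 0 < τ) (h1 : τ ≤ 1) (y : Ed d) :
    ‖mol (sc p q τ) g y‖ ≤ n2 q * n2 g * (√τ)⁻¹ := by
  have hm : MemLp (fun x => sc p q τ (x - y)) 2 :=
    ((sc_smooth hq.smooth p τ).continuous.comp (by fun_prop)).memLp_of_hasCompactSupport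
      ((hq.sc_compact p hτ).comp_homeomorph (Homeomorph.subRight y))
  calc ‖mol (sc p q τ) g y‖ ≤ ∫ x, ‖sc p q τ (x - y) • g x‖ := norm_integral_le_integral_norm _
    _ = ∫ x, ‖sc p q τ (x - y)‖ * ‖g x‖ := by simp only [norm_smul]
    _ ≤ n2 (fun x => sc p q τ (x - y)) * n2 g := cauchy_schwarz hm hg
    _ ≤ ((√τ)⁻¹ * n2 q) * n2 g := by
        gcongr
        · exact n2_nonneg _
        · exact n2_sc p hp hd hτ h1 y
    _ = _ := by ring

theorem int_sc {q : Ed d → ℝ} {τ : ℝ} (hτ : 0 < τ) (y : Ed d) :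
    ∫ x, sc d q τ (x - y) = ∫ x, q x := by
  rw [integral_sub_right_eq_self (fun x => sc d q τ x) y]
  simp only [sc, integral_const_mul]
  rw [Measure.integral_comp_inv_smul volume q τ]
  have : (τ ^ d : ℝ) ≠ 0 := by positivity
  simp [abs_of_pos hτ, this]

theorem mol_le_sup {q : Ed d → ℝ} (hq : KK q) {g : Ed d → ℂ} {G τ : ℝ} (hτ : 0 < τ) {y : Ed d}
    (hG : ∀ x ∈ closedBall y τ, ‖g x‖ ≤ G) :
    ‖mol (sc d q τ) g y‖ ≤ G * ∫ x, ‖q x‖ := by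
  have e : ∫ x, ‖sc d q τ (x - y)‖ = ∫ x, ‖q x‖ := by
    rw [← int_sc (q := fun x => ‖q x‖) hτ y]
    simp [sc, abs_of_pos hτ]
  rw [← e, ← integral_const_mul]
  refine norm_integral_le_of_norm_le ?_ (Eventually.of_forall fun x => ?_)
  · refine Integrable.const_mul (Integrable.norm ?_) _
    exact ((sc_smooth hq.smooth d τ).continuous.comp (by fun_prop)).integrable_of_hasCompactSupport
      ((hq.sc_compact d hτ).comp_homeomorph (Homeomorph.subRight y))
  · rw [norm_smul, mul_comm]
    by_cases hx : x ∈ closedBall y τ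
    · gcongr; exact hG x hx
    · rw [sc_supp hq.zero d hτ (by simpa [dist_eq_norm] using hx)]; simp

/-- A curve whose speed at time `t` is at most `C/√t` is Hölder-`1/2` at the origin. -/
theorem sqrt_cauchy {F F' : ℝ → ℂ} {r C : ℝ} (hC : 0 ≤ C)
    (h : ∀ t, 0 < t → t ≤ r → HasDerivAt F (F' t) t)
    (hb : ∀ t, 0 < t → t ≤ r → ‖F' t‖ ≤ C * (√t)⁻¹) {s t : ℝ} (hs : 0 < s) (hst : s ≤ t)
    (ht : t ≤ r) : ‖F t - F s‖ ≤ 2 * C * √t := by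
  have key := (convex_Icc (√s) (√t)).norm_image_sub_le_of_norm_hasDerivWithin_le
    (f := fun a : ℝ => F (a ^ 2)) (f' := fun a => (2 * a) • F' (a ^ 2)) (C := 2 * C)
    (x := √s) (y := √t) ?_ ?_ ⟨le_rfl, Real.sqrt_le_sqrt hst⟩ ⟨Real.sqrt_le_sqrt hst, le_rfl⟩
  · simp only [Real.sq_sqrt hs.le, Real.sq_sqrt (hs.le.trans hst)] at key
    refine key.trans ?_
    rw [Real.norm_of_nonneg (sub_nonneg.2 (Real.sqrt_le_sqrt hst))]
    gcongr
    linarith [Real.sqrt_nonneg s]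
  · intro a ha
    have ha0 : 0 < a := (Real.sqrt_pos.2 hs).trans_le ha.1
    have h2 : a ^ 2 ≤ r := by
      have : a ^ 2 ≤ √t ^ 2 := by gcongr; exact ha.2
      rw [Real.sq_sqrt (hs.le.trans hst)] at this
      linarith
    have h3 : HasDerivAt (fun a : ℝ => a ^ 2) (2 * a) a := by simpa using hasDerivAt_pow 2 a
    exact (HasDerivAt.scomp (h := fun a : ℝ => a ^ 2) a (h (a ^ 2) (by positivity) h2) h3).hasDerivWithinAt
  · intro a ha
    have ha0 : 0 < a := (Real.sqrt_pos.2 hs).trans_le ha.1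
    have h2 : a ^ 2 ≤ r := by
      have : a ^ 2 ≤ √t ^ 2 := by gcongr; exact ha.2
      rw [Real.sq_sqrt (hs.le.trans hst)] at this
      linarith
    rw [norm_smul, Real.norm_of_nonneg (by positivity)]
    calc 2 * a * ‖F' (a ^ 2)‖ ≤ 2 * a * (C * (√(a ^ 2))⁻¹) := by
          gcongr
          exact hb _ (by positivity) h2
      _ = 2 * C := by rw [Real.sqrt_sq ha0.le]; field_simp

/-- `2∫ s(1-|x|²)` with `s = smoothTransition'`, the normalising constant of the kernels. -/
def kmass (d : ℕ) : ℝ := ∫ x : Ed d, 2 * deriv Real.smoothTransition (1 - ‖x‖ ^ 2)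

/-- The kernel whose gradient is `-x rho`. -/
def K0 (x : Ed d) : ℝ := Real.smoothTransition (1 - ‖x‖ ^ 2) / kmass d

/-- The mollifying kernel. -/
def rho (x : Ed d) : ℝ := 2 * deriv Real.smoothTransition (1 - ‖x‖ ^ 2) / kmass d

end Mollify

/-! ### The mollifying kernel -/

section Rho
variable {d : ℕ}

theorem sT_deriv_nonneg (t : ℝ) : 0 ≤ deriv Real.smoothTransition t :=
  Real.smoothTransition.monotone.deriv_nonneg

theorem sT_deriv_smooth : ContDiff ℝ (⊤ : ℕ∞) (deriv Real.smoothTransition) := by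
  have h : ContDiff ℝ (⊤ : ℕ∞) (Real.smoothTransition : ℝ → ℝ) := Real.smoothTransition.contDiff
  exact ((contDiff_infty_iff_deriv).1 h).2

theorem one_sub_sq_smooth : ContDiff ℝ (⊤ : ℕ∞) (fun x : Ed d => 1 - ‖x‖ ^ 2) :=
  contDiff_const.sub (contDiff_norm_sq ℝ)

theorem KK_comp {s : ℝ → ℝ} (hs : ContDiff ℝ (⊤ : ℕ∞) s) (h0 : ∀ t < 0, s t = 0) (m : ℝ) :
    KK (fun x : Ed d => s (1 - ‖x‖ ^ 2) / m) := by
  refine ⟨(hs.comp one_sub_sq_smooth).div_const m, fun z hz => ?_⟩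
  rw [h0 _ (by nlinarith), zero_div]

theorem K0_KK : KK (K0 : Ed d → ℝ) :=
  KK_comp Real.smoothTransition.contDiff (fun _ ht => Real.smoothTransition.zero_of_nonpos ht.le) _

theorem rho_KK : KK (rho : Ed d → ℝ) :=
  KK_comp (s := fun t => 2 * deriv Real.smoothTransition t) (contDiff_const.mul sT_deriv_smooth)
    (fun t ht => by
      have := sT_deriv_zero (t := t) (fun h => by linarith [h.1])
      simp [this]) _

theorem kmass_pos [NeZero d] : 0 < kmass d := by
  have hc : Continuous (fun x : Ed d => 2 * deriv Real.smoothTransition (1 - ‖x‖ ^ 2)) :=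
    continuous_const.mul (sT_deriv_smooth.continuous.comp one_sub_sq_smooth.continuous)
  obtain ⟨t, ht, h1⟩ := exists_deriv_eq_slope Real.smoothTransition (zero_lt_one)
    (Real.smoothTransition.continuous.continuousOn)
    ((Real.smoothTransition.contDiff (n := 1)).differentiable one_ne_zero).differentiableOn
  have hK := (KK_comp (d := d) (s := fun t => 2 * deriv Real.smoothTransition t)
    (contDiff_const.mul sT_deriv_smooth)
    (fun t ht => by
      have := sT_deriv_zero (t := t) (fun h => by linarith [h.1])
      simp [this]) 1).compact
  simp only [div_one] at hK
  refine Continuous.integral_pos_of_hasCompactSupport_nonneg_nonzero hc hK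
    (x := √(1 - t) • bv 0)
    (fun x => mul_nonneg zero_le_two (sT_deriv_nonneg _)) ?_
  have : ‖√(1 - t) • (bv 0 : Ed d)‖ ^ 2 = 1 - t := by
    rw [norm_smul, mul_pow, Real.norm_eq_abs, sq_abs, Real.sq_sqrt (by linarith [ht.2])]
    simp [bv]
  simp only [this, sub_sub_cancel, h1]
  simp [Real.smoothTransition.zero, Real.smoothTransition.one]

theorem rho_nonneg [NeZero d] (x : Ed d) : 0 ≤ rho x :=
  div_nonneg (mul_nonneg zero_le_two (sT_deriv_nonneg _)) kmass_pos.le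

theorem rho_int [NeZero d] : ∫ x : Ed d, rho x = 1 := by
  simp only [rho]
  rw [integral_div]
  exact div_self kmass_pos.ne'

theorem dv_K0 (i : Fin d) : dv (K0 : Ed d → ℝ) i = fun x => -(x i) * rho x := by
  funext x
  have h1 : HasFDerivAt (fun x : Ed d => 1 - ‖x‖ ^ 2) (-(2 • (innerSL ℝ x))) x :=
    (hasStrictFDerivAt_norm_sq x).hasFDerivAt.const_sub 1
  have h2 := (((sT_hasDeriv (1 - ‖x‖ ^ 2)).comp_hasFDerivAt x h1).mul_const (kmass d)⁻¹)
  have h3 : fderiv ℝ (K0 : Ed d → ℝ) x = _ := HasFDerivAt.fderiv (f := (K0 : Ed d → ℝ)) h2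
  rw [dv, h3]
  simp [rho, bv, EuclideanSpace.inner_single_right]
  ring

/-- The scale derivative of the mollifier is a Laplacian. -/
theorem lap_K0 : lapR (K0 : Ed d → ℝ) = k1 d rho := by
  funext x
  have hr := (rho_KK (d := d)).smooth
  have h : ∀ i, dv (dv (K0 : Ed d → ℝ) i) i x = -rho x - x i * dv rho i x := by
    intro i
    rw [dv_K0, dv]
    have h1 : HasFDerivAt (fun x : Ed d => -(x i)) (-(EuclideanSpace.proj (𝕜 := ℝ) i)) x :=
      HasFDerivAt.fun_neg (EuclideanSpace.proj (𝕜 := ℝ) i).hasFDerivAt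
    have h2 := h1.fun_mul (hr.differentiable (by simp) x).hasFDerivAt
    rw [h2.fderiv]
    simp [dv, bv]
    ring
  simp only [lapR, h, k1, fderivR_eq_sum]
  simp [Finset.sum_sub_distrib]

theorem dv_add_fun {f g : Ed d → ℝ} {x : Ed d} (hf : DifferentiableAt ℝ f x)
    (hg : DifferentiableAt ℝ g x) (i : Fin d) :
    dv (fun x => f x + g x) i x = dv f i x + dv g i x := by
  rw [dv, fderiv_fun_add hf hg]; rfl

theorem dv_lapR {f : Ed d → ℝ} (hf : ContDiff ℝ (⊤ : ℕ∞) f) (i : Fin d) :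
    dv (lapR f) i = lapR (dv f i) := by
  funext x
  have : lapR f = fun x => ∑ j, dv (dv f j) j x := rfl
  rw [this, dv, fderiv_fun_sum (fun j _ =>
    ((dv_smooth (dv_smooth hf j) j).differentiable (by simp) x)), sum_apply]
  refine Finset.sum_congr rfl fun j _ => ?_
  change dv (dv (dv f j) j) i x = _
  rw [dv_comm (dv_smooth hf j) j i, dv_comm hf j i]

/-- The scale derivative of the gradient kernel is a Laplacian. -/
theorem lap_dv_K0 (i : Fin d) : lapR (dv (K0 : Ed d → ℝ) i) = k1 (d + 1) (dv rho i) := by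
  have hr := (rho_KK (d := d)).smooth
  rw [← dv_lapR K0_KK.smooth, lap_K0]
  funext x
  have hk : (k1 d (rho : Ed d → ℝ)) = fun z => -d * rho z - ∑ j, z j * dv rho j z := by
    funext z; simp [k1, fderivR_eq_sum]
  have h0 : HasFDerivAt (fun z : Ed d => -(d : ℝ) * rho z) (-(d : ℝ) • fderiv ℝ rho x) x :=
    (hr.differentiable (by simp) x).hasFDerivAt.const_mul _
  have hj : ∀ j ∈ Finset.univ, HasFDerivAt (fun z : Ed d => z j * dv rho j z)
      (x j • fderiv ℝ (dv rho j) x + dv rho j x • (EuclideanSpace.proj j)) x := fun j _ =>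
    HasFDerivAt.mul ((EuclideanSpace.proj (𝕜 := ℝ) j).hasFDerivAt (x := x))
      ((dv_smooth hr j).differentiable (by simp) x).hasFDerivAt
  have h2 := h0.fun_sub (HasFDerivAt.fun_sum hj)
  rw [hk, dv, HasFDerivAt.fderiv h2, k1, fderivR_eq_sum]
  have e : ∀ j, fderiv ℝ (dv (rho : Ed d → ℝ) j) x (bv i) = dv (dv rho i) j x := by
    intro j
    rw [dv_comm hr i j]; rfl
  simp only [sub_apply, smul_apply,
    sum_apply, add_apply, e, smul_eq_mul,
    Finset.sum_add_distrib]
  have e2 : ∑ j, dv (rho : Ed d → ℝ) j x * (EuclideanSpace.proj (𝕜 := ℝ) j) (bv i : Ed d)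
      = dv rho i x := by
    simp [bv]
  rw [e2, show fderiv ℝ (rho : Ed d → ℝ) x (bv i) = dv rho i x from rfl]
  push_cast
  ring

end Rho

/-! ### Interior regularity for the Poisson equation -/

section Reg
variable {d : ℕ}

/-- The scales `1/(n+1)`. -/
def ts (n : ℕ) : ℝ := 1 / ((n : ℝ) + 1)

theorem ts_pos (n : ℕ) : 0 < ts n := by unfold ts; positivity

theorem ts_le_one (n : ℕ) : ts n ≤ 1 := by
  unfold ts; rw [div_le_one (by positivity)]; linarith [n.cast_nonneg (α := ℝ)]

theorem ts_anti {n m : ℕ} (h : n ≤ m) : ts m ≤ ts n := by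
  unfold ts
  gcongr

theorem ts_tendsto : Tendsto ts atTop (𝓝 0) := tendsto_one_div_add_atTop_nhds_zero_nat

/-- The mollification of `f` at scale `1/(n+1)`. -/
def ms (f : Ed d → ℂ) (n : ℕ) : Ed d → ℂ := mol (sc d rho (ts n)) f

theorem rho_sc_int [NeZero d] {τ : ℝ} (hτ : 0 < τ) (y : Ed d) : ∫ x, sc d rho τ (x - y) = 1 := by
  rw [int_sc hτ, rho_int]

theorem mol_sub_const [NeZero d] {f : Ed d → ℂ} (hf : LocallyIntegrable f) {τ : ℝ} (hτ : 0 < τ)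
    (y : Ed d) (z : ℂ) :
    mol (sc d rho τ) (fun x => f x - z) y = mol (sc d rho τ) f y - z := by
  have h1 := kf_integrable hf (sc_smooth (rho_KK (d := d)).smooth d τ).continuous
    (rho_KK.sc_compact d hτ) y
  have h2 := kf_integrable (f := fun _ => z) (locallyIntegrable_const z)
    (sc_smooth (rho_KK (d := d)).smooth d τ).continuous (rho_KK.sc_compact d hτ) y
  simp only [mol, smul_sub]
  rw [integral_sub h1 h2, integral_smul_const, rho_sc_int hτ, one_smul]

theorem ms_tendsto_cont [NeZero d] {f : Ed d → ℂ} (hf : LocallyIntegrable f) {y : Ed d}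
    (hy : ContinuousAt f y) : Tendsto (fun n => ms f n y) atTop (𝓝 (f y)) := by
  rw [Metric.tendsto_atTop]
  intro ε hε
  obtain ⟨δ, hδ, h⟩ := Metric.continuousAt_iff.1 hy (ε / 2) (by linarith)
  obtain ⟨n0, hn0⟩ := (ts_tendsto.eventually_lt_const hδ).exists_forall_of_atTop
  refine ⟨n0, fun n hn => ?_⟩
  rw [dist_eq_norm, ms, ← mol_sub_const hf (ts_pos n)]
  refine (mol_le_sup rho_KK (ts_pos n) (G := ε / 2) fun x hx => ?_).trans_lt ?_
  · rw [← dist_eq_norm]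
    exact (h (lt_of_le_of_lt hx (hn0 n hn))).le
  · simp only [Real.norm_of_nonneg (rho_nonneg _), rho_int]
    linarith

theorem ms_tendsto_ae [NeZero d] {f : Ed d → ℂ} (hf : LocallyIntegrable f) :
    ∀ᵐ y, Tendsto (fun n => ms f n y) atTop (𝓝 (f y)) := by
  filter_upwards [IsUnifLocDoublingMeasure.ae_tendsto_average_norm_sub (volume : Measure (Ed d)) hf 1] with y hy
  have h1 := hy (l := atTop) (fun _ => y) ts
    (tendsto_nhdsWithin_iff.2 ⟨ts_tendsto, Eventually.of_forall ts_pos⟩)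
    (Eventually.of_forall fun n => mem_closedBall_self (by simpa using (ts_pos n).le))
  obtain ⟨C, hC, hb⟩ := (rho_KK (d := d)).bdd
  set V := volume.real (ball (0 : Ed d) 1) with hV
  have hVp : 0 < V := by
    rw [hV, measureReal_def]
    exact ENNReal.toReal_pos (measure_ball_pos _ _ one_pos).ne' measure_ball_lt_top.ne
  rw [tendsto_iff_norm_sub_tendsto_zero]
  refine squeeze_zero (fun _ => norm_nonneg _) (fun n => ?_)
    (by simpa using h1.const_mul (C * V))
  have hloc : LocallyIntegrable (fun x => f x - f y) := hf.sub (locallyIntegrable_const _)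
  rw [ms, ← mol_sub_const hf (ts_pos n)]
  have hv : volume.real (closedBall y (ts n)) = ts n ^ d * V := by
    rw [measureReal_def, Measure.addHaar_closedBall _ _ (ts_pos n).le, ENNReal.toReal_mul,
      ENNReal.toReal_ofReal (pow_nonneg (ts_pos n).le _), hV, measureReal_def]
    simp
  rw [setAverage_eq, hv, smul_eq_mul]
  have hp := pow_pos (ts_pos n) d
  have e : C * V * ((ts n ^ d * V)⁻¹ * ∫ x in closedBall y (ts n), ‖f x - f y‖)
      = ∫ x, (closedBall y (ts n)).indicator (fun x => (ts n ^ d)⁻¹ * C * ‖f x - f y‖) x := by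
    rw [integral_indicator measurableSet_closedBall, integral_const_mul]
    field_simp
  rw [e]
  refine norm_integral_le_of_norm_le ?_ (Eventually.of_forall fun x => ?_)
  · rw [integrable_indicator_iff measurableSet_closedBall]
    exact (hloc.integrableOn_isCompact (isCompact_closedBall _ _)).norm.const_mul _
  · by_cases hx : x ∈ closedBall y (ts n)
    · rw [Set.indicator_of_mem hx, norm_smul, sc, norm_mul, norm_inv, Real.norm_of_nonneg hp.le]
      gcongr
      exact hb _
    · rw [Set.indicator_of_notMem hx, sc_supp rho_KK.zero d (ts_pos n)
        (by simpa [dist_eq_norm] using hx)]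
      simp

theorem unif_lim {E : Type*} [NormedAddCommGroup E] [CompleteSpace E] {F : ℕ → Ed d → E}
    {s : Set (Ed d)} {ε : ℕ → ℝ} {n0 : ℕ} (hε : Tendsto ε atTop (𝓝 0))
    (h : ∀ n m, n0 ≤ n → n ≤ m → ∀ y ∈ s, ‖F n y - F m y‖ ≤ ε n)
    (hF : ∀ n, ContinuousOn (F n) s) :
    ∃ G : Ed d → E, ContinuousOn G s ∧ TendstoUniformlyOn F G atTop s := by
  have hc : ∀ y ∈ s, CauchySeq (fun n => F n y) := by
    intro y hy
    refine Metric.cauchySeq_iff'.2 fun e he => ?_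
    obtain ⟨N, hN⟩ := ((hε.eventually_lt_const he).and (eventually_ge_atTop n0)).exists
    refine ⟨N, fun n hn => ?_⟩
    rw [dist_comm, dist_eq_norm]
    exact (h N n hN.2 hn y hy).trans_lt hN.1
  have hl : ∀ y, ∃ g, y ∈ s → Tendsto (fun n => F n y) atTop (𝓝 g) := by
    intro y
    by_cases hy : y ∈ s
    · obtain ⟨g, hg⟩ := cauchySeq_tendsto_of_complete (hc y hy)
      exact ⟨g, fun _ => hg⟩
    · exact ⟨0, fun h => absurd h hy⟩
  choose G hG using hl
  have hu : TendstoUniformlyOn F G atTop s := by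
    rw [Metric.tendstoUniformlyOn_iff]
    intro e he
    filter_upwards [hε.eventually_lt_const he, eventually_ge_atTop n0] with n hn hn0 y hy
    rw [dist_comm, dist_eq_norm]
    refine lt_of_le_of_lt ?_ hn
    refine le_of_tendsto (((hG y hy).const_sub (F n y)).norm) ?_
    filter_upwards [eventually_ge_atTop n] with m hm
    exact h n m hn0 hm y hy
  exact ⟨G, hu.continuousOn (Frequently.of_forall hF), hu⟩

/-- An `L²` function with `L²` distributional Laplacian on `O` is continuous on `O`
(after modification on a null set), in dimension at most three. -/
theorem reg0 [NeZero d] (hd : d = 2 ∨ d = 3) {O : Set (Ed d)} (hO : IsOpen O) {f g : Ed d → ℂ}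
    (hf : MemLp f 2) (hg : MemLp g 2) (hfg : DistEq O f g) :
    ∃ F : Ed d → ℂ, ContinuousOn F O ∧ ∀ᵐ x, x ∈ O → F x = f x := by
  have hfl : LocallyIntegrable f := hf.locallyIntegrable (by norm_num)
  obtain ⟨p, hp⟩ : ∃ p, p + 1 = d := ⟨d - 1, by have := NeZero.pos d; omega⟩
  refine ⟨fun y => limUnder atTop (fun n => ms f n y), ?_, ?_⟩
  swap
  · filter_upwards [ms_tendsto_ae hfl] with y hy _
    exact hy.limUnder_eq
  set C := n2 (K0 : Ed d → ℝ) * n2 g with hC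
  have hC0 : 0 ≤ C := mul_nonneg (n2_nonneg _) (n2_nonneg _)
  intro y0 hy0
  obtain ⟨r, hr, hball⟩ := Metric.isOpen_iff.1 hO y0 hy0
  obtain ⟨n0, hn0⟩ := (ts_tendsto.eventually_lt_const (half_pos hr)).exists
  have key : ∃ G, ContinuousOn G (ball y0 (r / 2)) ∧
      TendstoUniformlyOn (ms f) G atTop (ball y0 (r / 2)) := by
    refine unif_lim (F := ms f) (s := ball y0 (r / 2)) (n0 := n0)
      (ε := fun n => 2 * C * √(ts n))
      (by
        have := (Real.continuous_sqrt.tendsto 0).comp ts_tendsto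
        simpa using this.const_mul (2 * C)) ?_ ?_
    · intro n m hn hnm y hy
      refine sqrt_cauchy (F := fun t => mol (sc d rho t) f y) (r := r / 2 ⊓ 1) hC0
        (F' := fun t => -mol (sc p K0 t) g y) ?_ ?_ (ts_pos m) (ts_anti hnm) ?_
      · intro t ht htr
        have hk : k1 (p + 1) (rho : Ed d → ℝ) = lapR K0 := by rw [lap_K0, hp]
        have := mol_hasDeriv hfl hfg (rho_KK (d := d)) K0_KK hk ht (y := y) ?_
        · rw [hp] at this
          exact this
        · refine Set.Subset.trans (fun x hx => ?_) hball
          rw [mem_ball] at hy ⊢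
          rw [mem_closedBall] at hx
          have := dist_triangle x y y0
          have := htr.trans inf_le_left
          linarith
      · intro t ht htr
        rw [norm_neg]
        exact mol_le_L2 K0_KK hg p hp hd ht (htr.trans inf_le_right) y
      · exact le_inf ((ts_anti hn).trans hn0.le) (ts_le_one n)
    · intro n
      exact (mol_smooth hfl (sc_smooth rho_KK.smooth d _)
        (rho_KK.sc_compact d (ts_pos n))).continuous.continuousOn
  obtain ⟨G, hGc, hG⟩ := key
  have heq : ∀ y ∈ ball y0 (r / 2), limUnder atTop (fun n => ms f n y) = G y := fun y hy =>
    (hG.tendsto_at hy).limUnder_eq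
  have hm : ball y0 (r / 2) ∈ 𝓝 y0 := ball_mem_nhds _ (half_pos hr)
  refine (((hGc y0 (mem_ball_self (half_pos hr))).continuousAt hm).congr ?_).continuousWithinAt
  filter_upwards [hm] with y hy using (heq y hy).symm

/-- A continuous function with locally bounded distributional Laplacian is `C¹`. -/
theorem reg1 [NeZero d] {O : Set (Ed d)} (hO : IsOpen O) {f g : Ed d → ℂ}
    (hf : ContinuousOn f O)
    (hg : ∀ y ∈ O, ∃ r > 0, ∃ G, ∀ x ∈ ball y r, ‖g x‖ ≤ G) (hfg : DistEq O f g) :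
    ContDiffOn ℝ 1 f O := by
  intro y0 hy0
  refine ContDiffAt.contDiffWithinAt ?_
  obtain ⟨r0, hr0, hball⟩ := Metric.isOpen_iff.1 hO y0 hy0
  obtain ⟨r1, hr1, G, hG⟩ := hg y0 hy0
  set r := min (min r0 r1 / 4) 1 with hr
  have hrp : 0 < r := by positivity
  have hrl : 4 * r ≤ min r0 r1 := by
    have := min_le_left (min r0 r1 / 4) 1
    rw [← hr] at this; linarith
  have hG0 : 0 ≤ G := (norm_nonneg _).trans (hG y0 (mem_ball_self hr1))
  set B := closedBall y0 (3 * r) with hB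
  have hB0 : B ⊆ ball y0 r0 := closedBall_subset_ball (by linarith [min_le_left r0 r1])
  have hB1 : B ⊆ ball y0 r1 := closedBall_subset_ball (by linarith [min_le_right r0 r1])
  have hBc : IsCompact B := isCompact_closedBall _ _
  set f' := B.indicator f with hf'
  set g' := B.indicator g with hg'
  have hfi : Integrable f' := by
    rw [hf', integrable_indicator_iff measurableSet_closedBall]
    exact (hf.mono (hB0.trans hball)).integrableOn_compact hBc
  have hfl : LocallyIntegrable f' := hfi.locallyIntegrable
  have hg'b : ∀ x, ‖g' x‖ ≤ G := by
    intro x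
    by_cases hx : x ∈ B
    · rw [hg', Set.indicator_of_mem hx]; exact hG x (hB1 hx)
    · rw [hg', Set.indicator_of_notMem hx, norm_zero]; exact hG0
  have hfg' : DistEq (ball y0 (3 * r)) f' g' := by
    intro φ h1 h2 h3
    have key := hfg φ h1 h2 (h3.trans ((ball_subset_closedBall.trans hB0).trans hball))
    have hφ : ∀ x ∉ B, φ x = 0 ∧ lapR φ x = 0 := by
      intro x hx
      have hx' : x ∉ tsupport φ := fun h => hx (ball_subset_closedBall (h3 h))
      exact ⟨image_eq_zero_of_notMem_tsupport hx', Finset.sum_eq_zero fun i _ =>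
        image_eq_zero_of_notMem_tsupport fun h => hx' (dv_supp _ i (dv_supp _ i h))⟩
    have e1 : ∀ x, lapR φ x • f' x = lapR φ x • f x := by
      intro x
      by_cases hx : x ∈ B
      · rw [hf', Set.indicator_of_mem hx]
      · rw [(hφ x hx).2]; simp
    have e2 : ∀ x, φ x • g' x = φ x • g x := by
      intro x
      by_cases hx : x ∈ B
      · rw [hg', Set.indicator_of_mem hx]
      · rw [(hφ x hx).1]; simp
    simp only [e1, e2]
    exact key
  have hsub : ∀ y ∈ ball y0 r, ∀ t ≤ r, closedBall y t ⊆ ball y0 (3 * r) := by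
    intro y hy t ht x hx
    rw [mem_ball] at hy ⊢
    rw [mem_closedBall] at hx
    linarith [dist_triangle x y y0]
  have hms : ∀ n, ContDiff ℝ (⊤ : ℕ∞) (ms f' n) := fun n =>
    mol_smooth hfl (sc_smooth rho_KK.smooth d _) (rho_KK.sc_compact d (ts_pos n))
  set D := ∑ i : Fin d, G * ∫ x, ‖dv (K0 : Ed d → ℝ) i x‖ with hD
  obtain ⟨n0, hn0⟩ := (ts_tendsto.eventually_lt_const hrp).exists
  have key : ∃ G, ContinuousOn G (ball y0 r) ∧
      TendstoUniformlyOn (fun n => fderiv ℝ (ms f' n)) G atTop (ball y0 r) := by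
    refine unif_lim (F := fun n => fderiv ℝ (ms f' n)) (s := ball y0 r) (n0 := n0)
      (ε := fun n => 2 * D * √(ts n))
      (by
        have := (Real.continuous_sqrt.tendsto 0).comp ts_tendsto
        simpa using this.const_mul (2 * D)) ?_ ?_
    · intro n m hn hnm y hy
      have e : fderiv ℝ (ms f' n) y - fderiv ℝ (ms f' m) y
          = fderiv ℝ (fun x => ms f' n x - ms f' m x) y :=
        (fderiv_fun_sub ((hms n).differentiable (by simp) y)
          ((hms m).differentiable (by simp) y)).symm
      rw [e]
      refine (norm_fderiv_le _).trans ?_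
      rw [hD, Finset.mul_sum, Finset.sum_mul]
      refine Finset.sum_le_sum fun i _ => ?_
      have e2 : pd (fun x => ms f' n x - ms f' m x) i y
          = -mol (sc (d + 1) (dv rho i) (ts n)) f' y - -mol (sc (d + 1) (dv rho i) (ts m)) f' y := by
        have h : ∀ n, pd (ms f' n) i y = -mol (sc (d + 1) (dv rho i) (ts n)) f' y := fun n => by
          rw [ms, pd_mol hfl (sc_smooth rho_KK.smooth d _) (rho_KK.sc_compact d (ts_pos n)),
            dv_sc rho_KK.smooth]
        rw [← h n, ← h m, pd, fderiv_fun_sub ((hms n).differentiable (by simp) y)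
          ((hms m).differentiable (by simp) y)]
        rfl
      rw [e2]
      refine sqrt_cauchy (F := fun t => -mol (sc (d + 1) (dv rho i) t) f' y) (r := r)
        (F' := fun t => - -mol (sc d (dv K0 i) t) g' y)
        (mul_nonneg hG0 (integral_nonneg fun _ => norm_nonneg _)) ?_ ?_ (ts_pos m) (ts_anti hnm)
        ((ts_anti hn).trans hn0.le)
      · intro t ht htr
        exact (mol_hasDeriv hfl hfg' (rho_KK.dv i) (K0_KK.dv i) (lap_dv_K0 i).symm ht
          (hsub y hy t htr)).neg
      · intro t ht htr
        rw [neg_neg]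
        refine (mol_le_sup (K0_KK.dv i) ht (fun x _ => hg'b x)).trans ?_
        refine le_mul_of_one_le_right
          (mul_nonneg hG0 (integral_nonneg fun _ => norm_nonneg _)) ?_
        refine (one_le_inv₀ (Real.sqrt_pos.2 ht)).2 (Real.sqrt_le_one.2 (htr.trans (min_le_right _ _)))
    · intro n
      exact ((hms n).continuous_fderiv (by simp)).continuousOn
  obtain ⟨L, hLc, hL⟩ := key
  rw [show (1 : WithTop ℕ∞) = 1 from rfl, contDiffAt_one_iff]
  refine ⟨L, ball y0 r, ball_mem_nhds _ hrp, hLc, fun y hy => ?_⟩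
  refine hasFDerivAt_of_tendstoUniformlyOn isOpen_ball hL
    (fun n x _ => ((hms n).differentiable (by simp) x).hasFDerivAt) (fun x hx => ?_) hy
  have hxB : B ∈ 𝓝 x := by
    refine mem_of_superset (isOpen_ball.mem_nhds hx)
      (ball_subset_closedBall.trans (closedBall_subset_closedBall (by linarith)))
  have hev : f' =ᶠ[𝓝 x] f := by
    filter_upwards [hxB] with z hz
    rw [hf', Set.indicator_of_mem hz]
  have hcx : ContinuousAt f x :=
    hf.continuousAt (hO.mem_nhds (hball (hB0 (mem_of_mem_nhds hxB))))
  rw [← hev.eq_of_nhds]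
  exact ms_tendsto_cont hfl (hcx.congr hev.symm)

end Reg

/-! ### Tangential regularity -/

section Boot
variable {d : ℕ}

theorem bv_line (x : Ed d) (i : Fin d) {F : Ed d → ℂ} (hF : DifferentiableAt ℝ F x) :
    HasLineDerivAt ℝ F (pd F i x) x (bv i) := hF.hasFDerivAt.hasLineDerivAt _

theorem pd_contOn {O : Set (Ed d)} (hO : IsOpen O) {F : Ed d → ℂ} (hF : ContDiffOn ℝ 1 F O)
    (i : Fin d) : ContinuousOn (pd F i) O :=
  (hF.continuousOn_fderiv_of_isOpen hO le_rfl).clm_apply continuousOn_const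

/-- A bounded measurable coefficient that does not depend on the `i`-th coordinate. -/
structure CInv (i : Fin d) (a : Ed d → ℂ) : Prop where
  meas : Measurable a
  bdd : ∃ K, ∀ x, ‖a x‖ ≤ K
  inv : ∀ x (t : ℝ), a (x + t • bv i) = a x

theorem ibp_global {i : Fin d} {a F : Ed d → ℂ} (ha : CInv i a) (hF : ContDiff ℝ 1 F)
    (hs : HasCompactSupport F) : ∫ x, a x * pd F i x = 0 := by
  obtain ⟨K, hK⟩ := ha.bdd
  have hpc : Continuous (pd F i) := (hF.continuous_fderiv one_ne_zero).clm_apply continuous_const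
  have hps : HasCompactSupport (pd F i) := by
    have := hs.fderiv_apply ℝ (bv i : Ed d)
    exact this
  have h1 : Integrable fun x => a x * pd F i x :=
    (hpc.integrable_of_hasCompactSupport hps).bdd_mul ha.meas.aestronglyMeasurable
      (ae_of_all _ hK)
  have h2 : Integrable fun x => a x * F x :=
    (hF.continuous.integrable_of_hasCompactSupport hs).bdd_mul ha.meas.aestronglyMeasurable
      (ae_of_all _ hK)
  have := integral_bilinear_hasLineDerivAt_right_eq_neg_left_of_integrable
    (B := ContinuousLinearMap.mul ℝ ℂ) (μ := volume) (f := a) (f' := fun _ => 0) (g := F)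
    (g' := pd F i) (v := (bv i : Ed d)) (by simp) h1 h2
    (fun x _ => by
      have : (fun t : ℝ => a (x + t • bv i)) = fun _ => a x := funext fun t => ha.inv x t
      rw [HasLineDerivAt, this]
      exact hasDerivAt_const _ _)
    (fun x _ => bv_line x i (hF.differentiable one_ne_zero x))
  simpa using this

theorem smul_global {O : Set (Ed d)} (hO : IsOpen O) {φ : Ed d → ℝ} {F : Ed d → ℂ}
    (hφ : ContDiff ℝ (⊤ : ℕ∞) φ) (hsO : tsupport φ ⊆ O) (hF : ContDiffOn ℝ 1 F O) :
    ContDiff ℝ 1 (fun x => φ x • F x) := by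
  rw [contDiff_iff_contDiffAt]
  intro x
  by_cases hx : x ∈ tsupport φ
  · exact (hφ.contDiffAt.of_le (by exact_mod_cast le_top)).smul
      (hF.contDiffAt (hO.mem_nhds (hsO hx)))
  · have : (fun x => φ x • F x) =ᶠ[𝓝 x] fun _ => 0 := by
      have h := (isClosed_tsupport φ).isOpen_compl.mem_nhds hx
      filter_upwards [h] with y hy
      rw [image_eq_zero_of_notMem_tsupport hy, zero_smul]
    exact contDiffAt_const.congr_of_eventuallyEq this

theorem ibp {O : Set (Ed d)} (hO : IsOpen O) {i : Fin d} {a F : Ed d → ℂ} (ha : CInv i a)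
    {φ : Ed d → ℝ} (hφ : ContDiff ℝ (⊤ : ℕ∞) φ) (hs : HasCompactSupport φ) (hsO : tsupport φ ⊆ O)
    (hF : ContDiffOn ℝ 1 F O) :
    ∫ x, dv φ i x • (a x * F x) = -∫ x, φ x • (a x * pd F i x) := by
  have hg := smul_global hO hφ hsO hF
  have hgs : HasCompactSupport fun x => φ x • F x := hs.smul_right
  have h0 := ibp_global ha hg hgs
  obtain ⟨K, hK⟩ := ha.bdd
  have hdvs : HasCompactSupport (dv φ i) := hs.mono' (subset_trans subset_closure (dv_supp φ i))
  have hg1 : ContDiff ℝ 1 (fun x => dv φ i x • F x) :=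
    smul_global hO (dv_smooth hφ i) ((dv_supp φ i).trans hsO) hF
  have hpF : ContinuousOn (pd F i) O :=
    pd_contOn hO hF i
  have hc2 : Continuous fun x => φ x • pd F i x := by
    rw [continuous_iff_continuousAt]
    intro x
    by_cases hx : x ∈ tsupport φ
    · exact hφ.continuous.continuousAt.smul (hpF.continuousAt (hO.mem_nhds (hsO hx)))
    · have : (fun x => φ x • pd F i x) =ᶠ[𝓝 x] fun _ => 0 := by
        filter_upwards [(isClosed_tsupport φ).isOpen_compl.mem_nhds hx] with y hy
        rw [image_eq_zero_of_notMem_tsupport hy, zero_smul]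
      exact continuousAt_const.congr this.symm
  have e : ∀ x, a x * pd (fun x => φ x • F x) i x
      = dv φ i x • (a x * F x) + φ x • (a x * pd F i x) := by
    intro x
    by_cases hx : x ∈ tsupport φ
    · have h1 := ((hφ.differentiable (by simp) x).hasFDerivAt.smul
        ((hF.differentiableOn one_ne_zero).differentiableAt
          (hO.mem_nhds (hsO hx))).hasFDerivAt).fderiv
      have h2 : pd (fun x => φ x • F x) i x = φ x • pd F i x + dv φ i x • F x := by
        rw [pd]
        refine (congrArg (fun L => L (EuclideanSpace.single i 1)) h1).trans ?_
        simp [pd, dv]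
      rw [h2]
      simp only [Complex.real_smul]
      ring
    · have h1 : φ x = 0 := image_eq_zero_of_notMem_tsupport hx
      have h2 : dv φ i x = 0 := image_eq_zero_of_notMem_tsupport fun h => hx (dv_supp φ i h)
      have h3 : pd (fun x => φ x • F x) i x = 0 := by
        have h4 : x ∉ tsupport (fun x => φ x • F x) := fun h => hx
          (closure_mono (Function.support_smul_subset_left φ F) h)
        have : fderiv ℝ (fun x => φ x • F x) x = 0 :=
          image_eq_zero_of_notMem_tsupport fun h => h4 (tsupport_fderiv_subset ℝ h)
        rw [pd, this]; rfl
      rw [h1, h2, h3]; simp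
  simp only [e] at h0
  have i1 : Integrable fun x => dv φ i x • (a x * F x) := by
    have := (hg1.continuous.integrable_of_hasCompactSupport hdvs.smul_right).bdd_mul
      ha.meas.aestronglyMeasurable (ae_of_all volume hK)
    refine this.congr (ae_of_all _ fun x => ?_)
    simp only [Complex.real_smul]; ring
  have i2 : Integrable fun x => φ x • (a x * pd F i x) := by
    have := (hc2.integrable_of_hasCompactSupport hs.smul_right).bdd_mul
      ha.meas.aestronglyMeasurable (ae_of_all volume hK)
    refine this.congr (ae_of_all _ fun x => ?_)
    simp only [Complex.real_smul]; ring
  rw [integral_add i1 i2] at h0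
  exact eq_neg_of_add_eq_zero_left h0

theorem smul_int {O : Set (Ed d)} (hO : IsOpen O) {a F : Ed d → ℂ} (ha : Measurable a)
    (hb : ∃ K, ∀ x, ‖a x‖ ≤ K)
    {φ : Ed d → ℝ} (hφ : ContDiff ℝ (⊤ : ℕ∞) φ) (hs : HasCompactSupport φ) (hsO : tsupport φ ⊆ O)
    (hF : ContinuousOn F O) : Integrable fun x => φ x • (a x * F x) := by
  obtain ⟨K, hK⟩ := hb
  have hc2 : Continuous fun x => φ x • F x := by
    rw [continuous_iff_continuousAt]
    intro x
    by_cases hx : x ∈ tsupport φ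
    · exact hφ.continuous.continuousAt.smul (hF.continuousAt (hO.mem_nhds (hsO hx)))
    · have : (fun x => φ x • F x) =ᶠ[𝓝 x] fun _ => 0 := by
        filter_upwards [(isClosed_tsupport φ).isOpen_compl.mem_nhds hx] with y hy
        rw [image_eq_zero_of_notMem_tsupport hy, zero_smul]
      exact continuousAt_const.congr this.symm
  have := (hc2.integrable_of_hasCompactSupport hs.smul_right).bdd_mul
    ha.aestronglyMeasurable (ae_of_all volume hK)
  refine this.congr (ae_of_all _ fun x => ?_)
  simp only [Complex.real_smul]; ring

/-- A coordinate derivative may be taken in the distributional Poisson equation when the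
coefficients do not depend on that coordinate. -/
theorem DistEq.deriv {ι : Type*} [Fintype ι] {O : Set (Ed d)} (hO : IsOpen O) {i : Fin d}
    {f : Ed d → ℂ} {a F : ι → Ed d → ℂ} (ha : ∀ j, CInv i (a j)) (hf : ContDiffOn ℝ 1 f O)
    (hF : ∀ j, ContDiffOn ℝ 1 (F j) O) (h : DistEq O f (fun x => ∑ j, a j x * F j x)) :
    DistEq O (pd f i) (fun x => ∑ j, a j x * pd (F j) i x) := by
  intro φ h1 h2 h3
  have k1 : CInv i (fun _ : Ed d => (1 : ℂ)) :=
    ⟨measurable_const, ⟨1, fun _ => by simp⟩, fun _ _ => rfl⟩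
  have hd2 : HasCompactSupport (dv φ i) := h2.mono' (subset_trans subset_closure (dv_supp φ i))
  have key := h (dv φ i) (dv_smooth h1 i) hd2 ((dv_supp φ i).trans h3)
  have hl : ContDiff ℝ (⊤ : ℕ∞) (lapR φ) :=
    ContDiff.sum fun j _ => dv_smooth (dv_smooth h1 j) j
  have hls' : tsupport (lapR φ) ⊆ tsupport φ := by
    refine closure_minimal (fun x hx => ?_) (isClosed_tsupport φ)
    by_contra hh
    exact hx (Finset.sum_eq_zero fun j _ => image_eq_zero_of_notMem_tsupport fun h =>
      hh (dv_supp _ j (dv_supp _ j h)))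
  have hls : HasCompactSupport (lapR φ) := h2.mono' (subset_trans subset_closure hls')
  have e1 := ibp hO k1 hl hls (hls'.trans h3) hf
  simp only [one_mul] at e1
  rw [← dv_lapR h1, e1] at key
  have e2 : ∫ x, dv φ i x • ∑ j, a j x * F j x = -∫ x, φ x • ∑ j, a j x * pd (F j) i x := by
    simp only [Finset.smul_sum]
    rw [integral_finsetSum _ fun j _ => smul_int hO (ha j).meas (ha j).bdd (dv_smooth h1 i) hd2
        ((dv_supp φ i).trans h3) (hF j).continuousOn,
      integral_finsetSum _ fun j _ => smul_int hO (ha j).meas (ha j).bdd h1 h2 h3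
        (pd_contOn hO (hF j) i),
      ← Finset.sum_neg_distrib]
    exact Finset.sum_congr rfl fun j _ => ibp hO (ha j) h1 h2 h3 (hF j)
  rw [e2] at key
  exact neg_injective key

/-- Iterated derivatives of order at most `k` in the directions of `S` all satisfy `A`. -/
def Tan (S : Set (Fin d)) (A : (Ed d → ℂ) → Prop) : ℕ → (Ed d → ℂ) → Prop
  | 0, f => A f
  | k + 1, f => A f ∧ ∀ i ∈ S, Tan S A k (pd f i)

/-- A self-conjugate local algebra of `C¹` functions on `O`. -/
structure CAlg (O : Set (Ed d)) (A : (Ed d → ℂ) → Prop) : Prop where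
  c1 : ∀ {f}, A f → ContDiffOn ℝ 1 f O
  congr : ∀ {f g}, A f → Set.EqOn f g O → A g
  add : ∀ {f g}, A f → A g → A (fun x => f x + g x)
  mul : ∀ {f g}, A f → A g → A (fun x => f x * g x)
  conj : ∀ {f}, A f → A (fun x => (starRingEnd ℂ) (f x))
  zero : A fun _ => 0

section tan
variable {S : Set (Fin d)} {A B : (Ed d → ℂ) → Prop} {O : Set (Ed d)} {f g : Ed d → ℂ} {k : ℕ}

theorem Tan.base (h : Tan S A k f) : A f := by
  cases k with
  | zero => exact h
  | succ k => exact h.1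

theorem Tan.pred (h : Tan S A (k + 1) f) : Tan S A k f := by
  induction k generalizing f with
  | zero => exact h.1
  | succ k ih => exact ⟨h.1, fun i hi => ih (h.2 i hi)⟩

theorem Tan.mono (hAB : ∀ f, A f → B f) (h : Tan S A k f) : Tan S B k f := by
  induction k generalizing f with
  | zero => exact hAB _ h
  | succ k ih => exact ⟨hAB _ h.1, fun i hi => ih (h.2 i hi)⟩

theorem pd_congrOn (hO : IsOpen O) (h : Set.EqOn f g O) (i : Fin d) :
    Set.EqOn (pd f i) (pd g i) O := by
  intro x hx
  have : f =ᶠ[𝓝 x] g := by filter_upwards [hO.mem_nhds hx] with y hy using h hy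
  rw [pd, this.fderiv_eq]; rfl

theorem Tan.congr (hA : CAlg O A) (hO : IsOpen O) (h : Tan S A k f) (hfg : Set.EqOn f g O) :
    Tan S A k g := by
  induction k generalizing f g with
  | zero => exact hA.congr h hfg
  | succ k ih => exact ⟨hA.congr h.1 hfg, fun i hi => ih (h.2 i hi) (pd_congrOn hO hfg i)⟩

theorem CAlg.da (hA : CAlg O A) (hO : IsOpen O) (h : A f) {x : Ed d} (hx : x ∈ O) :
    DifferentiableAt ℝ f x :=
  ((hA.c1 h).differentiableOn one_ne_zero).differentiableAt (hO.mem_nhds hx)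

theorem Tan.zero (hA : CAlg O A) : Tan S A k (fun _ => 0) := by
  have e : ∀ i : Fin d, pd (fun _ : Ed d => (0 : ℂ)) i = fun _ => 0 := fun i => by
    funext x; simp [pd]
  induction k with
  | zero => exact hA.zero
  | succ k ih => exact ⟨hA.zero, fun i _ => by rw [e]; exact ih⟩

theorem Tan.add (hA : CAlg O A) (hO : IsOpen O) (hf : Tan S A k f) (hg : Tan S A k g) :
    Tan S A k (fun x => f x + g x) := by
  induction k generalizing f g with
  | zero => exact hA.add hf hg
  | succ k ih =>
    refine ⟨hA.add hf.1 hg.1, fun i hi => (ih (hf.2 i hi) (hg.2 i hi)).congr hA hO fun x hx => ?_⟩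
    simp only [pd]
    rw [fderiv_fun_add (hA.da hO hf.1 hx) (hA.da hO hg.1 hx)]; rfl

theorem Tan.mul (hA : CAlg O A) (hO : IsOpen O) (hf : Tan S A k f) (hg : Tan S A k g) :
    Tan S A k (fun x => f x * g x) := by
  induction k generalizing f g with
  | zero => exact hA.mul hf hg
  | succ k ih =>
    refine ⟨hA.mul hf.1 hg.1, fun i hi =>
      ((ih hf.pred (hg.2 i hi)).add hA hO (ih (hf.2 i hi) hg.pred)).congr hA hO fun x hx => ?_⟩
    simp only [pd]
    rw [fderiv_fun_mul (hA.da hO hf.1 hx) (hA.da hO hg.1 hx)]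
    simp [mul_comm]

theorem Tan.conj (hA : CAlg O A) (hO : IsOpen O) (hf : Tan S A k f) :
    Tan S A k (fun x => (starRingEnd ℂ) (f x)) := by
  induction k generalizing f with
  | zero => exact hA.conj hf
  | succ k ih =>
    refine ⟨hA.conj hf.1, fun i hi => (ih (hf.2 i hi)).congr hA hO fun x hx => ?_⟩
    have := ((conjCLE : ℂ →L[ℝ] ℂ).hasFDerivAt.comp x (hA.da hO hf.1 hx).hasFDerivAt).fderiv
    simp only [pd]
    refine Eq.trans ?_ (congrArg (fun L => L (EuclideanSpace.single i 1)) this).symm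
    simp

theorem Tan.sum (hA : CAlg O A) (hO : IsOpen O) {ι : Type*} (s : Finset ι) {F : ι → Ed d → ℂ}
    (hF : ∀ j ∈ s, Tan S A k (F j)) : Tan S A k (fun x => ∑ j ∈ s, F j x) := by
  classical
  induction s using Finset.induction_on with
  | empty => simpa using Tan.zero hA
  | insert j s hj ih =>
    have := (hF j (Finset.mem_insert_self _ _)).add hA hO
      (ih fun l hl => hF l (Finset.mem_insert_of_mem hl))
    refine this.congr hA hO fun _ _ => ?_
    simp [Finset.sum_insert hj]

end tan

/-- The monomials of the nonlinearity. -/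
def P5 : Fin 5 → ℂ → ℂ := ![fun w => w, fun w => (starRingEnd ℂ) w, fun w => w * (starRingEnd ℂ) w,
  fun w => w * w, fun w => w * (starRingEnd ℂ) w * w]

theorem Tan.P5 {S : Set (Fin d)} {A : (Ed d → ℂ) → Prop} {O : Set (Ed d)} {f : Ed d → ℂ} {k : ℕ}
    (hA : CAlg O A) (hO : IsOpen O) (hf : Tan S A k f) (j : Fin 5) :
    Tan S A k (fun x => P5 j (f x)) := by
  have hc := hf.conj hA hO
  fin_cases j
  · exact hf
  · exact hc
  · exact hf.mul hA hO hc
  · exact hf.mul hA hO hf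
  · exact (hf.mul hA hO hc).mul hA hO hf

theorem calg_C1 (O : Set (Ed d)) : CAlg O (fun f => ContDiffOn ℝ 1 f O) where
  c1 h := h
  congr h e := h.congr fun _ hx => (e hx).symm
  add := ContDiffOn.add
  mul := ContDiffOn.mul
  conj h := (conjCLE : ℂ →L[ℝ] ℂ).contDiff.comp_contDiffOn h
  zero := contDiffOn_const

/-- One tangential derivative is gained from the right-hand side. -/
theorem reg_tan [NeZero d] {ι : Type*} [Fintype ι] {S : Set (Fin d)} {O : Set (Ed d)}
    (hO : IsOpen O) {a : ι → Ed d → ℂ} (ha : ∀ j, ∀ i ∈ S, CInv i (a j)) {k : ℕ} {f : Ed d → ℂ}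
    {F : ι → Ed d → ℂ} (hf : ContDiffOn ℝ 1 f O) (h : DistEq O f (fun x => ∑ j, a j x * F j x))
    (hF : ∀ j, Tan S (fun f => ContDiffOn ℝ 1 f O) k (F j)) :
    Tan S (fun f => ContDiffOn ℝ 1 f O) (k + 1) f := by
  have hstep : ∀ {f : Ed d → ℂ} {F : ι → Ed d → ℂ}, ContDiffOn ℝ 1 f O →
      DistEq O f (fun x => ∑ j, a j x * F j x) → (∀ j, ContDiffOn ℝ 1 (F j) O) → ∀ i ∈ S,
      DistEq O (pd f i) (fun x => ∑ j, a j x * pd (F j) i x) ∧ ContDiffOn ℝ 1 (pd f i) O := by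
    intro f F hf h hF i hi
    have hD := DistEq.deriv hO (fun j => ha j i hi) hf hF h
    refine ⟨hD, reg1 hO (pd_contOn hO hf i) (fun y hy => ?_) hD⟩
    choose K hK using fun j => (ha j i hi).bdd
    have hev : ∀ j, ∀ᶠ x in 𝓝 y, ‖pd (F j) i x‖ ≤ ‖pd (F j) i y‖ + 1 := by
      intro j
      have hc : ContinuousAt (pd (F j) i) y :=
        (pd_contOn hO (hF j) i).continuousAt (hO.mem_nhds hy)
      exact (hc.norm.eventually_lt_const (lt_add_one _)).mono fun _ h => h.le
    obtain ⟨r, hr, hball⟩ := Metric.eventually_nhds_iff_ball.1 (eventually_all.2 hev)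
    refine ⟨r, hr, ∑ j, K j * (‖pd (F j) i y‖ + 1), fun x hx => ?_⟩
    refine (norm_sum_le _ _).trans (Finset.sum_le_sum fun j _ => ?_)
    rw [norm_mul]
    exact mul_le_mul (hK j x) (hball x hx j) (norm_nonneg _) ((norm_nonneg _).trans (hK j x))
  induction k generalizing f F with
  | zero => exact ⟨hf, fun i hi => (hstep hf h hF i hi).2⟩
  | succ k ih =>
    refine ⟨hf, fun i hi => ?_⟩
    obtain ⟨h1, h2⟩ := hstep hf h (fun j => (hF j).1) i hi
    exact ih h2 h1 fun j => (hF j).2 i hi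

end Boot

/-! ### Regularity up to the boundary -/

section Bdry
variable {d : ℕ}

/-- A distributional solution that is twice differentiable is a classical solution. -/
theorem DistEq.classical {O : Set (Ed d)} (hO : IsOpen O) {f g : Ed d → ℂ}
    (hf : ContDiffOn ℝ 1 f O) (hf2 : ∀ i, ContDiffOn ℝ 1 (pd f i) O) (hg : ContinuousOn g O)
    (h : DistEq O f g) : ∀ x ∈ O, ∑ i, pd (pd f i) i x = -g x := by
  have k1 : ∀ i : Fin d, CInv i (fun _ : Ed d => (1 : ℂ)) := fun i =>
    ⟨measurable_const, ⟨1, fun _ => by simp⟩, fun _ _ => rfl⟩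
  have hsum : ContinuousOn (fun x => ∑ i, pd (pd f i) i x) O :=
    continuousOn_finsetSum _ fun i _ => pd_contOn hO (hf2 i) i
  have hc := hsum.add hg
  have hae := hO.ae_eq_zero_of_integral_contDiff_smul_eq_zero
    (f := fun x => (∑ i, pd (pd f i) i x) + g x) (μ := volume)
    (hc.locallyIntegrableOn hO.measurableSet) ?_
  · have := Measure.eqOn_open_of_ae_eq (μ := volume) (g := fun _ => (0 : ℂ))
      ((ae_restrict_iff' hO.measurableSet).2 hae) hO hc continuousOn_const
    exact fun x hx => eq_neg_of_add_eq_zero_left (this hx)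
  · intro φ h1 h2 h3
    have key := h φ h1 h2 h3
    have si : ∀ (ψ : Ed d → ℝ) (F : Ed d → ℂ), ContDiff ℝ (⊤ : ℕ∞) ψ → HasCompactSupport ψ →
        tsupport ψ ⊆ O → ContinuousOn F O → Integrable fun x => ψ x • F x := by
      intro ψ F a b c e
      simpa using smul_int hO (measurable_const (a := (1 : ℂ))) ⟨1, fun _ => by simp⟩ a b c e
    have hd2 : ∀ {ψ : Ed d → ℝ} (i : Fin d), HasCompactSupport ψ → HasCompactSupport (dv ψ i) :=
      fun i h => h.mono' (subset_trans subset_closure (dv_supp _ i))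
    have e1 : ∀ i, ∫ x, dv (dv φ i) i x • f x = ∫ x, φ x • pd (pd f i) i x := by
      intro i
      have a1 := ibp hO (k1 i) (dv_smooth h1 i) (hd2 i h2) ((dv_supp φ i).trans h3) hf
      have a2 := ibp hO (k1 i) h1 h2 h3 (hf2 i)
      simp only [one_mul] at a1 a2
      rw [a1, a2, neg_neg]
    have e2 : ∫ x, lapR φ x • f x = ∫ x, φ x • ∑ i, pd (pd f i) i x := by
      simp only [lapR, Finset.sum_smul, Finset.smul_sum]
      rw [integral_finsetSum _ fun i _ => si _ _ (dv_smooth (dv_smooth h1 i) i)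
          (hd2 i (hd2 i h2)) ((dv_supp _ i).trans ((dv_supp φ i).trans h3)) hf.continuousOn,
        integral_finsetSum _ fun i _ => si _ _ h1 h2 h3 (pd_contOn hO (hf2 i) i)]
      exact Finset.sum_congr rfl fun i _ => e1 i
    simp only [smul_add]
    rw [integral_add (si _ _ h1 h2 h3 hsum) (si _ _ h1 h2 h3 hg), ← e2, key, neg_add_cancel]

theorem smooth_of_Tan {O : Set (Ed d)} (hO : IsOpen O) {k : ℕ} {f : Ed d → ℂ}
    (h : Tan Set.univ (fun f => ContDiffOn ℝ 1 f O) k f) : ContDiffOn ℝ ((k + 1 : ℕ)) f O := by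
  induction k generalizing f with
  | zero => exact_mod_cast h
  | succ k ih =>
    have hf : ContDiffOn ℝ 1 f O := h.1
    rw [Nat.cast_succ, contDiffOn_succ_iff_fderiv_of_isOpen hO]
    refine ⟨hf.differentiableOn one_ne_zero, by simp, contDiffOn_clm_apply.2 fun y => ?_⟩
    simp only [fderiv_eq_sum]
    exact ContDiffOn.sum fun i _ => (ih (h.2 i trivial)).const_smul _

variable [NeZero d] {N : ℕ}

theorem slab_pre : slab d N = (fun x : Ed d => x 0) ⁻¹' Set.Ioo (-(N : ℝ)) N := rfl

theorem slabCl_pre : slabCl d N = (fun x : Ed d => x 0) ⁻¹' Set.Icc (-(N : ℝ)) N := rfl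

theorem coord_cont : Continuous (fun x : Ed d => x 0) := by fun_prop

theorem slab_isOpen : IsOpen (slab d N) := isOpen_Ioo.preimage coord_cont

theorem slabCl_isClosed : IsClosed (slabCl d N) := isClosed_Icc.preimage coord_cont

theorem slab_convex : Convex ℝ (slab d N) :=
  (convex_Ioo _ _).linear_preimage
    (EuclideanSpace.proj (0 : Fin d) : Ed d →L[ℝ] ℝ).toLinearMap

theorem slabCl_convex : Convex ℝ (slabCl d N) :=
  (convex_Icc _ _).linear_preimage
    (EuclideanSpace.proj (0 : Fin d) : Ed d →L[ℝ] ℝ).toLinearMap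

theorem slab_sub_cl : slab d N ⊆ slabCl d N := fun _ h => ⟨h.1.le, h.2.le⟩

theorem slab_closure (hN : 0 < N) : closure (slab d N) = slabCl d N := by
  refine Set.Subset.antisymm (closure_minimal slab_sub_cl slabCl_isClosed) fun x hx => ?_
  have hN' : (0 : ℝ) < N := by exact_mod_cast hN
  have hlim : Tendsto (fun t : ℝ => (1 - t) • x) (𝓝[>] 0) (𝓝 x) := by
    have : Tendsto (fun t : ℝ => (1 - t) • x) (𝓝 0) (𝓝 ((1 - (0 : ℝ)) • x)) := by
      apply Continuous.tendsto
      fun_prop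
    rw [sub_zero, one_smul] at this
    exact this.mono_left nhdsWithin_le_nhds
  refine mem_closure_of_tendsto hlim ?_
  filter_upwards [Ioo_mem_nhdsGT one_pos] with t ht
  have h1 : ((1 - t) • x) 0 = (1 - t) * x 0 := rfl
  have := hx.1
  have := hx.2
  constructor
  · rw [h1]; nlinarith [ht.1, ht.2]
  · rw [h1]; nlinarith [ht.1, ht.2]

theorem slabCl_unique (hN : 0 < N) : UniqueDiffOn ℝ (slabCl d N) := by
  refine uniqueDiffOn_convex slabCl_convex ⟨0, ?_⟩
  have hN' : (0 : ℝ) < N := by exact_mod_cast hN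
  exact interior_maximal slab_sub_cl slab_isOpen ⟨by simpa using hN', by simpa using hN'⟩

/-- A continuous function on the closed slab whose partial derivatives in the open slab extend to
`C^n` functions on the closed slab is of class `C^{n+1}` there. -/
theorem extC (hN : 0 < N) {n : ℕ} {p : Ed d → ℂ} {g : Fin d → Ed d → ℂ}
    (hp : ContinuousOn p (slabCl d N)) (hd : DifferentiableOn ℝ p (slab d N))
    (hg : ∀ i, ContDiffOn ℝ n (g i) (slabCl d N)) (he : ∀ i, Set.EqOn (pd p i) (g i) (slab d N)) :
    ContDiffOn ℝ ((n + 1 : ℕ)) p (slabCl d N) := by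
  set L : Ed d → Ed d →L[ℝ] ℂ := fun x => ∑ i, (EuclideanSpace.proj i).smulRight (g i x) with hL
  have hLa : ∀ x y, L x y = ∑ i, y i • g i x := by
    intro x y
    simp [hL]
  have hLc : ContDiffOn ℝ n L (slabCl d N) := by
    refine contDiffOn_clm_apply.2 fun y => ?_
    simp only [hLa]
    exact ContDiffOn.sum fun i _ => (hg i).const_smul _
  rw [Nat.cast_succ, contDiffOn_succ_iff_hasFDerivWithinAt_of_uniqueDiffOn (slabCl_unique hN)]
  refine ⟨by simp, L, hLc, fun x hx => ?_⟩
  have hcl := slab_closure (d := d) hN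
  rw [← hcl]
  refine hasFDerivWithinAt_closure_of_tendsto_fderiv hd slab_convex slab_isOpen
    (fun y hy => (hp y (hcl ▸ hy)).mono slab_sub_cl) ?_
  have h1 : Tendsto L (𝓝[slab d N] x) (𝓝 (L x)) :=
    (hLc.continuousOn x hx).mono slab_sub_cl
  refine h1.congr' ?_
  filter_upwards [self_mem_nhdsWithin] with y hy
  ext v
  rw [hLa, fderiv_eq_sum]
  exact Finset.sum_congr rfl fun i _ => by rw [he i hy]

theorem pd_cl (hN : 0 < N) {n : ℕ} {O : Set (Ed d)} (hO : IsOpen O) (hsub : slabCl d N ⊆ O)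
    {f : Ed d → ℂ} (hf : ContDiffOn ℝ ((n + 1 : ℕ)) f (slabCl d N)) (hf1 : ContDiffOn ℝ 1 f O)
    (i : Fin d) : ContDiffOn ℝ n (pd f i) (slabCl d N) := by
  have h := (hf.fderivWithin (m := n) (slabCl_unique hN) (by exact_mod_cast le_rfl)).clm_apply
    (contDiffOn_const (c := (bv i : Ed d)))
  refine h.congr fun x hx => ?_
  have hd : DifferentiableAt ℝ f x :=
    (hf1.differentiableOn one_ne_zero).differentiableAt (hO.mem_nhds (hsub hx))
  rw [hd.fderivWithin (slabCl_unique hN x hx)]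
  rfl

/-- Functions of class `C^n` on the closed slab and of class `C¹` near it. -/
def AN (N : ℕ) (O : Set (Ed d)) (n : ℕ) (f : Ed d → ℂ) : Prop :=
  ContDiffOn ℝ n f (slabCl d N) ∧ ContDiffOn ℝ 1 f O

theorem calg_AN {O : Set (Ed d)} (hsub : slabCl d N ⊆ O) (n : ℕ) : CAlg O (AN N O n) where
  c1 h := h.2
  congr h e := ⟨h.1.congr fun _ hx => (e (hsub hx)).symm, h.2.congr fun _ hx => (e hx).symm⟩
  add h h' := ⟨h.1.add h'.1, h.2.add h'.2⟩
  mul h h' := ⟨h.1.mul h'.1, h.2.mul h'.2⟩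
  conj h := ⟨(conjCLE : ℂ →L[ℝ] ℂ).contDiff.comp_contDiffOn h.1,
    (conjCLE : ℂ →L[ℝ] ℂ).contDiff.comp_contDiffOn h.2⟩
  zero := ⟨contDiffOn_const, contDiffOn_const⟩

omit [NeZero d] in
theorem pd_commOn {O : Set (Ed d)} (hO : IsOpen O) {f : Ed d → ℂ} (hf : ContDiffOn ℝ 2 f O)
    (i j : Fin d) : Set.EqOn (pd (pd f i) j) (pd (pd f j) i) O := by
  intro x hx
  have hc : ContDiffAt ℝ 2 f x := hf.contDiffAt (hO.mem_nhds hx)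
  have hd : DifferentiableAt ℝ (fderiv ℝ f) x :=
    (hc.fderiv_right (m := 1) (by norm_num)).differentiableAt one_ne_zero
  have key : ∀ a b : Fin d, pd (pd f a) b x = fderiv ℝ (fderiv ℝ f) x (bv b) (bv a) := by
    intro a b
    have : HasFDerivAt (pd f a) ((fderiv ℝ (fderiv ℝ f) x).flip (bv a)) x := by
      have := hd.hasFDerivAt.clm_apply (hasFDerivAt_const (bv a : Ed d) x)
      refine HasFDerivAt.congr_fderiv (f := pd f a) this ?_
      ext v; simp
    rw [pd, this.fderiv]; rfl
  rw [key, key]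
  have hs : IsSymmSndFDerivAt ℝ f x := by
    refine hc.isSymmSndFDerivAt ?_
    simp [minSmoothness_of_isRCLikeNormedField]
  exact hs _ _

/-- The gain of one derivative up to the boundary: the second normal derivative is read off from
the equation, and the other second derivatives contain a tangential one. -/
theorem bdry_step (hN : 0 < N) {n : ℕ} {O : Set (Ed d)} (hO : IsOpen O) (hsub : slabCl d N ⊆ O)
    {f q : Ed d → ℂ} (hs : ContDiffOn ℝ (⊤ : ℕ∞) f (slab d N))
    (hf : ∀ k, Tan {i | i ≠ 0} (AN N O (n + 1)) k f) (hq : ∀ k, Tan {i | i ≠ 0} (AN N O n) k q)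
    (he : Set.EqOn (pd (pd f 0) 0) q (slab d N)) (k : ℕ) :
    Tan {i | i ≠ 0} (AN N O (n + 2)) k f := by
  have hpds : ∀ {g : Ed d → ℂ} (i : Fin d), ContDiffOn ℝ (⊤ : ℕ∞) g (slab d N) →
      ContDiffOn ℝ (⊤ : ℕ∞) (pd g i) (slab d N) := fun i hg =>
    (hg.fderiv_of_isOpen slab_isOpen (by simp)).clm_apply contDiffOn_const
  have two : (2 : WithTop ℕ∞) ≤ ((⊤ : ℕ∞) : WithTop ℕ∞) := ENat.LEInfty.out
  have base : ∀ {f q : Ed d → ℂ}, ContDiffOn ℝ (⊤ : ℕ∞) f (slab d N) →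
      (∀ k, Tan {i | i ≠ 0} (AN N O (n + 1)) k f) → (∀ k, Tan {i | i ≠ 0} (AN N O n) k q) →
      Set.EqOn (pd (pd f 0) 0) q (slab d N) → AN N O (n + 2) f := by
    intro f q hs hf hq he
    have hf0 : AN N O (n + 1) f := hf 0
    have hfi : ∀ i ≠ 0, AN N O (n + 1) (pd f i) := fun i hi => (hf 1).2 i hi
    have h0 : ContDiffOn ℝ ((n + 1 : ℕ)) (pd f 0) (slabCl d N) := by
      classical
      refine extC hN (g := fun i => if i = 0 then q else pd (pd f i) 0)
        ((pd_contOn hO hf0.2 0).mono hsub) ((hpds 0 hs).differentiableOn (by simp)) ?_ ?_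
      · intro i
        by_cases hi : i = 0
        · simp only [hi, if_true]; exact (hq 0).1
        · simp only [hi, if_false]
          exact pd_cl hN hO hsub (hfi i hi).1 (hfi i hi).2 0
      · intro i
        by_cases hi : i = 0
        · simp only [hi, if_true]; exact he
        · simp only [hi, if_false]
          exact pd_commOn slab_isOpen (hs.of_le two) 0 i
    refine ⟨extC hN (n := n + 1) (g := fun i => pd f i) (hf0.1.continuousOn)
      (hs.differentiableOn (by simp)) (fun i => ?_) (fun i => Set.eqOn_refl _ _), hf0.2⟩
    by_cases hi : i = 0
    · subst hi; exact h0
    · exact (hfi i hi).1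
  induction k generalizing f q with
  | zero => exact base hs hf hq he
  | succ k ih =>
    refine ⟨base hs hf hq he, fun i hi => ?_⟩
    refine ih (hpds i hs) (fun k => (hf (k + 1)).2 i hi) (q := pd q i)
      (fun k => (hq (k + 1)).2 i hi) ?_
    have c1 := pd_congrOn slab_isOpen he i
    have c2 := pd_commOn slab_isOpen (hs.of_le two) i 0
    have c3 := pd_congrOn slab_isOpen c2 0
    have c4 := pd_commOn slab_isOpen ((hpds 0 hs).of_le two) i 0
    exact fun x hx => (c3 hx).trans ((c4 hx).trans (c1 hx))

/-- Coefficients depending on the first coordinate only are tangentially constant. -/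
theorem Tan.coeff {O : Set (Ed d)} {n : ℕ} (hsub : slabCl d N ⊆ O) {α : Ed d → ℂ}
    (hα : ContDiff ℝ (⊤ : ℕ∞) α) (hi : ∀ i ≠ 0, pd α i = fun _ => 0) (k : ℕ) :
    Tan {i | i ≠ 0} (AN N O n) k α := by
  have h : AN N O n α := ⟨(hα.of_le (by exact_mod_cast le_top)).contDiffOn,
    (hα.of_le (by exact_mod_cast le_top)).contDiffOn⟩
  cases k with
  | zero => exact h
  | succ k => exact ⟨h, fun i h0 => by rw [hi i h0]; exact Tan.zero (calg_AN hsub n)⟩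

omit [NeZero d] in
theorem Tan.smooth {S : Set (Fin d)} {O : Set (Ed d)} {α : Ed d → ℂ}
    (hα : ContDiff ℝ (⊤ : ℕ∞) α) (k : ℕ) : Tan S (fun f => ContDiffOn ℝ 1 f O) k α := by
  induction k generalizing α with
  | zero => exact (hα.of_le (by exact_mod_cast le_top)).contDiffOn
  | succ k ih =>
    exact ⟨(hα.of_le (by exact_mod_cast le_top)).contDiffOn, fun i _ =>
      ih ((hα.fderiv_right (m := (⊤ : ℕ∞)) (by simp)).clm_apply contDiff_const)⟩

/-- Regularity up to the boundary of the slab for a semilinear equation that holds across the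
boundary with coefficients depending on the first coordinate only, smooth in the slab. -/
theorem slab_regularity (hN : 0 < N) {O : Set (Ed d)} (hO : IsOpen O) (hsub : slabCl d N ⊆ O)
    {a α : Fin 5 → Ed d → ℂ} (ha : ∀ j, ∀ i ≠ 0, CInv i (a j))
    (hα : ∀ j, ContDiff ℝ (⊤ : ℕ∞) (α j)) (hαi : ∀ j, ∀ i ≠ 0, pd (α j) i = fun _ => 0)
    (haα : ∀ j, Set.EqOn (a j) (α j) (slab d N)) {W : Ed d → ℂ} (hW : ContDiffOn ℝ 1 W O)
    (h : DistEq O W (fun x => ∑ j, a j x * P5 j (W x))) :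
    ContDiffOn ℝ (⊤ : ℕ∞) W (slabCl d N) ∧
      ∀ x ∈ slab d N, ∑ i, pd (pd W i) i x = -∑ j, α j x * P5 j (W x) := by
  have hso : slab d N ⊆ O := slab_sub_cl.trans hsub
  -- tangential derivatives across the boundary
  have hT : ∀ k, Tan {i : Fin d | i ≠ 0} (fun f => ContDiffOn ℝ 1 f O) k W := by
    intro k
    induction k with
    | zero => exact hW
    | succ k ih =>
      exact reg_tan hO (fun j i hi => ha j i hi) hW h fun j => ih.P5 (calg_C1 O) hO j
  -- all derivatives inside
  have hD : DistEq (slab d N) W (fun x => ∑ j, α j x * P5 j (W x)) := by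
    intro φ h1 h2 h3
    rw [h φ h1 h2 (h3.trans hso)]
    congr 1
    refine integral_congr_ae (ae_of_all _ fun x => ?_)
    by_cases hx : x ∈ slab d N
    · simp only [fun j => haα j hx]
    · simp [image_eq_zero_of_notMem_tsupport (fun hh => hx (h3 hh))]
  have hWs : ContDiffOn ℝ 1 W (slab d N) := hW.mono hso
  have hI : ∀ k, Tan Set.univ (fun f => ContDiffOn ℝ 1 f (slab d N)) k W := by
    intro k
    induction k with
    | zero => exact hWs
    | succ k ih =>
      refine reg_tan slab_isOpen (a := fun _ : Fin 5 => fun _ => 1)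
        (F := fun j x => α j x * P5 j (W x))
        (fun j i _ => ⟨measurable_const, ⟨1, fun _ => by simp⟩, fun _ _ => rfl⟩) hWs ?_
        fun j => (Tan.smooth (hα j) k).mul (calg_C1 _) slab_isOpen (ih.P5 (calg_C1 _) slab_isOpen j)
      simpa only [one_mul] using hD
  have hsm : ContDiffOn ℝ (⊤ : ℕ∞) W (slab d N) :=
    contDiffOn_infty.2 fun n => (smooth_of_Tan slab_isOpen (hI n)).of_le (by
      exact_mod_cast Nat.le_succ n)
  have hcl := hD.classical slab_isOpen hWs (fun i => (hI 1).2 i trivial) (by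
    refine continuousOn_finsetSum _ fun j _ => (hα j).continuous.continuousOn.mul ?_
    exact (((hI 0).P5 (calg_C1 _) slab_isOpen j : ContDiffOn ℝ 1 _ _)).continuousOn)
  refine ⟨?_, hcl⟩
  have main : ∀ n k, Tan {i : Fin d | i ≠ 0} (AN N O (n + 1)) k W := by
    intro n
    induction n with
    | zero => exact fun k => (hT k).mono fun f hf => ⟨by simpa using hf.mono hsub, hf⟩
    | succ n ih =>
      have A := calg_AN (N := N) hsub n
      have ih' : ∀ k, Tan {i : Fin d | i ≠ 0} (AN N O n) k W := fun k =>
        (ih k).mono fun f hf => ⟨hf.1.of_le (by exact_mod_cast Nat.le_succ n), hf.2⟩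
      refine bdry_step hN hO hsub hsm ih
        (q := fun x => (∑ j, (-1) * (α j x * P5 j (W x)))
          + ∑ i ∈ Finset.univ.erase (0 : Fin d), (-1) * pd (pd W i) i x) (fun k => ?_) ?_
      · have hm1 : Tan {i : Fin d | i ≠ 0} (AN N O n) k (fun _ => (-1 : ℂ)) :=
          Tan.coeff hsub contDiff_const (fun i _ => by funext x; simp [pd]) k
        refine (Tan.sum A hO _ fun j _ => hm1.mul A hO ((Tan.coeff hsub (hα j) (hαi j) k).mul A hO
          ((ih' k).P5 A hO j))).add A hO (Tan.sum A hO _ fun i hi => hm1.mul A hO ?_)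
        have hi0 : i ≠ 0 := (Finset.mem_erase.1 hi).1
        exact ((ih' (k + 2)).2 i hi0).2 i hi0
      · intro x hx
        have h1 := hcl x hx
        rw [← Finset.add_sum_erase _ _ (Finset.mem_univ (0 : Fin d))] at h1
        simp only [← Finset.mul_sum]
        linear_combination h1
  exact contDiffOn_infty.2 fun n => ((main n 0).1 : ContDiffOn ℝ _ _ _).of_le (by
    exact_mod_cast Nat.le_succ n)

end Bdry

/-! ### Odd reflection -/

section Reflect
variable {d : ℕ} [NeZero d]

/-- The sign change of the first coordinate. -/
def rl : Ed d ≃ₗᵢ[ℝ] Ed d :=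
  LinearIsometryEquiv.piLpCongrRight 2 fun i : Fin d =>
    if i = 0 then LinearIsometryEquiv.neg ℝ else LinearIsometryEquiv.refl ℝ ℝ

/-- The reflection in the hyperplane `x₁ = s`. -/
def rr (s : ℝ) (x : Ed d) : Ed d := rl x + (2 * s) • bv 0

theorem rl_apply (x : Ed d) (i : Fin d) : rl x i = if i = 0 then -x i else x i := by
  simp only [rl, LinearIsometryEquiv.piLpCongrRight_apply]
  split_ifs <;> simp

theorem rr_zero (s : ℝ) (x : Ed d) : rr s x 0 = 2 * s - x 0 := by
  simp [rr, rl_apply, bv]; ring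

theorem rr_ne (s : ℝ) (x : Ed d) {i : Fin d} (hi : i ≠ 0) : rr s x i = x i := by
  simp [rr, rl_apply, bv, hi]

theorem rr_rr (s : ℝ) (x : Ed d) : rr s (rr s x) = x := by
  ext i
  by_cases hi : i = 0
  · subst hi; rw [rr_zero, rr_zero]; ring
  · rw [rr_ne s _ hi, rr_ne s _ hi]

theorem rr_fix {s : ℝ} {x : Ed d} (h : x 0 = s) : rr s x = x := by
  ext i
  by_cases hi : i = 0
  · subst hi; rw [rr_zero, h]; ring
  · rw [rr_ne s _ hi]

theorem rr_cont (s : ℝ) : Continuous (rr s : Ed d → Ed d) := rl.continuous.add continuous_const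

theorem rr_smooth (s : ℝ) : ContDiff ℝ (⊤ : ℕ∞) (rr s : Ed d → Ed d) :=
  rl.contDiff.add contDiff_const

theorem rr_mp (s : ℝ) : MeasurePreserving (rr s : Ed d → Ed d) :=
  (measurePreserving_add_right volume ((2 * s) • (bv 0 : Ed d))).comp rl.measurePreserving

theorem rr_integral {F : Type*} [NormedAddCommGroup F] [NormedSpace ℝ F] (s : ℝ) (f : Ed d → F) :
    ∫ x, f (rr s x) = ∫ x, f x := by
  have h := rl.measurePreserving.integral_comp (G := F) (rl (d := d)).toHomeomorph.measurableEmbedding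
    (fun x => f (x + (2 * s) • bv 0))
  exact h.trans (integral_add_right_eq_self f _)

theorem dv_rr {φ : Ed d → ℝ} (hφ : ContDiff ℝ (⊤ : ℕ∞) φ) (s : ℝ) (i : Fin d) :
    dv (fun x => φ (rr s x)) i = fun x => (if i = 0 then -1 else 1) * dv φ i (rr s x) := by
  funext x
  have h1 : HasFDerivAt (rr s : Ed d → Ed d) ((rl (d := d)).toContinuousLinearEquiv : Ed d →L[ℝ] Ed d) x := by
    have h0 : HasFDerivAt (fun y : Ed d => (rl (d := d)).toContinuousLinearEquiv y)
        ((rl (d := d)).toContinuousLinearEquiv : Ed d →L[ℝ] Ed d) x :=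
      ((rl (d := d)).toContinuousLinearEquiv : Ed d →L[ℝ] Ed d).hasFDerivAt
    exact h0.add_const ((2 * s) • bv 0)
  have h2 := ((hφ.differentiable (by simp) (rr s x)).hasFDerivAt.comp x h1).fderiv
  have h3 : rl (bv i : Ed d) = (if i = 0 then (-1 : ℝ) else 1) • bv i := by
    ext j
    rw [rl_apply]
    by_cases hi : i = 0
    · subst hi
      by_cases hj : j = 0
      · simp [hj, bv]
      · simp [hj, bv]
    · by_cases hj : j = 0
      · subst hj; simp [hi, bv, Ne.symm hi]
      · simp [hi, hj, bv]
  rw [dv]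
  refine (congrArg (fun L => L (bv i)) h2).trans ?_
  change fderiv ℝ φ (rr s x) (rl (bv i)) = _
  rw [h3, map_smul]
  rfl

theorem lapR_rr {φ : Ed d → ℝ} (hφ : ContDiff ℝ (⊤ : ℕ∞) φ) (s : ℝ) (x : Ed d) :
    lapR (fun x => φ (rr s x)) x = lapR φ (rr s x) := by
  refine Finset.sum_congr rfl fun i _ => ?_
  rw [dv_rr hφ]
  have h1 := dv_rr (dv_smooth hφ i) s i
  have h2 : dv (fun x => (if i = 0 then (-1 : ℝ) else 1) * dv φ i (rr s x)) i x
      = (if i = 0 then (-1 : ℝ) else 1) * dv (fun x => dv φ i (rr s x)) i x := by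
    have h0 : DifferentiableAt ℝ (fun x => dv φ i (rr s x)) x :=
      ((dv_smooth hφ i).comp (rr_smooth s)).differentiable (by simp) x
    exact congrArg (fun L => L (bv i)) (h0.hasFDerivAt.const_mul _).fderiv
  rw [h2, h1]
  split_ifs <;> simp

/-- The Dirichlet problem in the slab in distributional form: `Δw = -h`, tested with functions
vanishing on the boundary. -/
def DirEq (N : ℕ) (w h : Ed d → ℂ) : Prop :=
  ∀ φ : Ed d → ℝ, ContDiff ℝ (⊤ : ℕ∞) φ → HasCompactSupport φ → (∀ x ∈ slabBdry d N, φ x = 0) →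
    ∫ x, lapR φ x • w x = -∫ x, φ x • h x

/-- Odd extension across both boundary components. -/
def fold (N : ℕ) (w : Ed d → ℂ) (x : Ed d) : ℂ := w x - w (rr N x) - w (rr (-N) x)

/-- The slab of three times the width. -/
def big (d N : ℕ) [NeZero d] : Set (Ed d) := {x | |x 0| < 3 * N}

theorem big_isOpen {N : ℕ} : IsOpen (big d N) :=
  isOpen_lt (coord_cont.abs) continuous_const

theorem slabCl_big {N : ℕ} (hN : 0 < N) : slabCl d N ⊆ big d N := by
  intro x hx
  have hN' : (0 : ℝ) < N := by exact_mod_cast hN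
  have h := abs_le.2 ⟨hx.1, hx.2⟩
  change |x 0| < 3 * N
  linarith

omit [NeZero d] in
theorem lapR_sub {f g : Ed d → ℝ} (hf : ContDiff ℝ (⊤ : ℕ∞) f) (hg : ContDiff ℝ (⊤ : ℕ∞) g)
    (x : Ed d) : lapR (fun x => f x - g x) x = lapR f x - lapR g x := by
  have h : ∀ {f g : Ed d → ℝ}, ContDiff ℝ (⊤ : ℕ∞) f → ContDiff ℝ (⊤ : ℕ∞) g → ∀ i,
      dv (fun x => f x - g x) i = fun x => dv f i x - dv g i x := by
    intro f g hf hg i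
    funext x
    rw [dv, fderiv_fun_sub (hf.differentiable (by simp) x) (hg.differentiable (by simp) x)]
    rfl
  simp only [lapR, ← Finset.sum_sub_distrib]
  exact Finset.sum_congr rfl fun i _ => by
    rw [h hf hg, h (dv_smooth hf i) (dv_smooth hg i)]

omit [NeZero d] in
theorem lapR_smooth {φ : Ed d → ℝ} (hφ : ContDiff ℝ (⊤ : ℕ∞) φ) : ContDiff ℝ (⊤ : ℕ∞) (lapR φ) :=
  ContDiff.sum fun j _ => dv_smooth (dv_smooth hφ j) j

omit [NeZero d] in
theorem lapR_supp (φ : Ed d → ℝ) : tsupport (lapR φ) ⊆ tsupport φ := by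
  refine closure_minimal (fun x hx => ?_) (isClosed_tsupport φ)
  by_contra hh
  exact hx (Finset.sum_eq_zero fun j _ => image_eq_zero_of_notMem_tsupport fun h =>
    hh (dv_supp _ j (dv_supp _ j h)))

theorem fold_distEq {N : ℕ} {w h : Ed d → ℂ} (hw : LocallyIntegrable w)
    (hh : LocallyIntegrable h) (H : DirEq N w h) : DistEq (big d N) (fold N w) (fold N h) := by
  intro φ h1 h2 h3
  have hcs : ∀ s : ℝ, HasCompactSupport fun x : Ed d => φ (rr s x) := by
    intro s
    refine HasCompactSupport.intro (h2.image (rr_cont s)) fun x hx => ?_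
    by_contra hne
    exact hx ⟨rr s x, subset_tsupport _ hne, rr_rr s x⟩
  have hsm : ∀ s : ℝ, ContDiff ℝ (⊤ : ℕ∞) fun x : Ed d => φ (rr s x) := fun s =>
    h1.comp (rr_smooth s)
  have hz : ∀ x : Ed d, 3 * (N : ℝ) ≤ |x 0| → φ x = 0 := fun x hx =>
    image_eq_zero_of_notMem_tsupport fun hm => absurd (h3 hm) (not_lt.2 hx)
  have key := H (fun x => φ x - φ (rr N x) - φ (rr (-N) x)) ((h1.sub (hsm _)).sub (hsm _))
    ((h2.sub (hcs _)).sub (hcs _)) ?_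
  · have hi : ∀ (ψ : Ed d → ℝ) (g : Ed d → ℂ), ContDiff ℝ (⊤ : ℕ∞) ψ → HasCompactSupport ψ →
        LocallyIntegrable g → Integrable fun x => ψ x • g x := fun ψ g a b e =>
      e.integrable_smul_left_of_hasCompactSupport a.continuous b
    have hir : ∀ (s : ℝ) (ψ : Ed d → ℝ) (g : Ed d → ℂ), ContDiff ℝ (⊤ : ℕ∞) ψ →
        HasCompactSupport ψ → (∀ s : ℝ, HasCompactSupport fun x : Ed d => ψ (rr s x)) →
        LocallyIntegrable g → (Integrable fun x => ψ x • g (rr s x)) ∧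
          (∫ x, ψ x • g (rr s x)) = ∫ x, ψ (rr s x) • g x := by
      intro s ψ g a b b' e
      constructor
      · have := (rr_mp s).integrable_comp_of_integrable
          (hi (fun x => ψ (rr s x)) g (a.comp (rr_smooth s)) (b' s) e)
        simpa [Function.comp_def, rr_rr] using this
      · have := rr_integral s fun x => ψ (rr s x) • g x
        simpa only [rr_rr] using this
    have main : ∀ (ψ : Ed d → ℝ) (g : Ed d → ℂ), ContDiff ℝ (⊤ : ℕ∞) ψ →
        HasCompactSupport ψ → (∀ s : ℝ, HasCompactSupport fun x : Ed d => ψ (rr s x)) →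
        LocallyIntegrable g → ∫ x, ψ x • fold N g x
          = ∫ x, (ψ x - ψ (rr N x) - ψ (rr (-N) x)) • g x := by
      intro ψ g a b b' e
      have r := fun s => hir s ψ g a b b' e
      have r' := fun s : ℝ => hi (fun x => ψ (rr s x)) g (a.comp (rr_smooth s)) (b' s) e
      have r0 := hi ψ g a b e
      have r1 : Integrable fun x => ψ x • g x - ψ x • g (rr N x) := r0.sub (r N).1
      have r2 : Integrable fun x => ψ x • g x - ψ (rr N x) • g x := r0.sub (r' N)
      simp only [fold, smul_sub, sub_smul]
      rw [integral_sub r1 (r (-N)).1, integral_sub r0 (r N).1, integral_sub r2 (r' (-N)),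
        integral_sub r0 (r' N), (r N).2, (r (-N)).2]
    have hl : ∀ x, lapR (fun x => φ x - φ (rr N x) - φ (rr (-N) x)) x
        = lapR φ x - lapR φ (rr N x) - lapR φ (rr (-N) x) := by
      intro x
      rw [lapR_sub (h1.sub (hsm _)) (hsm _), lapR_sub h1 (hsm _), lapR_rr h1, lapR_rr h1]
    have hlc : HasCompactSupport (lapR φ) := h2.mono' (subset_trans subset_closure (lapR_supp φ))
    have hlcs : ∀ s : ℝ, HasCompactSupport fun x : Ed d => lapR φ (rr s x) := by
      intro s
      refine HasCompactSupport.intro (hlc.image (rr_cont s)) fun x hx => ?_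
      by_contra hne
      exact hx ⟨rr s x, subset_tsupport _ hne, rr_rr s x⟩
    rw [main _ w (lapR_smooth h1) hlc hlcs hw, main φ h h1 h2 hcs hh, ← key]
    simp only [hl]
  · intro x hx
    rcases hx with hx | hx
    · have e : rr (-N) x = x := rr_fix hx
      have e2 : φ (rr N x) = 0 := hz _ (by
        rw [rr_zero, hx, abs_of_nonneg (by ring_nf; positivity)]; linarith)
      simp only [e, e2]; ring
    · have e : rr N x = x := rr_fix hx
      have e2 : φ (rr (-N) x) = 0 := hz _ (by
        rw [rr_zero, hx, abs_of_nonpos (by ring_nf; simp)]; linarith)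
      simp only [e, e2]; ring

/-- The parity of the monomials, with the sign produced by the odd reflection. -/
def sgn5 : Fin 5 → ℂ := ![1, 1, -1, -1, 1]

theorem P5_neg (j : Fin 5) (z : ℂ) : -P5 j z = sgn5 j * P5 j (-z) := by
  fin_cases j <;> simp [P5, sgn5]

theorem P5_zero (j : Fin 5) : P5 j 0 = 0 := by
  fin_cases j <;> simp [P5]

theorem P5_cont (j : Fin 5) : Continuous (P5 j) := by
  fin_cases j <;> simp only [P5] <;> dsimp <;> fun_prop

theorem P5_le (j : Fin 5) (z : ℂ) : ‖P5 j z‖ ≤ ‖z‖ + ‖z‖ ^ 2 + ‖z‖ ^ 3 := by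
  have h := norm_nonneg z
  have h2 := pow_nonneg h 2
  have h3 := pow_nonneg h 3
  fin_cases j <;> simp [P5] <;> nlinarith

/-- The coefficients of the equation for the odd extension. -/
def cf (N : ℕ) (A : Fin 5 → ℝ → ℂ) (j : Fin 5) (t : ℝ) : ℂ :=
  if |t| ≤ N then A j t else if (N : ℝ) < t then sgn5 j * A j (2 * N - t)
    else sgn5 j * A j (2 * (-N) - t)

/-- The odd extension commutes with the cubic nonlinearity, up to the sign changes and reflections
of the coefficients recorded in `cf`. -/
theorem fold_poly {N : ℕ} {w : Ed d → ℂ} (hw : ∀ x ∉ slab d N, w x = 0) (A : Fin 5 → ℝ → ℂ) :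
    fold N (fun x => ∑ j, A j (x 0) * P5 j (w x))
      = fun x => ∑ j, cf N A j (x 0) * P5 j (fold N w x) := by
  funext x
  have hN : (0 : ℝ) ≤ N := N.cast_nonneg
  have off : ∀ y : Ed d, (N : ℝ) ≤ |y 0| → w y = 0 := fun y hy => hw y fun h =>
    absurd (abs_lt.2 h) (not_lt.2 hy)
  have offs : ∀ y : Ed d, (N : ℝ) ≤ |y 0| → ∑ j, A j (y 0) * P5 j (w y) = 0 := fun y hy => by
    simp [off y hy, P5_zero]
  simp only [fold]
  by_cases h1 : |x 0| ≤ N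
  · have b := abs_le.1 h1
    have o1 : (N : ℝ) ≤ |rr N x 0| := by rw [rr_zero, le_abs]; left; linarith
    have o2 : (N : ℝ) ≤ |rr (-N) x 0| := by rw [rr_zero, le_abs]; right; linarith
    rw [offs _ o1, offs _ o2, off _ o1, off _ o2]
    simp [cf, h1]
  · by_cases h2 : (N : ℝ) < x 0
    · have o1 : (N : ℝ) ≤ |x 0| := (not_le.1 h1).le
      have o2 : (N : ℝ) ≤ |rr (-N) x 0| := by rw [rr_zero, le_abs]; right; linarith
      rw [offs _ o1, offs _ o2, off _ o1, off _ o2]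
      simp only [cf, h1, h2, if_true, if_false, zero_sub, sub_zero, ← Finset.sum_neg_distrib]
      refine Finset.sum_congr rfl fun j _ => ?_
      rw [← mul_neg, P5_neg, rr_zero]; ring
    · have h3 : x 0 < -N := by
        rcases lt_abs.1 (not_le.1 h1) with h | h
        · exact absurd h h2
        · linarith
      have o1 : (N : ℝ) ≤ |x 0| := (not_le.1 h1).le
      have o2 : (N : ℝ) ≤ |rr N x 0| := by rw [rr_zero, le_abs]; left; linarith
      rw [offs _ o1, offs _ o2, off _ o1, off _ o2]
      simp only [cf, h1, h2, if_false, zero_sub, sub_zero, ← Finset.sum_neg_distrib]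
      refine Finset.sum_congr rfl fun j _ => ?_
      rw [← mul_neg, P5_neg, rr_zero]; ring

theorem cf_inv {N : ℕ} {A : Fin 5 → ℝ → ℂ} (hA : ∀ j, Measurable (A j))
    (hb : ∀ j, ∃ K, ∀ t, ‖A j t‖ ≤ K) (j : Fin 5) {i : Fin d} (hi : i ≠ 0) :
    CInv i (fun x : Ed d => cf N A j (x 0)) where
  meas := by
    have : Measurable (cf N A j) := by
      refine Measurable.ite (measurableSet_le measurable_norm measurable_const) (hA j)
        (Measurable.ite measurableSet_Ioi ?_ ?_)
      · exact ((hA j).comp (measurable_const.sub measurable_id)).const_mul _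
      · exact ((hA j).comp (measurable_const.sub measurable_id)).const_mul _
    exact this.comp coord_cont.measurable
  bdd := by
    obtain ⟨K, hK⟩ := hb j
    refine ⟨K, fun x => ?_⟩
    have hs : ‖sgn5 j‖ = 1 := by fin_cases j <;> simp [sgn5]
    simp only [cf]
    split_ifs
    · exact hK _
    · rw [norm_mul, hs, one_mul]; exact hK _
    · rw [norm_mul, hs, one_mul]; exact hK _
  inv x t := by
    have : (x + t • bv i : Ed d) 0 = x 0 := by simp [bv, Ne.symm hi]
    simp only [this]

theorem fold_odd {N : ℕ} {w : Ed d → ℂ} (hw : ∀ x ∉ slab d N, w x = 0) {s : ℝ}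
    (hs : s = N ∨ s = -N) {x : Ed d} (hx : x ∈ big d N) (hx' : rr s x ∈ big d N) :
    fold N w (rr s x) = -fold N w x := by
  have off : ∀ y : Ed d, (N : ℝ) ≤ |y 0| → w y = 0 := fun y hy => hw y fun h =>
    absurd (abs_lt.2 h) (not_lt.2 hy)
  have b := abs_lt.1 (show |x 0| < 3 * N from hx)
  have b' : |rr s x 0| < 3 * N := hx'
  rw [rr_zero, abs_lt] at b'
  have hN : (0 : ℝ) ≤ N := N.cast_nonneg
  rcases hs with rfl | rfl
  · have o1 : (N : ℝ) ≤ |rr (-N) x 0| := by rw [rr_zero, le_abs]; right; linarith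
    have o2 : (N : ℝ) ≤ |rr (-N) (rr N x) 0| := by rw [rr_zero, rr_zero, le_abs]; right; linarith
    simp only [fold, rr_rr, off _ o1, off _ o2]; ring
  · have o1 : (N : ℝ) ≤ |rr N x 0| := by rw [rr_zero, le_abs]; left; linarith
    have o2 : (N : ℝ) ≤ |rr N (rr (-N) x) 0| := by rw [rr_zero, rr_zero, le_abs]; left; linarith
    simp only [fold, rr_rr, off _ o1, off _ o2]; ring

/-- Weak solutions of the semilinear Dirichlet problem in the slab are smooth up to the boundary:
the odd reflection solves an equation of the same type across the boundary. -/
theorem dirichlet_regularity (hd : d = 2 ∨ d = 3) {N : ℕ} (hN : 0 < N) {A : Fin 5 → ℝ → ℂ}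
    (hA : ∀ j, ContDiff ℝ (⊤ : ℕ∞) (A j)) (hb : ∀ j, ∃ K, ∀ t, ‖A j t‖ ≤ K) {w : Ed d → ℂ}
    (hw : ∀ x ∉ slab d N, w x = 0) (w1 : MemLp w 2)
    (w2 : MemLp (fun x => ∑ j, A j (x 0) * P5 j (w x)) 2)
    (H : DirEq N w (fun x => ∑ j, A j (x 0) * P5 j (w x))) :
    ∃ F : Ed d → ℂ, ContDiffOn ℝ (⊤ : ℕ∞) F (slabCl d N) ∧ (∀ x ∈ slabBdry d N, F x = 0) ∧
      (∀ᵐ x, x ∈ slab d N → F x = w x) ∧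
      ∀ x ∈ slab d N, ∑ i, pd (pd F i) i x = -∑ j, A j (x 0) * P5 j (F x) := by
  have hN' : (0 : ℝ) < N := by exact_mod_cast hN
  have mp : ∀ (s : ℝ) {g : Ed d → ℂ}, MemLp g 2 → MemLp (fun x => g (rr s x)) 2 := fun s g hg =>
    hg.comp_measurePreserving (rr_mp s)
  have mf : ∀ {g : Ed d → ℂ}, MemLp g 2 → MemLp (fold N g) 2 := fun hg =>
    (hg.sub (mp N hg)).sub (mp (-N) hg)
  have hD := fold_distEq (w1.locallyIntegrable (by norm_num)) (w2.locallyIntegrable (by norm_num)) H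
  obtain ⟨F, hFc, hFae⟩ := reg0 hd big_isOpen (mf w1) (mf w2) hD
  rw [fold_poly hw A] at hD
  have hDF : DistEq (big d N) F (fun x => ∑ j, cf N A j (x 0) * P5 j (F x)) := by
    intro φ h1 h2 h3
    have e1 : ∫ x, lapR φ x • F x = ∫ x, lapR φ x • fold N w x := by
      refine integral_congr_ae ?_
      filter_upwards [hFae] with x hx
      by_cases hm : x ∈ big d N
      · rw [hx hm]
      · rw [image_eq_zero_of_notMem_tsupport fun h => hm (h3 (lapR_supp φ h))]; simp
    have e2 : (∫ x, φ x • ∑ j, cf N A j (x 0) * P5 j (F x))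
        = ∫ x, φ x • ∑ j, cf N A j (x 0) * P5 j (fold N w x) := by
      refine integral_congr_ae ?_
      filter_upwards [hFae] with x hx
      by_cases hm : x ∈ big d N
      · rw [hx hm]
      · rw [image_eq_zero_of_notMem_tsupport fun h => hm (h3 h)]; simp
    rw [e1, e2]
    exact hD φ h1 h2 h3
  have hInv : ∀ j, ∀ i : Fin d, i ≠ 0 → CInv i (fun x : Ed d => cf N A j (x 0)) := fun j i hi =>
    cf_inv (fun j => (hA j).continuous.measurable) hb j hi
  have hF1 : ContDiffOn ℝ 1 F (big d N) := by
    refine reg1 big_isOpen hFc (fun y hy => ?_) hDF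
    have h01 : (1 : Fin d) ≠ 0 := by
      rcases hd with rfl | rfl <;> simp
    choose K hK using fun j => (hInv j 1 h01).bdd
    have hev : ∀ j, ∀ᶠ x in 𝓝 y, ‖P5 j (F x)‖ ≤ ‖P5 j (F y)‖ + 1 := by
      intro j
      have hc : ContinuousAt (fun x => P5 j (F x)) y :=
        (P5_cont j).continuousAt.comp (hFc.continuousAt (big_isOpen.mem_nhds hy))
      exact (hc.norm.eventually_lt_const (lt_add_one _)).mono fun _ h => h.le
    obtain ⟨r, hr, hball⟩ := Metric.eventually_nhds_iff_ball.1 (eventually_all.2 hev)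
    refine ⟨r, hr, ∑ j, K j * (‖P5 j (F y)‖ + 1), fun x hx => ?_⟩
    refine (norm_sum_le _ _).trans (Finset.sum_le_sum fun j _ => ?_)
    rw [norm_mul]
    exact mul_le_mul (hK j x) (hball x hx j) (norm_nonneg _) ((norm_nonneg _).trans (hK j x))
  have hc0 : ContDiff ℝ (⊤ : ℕ∞) (fun x : Ed d => x 0) :=
    (EuclideanSpace.proj (0 : Fin d) : Ed d →L[ℝ] ℝ).contDiff
  have hreg := slab_regularity hN big_isOpen (slabCl_big hN) hInv
    (α := fun j x => A j (x 0)) (fun j => (hA j).comp hc0) (fun j i hi => by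
      funext x
      have h1 := (((hA j).differentiable (by simp) (x 0)).hasFDerivAt.comp x
        (EuclideanSpace.proj (0 : Fin d) : Ed d →L[ℝ] ℝ).hasFDerivAt).fderiv
      rw [pd]
      refine (congrArg (fun L => L (EuclideanSpace.single i 1)) h1).trans ?_
      simp [Ne.symm hi]) (fun j x hx => by
      have : |x 0| ≤ N := (abs_lt.2 hx).le
      simp [cf, this]) hF1 hDF
  refine ⟨F, hreg.1, ?_, ?_, hreg.2⟩
  · have odd : ∀ s : ℝ, s = N ∨ s = -N → ∀ x : Ed d, x 0 = s → F x = 0 := by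
      intro s hs x hx
      set U : Set (Ed d) := big d N ∩ rr s ⁻¹' big d N with hU
      have hUo : IsOpen U := big_isOpen.inter (big_isOpen.preimage (rr_cont s))
      have hae : (fun x => F (rr s x)) =ᵐ[volume.restrict U] fun x => -F x := by
        refine (ae_restrict_iff' hUo.measurableSet).2 ?_
        filter_upwards [hFae, (rr_mp s).quasiMeasurePreserving.ae hFae] with y h1 h2 hy
        rw [h1 hy.1, h2 hy.2, fold_odd hw hs hy.1 hy.2]
      have heq := Measure.eqOn_open_of_ae_eq hae hUo
        (hFc.comp (rr_cont s).continuousOn fun y hy => hy.2) (hFc.mono fun y hy => hy.1).neg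
      have hxb : x ∈ big d N := by
        refine slabCl_big hN ?_
        rcases hs with rfl | rfl
        · exact ⟨by rw [hx]; linarith, hx.le⟩
        · exact ⟨hx.ge, by rw [hx]; linarith⟩
      have := heq (show x ∈ U from ⟨hxb, by rw [Set.mem_preimage, rr_fix hx]; exact hxb⟩)
      simp only [rr_fix hx] at this
      exact self_eq_neg.1 this
    rintro x (hx | hx)
    · exact odd _ (Or.inr rfl) x hx
    · exact odd _ (Or.inl rfl) x hx
  · filter_upwards [hFae] with x hx hm
    rw [hx (slabCl_big hN (slab_sub_cl hm))]
    have off : ∀ y : Ed d, (N : ℝ) ≤ |y 0| → w y = 0 := fun y hy => hw y fun h =>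
      absurd (abs_lt.2 h) (not_lt.2 hy)
    have o1 : (N : ℝ) ≤ |rr N x 0| := by rw [rr_zero, le_abs]; left; linarith [hm.2]
    have o2 : (N : ℝ) ≤ |rr (-N) x 0| := by rw [rr_zero, le_abs]; right; linarith [hm.1]
    simp [fold, off _ o1, off _ o2]

end Reflect

/-! ### Gauge transformation of the equation -/

section Gauge
variable {d : ℕ} [NeZero d]

/-- The plane wave `exp(iκt)`. -/
def ex (κ t : ℝ) : ℂ := exp (I * κ * t)

theorem ex_mul (κ t : ℝ) : ex κ t * ex (-κ) t = 1 := by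
  rw [ex, ex, ← Complex.exp_add]; push_cast; ring_nf; simp

theorem ex_conj (κ t : ℝ) : (starRingEnd ℂ) (ex κ t) = ex (-κ) t := by
  rw [ex, ex, ← Complex.exp_conj]; congr 1; simp

theorem ex_norm (κ t : ℝ) : ‖ex κ t‖ = 1 := by
  have : I * κ * t = ((κ * t : ℝ) : ℂ) * I := by push_cast; ring
  rw [ex, this, Complex.norm_exp_ofReal_mul_I]

theorem ex_smooth (κ : ℝ) : ContDiff ℝ (⊤ : ℕ∞) (ex κ) := by
  unfold ex
  exact (contDiff_const.mul Complex.ofRealCLM.contDiff).cexp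

theorem ex_deriv (κ t : ℝ) : HasDerivAt (ex κ) (ex κ t * (I * κ)) t := by
  have h : HasDerivAt (fun t : ℝ => I * κ * (t : ℂ)) (I * κ) t := by
    simpa using (Complex.ofRealCLM.hasDerivAt (x := t)).const_mul (I * (κ : ℂ))
  exact h.cexp

theorem exx_smooth (κ : ℝ) : ContDiff ℝ (⊤ : ℕ∞) fun x : Ed d => ex κ (x 0) :=
  (ex_smooth κ).comp (EuclideanSpace.proj (0 : Fin d) : Ed d →L[ℝ] ℝ).contDiff

theorem pd_gauge (κ : ℝ) {F : Ed d → ℂ} {x : Ed d} (hF : DifferentiableAt ℝ F x) (i : Fin d) :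
    pd (fun x => ex κ (x 0) * F x) i x
      = ex κ (x 0) * (pd F i x + (if i = 0 then I * κ else 0) * F x) := by
  have h0 : HasFDerivAt (fun x : Ed d => x 0) (EuclideanSpace.proj (0 : Fin d) : Ed d →L[ℝ] ℝ) x :=
    (EuclideanSpace.proj (0 : Fin d) : Ed d →L[ℝ] ℝ).hasFDerivAt
  have h1 := (ex_deriv κ (x 0)).hasFDerivAt.comp x h0
  have h2 := (HasFDerivAt.mul h1 hF.hasFDerivAt).fderiv
  refine (congrArg (fun L => L (EuclideanSpace.single i 1)) h2).trans ?_
  by_cases hi : i = 0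
  · subst hi; simp [pd]; ring
  · simp [pd, hi, Ne.symm hi]

theorem lap_gauge (κ : ℝ) {F : Ed d → ℂ} {O : Set (Ed d)} (hO : IsOpen O)
    (hF : ContDiffOn ℝ (⊤ : ℕ∞) F O) {x : Ed d} (hx : x ∈ O) :
    lap (fun x => ex κ (x 0) * F x) x
      = ex κ (x 0) * (∑ i, pd (pd F i) i x + 2 * (I * κ) * pd F 0 x - κ ^ 2 * F x) := by
  have hd : ∀ y ∈ O, DifferentiableAt ℝ F y := fun y hy =>
    (hF.contDiffAt (hO.mem_nhds hy)).differentiableAt (by simp)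
  have hpd : ∀ i, DifferentiableAt ℝ (pd F i) x := fun i =>
    (((hF.contDiffAt (hO.mem_nhds hx)).fderiv_right (m := 1) (by
      simp only [one_add_one_eq_two]; exact ENat.LEInfty.out)).clm_apply contDiffAt_const).differentiableAt one_ne_zero
  have key : ∀ i : Fin d, pd (pd (fun x => ex κ (x 0) * F x) i) i x = ex κ (x 0) *
      (pd (pd F i) i x + if i = 0 then 2 * (I * κ) * pd F 0 x - κ ^ 2 * F x else 0) := by
    intro i
    have e1 : pd (fun x => ex κ (x 0) * F x) i =ᶠ[𝓝 x]
        fun y => ex κ (y 0) * (pd F i y + (if i = 0 then I * κ else 0) * F y) := by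
      filter_upwards [hO.mem_nhds hx] with y hy
      exact pd_gauge κ (hd y hy) i
    have e2 : pd (pd (fun x => ex κ (x 0) * F x) i) i x
        = pd (fun y => ex κ (y 0) * (pd F i y + (if i = 0 then I * κ else 0) * F y)) i x :=
      congrArg (fun L : Ed d →L[ℝ] ℂ => L (EuclideanSpace.single i 1)) e1.fderiv_eq
    have hG : HasFDerivAt (fun y => pd F i y + (if i = 0 then I * κ else 0) * F y)
        (fderiv ℝ (pd F i) x + (if i = 0 then I * κ else 0) • fderiv ℝ F x) x :=
      (hpd i).hasFDerivAt.add ((hd x hx).hasFDerivAt.const_mul _)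
    have e3 : pd (fun y => pd F i y + (if i = 0 then I * κ else 0) * F y) i x
        = pd (pd F i) i x + (if i = 0 then I * κ else 0) * pd F i x :=
      congrArg (fun L => L (EuclideanSpace.single i 1)) hG.fderiv
    rw [e2, pd_gauge κ hG.differentiableAt, e3]
    by_cases hi : i = 0
    · subst hi
      simp only [if_true]
      have : (I : ℂ) ^ 2 = -1 := I_sq
      linear_combination (ex κ (x 0) * (κ ^ 2 * F x)) * this
    · simp [hi]
  have : lap (fun x => ex κ (x 0) * F x) x
      = ∑ i, pd (pd (fun x => ex κ (x 0) * F x) i) i x := rfl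
  rw [this, Finset.sum_congr rfl fun i _ => key i, ← Finset.mul_sum, Finset.sum_add_distrib]
  simp only [Finset.sum_ite_eq', Finset.mem_univ, if_true]
  ring

/-- The equation for `1 + u` in very weak form, tested with functions vanishing on the boundary
of the slab. -/
def WeakGP (N : ℕ) (c : ℝ) (u : Ed d → ℂ) : Prop :=
  ∀ Φ : Ed d → ℂ, TF Φ → (∀ x ∈ slabBdry d N, Φ x = 0) →
    ∫ x, (-rip (u x) (lap Φ x) - c * rip (u x) (I * pd Φ 0 x)
      + kk (u x) * rip (1 + u x) (Φ x)) = 0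

theorem kk_coe (z : ℂ) : (kk z : ℂ) = z + (starRingEnd ℂ) z + z * (starRingEnd ℂ) z := by
  apply Complex.ext
  · rw [Complex.ofReal_re, kk]; simp; ring
  · rw [Complex.ofReal_im]; simp; ring

/-- The coefficients of the equation for `exp(iκx₁)u`. -/
def cg (κ : ℝ) : Fin 5 → ℝ → ℂ :=
  ![fun _ => κ ^ 2 - 1, fun t => -(ex κ t * ex κ t), fun t => -(2 * ex κ t), fun t => -ex (-κ) t,
    fun _ => -1]

theorem cg_smooth (κ : ℝ) (j : Fin 5) : ContDiff ℝ (⊤ : ℕ∞) (cg κ j) := by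
  have h1 := ex_smooth κ
  have h2 := ex_smooth (-κ)
  fin_cases j
  · exact contDiff_const
  · exact (h1.mul h1).neg
  · exact (contDiff_const.mul h1).neg
  · exact h2.neg
  · exact contDiff_const

theorem cg_bdd (κ : ℝ) (j : Fin 5) : ∃ K, ∀ t, ‖cg κ j t‖ ≤ K := by
  refine ⟨‖(κ ^ 2 - 1 : ℂ)‖ + 2, fun t => ?_⟩
  have := norm_nonneg (κ ^ 2 - 1 : ℂ)
  fin_cases j <;> simp [cg, ex_norm] <;> linarith

theorem cg_sum (κ t : ℝ) (u : ℂ) : ∑ j, cg κ j t * P5 j (ex κ t * u)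
    = κ ^ 2 * (ex κ t * u) - ex κ t * (kk u * (1 + u)) := by
  have h := ex_mul κ t
  have e := ex_conj κ t
  rw [kk_coe, Fin.sum_univ_five]
  change (κ ^ 2 - 1) * (ex κ t * u)
    + -(ex κ t * ex κ t) * (starRingEnd ℂ) (ex κ t * u)
    + -(2 * ex κ t) * ((ex κ t * u) * (starRingEnd ℂ) (ex κ t * u))
    + -ex (-κ) t * ((ex κ t * u) * (ex κ t * u))
    + (-1) * ((ex κ t * u) * (starRingEnd ℂ) (ex κ t * u) * (ex κ t * u)) = _
  rw [map_mul, e]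
  generalize ex κ t = a at *
  generalize ex (-κ) t = b at *
  generalize (starRingEnd ℂ) u = v
  linear_combination (-(a * v) - 2 * a * u * v - a * u ^ 2 - a * u ^ 2 * v) * h

end Gauge

/-! ### Regularity of very weak solutions -/

section Gauge2
variable {d : ℕ} [NeZero d]

theorem rip_ex (κ t : ℝ) (u z : ℂ) : rip u (ex (-κ) t * z) = rip (ex κ t * u) z := by
  have e := ex_conj (-κ) t
  rw [neg_neg] at e
  rw [rip_eq, rip_eq, map_mul, e]; ring_nf

/-- Very weak solutions of the equation for `1 + u` give distributional solutions of the Dirichlet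
problem for `exp(icx₁/2)u`, which carries no first order term. -/
theorem WeakGP.dirEq {N : ℕ} {c : ℝ} {u : Ed d → ℂ} (u1 : MemLp u 2)
    (u2 : MemLp (fun x => ∑ j, cg (c / 2) j (x 0) * P5 j (ex (c / 2) (x 0) * u x)) 2)
    (H : WeakGP N c u) :
    DirEq N (fun x => ex (c / 2) (x 0) * u x)
      (fun x => ∑ j, cg (c / 2) j (x 0) * P5 j (ex (c / 2) (x 0) * u x)) := by
  set κ := c / 2 with hκ
  set w : Ed d → ℂ := fun x => ex κ (x 0) * u x with hw
  set h : Ed d → ℂ := fun x => ∑ j, cg κ j (x 0) * P5 j (w x) with hh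
  intro φ h1 h2 h3
  have w1 : MemLp w 2 := by
    refine u1.of_le (((exx_smooth κ).continuous.aestronglyMeasurable).mul u1.1) ?_
    exact Eventually.of_forall fun x => by simp [hw, ex_norm]
  have i1 : Integrable fun x => lapR φ x • w x :=
    (w1.locallyIntegrable (by norm_num)).integrable_smul_left_of_hasCompactSupport
      (lapR_smooth h1).continuous (h2.mono' (subset_trans subset_closure (lapR_supp φ)))
  have i2 : Integrable fun x => φ x • h x :=
    (u2.locallyIntegrable (by norm_num)).integrable_smul_left_of_hasCompactSupport
      h1.continuous h2
  have key : ∀ z : ℂ, inner ℝ z (∫ x, (lapR φ x • w x + φ x • h x)) = 0 := by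
    intro z
    have hin : ∫ x, inner ℝ z (lapR φ x • w x + φ x • h x)
        = inner ℝ z (∫ x, (lapR φ x • w x + φ x • h x)) :=
      (innerSL ℝ z).integral_comp_comm (i1.add i2)
    rw [← hin]
    have hφz : ContDiff ℝ (⊤ : ℕ∞) fun x => (φ x : ℂ) * z :=
      (Complex.ofRealCLM.contDiff.comp h1).mul contDiff_const
    have pz : ∀ (f : Ed d → ℝ), ContDiff ℝ (⊤ : ℕ∞) f → ∀ i,
        pd (fun x => (f x : ℂ) * z) i = fun x => (dv f i x : ℂ) * z := by
      intro f hf i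
      funext x
      have a := (Complex.ofRealCLM.hasFDerivAt.comp x
        (hf.differentiable (by simp) x).hasFDerivAt).mul_const z
      refine (congrArg (fun L : Ed d →L[ℝ] ℂ => L (EuclideanSpace.single i 1)) a.fderiv).trans ?_
      simp [dv, mul_comm]
    set Φ : Ed d → ℂ := fun x => ex (-κ) (x 0) * ((φ x : ℂ) * z) with hΦ
    have hT : TF Φ := by
      refine ⟨(exx_smooth (-κ)).mul hφz, h2.mono fun x hx => ?_⟩
      rw [Function.mem_support] at hx ⊢
      contrapose! hx
      simp [hΦ, hx]
    have hq := H Φ hT fun x hx => by simp [hΦ, h3 x hx]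
    have hp : ∀ x, pd Φ 0 x = ex (-κ) (x 0) * ((dv φ 0 x - I * κ * φ x) * z) := by
      intro x
      rw [hΦ, pd_gauge (-κ) (hφz.differentiable (by simp) x), pz φ h1]
      simp only [if_true]; push_cast; ring
    have hl : ∀ x, lap Φ x = ex (-κ) (x 0)
        * ((lapR φ x - 2 * (I * κ) * dv φ 0 x - κ ^ 2 * φ x) * z) := by
      intro x
      rw [hΦ, lap_gauge (-κ) isOpen_univ hφz.contDiffOn (Set.mem_univ x)]
      have : ∑ i, pd (pd (fun x => (φ x : ℂ) * z) i) i x = (lapR φ x : ℂ) * z := by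
        rw [lapR, Complex.ofReal_sum, Finset.sum_mul]
        exact Finset.sum_congr rfl fun i _ => by rw [pz φ h1, pz _ (dv_smooth h1 i)]
      rw [this, pz φ h1]
      push_cast; ring
    rw [← neg_eq_zero, ← integral_neg]
    refine Eq.trans (integral_congr_ae (Eventually.of_forall fun x => ?_)) hq
    simp only
    have hs : h x = κ ^ 2 * w x - ex κ (x 0) * (kk (u x) * (1 + u x)) := cg_sum κ (x 0) (u x)
    rw [hl, hp, hs, ← rip_inner]
    have e1 : I * (ex (-κ) (x 0) * ((dv φ 0 x - I * κ * φ x) * z))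
        = ex (-κ) (x 0) * ((I * dv φ 0 x + κ * φ x) * z) := by
      have : (I : ℂ) ^ 2 = -1 := I_sq
      linear_combination (-(ex (-κ) (x 0) * κ * φ x * z)) * this
    have e2 : kk (u x) * rip (1 + u x) (Φ x)
        = φ x * rip (ex κ (x 0) * (kk (u x) * (1 + u x))) z := by
      rw [hΦ]
      simp only
      rw [rip_ex]
      generalize ex κ (x 0) = a
      simp [rip]; ring
    rw [e1, e2, rip_ex, rip_ex]
    have hc : c = 2 * κ := by rw [hκ]; ring
    change _ = -rip (w x) _ - c * rip (w x) _ + _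
    generalize ex κ (x 0) * (kk (u x) * (1 + u x)) = y
    generalize w x = y'
    rw [hc]
    simp [rip, pow_two]; ring
  have h0 := key (∫ x, (lapR φ x • w x + φ x • h x))
  rw [inner_self_eq_zero] at h0
  have h4 := integral_add i1 i2
  rw [h0] at h4
  exact eq_neg_of_add_eq_zero_left h4.symm

/-- Very weak solutions of the slab problem are classical up to the boundary. -/
theorem gauge_regularity (hd : d = 2 ∨ d = 3) {N : ℕ} (hN : 0 < N) {c : ℝ} {u : Ed d → ℂ}
    (hu : ∀ x ∉ slab d N, u x = 0) (u1 : MemLp u 2) (u2 : MemLp (fun x => ‖u x‖ ^ 2) 2)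
    (u3 : MemLp (fun x => ‖u x‖ ^ 3) 2) (H : WeakGP N c u) :
    ∃ ψ : Ed d → ℂ, ContDiffOn ℝ (⊤ : ℕ∞) ψ (slabCl d N) ∧
      (∀ x ∈ slab d N,
        Complex.I * (c : ℂ) * pd ψ 0 x + lap ψ x + (1 - (‖ψ x‖ : ℂ) ^ 2) * ψ x = 0) ∧
      (∀ x ∈ slabBdry d N, ψ x = 1) ∧ ∀ᵐ x, x ∈ slab d N → ψ x = 1 + u x := by
  set κ := c / 2 with hκ
  set w : Ed d → ℂ := fun x => ex κ (x 0) * u x with hw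
  have hcw : Continuous fun x : Ed d => ex κ (x 0) := (exx_smooth κ).continuous
  have w0 : AEStronglyMeasurable w := hcw.aestronglyMeasurable.mul u1.1
  have hn : ∀ x, ‖w x‖ = ‖u x‖ := fun x => by simp [hw, ex_norm]
  have w1 : MemLp w 2 := u1.of_le w0 (Eventually.of_forall fun x => (hn x).le)
  have w2 : MemLp (fun x => ∑ j, cg κ j (x 0) * P5 j (w x)) 2 := by
    refine memLp_finsetSum _ fun j _ => ?_
    obtain ⟨K, hK⟩ := cg_bdd κ j
    have hb : MemLp (fun x => ‖u x‖ + ‖u x‖ ^ 2 + ‖u x‖ ^ 3) 2 := (u1.norm.add u2).add u3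
    refine (hb.const_mul K).of_le ?_ (Eventually.of_forall fun x => ?_)
    · exact ((cg_smooth κ j).continuous.comp coord_cont).aestronglyMeasurable.mul
        ((P5_cont j).comp_aestronglyMeasurable w0)
    · refine (norm_mul_le _ _).trans ?_
      refine (mul_le_mul (hK (x 0)) (P5_le j (w x)) (norm_nonneg _)
        ((norm_nonneg _).trans (hK 0))).trans ?_
      rw [hn]; exact le_abs_self _
  obtain ⟨F, hF, hF0, hFw, hFe⟩ := dirichlet_regularity hd hN (cg_smooth κ) (cg_bdd κ)
    (fun x hx => by simp [hw, hu x hx]) w1 w2 (H.dirEq u1 w2)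
  have hFs : ContDiffOn ℝ (⊤ : ℕ∞) F (slab d N) := hF.mono slab_sub_cl
  refine ⟨fun x => 1 + ex (-κ) (x 0) * F x,
    contDiffOn_const.add ((exx_smooth (-κ)).contDiffOn.mul hF), fun x hx => ?_, fun x hx => ?_, ?_⟩
  · have hdF : DifferentiableAt ℝ F x :=
      (hFs.contDiffAt (slab_isOpen.mem_nhds hx)).differentiableAt (by simp)
    have e1 : lap (fun x => 1 + ex (-κ) (x 0) * F x) x = lap (fun x => ex (-κ) (x 0) * F x) x :=
      Finset.sum_congr rfl fun i _ => by
        change pd (pd (fun x => 1 + ex (-κ) (x 0) * F x) i) i x = _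
        rw [pd_const_add]; rfl
    rw [pd_const_add, e1, pd_gauge (-κ) hdF, lap_gauge (-κ) slab_isOpen hFs hx, hFe x hx]
    have e2 : (‖1 + ex (-κ) (x 0) * F x‖ : ℂ) ^ 2 = 1 + kk (ex (-κ) (x 0) * F x) := by
      exact_mod_cast congrArg (fun r : ℝ => (r : ℂ)) (kk_eq (ex (-κ) (x 0) * F x))
    have e3 := cg_sum κ (x 0) (ex (-κ) (x 0) * F x)
    have hm := ex_mul κ (x 0)
    rw [← mul_assoc, hm, one_mul] at e3
    have hc : (c : ℂ) = 2 * κ := by rw [hκ]; push_cast; ring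
    rw [e2, e3, hc]
    simp only [if_true]
    push_cast
    have hI : (I : ℂ) ^ 2 = -1 := I_sq
    generalize hk : (kk (ex (-κ) (x 0) * F x) : ℂ) = k
    generalize ex (-κ) (x 0) = b at *
    generalize ex κ (x 0) = a at *
    linear_combination (k * (1 + b * F x)) * hm + (-(2 * κ ^ 2 * b * F x)) * hI
  · simp [hF0 x hx]
  · filter_upwards [hFw] with x hx hm
    rw [hx hm, hw]
    simp only
    rw [← mul_assoc, mul_comm (ex (-κ) (x 0)), ex_mul, one_mul]

end Gauge2

/-! ### Mollification in `L²` -/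

section MolGrad
variable {d : ℕ} [NeZero d] {u : Ed d → ℂ}

theorem lsq {X : Type*} [MeasurableSpace X] {μ : Measure X} [IsProbabilityMeasure μ]
    {f : X → ENNReal} (hf : Measurable f) : (∫⁻ x, f x ∂μ) ^ 2 ≤ ∫⁻ x, f x ^ 2 ∂μ := by
  have h := ENNReal.lintegral_mul_le_Lp_mul_Lq μ Real.HolderConjugate.two_two hf.aemeasurable
    (g := fun _ => 1) aemeasurable_const
  simp only [Pi.mul_apply, mul_one, ENNReal.one_rpow, lintegral_one, measure_univ] at h
  have h2 := pow_le_pow_left₀ (zero_le) h 2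
  refine h2.trans_eq ?_
  rw [← ENNReal.rpow_natCast, ← ENNReal.rpow_mul]
  simp

omit [NeZero d] in
theorem segment_enorm (hu : TF u) (y z : Ed d) : ‖u (z + y) - u y‖ₑ
    ≤ ‖z‖ₑ * ∫⁻ t in Set.Ioc (0 : ℝ) 1, ‖fderiv ℝ u (y + t • z)‖ₑ := by
  have hc : Continuous (fderiv ℝ u) := hu.smooth.continuous_fderiv (by simp)
  have h1 : ∀ t : ℝ, HasDerivAt (fun t : ℝ => u (y + t • z)) (fderiv ℝ u (y + t • z) z) t := by
    intro t
    have h2 : HasDerivAt (fun t : ℝ => y + t • z) z t := by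
      simpa using ((hasDerivAt_id t).smul_const z).const_add y
    exact (hu.diff (y + t • z)).hasFDerivAt.comp_hasDerivAt t h2
  have h3 := intervalIntegral.integral_eq_sub_of_hasDerivAt (a := 0) (b := 1)
    (fun t _ => h1 t) (Continuous.intervalIntegrable (by fun_prop) _ _)
  simp only [one_smul, zero_smul, add_zero] at h3
  rw [add_comm z y, ← h3, intervalIntegral.integral_of_le zero_le_one]
  refine (enorm_integral_le_lintegral_enorm _).trans ?_
  rw [← lintegral_const_mul' _ _ enorm_ne_top]
  refine lintegral_mono fun t => ?_
  rw [mul_comm]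
  exact ContinuousLinearMap.le_opENorm _ _

omit [NeZero d] in
theorem n2_eq_lint {F : Type*} [NormedAddCommGroup F] {f : Ed d → F} (hf : AEStronglyMeasurable f) :
    n2 f ^ 2 = (∫⁻ x, ‖f x‖ₑ ^ 2).toReal := by
  rw [n2_sq, integral_eq_lintegral_of_nonneg_ae (Eventually.of_forall fun _ => by positivity)
    (f := fun x => ‖f x‖ ^ 2) (hf.norm.aemeasurable.pow_const 2).aestronglyMeasurable]
  congr 1
  refine lintegral_congr fun x => ?_
  rw [ENNReal.ofReal_pow (norm_nonneg _), ofReal_norm]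

omit [NeZero d] in
theorem TF.mol (hu : TF u) {δ : ℝ} (hδ : 0 < δ) : TF (mol (sc d rho δ) u) := by
  refine ⟨mol_smooth (hu.cont.locallyIntegrable) (sc_smooth rho_KK.smooth _ _)
    (rho_KK.sc_compact _ hδ), ?_⟩
  refine HasCompactSupport.intro (hu.supp.isCompact.cthickening (r := δ)) fun y hy => ?_
  refine integral_eq_zero_of_ae (Eventually.of_forall fun x => ?_)
  by_cases hx : x ∈ tsupport u
  · have h1 : δ < ‖x - y‖ := by
      by_contra hcon
      exact hy (mem_cthickening_of_dist_le y x δ _ hx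
        (by rw [dist_comm, dist_eq_norm]; exact not_lt.1 hcon))
    simp [sc_supp rho_KK.zero d hδ h1]
  · simp [image_eq_zero_of_notMem_tsupport hx]

/-- Mollification at scale `δ` changes a function by at most `δ` times its gradient in `L²`. -/
theorem n2_mol_sub (hu : TF u) {δ : ℝ} (hδ : 0 < δ) :
    n2 (_root_.mol (sc d rho δ) u - u) ≤ δ * pN u := by
  have hc : Continuous (fderiv ℝ u) := hu.smooth.continuous_fderiv (by simp)
  set k : Ed d → ℝ := sc d rho δ with hk
  have hkc : Continuous k := (sc_smooth rho_KK.smooth _ _).continuous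
  set μ : Measure (Ed d) := volume.withDensity fun z => ‖k z‖ₑ with hμ
  have hk0 : ∀ z, 0 ≤ k z := fun z =>
    mul_nonneg (by positivity) (rho_nonneg _)
  have hP : IsProbabilityMeasure μ := by
    constructor
    rw [hμ, withDensity_apply _ MeasurableSet.univ, Measure.restrict_univ]
    have h1 : ∫ z, k z = 1 := by simpa using rho_sc_int hδ (0 : Ed d)
    rw [← ofReal_integral_norm_eq_lintegral_enorm
      (hkc.integrable_of_hasCompactSupport (rho_KK.sc_compact _ hδ))]
    simp only [Real.norm_of_nonneg (hk0 _), h1, ENNReal.ofReal_one]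
  set ν : Measure ℝ := volume.restrict (Set.Ioc 0 1) with hν
  have hP2 : IsProbabilityMeasure ν := ⟨by simp [hν]⟩
  have hJ : ∀ y : Ed d, Continuous fun q : Ed d × ℝ => fderiv ℝ u (y + q.2 • q.1) := fun y =>
    hc.comp (by fun_prop)
  have hpt : ∀ y, ‖_root_.mol k u y - u y‖ₑ
      ≤ ENNReal.ofReal δ * ∫⁻ q, ‖fderiv ℝ u (y + q.2 • q.1)‖ₑ ∂(μ.prod ν) := by
    intro y
    rw [← mol_sub_const hu.cont.locallyIntegrable hδ, _root_.mol,
      ← integral_add_right_eq_self _ y]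
    simp only [add_sub_cancel_right]
    refine (enorm_integral_le_lintegral_enorm _).trans ?_
    rw [lintegral_prod _ (hJ y).enorm.measurable.aemeasurable, hμ,
      lintegral_withDensity_eq_lintegral_mul _ hkc.enorm.measurable
        ((hJ y).enorm.measurable.lintegral_prod_right'), ← lintegral_const_mul' _ _ (by simp)]
    refine lintegral_mono fun z => ?_
    simp only [Pi.mul_apply]
    rw [enorm_smul]
    by_cases hz : k z = 0
    · change ‖k z‖ₑ * _ ≤ _
      simp [hz]
    · have hz' : ‖z‖ ≤ δ := by
        by_contra hcon
        exact hz (sc_supp rho_KK.zero _ hδ (not_le.1 hcon))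
      rw [mul_left_comm]
      refine mul_le_mul_right ((segment_enorm hu y z).trans ?_) _
      refine mul_le_mul_left ?_ _
      rw [← ofReal_norm]
      exact ENNReal.ofReal_le_ofReal hz'
  have hD : ∫⁻ x, ‖fderiv ℝ u x‖ₑ ^ 2 ≠ ⊤ := by
    have := (hu.fderiv_memLp 2).eLpNorm_lt_top
    rw [eLpNorm_lt_top_iff_lintegral_rpow_enorm_lt_top (by norm_num) (by norm_num)] at this
    simpa using this.ne
  have hint : ∫⁻ y, ‖_root_.mol k u y - u y‖ₑ ^ 2
      ≤ ENNReal.ofReal δ ^ 2 * ∫⁻ x, ‖fderiv ℝ u x‖ₑ ^ 2 := by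
    calc ∫⁻ y, ‖_root_.mol k u y - u y‖ₑ ^ 2
        ≤ ∫⁻ y, ENNReal.ofReal δ ^ 2 * ∫⁻ q, ‖fderiv ℝ u (y + q.2 • q.1)‖ₑ ^ 2 ∂(μ.prod ν) := by
          refine lintegral_mono fun y => ?_
          refine (pow_le_pow_left₀ zero_le (hpt y) 2).trans ?_
          rw [mul_pow]
          exact mul_le_mul_right (lsq (hJ y).enorm.measurable) _
      _ = ENNReal.ofReal δ ^ 2 * ∫⁻ q, (∫⁻ y, ‖fderiv ℝ u (y + q.2 • q.1)‖ₑ ^ 2) ∂(μ.prod ν) := by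
          rw [lintegral_const_mul' _ _ (by simp), lintegral_lintegral_swap]
          exact ((hc.comp (by fun_prop : Continuous fun p : Ed d × (Ed d × ℝ) =>
            p.1 + p.2.2 • p.2.1)).enorm.measurable.pow_const 2).aemeasurable
      _ = ENNReal.ofReal δ ^ 2 * ∫⁻ x, ‖fderiv ℝ u x‖ₑ ^ 2 := by
          have : ∀ q : Ed d × ℝ, ∫⁻ y, ‖fderiv ℝ u (y + q.2 • q.1)‖ₑ ^ 2
              = ∫⁻ x, ‖fderiv ℝ u x‖ₑ ^ 2 := fun q =>
            lintegral_add_right_eq_self (fun x => ‖fderiv ℝ u x‖ₑ ^ 2) (q.2 • q.1)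
          simp only [this, lintegral_const, measure_univ, mul_one]
  have h1 : n2 (_root_.mol k u - u) ^ 2 ≤ (δ * n2 (fderiv ℝ u)) ^ 2 := by
    rw [n2_eq_lint ((hu.mol hδ).cont.sub hu.cont).aestronglyMeasurable, mul_pow,
      n2_eq_lint hc.aestronglyMeasurable]
    refine (ENNReal.toReal_mono (ENNReal.mul_ne_top (by simp) hD) hint).trans_eq ?_
    rw [ENNReal.toReal_mul, ENNReal.toReal_pow, ENNReal.toReal_ofReal hδ.le]
  exact ((pow_le_pow_iff_left₀ (n2_nonneg _) (mul_nonneg hδ.le (n2_nonneg _)) two_ne_zero).1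
    h1).trans (mul_le_mul_of_nonneg_left hu.n2_fderiv_le_pN hδ.le)

end MolGrad

/-! ### Non-vanishing of Palais-Smale sequences -/

section Nonvanishing
variable {d : ℕ} {u v φ : Ed d → ℂ} {S B : ℝ}

/-- Translate of a function. -/
def tr (a : Ed d) (u : Ed d → ℂ) (x : Ed d) : ℂ := u (x + a)

lemma pd_tr (a : Ed d) (u : Ed d → ℂ) (i : Fin d) (x : Ed d) : pd (tr a u) i x = pd u i (x + a) := by
  simp only [pd]
  rw [show tr a u = fun x => u (x + a) from rfl, fderiv_comp_add_right (f := u)]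

lemma TF.tr (h : TF u) (a : Ed d) : TF (tr a u) :=
  ⟨h.smooth.comp (by fun_prop : ContDiff ℝ (⊤ : ℕ∞) fun x : Ed d => x + a),
    h.supp.comp_homeomorph (Homeomorph.addRight a)⟩

lemma tr_tr_neg (a : Ed d) (u : Ed d → ℂ) : tr a (tr (-a) u) = u := by
  funext x; simp [tr]

lemma EE_tr (a : Ed d) (u : Ed d → ℂ) : EE (tr a u) = EE u := by
  simp only [EE, pd_tr, tr]
  exact integral_add_right_eq_self
    (fun x => (1 / 2 * ∑ i, ‖pd u i x‖ ^ 2 + 1 / 4 * kk (u x) ^ 2)) a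

lemma n2_tr {F : Type*} [NormedAddCommGroup F] (a : Ed d) (f : Ed d → F) :
    n2 (fun x => f (x + a)) = n2 f := by
  simp only [n2]
  rw [integral_add_right_eq_self (fun x => ‖f x‖ ^ 2) a]

lemma pN_tr (a : Ed d) (u : Ed d → ℂ) : pN (tr a u) = pN u := by
  simp only [pN]
  congr 1
  · exact n2_tr a u
  · refine Finset.sum_congr rfl fun i _ => ?_
    rw [show pd (tr a u) i = fun x => pd u i (x + a) from funext fun x => pd_tr a u i x]
    exact n2_tr a _

section Slab
variable [NeZero d] {N : ℕ}

lemma DD_tr (c : ℝ) (a : Ed d) (u φ : Ed d → ℂ) : DD c (tr a u) (tr a φ) = DD c u φ := by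
  simp only [DD, pd_tr, tr]
  exact integral_add_right_eq_self
    (fun x => (∑ i, rip (pd u i x) (pd φ i x) + kk (u x) * rip (1 + u x) (φ x)
    - c / 2 * (rip (I * pd u 0 x) (φ x) + rip (I * pd φ 0 x) (u x)))) a

lemma QQ_tr (c : ℝ) (a : Ed d) (u φ : Ed d → ℂ) : QQ c (tr a u) (tr a φ) = QQ c u φ := by
  simp only [QQ, pd_tr, tr]
  exact integral_add_right_eq_self
    (fun x => (∑ i, ‖pd φ i x‖ ^ 2 - c * rip (φ x) (I * pd φ 0 x) + kk (u x) * ‖φ x‖ ^ 2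
    + 2 * rip (φ x) (1 + u x) ^ 2)) a

lemma tr_mem {a : Ed d} (ha : a 0 = 0) {u : Ed d → ℂ} (h : u ∈ slabV d N) : tr a u ∈ slabV d N := by
  refine ⟨h.1.tr a, ?_⟩
  have h1 : tsupport (tr a u) = (Homeomorph.addRight a) ⁻¹' tsupport u :=
    tsupport_comp_eq_preimage u (Homeomorph.addRight a)
  rw [h1]
  intro x hx
  have h2 := h.2 hx
  have h3 : (x + a) 0 = x 0 := by simp [ha]
  rw [slab, Set.mem_ofPred_eq] at h2 ⊢
  simpa [h3] using h2

omit [NeZero d] in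
lemma int_le_of_norm_mul {F G : Type*} [NormedAddCommGroup F] [NormedAddCommGroup G]
    {f : Ed d → F} {g : Ed d → G} (hf : MemLp f 2) (hg : MemLp g 2) {h : Ed d → ℝ}
    (hh : ∀ x, h x = ‖f x‖ * ‖g x‖) : ∫ x, h x ≤ n2 f * n2 g := by
  rw [funext hh]; exact cauchy_schwarz hf hg

omit [NeZero d] in
lemma int_three_le (hu : TF u) (hB : pN u ≤ B) :
    ∫ x, ‖u x‖ ^ 3 ≤ B * n2 (fun x => ‖u x‖ ^ 2) :=
  (int_le_of_norm_mul (hu.memLp 2) (hu.pow_memLp 1) (fun x => by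
    simp only [norm_pow, norm_norm]; ring)).trans
    (mul_le_mul_of_nonneg_right ((n2_le_pN u).trans hB) (n2_nonneg _))

/-- A lower bound for the `L⁴` norm of an almost critical point at a positive level. -/
lemma L4_lower (hS : SobC d S) (hu : TF u) (hB : pN u ≤ B) {g ε c : ℝ} (hε : 0 ≤ ε)
    (hεB : ε * B ≤ g) (hg : g ≤ II c u) (hD : |DD c u u| ≤ ε * pN u) :
    2 * g ≤ (2 * B + S * B ^ 2) * n2 (fun x => ‖u x‖ ^ 2) := by
  set X := n2 (fun x => ‖u x‖ ^ 2) with hX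
  have hX0 : 0 ≤ X := n2_nonneg _
  have hB0 : 0 ≤ B := (pN_nonneg u).trans hB
  have i3 : Integrable fun x => ‖u x‖ ^ 3 :=
    hu.integ (by have := hu.cont; fun_prop) (fun x hx => by
      simp [image_eq_zero_of_notMem_tsupport hx])
  have i4 : Integrable fun x => ‖u x‖ ^ 4 :=
    hu.integ (by have := hu.cont; fun_prop) (fun x hx => by
      simp [image_eq_zero_of_notMem_tsupport hx])
  have h4 : ∫ x, ‖u x‖ ^ 4 = X ^ 2 := by
    rw [hX, n2_sq]
    refine integral_congr_ae (Eventually.of_forall fun x => ?_)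
    simp only [norm_pow, norm_norm]; ring
  have h3 := int_three_le hu hB
  have hXS : X ≤ S * B ^ 2 := (hS.2 u hu).1.trans
    (mul_le_mul_of_nonneg_left (pow_le_pow_left₀ (pN_nonneg u) hB 2) (by linarith [hS.1]))
  have ckk : Continuous fun x => kk (u x) := by
    have h := hu.cont
    unfold kk
    fun_prop
  have ikk : Integrable fun x => kk (u x) * ‖u x‖ ^ 2 :=
    hu.integ (ckk.mul (hu.cont.norm.pow 2)) (fun x hx => by
      simp [image_eq_zero_of_notMem_tsupport hx])
  have cM : Continuous fun x => 1 / 2 * rip (I * pd u 0 x) (u x) := by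
    have h := (hu.pd 0).cont
    have h' := hu.cont
    unfold rip
    fun_prop
  have iE : Integrable fun x => (1 / 2 * ∑ i, ‖pd u i x‖ ^ 2 + 1 / 4 * kk (u x) ^ 2) :=
    ((grad_integrable hu).const_mul _).add ((kk_integrable hu).const_mul _)
  have iM : Integrable fun x => 1 / 2 * rip (I * pd u 0 x) (u x) :=
    hu.integ cM (fun x hx => by
      simp [image_eq_zero_of_notMem_tsupport hx, rip])
  have hid : II c u = 1 / 2 * DD c u u + ∫ x, -(1 / 4) * (kk (u x) * ‖u x‖ ^ 2) := by
    unfold II EE MM DD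
    rw [← integral_const_mul, ← integral_const_mul, ← integral_sub iE (iM.const_mul c),
      ← integral_add ((DD_integrable c hu hu).const_mul _) (ikk.const_mul _)]
    refine integral_congr_ae (Eventually.of_forall fun x => ?_)
    simp only [rip_self]
    simp only [normsq_eq, kk, rip, add_re, add_im, one_re, one_im]
    ring
  have hle : ∫ x, -(1 / 4) * (kk (u x) * ‖u x‖ ^ 2) ≤ 1 / 4 * (2 * (B * X) + X ^ 2) := by
    have : ∫ x, -(1 / 4) * (kk (u x) * ‖u x‖ ^ 2)
        ≤ ∫ x, (1 / 2 * ‖u x‖ ^ 3 + 1 / 4 * ‖u x‖ ^ 4) := by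
      refine integral_mono (ikk.const_mul _) ((i3.const_mul _).add (i4.const_mul _)) fun x => ?_
      have h := neg_abs_le (kk (u x))
      have h' := abs_kk_le (u x)
      have := mul_le_mul_of_nonneg_right (by linarith : -kk (u x) ≤ ‖u x‖ * (2 + ‖u x‖))
        (by positivity : 0 ≤ ‖u x‖ ^ 2)
      simp only
      nlinarith
    rw [integral_add (i3.const_mul _) (i4.const_mul _), integral_const_mul (1 / 2 : ℝ),
      integral_const_mul (1 / 4 : ℝ) (fun x => ‖u x‖ ^ 4), h4] at this
    linarith
  have h5 : DD c u u ≤ g := (le_abs_self _).trans (hD.trans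
    ((mul_le_mul_of_nonneg_left hB hε).trans hεB))
  nlinarith [mul_le_mul_of_nonneg_right hXS hX0]

/-- If the mollification is uniformly small, so is the `L⁴` norm. -/
lemma L4_le_of_mol (hS : SobC d S) (hu : TF u) (hB : pN u ≤ B) {δ κ : ℝ} (hδ : 0 < δ)
    (hκ : ∀ y, ‖mol (sc d rho δ) u y‖ ≤ κ) :
    n2 (fun x => ‖u x‖ ^ 2) ^ 2 ≤ δ * (S * B ^ 4) + κ * (S * B ^ 3) := by
  have hB0 : 0 ≤ B := (pN_nonneg u).trans hB
  have hS0 : 0 ≤ S := by linarith [hS.1]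
  have hκ0 : 0 ≤ κ := (norm_nonneg _).trans (hκ 0)
  set J := mol (sc d rho δ) u with hJ
  have hJT : TF J := hu.mol hδ
  have h2 : n2 (fun x => ‖u x‖ ^ 2) ≤ S * B ^ 2 := (hS.2 u hu).1.trans
    (mul_le_mul_of_nonneg_left (pow_le_pow_left₀ (pN_nonneg u) hB 2) hS0)
  have h3 : n2 (fun x => ‖u x‖ ^ 3) ≤ S * B ^ 3 := (hS.2 u hu).2.trans
    (mul_le_mul_of_nonneg_left (pow_le_pow_left₀ (pN_nonneg u) hB 3) hS0)
  have i3 : Integrable fun x => ‖u x‖ ^ 3 :=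
    hu.integ (by have := hu.cont; fun_prop) (fun x hx => by
      simp [image_eq_zero_of_notMem_tsupport hx])
  have iJ := integrable_mul_norm (hu.pow_memLp 2) ((hJT.sub hu).memLp 2)
  have h4 := cauchy_schwarz (hu.pow_memLp 2) ((hJT.sub hu).memLp 2)
  have h5 : n2 (J - u) ≤ δ * B :=
    (n2_mol_sub hu hδ).trans (mul_le_mul_of_nonneg_left hB hδ.le)
  have h6 := (int_three_le hu hB).trans (mul_le_mul_of_nonneg_left h2 hB0)
  have h7 : n2 (fun x => ‖u x‖ ^ 2) ^ 2
      ≤ ∫ x, (‖‖u x‖ ^ (2 + 1)‖ * ‖(J - u) x‖ + κ * ‖u x‖ ^ 3) := by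
    rw [n2_sq]
    refine integral_mono (hu.pow_memLp 1).norm.integrable_sq (iJ.add (i3.const_mul _)) fun x => ?_
    have h8 : ‖u x‖ ≤ ‖(J - u) x‖ + κ := by
      have := norm_sub_le (J x) ((J - u) x)
      rw [Pi.sub_apply, sub_sub_cancel] at this
      rw [Pi.sub_apply]
      linarith [hκ x]
    have h9 := mul_le_mul_of_nonneg_left h8 (by positivity : 0 ≤ ‖u x‖ ^ 3)
    simp only [norm_pow, norm_norm]
    calc (‖u x‖ ^ 2) ^ 2 = ‖u x‖ ^ 3 * ‖u x‖ := by ring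
      _ ≤ _ := h9
      _ = _ := by ring
  rw [integral_add iJ (i3.const_mul _), integral_const_mul] at h7
  have h10 : n2 (fun x => ‖u x‖ ^ (2 + 1)) * n2 (J - u) ≤ S * B ^ 3 * (δ * B) :=
    mul_le_mul h3 h5 (n2_nonneg _) (by positivity)
  have h11 := mul_le_mul_of_nonneg_left h6 hκ0
  nlinarith

/-- A nonzero value of the mollification is attained within distance one of the slab, and is
controlled by the mass of a translate orthogonal to `x₁` on a fixed ball. -/
lemma mol_tr_le {u : Ed d → ℂ} (hu : u ∈ slabV d N) {δ : ℝ} (hδ : 0 < δ) (h1 : δ ≤ 1) {y : Ed d}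
    (hy : mol (sc d rho δ) u y ≠ 0) : ∃ a : Ed d, a 0 = 0 ∧ ‖mol (sc d rho δ) u y‖
      ≤ n2 (sc d rho δ : Ed d → ℝ) * n2 ((closedBall (0 : Ed d) (N + 2)).indicator (tr a u)) := by
  set k : Ed d → ℝ := sc d rho δ with hk
  have hkc : Continuous k := (sc_smooth rho_KK.smooth _ _).continuous
  have hks : HasCompactSupport k := rho_KK.sc_compact _ hδ
  have hy0 : |y 0| ≤ N + 1 := by
    by_contra hcon
    refine hy (integral_eq_zero_of_ae (Eventually.of_forall fun x => ?_))
    by_cases hx : x ∈ tsupport u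
    · have h2 := slab_abs_le (hu.2 hx)
      have h3 : ‖(x - y) 0‖ ≤ ‖x - y‖ := PiLp.norm_apply_le _ _
      have h4 : (x - y) 0 = x 0 - y 0 := rfl
      rw [h4, Real.norm_eq_abs] at h3
      have h5 := abs_sub_abs_le_abs_sub (y 0) (x 0)
      rw [abs_sub_comm] at h5
      have h6 : δ < ‖x - y‖ := by linarith [not_le.1 hcon]
      simp [hk, sc_supp rho_KK.zero d hδ h6]
    · simp [image_eq_zero_of_notMem_tsupport hx]
  set p : Ed d := EuclideanSpace.single 0 (y 0) with hp
  have hpn : ‖p‖ ≤ N + 1 := by simpa [hp] using hy0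
  refine ⟨y - p, by simp [hp], ?_⟩
  have h1 : mol k u y = ∫ x, k (x - p) • tr (y - p) u x := by
    rw [mol, ← integral_add_right_eq_self _ (y - p)]
    refine integral_congr_ae (Eventually.of_forall fun x => ?_)
    simp only [tr]
    rw [show x + (y - p) - y = x - p by abel]
  have hv : TF (tr (y - p) u) := hu.1.tr _
  set v := tr (y - p) u with hvdef
  have hmk : MemLp (fun x => k (x - p)) 2 :=
    (hkc.comp (by fun_prop)).memLp_of_hasCompactSupport
      (hks.comp_homeomorph (Homeomorph.subRight p))
  have hmv : MemLp ((closedBall (0 : Ed d) (N + 2)).indicator v) 2 :=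
    (hv.memLp 2).indicator measurableSet_closedBall
  rw [h1]
  refine (norm_integral_le_integral_norm _).trans ?_
  have h2 : n2 (fun x => k (x - p)) = n2 k := by
    simp only [sub_eq_add_neg]
    exact n2_tr (-p) k
  rw [← h2]
  refine int_le_of_norm_mul hmk hmv fun x => ?_
  rw [norm_smul]
  by_cases hx : x ∈ closedBall (0 : Ed d) (N + 2)
  · rw [Set.indicator_of_mem hx]
  · have h3 : δ < ‖x - p‖ := by
      rw [mem_closedBall_zero_iff, not_le] at hx
      have := norm_sub_norm_le x p
      linarith
    simp [hk, sc_supp rho_KK.zero d hδ h3]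

/-- A Palais-Smale sequence with second-order information, translated so as not to vanish. -/
structure PSeq (d N : ℕ) [NeZero d] (c M B κ : ℝ) (v : ℕ → slabV d N) : Prop where
  EE_le : ∀ n, EE (v n).1 ≤ M
  pN_le : ∀ n, pN (v n).1 ≤ B
  DD_le : ∀ n, ∀ φ : slabV d N, |DD c (v n).1 φ.1| ≤ 1 / (n + 1) * pN φ.1
  QQ_le : ∀ n : ℕ, ¬ ∃ e₁ e₂ : slabV d N, pN e₁.1 ≤ 1 ∧ pN e₂.1 ≤ 1 ∧
    ∀ a b : ℝ, QQ c (v n).1 (a • e₁ + b • e₂ : slabV d N).1 ≤ -(1 / (n + 1)) * (a ^ 2 + b ^ 2)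
  low : ∀ n, κ ≤ n2 ((closedBall (0 : Ed d) (N + 2)).indicator (v n).1)

/-- A sequence of almost critical points, translated orthogonally to `x₁` such that the `L²` norm on
a fixed ball stays bounded below. -/
lemma HasPS.seq (hd : d = 2 ∨ d = 3) {c M : ℝ} (H : HasPS d N c M) :
    ∃ B κ, 0 ≤ B ∧ 0 < κ ∧ ∃ v, PSeq d N c M B κ v := by
  obtain ⟨g, hg, H⟩ := H
  obtain ⟨S, hS⟩ : ∃ S, SobC d S := sobolev_const hd
  obtain ⟨B, hB, hBd⟩ := pN_bdd d N M
  have hS1 := hS.1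
  have hS0 : 0 ≤ S := by linarith
  set a0 := 2 * g / (2 * B + S * B ^ 2 + 1) with ha0
  set δ := min 1 (a0 ^ 2 / (4 * (S * B ^ 4 + 1))) with hδ
  set κ' := a0 ^ 2 / (4 * (S * B ^ 3 + 1)) with hκ'
  have ha0p : 0 < a0 := by positivity
  have hδp : 0 < δ := lt_min one_pos (by positivity)
  have hκp : 0 < κ' := by positivity
  set κ := κ' / (n2 (sc d rho δ : Ed d → ℝ) + 1) with hκ
  have hnn := n2_nonneg (sc d rho δ : Ed d → ℝ)
  refine ⟨B, κ, hB, by positivity, ?_⟩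
  have key : ∀ n : ℕ, ∃ v : slabV d N, EE v.1 ≤ M ∧ pN v.1 ≤ B ∧
      (∀ φ : slabV d N, |DD c v.1 φ.1| ≤ 1 / (n + 1) * pN φ.1) ∧
      (¬ ∃ e₁ e₂ : slabV d N, pN e₁.1 ≤ 1 ∧ pN e₂.1 ≤ 1 ∧
        ∀ a b : ℝ, QQ c v.1 (a • e₁ + b • e₂ : slabV d N).1 ≤ -(1 / (n + 1)) * (a ^ 2 + b ^ 2)) ∧
      κ ≤ n2 ((closedBall (0 : Ed d) (N + 2)).indicator v.1) := by
    intro n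
    set ε := min (1 / ((n : ℝ) + 1)) (g / (B + 1)) with hε
    have hεp : 0 < ε := lt_min (by positivity) (by positivity)
    have hε1 : ε ≤ 1 / ((n : ℝ) + 1) := min_le_left _ _
    obtain ⟨z, z1, z2, -, z4, z5⟩ := H ε hεp
    have hzB := hBd z.1 z.2.1 z.2.2 z1
    have hεB : ε * B ≤ g := by
      have := mul_le_mul_of_nonneg_right (min_le_right _ _ : ε ≤ g / (B + 1)) hB
      refine this.trans ?_
      rw [div_mul_eq_mul_div, div_le_iff₀ (by positivity)]
      nlinarith
    have hL := L4_lower hS z.2.1 hzB hεp.le hεB z2 (z4 z)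
    have hX0 := n2_nonneg (fun x => ‖z.1 x‖ ^ 2)
    have hXa : a0 ≤ n2 (fun x => ‖z.1 x‖ ^ 2) := by
      rw [ha0, div_le_iff₀ (by positivity)]
      nlinarith
    have hex : ∃ y, κ' < ‖mol (sc d rho δ) z.1 y‖ := by
      by_contra hcon
      push Not at hcon
      have h1 := L4_le_of_mol hS z.2.1 hzB hδp hcon
      have h2 := pow_le_pow_left₀ ha0p.le hXa 2
      have h3 : δ * (S * B ^ 4) ≤ a0 ^ 2 / 4 := by
        refine (mul_le_mul_of_nonneg_right (min_le_right _ _) (by positivity)).trans ?_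
        rw [div_mul_eq_mul_div, div_le_div_iff₀ (by positivity) (by positivity)]
        nlinarith [sq_nonneg a0]
      have h4 : κ' * (S * B ^ 3) ≤ a0 ^ 2 / 4 := by
        rw [hκ', div_mul_eq_mul_div, div_le_div_iff₀ (by positivity) (by positivity)]
        nlinarith [sq_nonneg a0]
      nlinarith
    obtain ⟨y, hy⟩ := hex
    obtain ⟨a, ha, hle⟩ := mol_tr_le z.2 hδp (min_le_left _ _) (y := y)
      (norm_pos_iff.1 (hκp.trans hy))
    have ha' : (-a) 0 = 0 := by simp [ha]
    refine ⟨⟨tr a z.1, tr_mem ha z.2⟩, (EE_tr a z.1).trans_le z1, (pN_tr a z.1).trans_le hzB,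
      fun φ => ?_, ?_, ?_⟩
    · have h1 := z4 ⟨tr (-a) φ.1, tr_mem ha' φ.2⟩
      simp only at h1 ⊢
      rw [← DD_tr c a, tr_tr_neg, pN_tr] at h1
      exact h1.trans (mul_le_mul_of_nonneg_right hε1 (pN_nonneg _))
    · rintro ⟨e₁, e₂, h1, h2, h3⟩
      refine z5 ⟨⟨tr (-a) e₁.1, tr_mem ha' e₁.2⟩, ⟨tr (-a) e₂.1, tr_mem ha' e₂.2⟩,
        (pN_tr _ _).trans_le h1, (pN_tr _ _).trans_le h2, fun s t => ?_⟩
      have h4 := h3 s t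
      rw [← QQ_tr c a]
      have h5 : tr a (s • (⟨tr (-a) e₁.1, tr_mem ha' e₁.2⟩ : slabV d N)
          + t • (⟨tr (-a) e₂.1, tr_mem ha' e₂.2⟩ : slabV d N) : slabV d N).1
          = (s • e₁ + t • e₂ : slabV d N).1 := by
        funext x
        simp [tr]
      rw [h5]
      refine h4.trans ?_
      nlinarith [sq_nonneg s, sq_nonneg t]
    · rw [hκ, div_le_iff₀ (by positivity)]
      have := n2_nonneg ((closedBall (0 : Ed d) (N + 2)).indicator (tr a z.1))
      simp only
      nlinarith
  choose v h1 h2 h3 h4 h5 using key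
  exact ⟨v, h1, h2, h3, h4, h5⟩

end Slab
end Nonvanishing

/-! ### Weighted compactness -/

section WeakLimit
variable {d : ℕ}

/-- A bounded sequence in `L²` has a weakly convergent subsequence. -/
theorem weak_subseq {v : ℕ → Ed d → ℂ} (hv : ∀ n, MemLp (v n) 2) {B : ℝ} (hB : ∀ n, n2 (v n) ≤ B) :
    ∃ φ : ℕ → ℕ, StrictMono φ ∧ ∀ k : Ed d → ℝ, MemLp k 2 →
      ∃ l, Tendsto (fun n => ∫ x, k x • v (φ n) x) atTop (𝓝 l) := by
  have : Fact ((2 : ENNReal) ≠ ⊤) := ⟨by norm_num⟩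
  have : SecondCountableTopology (Lp ℂ 2 (volume : Measure (Ed d))) := inferInstance
  set f : ℕ → Lp ℂ 2 (volume : Measure (Ed d)) := fun n => (hv n).toLp (v n) with hf
  set T : ℕ → WeakDual ℂ (Lp ℂ 2 (volume : Measure (Ed d))) := fun n =>
    StrongDual.toWeakDual (InnerProductSpace.toDual ℂ _ (f n)) with hT
  have hmem : ∀ n, T n ∈ WeakDual.toStrongDual ⁻¹'
      closedBall (0 : StrongDual ℂ (Lp ℂ 2 (volume : Measure (Ed d)))) B := by
    intro n
    change InnerProductSpace.toDual ℂ _ (f n) ∈ closedBall _ _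
    rw [mem_closedBall_zero_iff, LinearIsometryEquiv.norm_map, hf, Lp.norm_toLp, ← n2_eq (hv n)]
    exact hB n
  have key := WeakDual.isSeqCompact_closedBall ℂ (Lp ℂ 2 (volume : Measure (Ed d))) 0 B hmem
  obtain ⟨g, -, φ, hφ, hg⟩ := key
  refine ⟨φ, hφ, fun k hk => ?_⟩
  have hkc : MemLp (fun x => (k x : ℂ)) 2 := hk.ofReal
  have h1 : Tendsto (fun n => T (φ n) (hkc.toLp _)) atTop (𝓝 (g (hkc.toLp _))) :=
    ((WeakDual.eval_continuous (hkc.toLp _)).tendsto g).comp hg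
  refine ⟨starRingEnd ℂ (g (hkc.toLp _)), ?_⟩
  have h2 := ((continuous_star (R := ℂ)).tendsto _).comp h1
  refine h2.congr fun n => ?_
  have h3 : T (φ n) (hkc.toLp _) = inner ℂ (f (φ n)) (hkc.toLp _) := rfl
  simp only [Function.comp_apply]
  rw [h3]
  change starRingEnd ℂ _ = _
  rw [inner_conj_symm, L2.inner_def]
  refine integral_congr_ae ?_
  filter_upwards [hkc.coeFn_toLp, (hv (φ n)).coeFn_toLp] with x h4 h5
  simp only [hf]
  rw [h4, h5]
  simp [mul_comm]

/-- An integrable weight. -/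
def wt (x : Ed d) : ℝ := ((1 + ‖x‖) ^ 2)⁻¹

lemma wt_pos (x : Ed d) : 0 < wt x := by unfold wt; positivity
lemma wt_le_one (x : Ed d) : wt x ≤ 1 :=
  inv_le_one_of_one_le₀ (one_le_pow₀ (by linarith [norm_nonneg x]))
lemma wt_cont : Continuous (wt : Ed d → ℝ) := by
  unfold wt
  exact Continuous.inv₀ (by fun_prop) fun x => by positivity

lemma wt_memLp (hd : d = 2 ∨ d = 3) : MemLp (wt : Ed d → ℝ) 2 := by
  rw [memLp_two_iff_integrable_sq wt_cont.aestronglyMeasurable]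
  have h := integrable_one_add_norm (E := Ed d) (μ := volume) (r := 4)
    (by rcases hd with rfl | rfl <;> simp <;> norm_num)
  refine h.congr (Eventually.of_forall fun x => ?_)
  simp only [wt]
  rw [Real.rpow_neg (by positivity), inv_pow, ← pow_mul]
  norm_num

lemma wt_smul_memLp {F : Type*} [NormedAddCommGroup F] [NormedSpace ℝ F] {f : Ed d → F}
    (hf : MemLp f 2) : MemLp (fun x => wt x • f x) 2 := by
  refine hf.of_le (wt_cont.aestronglyMeasurable.smul hf.1) (Eventually.of_forall fun x => ?_)
  rw [norm_smul, Real.norm_of_nonneg (wt_pos x).le]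
  exact mul_le_of_le_one_left (norm_nonneg _) (wt_le_one x)

lemma n2_wt_le {F : Type*} [NormedAddCommGroup F] [NormedSpace ℝ F] {f : Ed d → F}
    (hf : MemLp f 2) : n2 (fun x => wt x • f x) ≤ n2 f := by
  refine n2_mono hf fun x => ?_
  rw [norm_smul, Real.norm_of_nonneg (wt_pos x).le]
  exact mul_le_of_le_one_left (norm_nonneg _) (wt_le_one x)

/-- Weighted `L²` compactness of sequences bounded in `H¹`. -/
theorem weight_compact [NeZero d] (hd : d = 2 ∨ d = 3) {v : ℕ → Ed d → ℂ} (hv : ∀ n, TF (v n)) {B : ℝ}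
    (hB : ∀ n, pN (v n) ≤ B) : ∃ φ : ℕ → ℕ, StrictMono φ ∧ ∃ u : Ed d → ℂ,
      MemLp (fun x => wt x • u x) 2 ∧
      Tendsto (fun n => n2 (fun x => wt x • (v (φ n) x - u x))) atTop (𝓝 0) := by
  have hB0 : 0 ≤ B := (pN_nonneg _).trans (hB 0)
  obtain ⟨φ, hφ, hw⟩ := weak_subseq (fun n => (hv n).memLp 2) (fun n => (n2_le_pN _).trans (hB n))
  refine ⟨φ, hφ, ?_⟩
  -- the mollifications converge pointwise, hence in the weighted space
  have hmol : ∀ δ > 0, ∃ L : Ed d → ℂ, MemLp (fun x => wt x • L x) 2 ∧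
      Tendsto (fun n => n2 (fun x => wt x • mol (sc d rho δ) (v (φ n)) x - wt x • L x))
        atTop (𝓝 0) := by
    intro δ hδ
    have hkc : Continuous (sc d rho δ : Ed d → ℝ) := (sc_smooth rho_KK.smooth _ _).continuous
    have hk : ∀ y : Ed d, MemLp (fun x => (sc d rho δ : Ed d → ℝ) (x - y)) 2 := fun y =>
      (hkc.comp (by fun_prop)).memLp_of_hasCompactSupport
        ((rho_KK.sc_compact _ hδ).comp_homeomorph (Homeomorph.subRight y))
    choose L hL' using fun y => hw _ (hk y)
    have hL : ∀ y, Tendsto (fun n => mol (sc d rho δ) (v (φ n)) y) atTop (𝓝 (L y)) := hL'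
    set C := n2 (sc d rho δ : Ed d → ℝ) * B with hC
    have hbd : ∀ n y, ‖mol (sc d rho δ) (v (φ n)) y‖ ≤ C := by
      intro n y
      refine (norm_integral_le_integral_norm _).trans ?_
      refine (int_le_of_norm_mul (hk y) ((hv (φ n)).memLp 2) fun x => norm_smul _ _).trans ?_
      have h2 : n2 (fun x => (sc d rho δ : Ed d → ℝ) (x - y)) = n2 (sc d rho δ : Ed d → ℝ) := by
        simp only [sub_eq_add_neg]
        exact n2_tr (-y) _
      rw [h2]
      exact mul_le_mul_of_nonneg_left ((n2_le_pN _).trans (hB _)) (n2_nonneg _)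
    have hLm : AEStronglyMeasurable L := aestronglyMeasurable_of_tendsto_ae atTop
      (fun n => ((hv (φ n)).mol hδ).cont.aestronglyMeasurable) (Eventually.of_forall hL)
    have hLC : ∀ y, ‖L y‖ ≤ C := fun y =>
      le_of_tendsto (hL y).norm (Eventually.of_forall fun n => hbd n y)
    have hC0 : 0 ≤ C := mul_nonneg (n2_nonneg _) hB0
    refine ⟨L, ?_, ?_⟩
    · refine ((wt_memLp hd).const_mul C).of_le (wt_cont.aestronglyMeasurable.smul hLm)
        (Eventually.of_forall fun x => ?_)
      rw [norm_smul, norm_mul, mul_comm, Real.norm_of_nonneg hC0]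
      exact mul_le_mul_of_nonneg_right (hLC x) (norm_nonneg _)
    · have h1 : Tendsto (fun n => ∫ x, ‖wt x • mol (sc d rho δ) (v (φ n)) x - wt x • L x‖ ^ 2)
          atTop (𝓝 (∫ x : Ed d, 0)) := by
        refine tendsto_integral_of_dominated_convergence (fun x => (2 * C) ^ 2 * wt x ^ 2) ?_ ?_ ?_ ?_
        · exact fun n => (((wt_cont.smul ((hv (φ n)).mol hδ).cont).aestronglyMeasurable.sub
            (wt_cont.aestronglyMeasurable.smul hLm)).norm.aemeasurable.pow_const 2).aestronglyMeasurable
        · exact ((memLp_two_iff_integrable_sq wt_cont.aestronglyMeasurable).1 (wt_memLp hd)).const_mul _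
        · refine fun n => Eventually.of_forall fun x => ?_
          rw [← smul_sub, norm_pow, norm_norm, norm_smul, Real.norm_of_nonneg (wt_pos x).le,
            mul_pow, mul_comm]
          refine mul_le_mul_of_nonneg_right (pow_le_pow_left₀ (norm_nonneg _) ?_ 2) (by positivity)
          exact (norm_sub_le _ _).trans (by linarith [hbd n x, hLC x])
        · refine Eventually.of_forall fun x => ?_
          have h2 := ((hL x).const_smul (wt x)).sub_const (wt x • L x)
          rw [sub_self] at h2
          simpa using h2.norm.pow 2
      simp only [integral_zero] at h1
      simpa [n2] using h1.sqrt
  set F : ℕ → Lp ℂ 2 (volume : Measure (Ed d)) := fun n =>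
    (wt_smul_memLp ((hv (φ n)).memLp 2)).toLp _ with hF
  have hdist : ∀ {f g : Ed d → ℂ} (hf : MemLp f 2) (hg : MemLp g 2),
      dist (hf.toLp f) (hg.toLp g) = n2 (fun x => f x - g x) := by
    intro f g hf hg
    rw [dist_eq_norm, ← MemLp.toLp_sub, Lp.norm_toLp, ← n2_eq (hf.sub hg)]
    rfl
  have hcau : CauchySeq F := by
    rw [Metric.cauchySeq_iff']
    intro ε hε
    set δ := ε / (4 * (B + 1)) with hδ
    have hδp : 0 < δ := by positivity
    obtain ⟨L, hL, hLt⟩ := hmol δ hδp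
    have hFL : ∀ᶠ n in atTop, dist (F n) (hL.toLp _) < ε / 2 := by
      filter_upwards [hLt.eventually_lt_const (by positivity : 0 < ε / 4)] with n hn
      have hm := wt_smul_memLp (((hv (φ n)).mol hδp).memLp 2)
      refine (dist_triangle _ (hm.toLp _) _).trans_lt ?_
      rw [hdist _ _, hdist _ _]
      have h1 : n2 (fun x => wt x • v (φ n) x - wt x • mol (sc d rho δ) (v (φ n)) x) ≤ ε / 4 := by
        have h2 : n2 (fun x => wt x • v (φ n) x - wt x • mol (sc d rho δ) (v (φ n)) x)
            ≤ n2 (mol (sc d rho δ) (v (φ n)) - v (φ n)) := by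
          refine n2_mono ((((hv (φ n)).mol hδp).sub (hv _)).memLp 2) fun x => ?_
          rw [← smul_sub, norm_smul, Real.norm_of_nonneg (wt_pos x).le, Pi.sub_apply,
            norm_sub_rev]
          exact mul_le_of_le_one_left (norm_nonneg _) (wt_le_one x)
        refine h2.trans ((n2_mol_sub (hv _) hδp).trans ?_)
        refine (mul_le_mul_of_nonneg_left (hB _) hδp.le).trans ?_
        rw [hδ, div_mul_eq_mul_div, div_le_div_iff₀ (by positivity) (by positivity)]
        nlinarith
      linarith
    obtain ⟨n₀, hn₀⟩ := eventually_atTop.1 hFL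
    refine ⟨n₀, fun n hn => ?_⟩
    have := dist_triangle_right (F n) (F n₀) (hL.toLp _)
    linarith [hn₀ n hn, hn₀ n₀ le_rfl]
  obtain ⟨W, hW⟩ := cauchySeq_tendsto_of_complete hcau
  have hWm : MemLp (W : Ed d → ℂ) 2 := Lp.memLp W
  have hu : ∀ x, wt x • ((wt x)⁻¹ • (W : Ed d → ℂ) x) = (W : Ed d → ℂ) x := fun x =>
    smul_inv_smul₀ (wt_pos x).ne' _
  refine ⟨fun x => (wt x)⁻¹ • (W : Ed d → ℂ) x, ?_, ?_⟩
  · simpa only [hu] using hWm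
  · have h1 := (tendsto_iff_dist_tendsto_zero).1 hW
    refine h1.congr fun n => ?_
    have h2 := hdist (wt_smul_memLp ((hv (φ n)).memLp 2)) hWm
    rw [Lp.toLp_coeFn] at h2
    rw [h2]
    simp only [smul_sub, hu]

end WeakLimit

/-! ### The limit of a Palais-Smale sequence -/

section LimitPackage
variable {d : ℕ} [NeZero d] {N : ℕ} {c M B κ : ℝ} {v : ℕ → slabV d N} {u : Ed d → ℂ}

lemma PSeq.sub (h : PSeq d N c M B κ v) {φ : ℕ → ℕ} (hφ : StrictMono φ) :
    PSeq d N c M B κ (v ∘ φ) := by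
  have hle : ∀ n : ℕ, (1 : ℝ) / (φ n + 1) ≤ 1 / (n + 1) := fun n =>
    one_div_le_one_div_of_le (by positivity) (by
      have : (n : ℝ) ≤ φ n := by exact_mod_cast hφ.le_apply
      linarith)
  refine ⟨fun n => h.EE_le _, fun n => h.pN_le _, fun n ψ => (h.DD_le (φ n) ψ).trans
    (mul_le_mul_of_nonneg_right (hle n) (pN_nonneg _)), fun n => ?_, fun n => h.low _⟩
  rintro ⟨e₁, e₂, h1, h2, h3⟩
  refine h.QQ_le (φ n) ⟨e₁, e₂, h1, h2, fun a b => (h3 a b).trans ?_⟩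
  nlinarith [hle n, sq_nonneg a, sq_nonneg b]

/-- `u` is the weighted `L²` limit of `v`, with the integrability inherited from the bounds. -/
structure Lim (N : ℕ) (v : ℕ → slabV d N) (u : Ed d → ℂ) : Prop where
  zero : ∀ x ∉ slab d N, u x = 0
  mem : MemLp u 2
  mem2 : MemLp (fun x => ‖u x‖ ^ 2) 2
  mem3 : MemLp (fun x => ‖u x‖ ^ 3) 2
  tends : Tendsto (fun n => n2 (fun x => wt x • ((v n).1 x - u x))) atTop (𝓝 0)

omit [NeZero d] in
lemma eLpNorm_eq_n2 {F : Type*} [NormedAddCommGroup F] {f : Ed d → F} (hf : MemLp f 2) :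
    eLpNorm f 2 = ENNReal.ofReal (n2 f) := by
  rw [n2_eq hf, ENNReal.ofReal_toReal hf.eLpNorm_ne_top]

omit [NeZero d] in
lemma fatou_memLp {F : Type*} [NormedAddCommGroup F] {f : ℕ → Ed d → F} {g : Ed d → F} {C : ℝ}
    (hf : ∀ n, MemLp (f n) 2) (hC : ∀ n, n2 (f n) ≤ C) (hg : AEStronglyMeasurable g)
    (h : ∀ᵐ x, Tendsto (fun n => f n x) atTop (𝓝 (g x))) : MemLp g 2 := by
  refine ⟨hg, (Lp.eLpNorm_lim_le_liminf_eLpNorm (fun n => (hf n).1) g h).trans_lt ?_⟩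
  refine lt_of_le_of_lt (b := ENNReal.ofReal C) ?_ ENNReal.ofReal_lt_top
  refine (liminf_le_liminf (Eventually.of_forall fun n => ?_)).trans_eq
    (liminf_const (ENNReal.ofReal C))
  rw [eLpNorm_eq_n2 (hf n)]
  exact ENNReal.ofReal_le_ofReal (hC n)

/-- A subsequence converges in weighted `L²`; the integrability of the limit follows from almost
everywhere convergence and Fatou's lemma. -/
lemma PSeq.limit (hd : d = 2 ∨ d = 3) (h : PSeq d N c M B κ v) :
    ∃ v' u, PSeq d N c M B κ v' ∧ Lim N v' u := by
  obtain ⟨S, hS⟩ : ∃ S, SobC d S := sobolev_const hd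
  obtain ⟨φ, hφ, u, hu, ht⟩ := weight_compact hd (fun n => (v n).2.1) h.pN_le
  have hvm : ∀ n, MemLp (fun x => wt x • (v (φ n)).1 x) 2 := fun n =>
    wt_smul_memLp ((v (φ n)).2.1.memLp 2)
  have h1 : Tendsto (fun n => eLpNorm ((fun x => wt x • (v (φ n)).1 x) - fun x => wt x • u x) 2)
      atTop (𝓝 0) := by
    have h2 := ENNReal.tendsto_ofReal ht
    rw [ENNReal.ofReal_zero] at h2
    refine h2.congr fun n => ?_
    rw [eLpNorm_eq_n2 ((hvm n).sub hu)]
    simp only [smul_sub]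
    rfl
  have h3 := tendstoInMeasure_of_tendsto_eLpNorm (by norm_num) (fun n => (hvm n).1) hu.1 h1
  obtain ⟨ns, hns, hae⟩ := h3.exists_seq_tendsto_ae
  have hae' : ∀ᵐ x, Tendsto (fun n => (v (φ (ns n))).1 x) atTop (𝓝 (u x)) := by
    filter_upwards [hae] with x hx
    have := hx.const_smul (wt x)⁻¹
    simpa only [inv_smul_smul₀ (wt_pos x).ne'] using this
  have hv' := h.sub (hφ.comp hns)
  set v' := v ∘ (φ ∘ ns) with hv'def
  set u' := (slab d N).indicator u with hu'
  have huu : u =ᵐ[volume] u' := by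
    filter_upwards [hae'] with x hx
    by_cases hxs : x ∈ slab d N
    · rw [hu', Set.indicator_of_mem hxs]
    · rw [hu', Set.indicator_of_notMem hxs]
      refine tendsto_nhds_unique hx (tendsto_const_nhds.congr fun n => ?_)
      rw [image_eq_zero_of_notMem_tsupport fun hh => hxs ((v (φ (ns n))).2.2 hh)]
  have hum : AEStronglyMeasurable u := by
    have h5 : u = fun x => (wt x)⁻¹ • (wt x • u x) := by
      funext x; rw [inv_smul_smul₀ (wt_pos x).ne']
    rw [h5]
    exact (Continuous.inv₀ wt_cont fun x => (wt_pos x).ne').aestronglyMeasurable.smul hu.1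
  have hum' : AEStronglyMeasurable u' := hum.congr huu
  have hlim : ∀ᵐ x, Tendsto (fun n => (v' n).1 x) atTop (𝓝 (u' x)) := by
    filter_upwards [hae', huu] with x hx hx2
    rw [← hx2]
    exact hx
  have hSB : ∀ k n, S * pN (v' n).1 ^ k ≤ S * B ^ k := fun k n =>
    mul_le_mul_of_nonneg_left (pow_le_pow_left₀ (pN_nonneg _) (hv'.pN_le n) k)
      (by linarith [hS.1])
  refine ⟨v', u', hv', fun x hx => Set.indicator_of_notMem hx _,
    fatou_memLp (fun n => (v' n).2.1.memLp 2) (fun n => (n2_le_pN _).trans (hv'.pN_le n)) hum' hlim,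
    fatou_memLp (fun n => (v' n).2.1.pow_memLp 1)
      (fun n => (hS.2 _ (v' n).2.1).1.trans (hSB 2 n))
      (hum'.norm.aemeasurable.pow_const 2).aestronglyMeasurable ?_,
    fatou_memLp (fun n => (v' n).2.1.pow_memLp 2)
      (fun n => (hS.2 _ (v' n).2.1).2.trans (hSB 3 n))
      (hum'.norm.aemeasurable.pow_const 3).aestronglyMeasurable ?_, ?_⟩
  · filter_upwards [hlim] with x hx using hx.norm.pow 2
  · filter_upwards [hlim] with x hx using hx.norm.pow 3
  · refine (ht.comp hns.tendsto_atTop).congr fun n => ?_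
    simp only [n2, Function.comp_apply]
    congr 1
    refine integral_congr_ae ?_
    filter_upwards [huu] with x hx
    rw [hx]
    rfl

end LimitPackage

/-! ### Convergence of nonlinear integrals -/

section Convergence
variable {d : ℕ} [NeZero d] {N : ℕ} {c M B κ : ℝ} {v : ℕ → slabV d N} {u : Ed d → ℂ}

/-- Passage to the limit in integrals whose integrand is locally Lipschitz in the unknown, with
quadratic growth of the Lipschitz constant. -/
theorem Lim.conv (hd : d = 2 ∨ d = 3) (hL : Lim N v u) {A : ℝ}
    (hA : ∀ n, n2 (fun x => ‖(v n).1 x‖ ^ 2) ≤ A) {G : ℂ → Ed d → ℝ}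
    (hG : Continuous fun p : ℂ × Ed d => G p.1 p.2) {C : ℝ} (hC : 0 ≤ C)
    (h : ∀ z w x, |G z x - G w x| ≤ C * wt x ^ 2 * (‖z - w‖ * (1 + ‖z‖ ^ 2 + ‖w‖ ^ 2)))
    (hi : ∀ n, Integrable fun x => G ((v n).1 x) x) :
    Integrable (fun x => G (u x) x) ∧
      Tendsto (fun n => ∫ x, G ((v n).1 x) x) atTop (𝓝 (∫ x, G (u x) x)) := by
  have hum := hL.mem.1
  have hGu : AEStronglyMeasurable fun x => G (u x) x :=
    hG.comp_aestronglyMeasurable (hum.prodMk aestronglyMeasurable_id)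
  have hw := wt_memLp (d := d) hd
  have hf : ∀ n, MemLp (fun x => wt x • ((v n).1 x - u x)) 2 := fun n =>
    wt_smul_memLp (((v n).2.1.memLp 2).sub hL.mem)
  have hp : ∀ n, MemLp (fun x => wt x + (‖(v n).1 x‖ ^ 2 + ‖u x‖ ^ 2)) 2 := fun n =>
    hw.add (((v n).2.1.pow_memLp 1).add hL.mem2)
  set A' := n2 (wt : Ed d → ℝ) + (A + n2 (fun x => ‖u x‖ ^ 2)) with hA'
  have hg : ∀ n, MemLp (fun x => wt x * (1 + ‖(v n).1 x‖ ^ 2 + ‖u x‖ ^ 2)) 2 ∧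
      n2 (fun x => wt x * (1 + ‖(v n).1 x‖ ^ 2 + ‖u x‖ ^ 2)) ≤ A' := by
    intro n
    have hpt : ∀ x, ‖wt x * (1 + ‖(v n).1 x‖ ^ 2 + ‖u x‖ ^ 2)‖
        ≤ ‖wt x + (‖(v n).1 x‖ ^ 2 + ‖u x‖ ^ 2)‖ := by
      intro x
      have h1 := wt_pos x
      have h2 := wt_le_one x
      rw [Real.norm_of_nonneg (by positivity), Real.norm_of_nonneg (by positivity)]
      nlinarith [mul_le_mul_of_nonneg_right h2 (by positivity : 0 ≤ ‖(v n).1 x‖ ^ 2 + ‖u x‖ ^ 2)]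
    refine ⟨(hp n).of_le ?_ (Eventually.of_forall hpt), (n2_mono (hp n) hpt).trans ?_⟩
    · have h1 := (v n).2.1.cont.norm.pow 2
      exact wt_cont.aestronglyMeasurable.mul
        (((continuous_const.add h1).aestronglyMeasurable).add hL.mem2.1)
    · refine (n2_add_le hw (((v n).2.1.pow_memLp 1).add hL.mem2)).trans (add_le_add le_rfl ?_)
      exact (n2_add_le ((v n).2.1.pow_memLp 1) hL.mem2).trans (add_le_add (hA n) le_rfl)
  have hbd : ∀ n x, ‖G ((v n).1 x) x - G (u x) x‖ ≤ C * (‖wt x • ((v n).1 x - u x)‖ *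
      ‖wt x * (1 + ‖(v n).1 x‖ ^ 2 + ‖u x‖ ^ 2)‖) := by
    intro n x
    have h1 := wt_pos x
    rw [norm_smul, Real.norm_of_nonneg h1.le,
      Real.norm_of_nonneg (by positivity : 0 ≤ wt x * (1 + ‖(v n).1 x‖ ^ 2 + ‖u x‖ ^ 2)),
      Real.norm_eq_abs]
    exact (h _ _ x).trans_eq (by ring)
  have hint := fun n => (integrable_mul_norm (hf n) (hg n).1).const_mul C
  have hD : ∀ n, Integrable fun x => G ((v n).1 x) x - G (u x) x := fun n =>
    (hint n).mono' ((hi n).1.sub hGu) (Eventually.of_forall (hbd n))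
  have hu : Integrable fun x => G (u x) x := by
    have := (hi 0).sub (hD 0)
    refine this.congr (Eventually.of_forall fun x => ?_)
    simp
  refine ⟨hu, ?_⟩
  rw [tendsto_iff_norm_sub_tendsto_zero]
  have h0 := (hL.tends.mul_const A').const_mul C
  rw [zero_mul, mul_zero] at h0
  refine squeeze_zero (fun n => norm_nonneg _) (fun n => ?_) h0
  rw [← integral_sub (hi n) hu]
  refine (norm_integral_le_of_norm_le (hint n) (Eventually.of_forall (hbd n))).trans ?_
  rw [integral_const_mul]
  exact mul_le_mul_of_nonneg_left ((cauchy_schwarz (hf n) (hg n).1).trans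
    (mul_le_mul_of_nonneg_left (hg n).2 (n2_nonneg _))) hC

omit [NeZero d] in
/-- Compactly supported continuous functions are dominated by the weight. -/
theorem wt_bound {F : Type*} [NormedAddCommGroup F] {f : Ed d → F} (hf : Continuous f)
    (hs : HasCompactSupport f) : ∃ C, 0 ≤ C ∧ ∀ x, ‖f x‖ ≤ C * wt x ^ 2 := by
  have hc : Continuous fun x => ‖f x‖ * (wt x ^ 2)⁻¹ :=
    hf.norm.mul (Continuous.inv₀ (wt_cont.pow 2) fun x => (pow_pos (wt_pos x) 2).ne')
  obtain ⟨C, hC⟩ := hc.bounded_above_of_compact_support (hs.norm.mul_right)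
  refine ⟨C, (norm_nonneg _).trans (hC 0), fun x => ?_⟩
  have h := (le_abs_self _).trans (hC x)
  have h2 := pow_pos (wt_pos x) 2
  rwa [← div_eq_mul_inv, div_le_iff₀ h2] at h

/-- The sequence is bounded in `L⁴`. -/
lemma PSeq.n2_sq_le (hd : d = 2 ∨ d = 3) (h : PSeq d N c M B κ v) :
    ∃ A, ∀ n, n2 (fun x => ‖(v n).1 x‖ ^ 2) ≤ A := by
  obtain ⟨S, hS⟩ : ∃ S, SobC d S := sobolev_const hd
  exact ⟨S * B ^ 2, fun n => (hS.2 _ (v n).2.1).1.trans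
    (mul_le_mul_of_nonneg_left (pow_le_pow_left₀ (pN_nonneg _) (h.pN_le n) 2)
      (by linarith [hS.1]))⟩

end Convergence

/-! ### Cutoffs near the boundary -/

section Cutoff
variable {d : ℕ} [NeZero d] {N : ℕ} {c M B κ : ℝ} {v : ℕ → slabV d N} {u Φ : Ed d → ℂ}

lemma plateau_deriv_uniform : ∃ C, 0 ≤ C ∧ ∀ R t, |deriv (plateau R) t| ≤ C := by
  obtain ⟨C, hC⟩ := sT_deriv_cont.bounded_above_of_compact_support sT_deriv_supp
  have hC0 : 0 ≤ C := (norm_nonneg _).trans (hC 0)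
  refine ⟨2 * C, by positivity, fun R t => ?_⟩
  have h1 : HasDerivAt (plateau R) (deriv Real.smoothTransition (t + (R + 1)) * 1 *
      Real.smoothTransition (R + 1 - t) + Real.smoothTransition (t + (R + 1)) *
      (deriv Real.smoothTransition (R + 1 - t) * -1)) t :=
    ((sT_hasDeriv _).comp t ((hasDerivAt_id t).add_const (R + 1))).mul
      ((sT_hasDeriv _).comp t ((hasDerivAt_id t).const_sub (R + 1)))
  rw [h1.deriv]
  refine (abs_add_le _ _).trans ?_
  rw [abs_mul, abs_mul, abs_mul, abs_mul, abs_neg, abs_one, mul_one, mul_one]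
  have h2 : ∀ s, |Real.smoothTransition s| ≤ 1 := fun s => by
    rw [abs_of_nonneg (Real.smoothTransition.nonneg s)]
    exact Real.smoothTransition.le_one s
  have h3 := mul_le_mul (hC (t + (R + 1))) (h2 (R + 1 - t)) (abs_nonneg _) hC0
  have h4 := mul_le_mul (h2 (t + (R + 1))) (hC (R + 1 - t)) (norm_nonneg _) zero_le_one
  rw [Real.norm_eq_abs] at h3 h4
  linarith

/-- A smooth cutoff in the first variable, vanishing within distance `1/k` of the boundary
of the slab and equal to `1` at distance more than `2/k`. -/
def cut (N : ℕ) (k : ℝ) (t : ℝ) : ℝ := plateau (k * N - 2) (k * t)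

lemma cut_smooth (N : ℕ) (k : ℝ) : ContDiff ℝ (⊤ : ℕ∞) (cut N k) :=
  (plateau_smooth _).comp (contDiff_const.mul contDiff_id)

lemma cut_one {k t : ℝ} (hk : 0 < k) (ht : |t| ≤ N - 2 / k) : cut N k t = 1 := by
  refine plateau_one ?_
  have h1 : k * |t| ≤ k * N - 2 := by
    have := mul_le_mul_of_nonneg_left ht hk.le
    rwa [mul_sub, mul_div_cancel₀ _ hk.ne'] at this
  rw [← abs_of_pos hk, ← abs_mul, abs_of_pos hk] at h1
  exact ⟨(abs_le.1 h1).1, (abs_le.1 h1).2⟩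

lemma cut_zero {k t : ℝ} (hk : 0 < k) (ht : N - 1 / k < |t|) : cut N k t = 0 := by
  refine plateau_zero fun hcon => ?_
  have h1 : |k * t| ≤ k * N - 2 + 1 := abs_le.2 ⟨hcon.1, hcon.2⟩
  rw [abs_mul, abs_of_pos hk] at h1
  have := mul_lt_mul_of_pos_left ht hk
  rw [mul_sub, mul_div_cancel₀ _ hk.ne'] at this
  linarith

lemma cut_deriv {C : ℝ} (hC0 : 0 ≤ C) (hC : ∀ R t, |deriv (plateau R) t| ≤ C) {k t : ℝ} (hk : 0 < k) :
    |deriv (cut N k) t| * |(N : ℝ) - abs t| ≤ 2 * C := by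
  by_cases h1 : |t| < N - 2 / k
  · have h2 : cut N k =ᶠ[𝓝 t] fun _ => 1 := by
      filter_upwards [(continuous_abs.tendsto t).eventually_lt_const h1] with s hs
      exact cut_one hk hs.le
    rw [h2.deriv_eq]
    simp [hC0]
  by_cases h3 : (N : ℝ) - 1 / k < |t|
  · have h2 : cut N k =ᶠ[𝓝 t] fun _ => 0 := by
      filter_upwards [(continuous_abs.tendsto t).eventually_const_lt h3] with s hs
      exact cut_zero hk hs
    rw [h2.deriv_eq]
    simp [hC0]
  push Not at h1 h3
  have h4 : HasDerivAt (cut N k) (deriv (plateau (k * N - 2)) (k * t) * (k * 1)) t :=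
    (((plateau_smooth _).differentiable (by simp)) _).hasDerivAt.comp t
      ((hasDerivAt_id t).const_mul k)
  have h6 : 0 < 1 / k := by positivity
  have h8 : |(N : ℝ) - abs t| = N - abs t := abs_of_nonneg (by linarith)
  rw [h8, h4.deriv, abs_mul, mul_one, abs_of_pos hk]
  have h5 : k * (N - |t|) ≤ 2 := by
    have : (N : ℝ) - |t| ≤ 2 / k := by linarith
    rwa [le_div_iff₀' hk] at this
  rw [mul_assoc, mul_comm 2 C]
  exact mul_le_mul (hC _ _) h5 (mul_nonneg hk.le (by linarith)) hC0

omit [NeZero d] in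
lemma TF.lipschitz (h : TF Φ) : ∃ L, 0 ≤ L ∧ ∀ x y, ‖Φ y - Φ x‖ ≤ L * ‖y - x‖ := by
  obtain ⟨L, hL⟩ := (h.smooth.continuous_fderiv (by simp)).bounded_above_of_compact_support
    (h.supp.fderiv ℝ)
  exact ⟨L, (norm_nonneg _).trans (hL 0), fun x y =>
    convex_univ.norm_image_sub_le_of_norm_fderiv_le (fun z _ => h.diff z) (fun z _ => hL z)
      (Set.mem_univ x) (Set.mem_univ y)⟩

/-- A test function that vanishes on the boundary of the slab is bounded by the distance to it. -/
lemma bdry_bound (h : TF Φ) (hb : ∀ x ∈ slabBdry d N, Φ x = 0) :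
    ∃ L, 0 ≤ L ∧ ∀ x, ‖Φ x‖ ≤ L * |(N : ℝ) - abs (x 0)| := by
  obtain ⟨L, hL0, hL⟩ := h.lipschitz
  have key : ∀ x : Ed d, ∀ s : ℝ, s = N ∨ s = -(N : ℝ) → ‖Φ x‖ ≤ L * |s - x 0| := by
    intro x s hs
    have h1 : Φ (x + EuclideanSpace.single 0 (s - x 0)) = 0 := by
      refine hb _ ?_
      rw [slabBdry, Set.mem_ofPred_eq]
      rcases hs with rfl | rfl <;> simp
    have h2 := hL (x + EuclideanSpace.single 0 (s - x 0)) x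
    rw [h1, sub_zero] at h2
    simpa [abs_sub_comm] using h2
  refine ⟨L, hL0, fun x => ?_⟩
  rcases le_total 0 (x 0) with h1 | h1
  · rw [abs_of_nonneg h1]
    exact key x N (Or.inl rfl)
  · rw [abs_of_nonpos h1]
    have := key x (-(N : ℝ)) (Or.inr rfl)
    rwa [← abs_neg, show -(-(N : ℝ) - x 0) = N - -x 0 by ring] at this

/-- The cutoff as a complex-valued function on space. -/
def cutc (d N : ℕ) [NeZero d] (k : ℝ) (x : Ed d) : ℂ := (cut N k (x 0) : ℂ)

lemma cutc_smooth (k : ℝ) : ContDiff ℝ (⊤ : ℕ∞) (cutc d N k) :=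
  Complex.ofRealCLM.contDiff.comp ((cut_smooth N k).comp
    (EuclideanSpace.proj (0 : Fin d) : Ed d →L[ℝ] ℝ).contDiff)

lemma norm_cutc_le (k : ℝ) (x : Ed d) : ‖cutc d N k x‖ ≤ 1 := by
  rw [cutc, Complex.norm_real, cut, Real.norm_of_nonneg (plateau_nonneg _ _)]
  exact plateau_le_one _ _

lemma norm_pd_cutc_le (k : ℝ) (i : Fin d) (x : Ed d) :
    ‖pd (cutc d N k) i x‖ ≤ |deriv (cut N k) (x 0)| := by
  have h1 : HasFDerivAt (cutc d N k) (Complex.ofRealCLM.comp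
      ((ContinuousLinearMap.toSpanSingleton ℝ (deriv (cut N k) (x 0))).comp
        (EuclideanSpace.proj (0 : Fin d) : Ed d →L[ℝ] ℝ))) x := by
    have h0 : HasFDerivAt (fun y : Ed d => cut N k (y 0))
        ((ContinuousLinearMap.toSpanSingleton ℝ (deriv (cut N k) (x 0))).comp
        (EuclideanSpace.proj (0 : Fin d) : Ed d →L[ℝ] ℝ)) x :=
      HasFDerivAt.comp (g := cut N k) x
        (((cut_smooth N k).differentiable (by simp)) _).hasDerivAt.hasFDerivAt
        (EuclideanSpace.proj (0 : Fin d) : Ed d →L[ℝ] ℝ).hasFDerivAt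
    exact Complex.ofRealCLM.hasFDerivAt.comp x h0
  rw [pd, h1.fderiv]
  by_cases hi : i = 0
  · subst hi; simp
  · simp [hi]

lemma cut_mem (h : TF Φ) {k : ℝ} (hk : 0 < k) : cutc d N k * Φ ∈ slabV d N := by
  refine ⟨⟨(cutc_smooth k).mul h.smooth, h.supp.mul_left⟩, ?_⟩
  have hcl : IsClosed {x : Ed d | |x 0| ≤ N - 1 / k} :=
    isClosed_le (by fun_prop) continuous_const
  have h1 : tsupport (cutc d N k * Φ) ⊆ {x : Ed d | |x 0| ≤ N - 1 / k} := by
    refine closure_minimal (fun x hx => ?_) hcl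
    rw [Set.mem_ofPred_eq]
    by_contra hcon
    refine hx ?_
    rw [Pi.mul_apply, cutc, cut_zero hk (not_le.1 hcon), ofReal_zero, zero_mul]
  refine h1.trans fun x hx => ?_
  rw [Set.mem_ofPred_eq] at hx
  have h2 : 0 < 1 / k := by positivity
  have h3 : |x 0| < N := by linarith
  exact ⟨(abs_lt.1 h3).1, (abs_lt.1 h3).2⟩

/-- Cutting off a function which vanishes on the boundary costs a bounded factor. -/
lemma cut_pN (h : TF Φ) (hb : ∀ x ∈ slabBdry d N, Φ x = 0) :
    ∃ C, 0 ≤ C ∧ ∀ k : ℝ, 0 < k → pN (cutc d N k * Φ) ≤ C := by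
  obtain ⟨L, hL0, hL⟩ := bdry_bound h hb
  obtain ⟨C, hC0, hC⟩ := plateau_deriv_uniform
  have hK : MeasurableSet (tsupport Φ) := (isClosed_tsupport Φ).measurableSet
  have hind : MemLp ((tsupport Φ).indicator fun _ => L * (2 * C)) 2 :=
    memLp_indicator_const 2 hK _ (Or.inr h.supp.isCompact.measure_lt_top.ne)
  refine ⟨n2 Φ + ∑ i, (n2 (pd Φ i) + n2 ((tsupport Φ).indicator fun _ => L * (2 * C))),
    add_nonneg (n2_nonneg _) (Finset.sum_nonneg fun i _ => add_nonneg (n2_nonneg _) (n2_nonneg _)),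
    fun k hk => ?_⟩
  refine add_le_add (n2_mono (h.memLp 2) fun x => ?_) (Finset.sum_le_sum fun i _ => ?_)
  · rw [Pi.mul_apply, norm_mul]
    exact mul_le_of_le_one_left (norm_nonneg _) (norm_cutc_le k x)
  · have hm := ((h.pd i).memLp 2).norm
    have e1 : n2 (fun x => ‖pd Φ i x‖) = n2 (pd Φ i) := by simp only [n2, norm_norm]
    rw [← e1]
    refine le_trans (n2_mono (hm.add hind) fun x => ?_) (n2_add_le hm hind)
    rw [pd_mul ((cutc_smooth k).differentiable (by simp)) h.diff]
    have hnn : 0 ≤ (tsupport Φ).indicator (fun _ => L * (2 * C)) x :=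
      Set.indicator_nonneg (fun _ _ => by positivity) _
    rw [Pi.add_apply, Pi.add_apply, Real.norm_of_nonneg (add_nonneg (norm_nonneg _) hnn)]
    refine (norm_add_le _ _).trans (add_le_add ?_ ?_)
    · rw [Pi.mul_apply, norm_mul]
      exact mul_le_of_le_one_left (norm_nonneg _) (norm_cutc_le k x)
    · rw [Pi.mul_apply, norm_mul]
      by_cases hx : x ∈ tsupport Φ
      · rw [Set.indicator_of_mem hx]
        refine (mul_le_mul (norm_pd_cutc_le k i x) (hL x) (norm_nonneg _) (abs_nonneg _)).trans ?_
        have := mul_le_mul_of_nonneg_left (cut_deriv (N := N) hC0 hC (t := x 0) hk) hL0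
        linarith
      · rw [image_eq_zero_of_notMem_tsupport hx, norm_zero, mul_zero]
        exact hnn

lemma DD_congr {v φ φ' : Ed d → ℂ} {O : Set (Ed d)} (hO : IsOpen O) (hv : tsupport v ⊆ O)
    (h : ∀ x ∈ O, φ x = φ' x) : DD c v φ = DD c v φ' := by
  refine integral_congr_ae (Eventually.of_forall fun x => ?_)
  by_cases hx : x ∈ tsupport v
  · have h1 : φ =ᶠ[𝓝 x] φ' := Filter.eventually_of_mem (hO.mem_nhds (hv hx)) h
    have h2 : ∀ i, pd φ i x = pd φ' i x := fun i => by rw [pd, pd, h1.fderiv_eq]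
    simp only [h2, h1.eq_of_nhds]
  · have h1 := image_eq_zero_of_notMem_tsupport hx
    have h2 : ∀ i, pd v i x = 0 := fun i => pd_zero_off i hx
    simp [h1, h2, rip, kk]

/-- Almost criticality, known for test functions supported in the open slab, extends to those that
merely vanish on the boundary; this makes the limit equation strong enough to encode the boundary
condition. -/
lemma PSeq.DD_bdry (h : PSeq d N c M B κ v) (hΦ : TF Φ) (hb : ∀ x ∈ slabBdry d N, Φ x = 0) :
    Tendsto (fun n => DD c (v n).1 Φ) atTop (𝓝 0) := by
  obtain ⟨C, hC0, hC⟩ := cut_pN hΦ hb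
  have h1 : ∀ n, ‖DD c (v n).1 Φ‖ ≤ 1 / ((n : ℝ) + 1) * C := by
    intro n
    have hk : ∃ k : ℝ, 0 < k ∧ ∀ x ∈ tsupport (v n).1, |x 0| < N - 2 / k := by
      rcases (tsupport (v n).1).eq_empty_or_nonempty with h0 | h0
      · exact ⟨1, one_pos, by simp [h0]⟩
      obtain ⟨y, hy, hmax⟩ := (v n).2.1.supp.isCompact.exists_isMaxOn h0
        (f := fun x : Ed d => |x 0|) (by fun_prop)
      have h2 : |y 0| < N := abs_lt.2 ((v n).2.2 hy)
      refine ⟨4 / (N - |y 0|), div_pos (by norm_num) (by linarith), fun x hx => ?_⟩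
      have h3 : |x 0| ≤ |y 0| := hmax hx
      rw [div_div_eq_mul_div]
      linarith
    obtain ⟨k, hk, hks⟩ := hk
    have hO : IsOpen {x : Ed d | |x 0| < N - 2 / k} := isOpen_lt (by fun_prop) continuous_const
    have h2 : DD c (v n).1 Φ = DD c (v n).1 (cutc d N k * Φ) := by
      refine DD_congr hO hks fun x hx => ?_
      rw [Set.mem_ofPred_eq] at hx
      rw [Pi.mul_apply, cutc, cut_one hk hx.le, ofReal_one, one_mul]
    rw [h2]
    exact (h.DD_le n ⟨_, cut_mem hΦ hk⟩).trans
      (mul_le_mul_of_nonneg_left (hC k hk) (by positivity))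
  have h2 := tendsto_one_div_add_atTop_nhds_zero_nat (𝕜 := ℝ).mul_const C
  rw [zero_mul] at h2
  exact squeeze_zero_norm h1 h2

end Cutoff

/-! ### The equation for the limit -/

section WeakEquation
variable {d : ℕ} [NeZero d] {N : ℕ} {c M B κ : ℝ} {v : ℕ → slabV d N} {u Φ w : Ed d → ℂ}

lemma rip_I_left (z w : ℂ) : rip (I * z) w = -rip z (I * w) := by simp [rip]

/-- The first variation with all derivatives moved to the test function. -/
lemma DD_parts (c : ℝ) (hw : TF w) (hΦ : TF Φ) :
    DD c w Φ = ∫ x, (-rip (w x) (lap Φ x) - c * rip (w x) (I * pd Φ 0 x)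
      + kk (w x) * rip (1 + w x) (Φ x)) := by
  have hcont : ∀ f : Ed d → ℂ, Continuous f → Integrable fun x => rip (w x) (f x) := fun f hf =>
    hw.integ (hw.cont.rip hf) fun x hx => by simp [zero_off hx, rip]
  have hcont' : ∀ (f : Ed d → ℂ) i, Continuous f → Integrable fun x => rip (pd w i x) (f x) :=
    fun f i hf => hw.integ ((hw.pd i).cont.rip hf) fun x hx => by simp [pd_zero_off i hx, rip]
  have hnl : Integrable fun x => kk (w x) * rip (1 + w x) (Φ x) :=
    hw.integ (by have := hw.cont; have := hΦ.cont; unfold kk rip; fun_prop)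
      fun x hx => by simp [zero_off hx, kk]
  have hI : Continuous fun x => I * pd Φ 0 x := continuous_const.mul (hΦ.pd 0).cont
  have e1 : ∀ i, ∫ x, rip (pd w i x) (pd Φ i x) = -∫ x, rip (w x) (pd (pd Φ i) i x) := fun i => by
    rw [rip_parts hw ((hΦ.pd i).smooth.of_le (by simp)) i, neg_neg]
  have e2 : ∫ x, rip (I * pd w 0 x) (Φ x) = ∫ x, rip (w x) (I * pd Φ 0 x) := by
    have h1 := rip_parts hw ((contDiff_const (c := I)).mul hΦ.smooth |>.of_le (by simp)) 0
    have h2 : ∀ x, pd (fun y => I * Φ y) 0 x = I * pd Φ 0 x := fun x => by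
      rw [pd, fderiv_const_mul (hΦ.diff x)]; rfl
    simp only [h2] at h1
    rw [h1, ← integral_neg]
    simp only [rip_I_left]
  have e3 : ∀ x, rip (w x) (lap Φ x) = ∑ i, rip (w x) (pd (pd Φ i) i x) := fun x => by
    simp only [rip_inner, lap, inner_sum]; rfl
  have i1 := hcont _ hI
  have i1' : Integrable fun x => rip (I * pd Φ 0 x) (w x) := by simpa only [rip_comm] using i1
  have i2 : Integrable fun x => rip (I * pd w 0 x) (Φ x) := by
    simp only [rip_I_left]
    exact (hcont' _ 0 (continuous_const.mul hΦ.cont)).neg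
  have i3 : Integrable fun x => ∑ i, rip (pd w i x) (pd Φ i x) :=
    integrable_finsetSum _ fun i _ => hcont' _ i (hΦ.pd i).cont
  have i4 : Integrable fun x => ∑ i, rip (w x) (pd (pd Φ i) i x) :=
    integrable_finsetSum _ fun i _ => hcont _ ((hΦ.pd i).pd i).cont
  simp only [e3]
  have j1 : Integrable fun x => ∑ i, rip (pd w i x) (pd Φ i x) + kk (w x) * rip (1 + w x) (Φ x) :=
    i3.add hnl
  have j2 : Integrable fun x => c / 2 * (rip (I * pd w 0 x) (Φ x) + rip (I * pd Φ 0 x) (w x)) :=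
    (i2.add i1').const_mul _
  have j3 : Integrable fun x => -∑ i, rip (w x) (pd (pd Φ i) i x) := i4.neg
  have j4 : Integrable fun x => c * rip (w x) (I * pd Φ 0 x) := i1.const_mul c
  have j5 : Integrable fun x => -∑ i, rip (w x) (pd (pd Φ i) i x) - c * rip (w x) (I * pd Φ 0 x) :=
    j3.sub j4
  rw [DD, integral_sub j1 j2, integral_add i3 hnl, integral_const_mul, integral_add i2 i1',
    integral_add j5 hnl, integral_sub j3 j4, integral_neg, integral_const_mul,
    integral_finsetSum _ (fun i _ => hcont' _ i (hΦ.pd i).cont),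
    integral_finsetSum _ (fun i _ => hcont _ ((hΦ.pd i).pd i).cont), e2]
  simp only [e1, Finset.sum_neg_distrib]
  have e4 : ∫ x, rip (I * pd Φ 0 x) (w x) = ∫ x, rip (w x) (I * pd Φ 0 x) := by
    simp only [rip_comm]
  rw [e4]
  ring

omit [NeZero d] in
lemma TF.lap (h : TF Φ) : TF (lap Φ) := by
  have h1 : _root_.lap Φ = ∑ i, _root_.pd (_root_.pd Φ i) i := by
    funext x; simp only [Finset.sum_apply]; rfl
  rw [h1]
  exact Finset.sum_induction _ TF (fun _ _ => TF.add) TF.zero fun i _ => (h.pd i).pd i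

/-- The limit solves the equation in very weak form. -/
theorem PSeq.weakGP (hd : d = 2 ∨ d = 3) (h : PSeq d N c M B κ v) (hL : Lim N v u) :
    WeakGP N c u := by
  intro Φ hΦ hb
  obtain ⟨A, hA⟩ := h.n2_sq_le hd
  obtain ⟨C₁, hC₁, b₁⟩ := wt_bound hΦ.lap.cont hΦ.lap.supp
  obtain ⟨C₂, hC₂, b₂⟩ := wt_bound (hΦ.pd 0).cont (hΦ.pd 0).supp
  obtain ⟨C₃, hC₃, b₃⟩ := wt_bound hΦ.cont hΦ.supp
  have key := hL.conv hd hA (G := fun z x => -rip z (lap Φ x) - c * rip z (I * pd Φ 0 x)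
      + kk z * rip (1 + z) (Φ x)) (C := C₁ + |c| * C₂ + 36 * C₃)
    (by have := hΦ.lap.cont; have := (hΦ.pd 0).cont; have := hΦ.cont; unfold kk rip; fun_prop)
    (by positivity) ?_ ?_
  · have h1 := h.DD_bdry hΦ hb
    simp only [fun n => DD_parts c (v n).2.1 hΦ] at h1
    exact tendsto_nhds_unique key.2 h1
  · intro z w x
    have h1 := abs_nonlin_diff w (z - w) (Φ x)
    rw [add_sub_cancel] at h1
    have h2 := abs_rip_le (z - w) (lap Φ x)
    have h3 := abs_rip_le (z - w) (I * pd Φ 0 x)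
    rw [norm_mul, norm_I, one_mul] at h3
    have nz := norm_nonneg z
    have nw := norm_nonneg w
    have nd := norm_nonneg (z - w)
    have nt := sq_nonneg (wt x)
    have h4 : ‖z - w‖ ^ 2 ≤ 2 * ‖z‖ ^ 2 + 2 * ‖w‖ ^ 2 := by
      nlinarith [norm_sub_le z w, sq_nonneg (‖z‖ - ‖w‖)]
    have e : -rip z (lap Φ x) - c * rip z (I * pd Φ 0 x) + kk z * rip (1 + z) (Φ x) -
        (-rip w (lap Φ x) - c * rip w (I * pd Φ 0 x) + kk w * rip (1 + w) (Φ x)) =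
        -rip (z - w) (lap Φ x) + -(c * rip (z - w) (I * pd Φ 0 x)) +
        (kk z * rip (1 + z) (Φ x) - kk w * rip (1 + w) (Φ x)) := by
      rw [rip_sub_left, rip_sub_left]; ring
    have q1 : ‖z - w‖ * ‖lap Φ x‖ ≤ C₁ * wt x ^ 2 * (‖z - w‖ * (1 + ‖z‖ ^ 2 + ‖w‖ ^ 2)) := by
      have h5 := mul_le_mul_of_nonneg_left (b₁ x) nd
      have h6 : 0 ≤ C₁ * wt x ^ 2 * ‖z - w‖ * (‖z‖ ^ 2 + ‖w‖ ^ 2) := by positivity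
      linarith
    have q2 : |c| * (‖z - w‖ * ‖pd Φ 0 x‖) ≤
        |c| * C₂ * wt x ^ 2 * (‖z - w‖ * (1 + ‖z‖ ^ 2 + ‖w‖ ^ 2)) := by
      have h5 := mul_le_mul_of_nonneg_left (mul_le_mul_of_nonneg_left (b₂ x) nd) (abs_nonneg c)
      have h6 : 0 ≤ |c| * (C₂ * wt x ^ 2 * ‖z - w‖ * (‖z‖ ^ 2 + ‖w‖ ^ 2)) := by positivity
      linarith
    have q3 : ‖z - w‖ * ‖Φ x‖ * (5 + 12 * ‖w‖ ^ 2 + 12 * ‖z - w‖ ^ 2) ≤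
        36 * C₃ * wt x ^ 2 * (‖z - w‖ * (1 + ‖z‖ ^ 2 + ‖w‖ ^ 2)) := by
      have h5 := mul_le_mul (mul_le_mul_of_nonneg_left (b₃ x) nd)
        (show 5 + 12 * ‖w‖ ^ 2 + 12 * ‖z - w‖ ^ 2 ≤ 36 * (1 + ‖z‖ ^ 2 + ‖w‖ ^ 2) by
          linarith [sq_nonneg ‖z‖]) (by positivity) (by positivity)
      linarith
    rw [e]
    refine (abs_add_three _ _ _).trans ?_
    rw [abs_neg, abs_neg, abs_mul c]
    have h7 := mul_le_mul_of_nonneg_left h3 (abs_nonneg c)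
    linarith
  · intro n
    have hv := (v n).2.1
    have hc := hv.cont
    have hl := hΦ.lap.cont
    have hp := (hΦ.pd 0).cont
    have hf := hΦ.cont
    exact hv.integ (by fun_prop) fun x hx => by simp [zero_off hx, rip, kk]

end WeakEquation

/-! ### Morse index of the limit -/

section MorseIndex
variable {d : ℕ} [NeZero d] {N : ℕ} {c M B κ : ℝ} {v : ℕ → slabV d N} {u φ φ₁ φ₂ w : Ed d → ℂ}

omit [NeZero d] in
lemma int_plane {f g k F : Ed d → ℝ} {a b : ℝ} (hf : Integrable f) (hg : Integrable g)
    (hk : Integrable k)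
    (h : ∀ x, F x = a ^ 2 * f x + b ^ 2 * g x + a * b * (k x - f x - g x)) :
    ∫ x, F x = a ^ 2 * (∫ x, f x) + b ^ 2 * (∫ x, g x)
      + a * b * ((∫ x, k x) - (∫ x, f x) - ∫ x, g x) := by
  have j1 : Integrable fun x => k x - f x := hk.sub hf
  have j2 : Integrable fun x => k x - f x - g x := j1.sub hg
  have j3 : Integrable fun x => a ^ 2 * f x + b ^ 2 * g x := (hf.const_mul _).add (hg.const_mul _)
  simp only [h]
  rw [integral_add j3 (j2.const_mul _), integral_add (hf.const_mul _) (hg.const_mul _),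
    integral_const_mul, integral_const_mul, integral_const_mul, integral_sub j1 hg,
    integral_sub hk hf]

lemma quad_nonpos {x y q : ℝ} (hx : x < 0) (h : 0 < 4 * (x * y) - q ^ 2) (s t : ℝ) :
    s ^ 2 * x + t ^ 2 * y + s * t * q ≤ 0 := by
  have h1 : 4 * (x * (s ^ 2 * x + t ^ 2 * y + s * t * q)) =
      (2 * x * s + q * t) ^ 2 + (4 * (x * y) - q ^ 2) * t ^ 2 := by ring
  have h2 : 0 ≤ x * (s ^ 2 * x + t ^ 2 * y + s * t * q) := by
    have := mul_nonneg h.le (sq_nonneg t)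
    linarith [sq_nonneg (2 * x * s + q * t)]
  exact nonpos_of_mul_nonneg_right h2 hx

/-- The second variation is a quadratic form on each plane of test functions. -/
lemma QQ_plane (hw : TF w) (h₁ : TF φ₁) (h₂ : TF φ₂) (a b : ℝ) :
    QQ c w (a • φ₁ + b • φ₂) = a ^ 2 * QQ c w φ₁ + b ^ 2 * QQ c w φ₂
      + a * b * (QQ c w (φ₁ + φ₂) - QQ c w φ₁ - QQ c w φ₂) := by
  have i1 := QQ_integrable c hw h₁
  have i2 := QQ_integrable c hw h₂
  have i3 := QQ_integrable c hw (h₁.add h₂)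
  refine int_plane i1 i2 i3 fun x => ?_
  simp only [pd_add (h₁.smul a).diff (h₂.smul b).diff, pd_smul h₁.diff, pd_smul h₂.diff,
    pd_add h₁.diff h₂.diff, Pi.add_apply, Pi.smul_apply]
  have e : ∀ z w : ℂ, ‖a • z + b • w‖ ^ 2 = a ^ 2 * ‖z‖ ^ 2 + b ^ 2 * ‖w‖ ^ 2
      + a * b * (‖z + w‖ ^ 2 - ‖z‖ ^ 2 - ‖w‖ ^ 2) := fun z w => by
    simp only [normsq_eq]; simp; ring
  simp only [e, Finset.sum_add_distrib, ← Finset.mul_sum, Finset.sum_sub_distrib]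
  simp only [rip, normsq_eq]
  simp
  ring

/-- The second variation at a fixed test function passes to the limit. -/
lemma PSeq.QQ_tendsto (hd : d = 2 ∨ d = 3) (h : PSeq d N c M B κ v) (hL : Lim N v u) (hφ : TF φ) :
    Tendsto (fun n => QQ c (v n).1 φ) atTop (𝓝 (QQ c u φ)) := by
  obtain ⟨A, hA⟩ := h.n2_sq_le hd
  obtain ⟨C, hC, b⟩ := wt_bound (f := fun x => ‖φ x‖ ^ 2) (hφ.cont.norm.pow 2)
    (hφ.supp.norm.comp_left (g := fun t : ℝ => t ^ 2) (by norm_num))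
  refine (hL.conv hd hA (G := fun z x => ∑ i, ‖pd φ i x‖ ^ 2 - c * rip (φ x) (I * pd φ 0 x)
    + kk z * ‖φ x‖ ^ 2 + 2 * rip (φ x) (1 + z) ^ 2) (C := 14 * C) ?_ (by positivity) ?_
    fun n => QQ_integrable c (v n).2.1 hφ).2
  · have := hφ.cont
    have h2 := fun i => (hφ.pd i).cont
    have h3 := h2 0
    fun_prop
  · intro z w x
    have h1 := abs_kk_diff w (z - w)
    rw [add_sub_cancel] at h1
    have b' := b x
    rw [norm_pow, norm_norm] at b'
    have nz := norm_nonneg z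
    have nw := norm_nonneg w
    have nd := norm_nonneg (z - w)
    have np := norm_nonneg (φ x)
    have h2 := abs_rip_le (φ x) (z - w)
    have h3 : |rip (φ x) (2 + z + w)| ≤ ‖φ x‖ * (2 + ‖z‖ + ‖w‖) := by
      refine (abs_rip_le _ _).trans (mul_le_mul_of_nonneg_left ?_ np)
      refine (norm_add_le _ _).trans (add_le_add_left ((norm_add_le _ _).trans ?_) _)
      simp
    have e : ∀ s t : ℝ, s - t + kk z * ‖φ x‖ ^ 2 + 2 * rip (φ x) (1 + z) ^ 2
        - (s - t + kk w * ‖φ x‖ ^ 2 + 2 * rip (φ x) (1 + w) ^ 2)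
        = (kk z - kk w) * ‖φ x‖ ^ 2 + 2 * (rip (φ x) (z - w) * rip (φ x) (2 + z + w)) := by
      intro s t
      simp [rip]; ring
    have h4 := mul_le_mul h2 h3 (abs_nonneg _) (by positivity)
    have h5 := mul_le_mul_of_nonneg_right h1 (sq_nonneg ‖φ x‖)
    have h6 : ‖z - w‖ ≤ ‖z‖ + ‖w‖ := norm_sub_le _ _
    rw [e]
    refine (abs_add_le _ _).trans ?_
    rw [abs_mul, abs_mul 2, abs_two, abs_mul (rip _ _), abs_of_nonneg (sq_nonneg ‖φ x‖)]
    have h7 : (2 + 2 * ‖w‖ + ‖z - w‖) + 2 * (2 + ‖z‖ + ‖w‖) ≤ 14 * (1 + ‖z‖ ^ 2 + ‖w‖ ^ 2) := by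
      nlinarith [sq_nonneg (‖z‖ - 1), sq_nonneg (‖w‖ - 1)]
    have h8 := mul_le_mul b' (mul_le_mul_of_nonneg_left h7 nd) (by positivity)
      (by have := sq_nonneg (wt x); positivity)
    linarith

/-- The second variation at the limit has no negative plane of compactly supported
test functions, since such a plane would persist along the sequence. -/
theorem PSeq.no_plane (hd : d = 2 ∨ d = 3) (h : PSeq d N c M B κ v) (hL : Lim N v u)
    (h₁ : φ₁ ∈ slabV d N) (h₂ : φ₂ ∈ slabV d N) :
    ¬ ∀ a b : ℝ, (a ≠ 0 ∨ b ≠ 0) → QQ c u (a • φ₁ + b • φ₂) < 0 := by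
  intro H
  set q := fun n => QQ c (v n).1 (φ₁ + φ₂) - QQ c (v n).1 φ₁ - QQ c (v n).1 φ₂ with hq
  set β := QQ c u (φ₁ + φ₂) - QQ c u φ₁ - QQ c u φ₂ with hβ
  set α := QQ c u φ₁ with hα
  set γ := QQ c u φ₂ with hγ
  have tα := h.QQ_tendsto hd hL h₁.1
  have tγ := h.QQ_tendsto hd hL h₂.1
  have tβ : Tendsto q atTop (𝓝 β) := ((h.QQ_tendsto hd hL (h₁.1.add h₂.1)).sub tα).sub tγ
  have hu : ∀ a b : ℝ, QQ c u (a • φ₁ + b • φ₂) = a ^ 2 * α + b ^ 2 * γ + a * b * β := by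
    intro a b
    refine tendsto_nhds_unique (h.QQ_tendsto hd hL ((h₁.1.smul a).add (h₂.1.smul b))) ?_
    simp only [QQ_plane (v _).2.1 h₁.1 h₂.1]
    exact ((tα.const_mul _).add (tγ.const_mul _)).add (tβ.const_mul _)
  simp only [hu] at H
  have hα0 : α < 0 := by simpa using H 1 0 (Or.inl one_ne_zero)
  have hdisc : 0 < 4 * (α * γ) - β ^ 2 := by
    have h1 := H β (-2 * α) (Or.inr (by simp [hα0.ne]))
    by_contra hcon
    nlinarith
  set K := pN φ₁ + pN φ₂ + 1 with hK
  have hK0 : 0 < K := by have := pN_nonneg φ₁; have := pN_nonneg φ₂; positivity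
  have tε : Tendsto (fun n : ℕ => K ^ 2 * (1 / ((n : ℝ) + 1))) atTop (𝓝 0) := by
    simpa using (tendsto_one_div_add_atTop_nhds_zero_nat (𝕜 := ℝ)).const_mul (K ^ 2)
  have t1 : Tendsto (fun n => QQ c (v n).1 φ₁ + K ^ 2 * (1 / ((n : ℝ) + 1))) atTop (𝓝 α) := by
    simpa using tα.add tε
  have t2 : Tendsto (fun n => QQ c (v n).1 φ₂ + K ^ 2 * (1 / ((n : ℝ) + 1))) atTop (𝓝 γ) := by
    simpa using tγ.add tε
  have t3 := ((t1.mul t2).const_mul 4).sub (tβ.pow 2)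
  obtain ⟨n, e1, e2⟩ := ((t1.eventually_lt_const hα0).and (t3.eventually_const_lt hdisc)).exists
  refine h.QQ_le n ⟨⟨K⁻¹ • φ₁, (slabV d N).smul_mem _ h₁⟩, ⟨K⁻¹ • φ₂, (slabV d N).smul_mem _ h₂⟩,
    ?_, ?_, fun a b => ?_⟩
  · change pN (K⁻¹ • φ₁) ≤ 1
    rw [pN_smul h₁.1, abs_of_pos (inv_pos.2 hK0), inv_mul_le_one₀ hK0]
    linarith [pN_nonneg φ₂]
  · change pN (K⁻¹ • φ₂) ≤ 1
    rw [pN_smul h₂.1, abs_of_pos (inv_pos.2 hK0), inv_mul_le_one₀ hK0]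
    linarith [pN_nonneg φ₁]
  · change QQ c (v n).1 (a • K⁻¹ • φ₁ + b • K⁻¹ • φ₂) ≤ _
    rw [smul_smul, smul_smul, QQ_plane (v n).2.1 h₁.1 h₂.1]
    set s := a * K⁻¹ with hs
    set t := b * K⁻¹ with ht
    have ha : a = s * K := by rw [hs, inv_mul_cancel_right₀ hK0.ne']
    have hb : b = t * K := by rw [ht, inv_mul_cancel_right₀ hK0.ne']
    rw [ha, hb]
    change s ^ 2 * QQ c (v n).1 φ₁ + t ^ 2 * QQ c (v n).1 φ₂ + s * t * q n ≤ _
    set ε := K ^ 2 * (1 / ((n : ℝ) + 1)) with hε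
    have e3 : -(1 / ((n : ℝ) + 1)) * ((s * K) ^ 2 + (t * K) ^ 2) = -ε * (s ^ 2 + t ^ 2) := by
      rw [hε]; ring
    rw [e3]
    set x := QQ c (v n).1 φ₁ + ε with hx
    set y := QQ c (v n).1 φ₂ + ε with hy
    have e5 := quad_nonpos (x := x) (y := y) (q := q n) e1 e2 s t
    have e6 : s ^ 2 * QQ c (v n).1 φ₁ + t ^ 2 * QQ c (v n).1 φ₂ + s * t * q n =
      s ^ 2 * x + t ^ 2 * y + s * t * q n - ε * (s ^ 2 + t ^ 2) := by rw [hx, hy]; ring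
    rw [e6]
    linarith

/-- The quadratic form of the Morse index is the second variation of the Lagrangian. -/
lemma QformOn_eq {ψ : Ed d → ℂ} (hψ : ∀ᵐ x, x ∈ slab d N → ψ x = 1 + u x)
    (hφ : tsupport φ ⊆ slab d N) : QformOn d N c ψ φ = QQ c u φ := by
  have h1 : QQ c u φ = QformOn d N c (fun x => 1 + u x) φ := by
    rw [QQ_eq_Qform, Qform, QformOn]
    refine (setIntegral_eq_integral_of_forall_compl_eq_zero fun x hx => ?_).symm
    have h0 : x ∉ tsupport φ := fun h => hx (hφ h)
    simp [gradSq, pd_zero_off _ h0, zero_off h0]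
  rw [h1]
  refine setIntegral_congr_ae slab_isOpen.measurableSet ?_
  filter_upwards [hψ] with x hx hxs
  rw [hx hxs]

theorem PSeq.morse (hd : d = 2 ∨ d = 3) (h : PSeq d N c M B κ v) (hL : Lim N v u) {ψ : Ed d → ℂ}
    (hψ : ∀ᵐ x, x ∈ slab d N → ψ x = 1 + u x) : SlabMorseIndexLE d N c ψ 1 := by
  intro Y hY hneg
  rw [Nat.cast_one, rank_submodule_le_one_iff']
  by_contra! hcon
  have hex : ∃ φ₁ ∈ Y, φ₁ ≠ 0 := by
    by_contra! h0
    exact hcon 0 fun φ hφ => by rw [h0 φ hφ]; exact Submodule.zero_mem _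
  obtain ⟨φ₁, hφ₁, hne⟩ := hex
  obtain ⟨φ₂, hφ₂, hspan⟩ := SetLike.not_le_iff_exists.1 (hcon φ₁)
  have hmem : ∀ φ ∈ Y, φ ∈ slabV d N := fun φ hφ => ⟨⟨(hY φ hφ).1, (hY φ hφ).2.1⟩, (hY φ hφ).2.2⟩
  refine h.no_plane hd hL (hmem _ hφ₁) (hmem _ hφ₂) fun a b hab => ?_
  have hm : a • φ₁ + b • φ₂ ∈ Y := Y.add_mem (Y.smul_mem _ hφ₁) (Y.smul_mem _ hφ₂)
  rw [← QformOn_eq hψ (hmem _ hm).2]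
  refine hneg _ hm fun h0 => ?_
  have hb : b = 0 := by
    by_contra hb
    refine hspan (Submodule.mem_span_singleton.2 ⟨-(b⁻¹ * a), ?_⟩)
    have h1 : b • φ₂ = -(a • φ₁) := by rw [eq_neg_iff_add_eq_zero, add_comm]; exact h0
    have h2 : φ₂ = b⁻¹ • b • φ₂ := by rw [smul_smul, inv_mul_cancel₀ hb, one_smul]
    rw [h2, h1, smul_neg, smul_smul, neg_smul]
  rcases hab with ha | hb'
  · rw [hb, zero_smul, add_zero] at h0
    exact (smul_eq_zero.1 h0).elim ha hne
  · exact hb' hb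

end MorseIndex

/-! ### Lower semicontinuity of the energy -/

section Energy
variable {d : ℕ} [NeZero d] {N : ℕ} {c M B κ : ℝ} {v : ℕ → slabV d N} {u ψ : Ed d → ℂ} {η : Ed d → ℝ}

lemma cutoff_smul {F : Type*} [NormedAddCommGroup F] [NormedSpace ℝ F] {f : Ed d → F}
    (hη : ContDiff ℝ (⊤ : ℕ∞) η) (hs : HasCompactSupport η) (hsub : tsupport η ⊆ slab d N)
    (hf : ContDiffOn ℝ (⊤ : ℕ∞) f (slab d N)) :
    ContDiff ℝ (⊤ : ℕ∞) (fun x => η x • f x) ∧ HasCompactSupport (fun x => η x • f x) := by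
  refine ⟨contDiff_iff_contDiffAt.2 fun x => ?_, hs.smul_right⟩
  by_cases hx : x ∈ tsupport η
  · exact hη.contDiffAt.smul (hf.contDiffAt (slab_isOpen.mem_nhds (hsub hx)))
  · have h1 : (fun x => η x • f x) =ᶠ[𝓝 x] fun _ => 0 := by
      filter_upwards [(isClosed_tsupport η).isOpen_compl.mem_nhds hx] with y hy
      rw [image_eq_zero_of_notMem_tsupport hy, zero_smul]
    exact contDiffAt_const.congr_of_eventuallyEq h1

lemma pd_contDiffOn (hψ : ContDiffOn ℝ (⊤ : ℕ∞) ψ (slab d N)) (i : Fin d) :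
    ContDiffOn ℝ (⊤ : ℕ∞) (pd ψ i) (slab d N) :=
  (hψ.fderiv_of_isOpen slab_isOpen (by simp)).clm_apply contDiffOn_const

lemma eDen_contDiffOn (hψ : ContDiffOn ℝ (⊤ : ℕ∞) ψ (slab d N)) :
    ContDiffOn ℝ (⊤ : ℕ∞) (eDen ψ) (slab d N) := by
  have h1 : ContDiffOn ℝ (⊤ : ℕ∞) (fun x => ∑ i, ‖pd ψ i x‖ ^ 2) (slab d N) :=
    ContDiffOn.sum fun i _ => (pd_contDiffOn hψ i).norm_sq ℝ
  exact (contDiffOn_const.mul h1).add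
    (contDiffOn_const.mul ((contDiffOn_const.sub (hψ.norm_sq ℝ)).pow 2))

/-- Integration by parts against `ψ - 1`, which is only smooth inside the slab. -/
lemma parts_inside (hψ : ContDiffOn ℝ (⊤ : ℕ∞) ψ (slab d N)) (hη : ContDiff ℝ (⊤ : ℕ∞) η)
    (hs : HasCompactSupport η) (hsub : tsupport η ⊆ slab d N) (i : Fin d) :
    Integrable (fun x => -rip (ψ x - 1) (pd (fun y => η y • pd ψ i y) i x)) ∧
    ∫ x, -rip (ψ x - 1) (pd (fun y => η y • pd ψ i y) i x) = ∫ x, η x * ‖pd ψ i x‖ ^ 2 := by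
  have hW : TF (fun y => η y • pd ψ i y) := by
    have h := cutoff_smul hη hs hsub (pd_contDiffOn hψ i)
    exact ⟨h.1, h.2⟩
  have hconj : ContDiff ℝ (⊤ : ℕ∞) fun z : ℂ => (starRingEnd ℂ) z :=
    Complex.conjCLE.toContinuousLinearMap.contDiff
  set g : Ed d → ℂ := fun y => (ψ y - 1) * (starRingEnd ℂ) (pd ψ i y) with hg
  have hF : TF (fun y => η y • g y) := by
    have h := cutoff_smul hη hs hsub
      ((hψ.sub contDiffOn_const).mul (hconj.comp_contDiffOn (pd_contDiffOn hψ i)) :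
        ContDiffOn ℝ (⊤ : ℕ∞) g (slab d N))
    exact ⟨h.1, h.2⟩
  have h0 := rip_parts hF (contDiff_const (c := (1 : ℂ))) i
  have h1 : ∀ x : Ed d, pd (fun _ => (1 : ℂ)) i x = 0 := fun x => by simp [pd]
  have e : ∀ x, rip (pd (fun y => η y • g y) i x) 1
      = η x * ‖pd ψ i x‖ ^ 2 - -rip (ψ x - 1) (pd (fun y => η y • pd ψ i y) i x) := by
    intro x
    by_cases hx : x ∈ tsupport η
    · have hψx : HasFDerivAt ψ (fderiv ℝ ψ x) x :=
        ((hψ.contDiffAt (slab_isOpen.mem_nhds (hsub hx))).differentiableAt (by simp)).hasFDerivAt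
      have hWx := (hW.diff x).hasFDerivAt
      have h2 : HasFDerivAt (fun y => (starRingEnd ℂ) (η y • pd ψ i y)) _ x :=
        Complex.conjCLE.toContinuousLinearMap.hasFDerivAt.comp x hWx
      have h3 := (hψx.sub_const 1).mul h2
      have h4 : (fun y => η y • g y) = (fun y => ψ y - 1) *
          fun y => (starRingEnd ℂ) (η y • pd ψ i y) := by
        funext y
        simp [hg]; ring
      rw [pd, h4, h3.fderiv]
      change rip ((ψ x - 1) * (starRingEnd ℂ) (pd (fun y => η y • pd ψ i y) i x)
        + (starRingEnd ℂ) (η x • pd ψ i x) * pd ψ i x) 1 = _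
      rw [normsq_eq]
      simp [rip]
      ring
    · have h2 : x ∉ tsupport fun y => η y • g y := fun h =>
        hx (tsupport_smul_subset_left η g h)
      have h3 : x ∉ tsupport fun y => η y • pd ψ i y := fun h =>
        hx (tsupport_smul_subset_left η (pd ψ i) h)
      rw [pd_zero_off i h2, pd_zero_off i h3, image_eq_zero_of_notMem_tsupport hx]
      simp [rip]
  have i1 : Integrable fun x => η x * ‖pd ψ i x‖ ^ 2 := by
    have h := cutoff_smul hη hs hsub ((pd_contDiffOn hψ i).norm_sq ℝ)
    exact h.1.continuous.integrable_of_hasCompactSupport h.2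
  have i2 : Integrable fun x => rip (pd (fun y => η y • g y) i x) 1 :=
    hF.integ ((hF.pd i).cont.rip continuous_const) fun x hx => by
      rw [pd_zero_off i hx]; simp [rip]
  have i3 : Integrable fun x => -rip (ψ x - 1) (pd (fun y => η y • pd ψ i y) i x) := by
    refine (i1.sub i2).congr (Eventually.of_forall fun x => ?_)
    simp only [Pi.sub_apply, e x]
    ring
  have h2 : ∀ z : ℂ, rip z 0 = 0 := fun z => by simp [rip]
  simp only [h1, h2, integral_zero] at h0
  simp only [e] at h0
  rw [integral_sub i1 i3] at h0
  exact ⟨i3, by linarith⟩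

/-- Lower semicontinuity of the energy, localized by a cutoff: by convexity, `η` times the energy
density of `1 + v` lies above its linearization at `∇ψ` and `|ψ|² - 1`, in which the gradient is
moved to the smooth field `W = η ∇ψ`, so that only strong convergence of `v` is needed. -/
lemma PSeq.cut_energy (hd : d = 2 ∨ d = 3) (h : PSeq d N c M B κ v) (hL : Lim N v u)
    (hψ : ContDiffOn ℝ (⊤ : ℕ∞) ψ (slab d N)) (hu : ∀ᵐ x, x ∈ slab d N → ψ x = 1 + u x)
    (hη : ContDiff ℝ (⊤ : ℕ∞) η)
    (hs : HasCompactSupport η) (hsub : tsupport η ⊆ slab d N) (h0 : ∀ x, 0 ≤ η x)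
    (h1 : ∀ x, η x ≤ 1) : ∫ x, η x * eDen ψ x ≤ M := by
  obtain ⟨A, hA⟩ := h.n2_sq_le hd
  set W : Fin d → Ed d → ℂ := fun i y => η y • pd ψ i y with hWdef
  have hW : ∀ i, TF (W i) := fun i => by
    have h := cutoff_smul hη hs hsub (pd_contDiffOn hψ i)
    exact ⟨h.1, h.2⟩
  have hWη : ∀ i, tsupport (W i) ⊆ tsupport η := fun i => tsupport_smul_subset_left η (pd ψ i)
  set Z : Ed d → ℂ := fun x => ∑ i, pd (W i) i x with hZ
  have hZc : Continuous Z := continuous_finsetSum _ fun i _ => ((hW i).pd i).cont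
  have hZ0 : ∀ x ∉ tsupport η, Z x = 0 := fun x hx =>
    Finset.sum_eq_zero fun i _ => pd_zero_off i fun h => hx (hWη i h)
  have hZs : HasCompactSupport Z := HasCompactSupport.intro hs.isCompact hZ0
  have hK := cutoff_smul hη hs hsub ((hψ.norm_sq ℝ).sub (contDiffOn_const (c := (1 : ℝ))))
  set K : Ed d → ℝ := fun x => η x * (‖ψ x‖ ^ 2 - 1) with hKdef
  have hKc : Continuous K := hK.1.continuous
  have hKs : HasCompactSupport K := hK.2
  have hE := cutoff_smul hη hs hsub (eDen_contDiffOn hψ)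
  set e : Ed d → ℝ := fun x => η x * eDen ψ x with he
  have hec : Continuous e := hE.1.continuous
  have hes : HasCompactSupport e := hE.2
  have ie : Integrable e := hec.integrable_of_hasCompactSupport hes
  obtain ⟨C₁, hC₁, b₁⟩ := wt_bound hZc hZs
  obtain ⟨C₂, hC₂, b₂⟩ := wt_bound hKc hKs
  have iZ : ∀ n, Integrable fun x => rip ((v n).1 x) (Z x) := fun n =>
    (v n).2.1.integ ((v n).2.1.cont.rip hZc) fun x hx => by simp [zero_off hx, rip]
  have iK : ∀ n, Integrable fun x => 1 / 2 * (kk ((v n).1 x) * K x) := fun n =>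
    (v n).2.1.integ (continuous_const.mul ((v n).2.1.cont.kk.mul hKc))
      fun x hx => by simp [zero_off hx, kk]
  have i1 : ∀ n, Integrable fun x => -rip ((v n).1 x) (Z x) + 1 / 2 * (kk ((v n).1 x) * K x) :=
    fun n => (iZ n).neg.add (iK n)
  have key := hL.conv hd hA (G := fun z x => -rip z (Z x) + 1 / 2 * (kk z * K x) - e x)
    (C := C₁ + 4 * C₂) (by fun_prop) (by positivity) ?_ fun n => (i1 n).sub ie
  · have hle : ∀ n, ∫ x, (-rip ((v n).1 x) (Z x) + 1 / 2 * (kk ((v n).1 x) * K x) - e x) ≤ M := by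
      intro n
      refine le_trans ?_ (h.EE_le n)
      have hv := (v n).2.1
      have iW : ∀ i, Integrable fun x => rip (pd (v n).1 i x) (W i x) := fun i =>
        hv.integ ((hv.pd i).cont.rip (hW i).cont) fun x hx => by simp [pd_zero_off i hx, rip]
      have iWs : Integrable fun x => ∑ i, rip (pd (v n).1 i x) (W i x) :=
        integrable_finsetSum _ fun i _ => iW i
      have iZi : ∀ i, Integrable fun x => rip ((v n).1 x) (pd (W i) i x) := fun i =>
        hv.integ (hv.cont.rip ((hW i).pd i).cont) fun x hx => by simp [zero_off hx, rip]
      have e1 : ∫ x, -rip ((v n).1 x) (Z x) = ∫ x, ∑ i, rip (pd (v n).1 i x) (W i x) := by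
        have e2 : ∀ x, rip ((v n).1 x) (Z x) = ∑ i, rip ((v n).1 x) (pd (W i) i x) := fun x => by
          simp only [rip_inner, hZ, inner_sum]
        simp only [e2]
        rw [integral_neg, integral_finsetSum _ fun i _ => iZi i,
          integral_finsetSum _ fun i _ => iW i, ← Finset.sum_neg_distrib]
        refine Finset.sum_congr rfl fun i _ => ?_
        rw [rip_parts hv ((hW i).smooth.of_le (by simp)) i, neg_neg]
      have e3 : ∫ x, (-rip ((v n).1 x) (Z x) + 1 / 2 * (kk ((v n).1 x) * K x) - e x) =
          ∫ x, (∑ i, rip (pd (v n).1 i x) (W i x) + 1 / 2 * (kk ((v n).1 x) * K x) - e x) := by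
        have jZ : Integrable fun x => -rip ((v n).1 x) (Z x) := (iZ n).neg
        have jW : Integrable fun x =>
          ∑ i, rip (pd (v n).1 i x) (W i x) + 1 / 2 * (kk ((v n).1 x) * K x) := iWs.add (iK n)
        rw [integral_sub (i1 n) ie, integral_add jZ (iK n), integral_sub jW ie,
          integral_add iWs (iK n), e1]
      rw [e3, EE]
      refine integral_mono ((iWs.add (iK n)).sub ie)
        (((grad_integrable hv).const_mul _).add ((kk_integrable hv).const_mul _)) fun x => ?_
      have g1 : ∑ i, rip (pd (v n).1 i x) (W i x) ≤
          η x * (1 / 2 * ∑ i, ‖pd (v n).1 i x‖ ^ 2 + 1 / 2 * ∑ i, ‖pd ψ i x‖ ^ 2) := by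
        rw [Finset.mul_sum, Finset.mul_sum, ← Finset.sum_add_distrib, Finset.mul_sum]
        refine Finset.sum_le_sum fun i _ => ?_
        rw [hWdef]
        simp only [rip_smul_right]
        refine mul_le_mul_of_nonneg_left ?_ (h0 x)
        have := (le_abs_self _).trans (abs_rip_le (pd (v n).1 i x) (pd ψ i x))
        nlinarith [sq_nonneg (‖pd (v n).1 i x‖ - ‖pd ψ i x‖)]
      have g2 : 1 / 2 * (kk ((v n).1 x) * K x) ≤
          η x * (1 / 4 * kk ((v n).1 x) ^ 2 + 1 / 4 * (1 - ‖ψ x‖ ^ 2) ^ 2) := by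
        have := mul_nonneg (h0 x) (sq_nonneg (kk ((v n).1 x) - (‖ψ x‖ ^ 2 - 1)))
        rw [hKdef]
        simp only
        linarith
      have g3 : η x * (1 / 2 * ∑ i, ‖pd (v n).1 i x‖ ^ 2 + 1 / 4 * kk ((v n).1 x) ^ 2) ≤
          1 / 2 * ∑ i, ‖pd (v n).1 i x‖ ^ 2 + 1 / 4 * kk ((v n).1 x) ^ 2 :=
        mul_le_of_le_one_left (by positivity) (h1 x)
      have g4 : e x = η x * (1 / 2 * ∑ i, ‖pd ψ i x‖ ^ 2 + 1 / 4 * (1 - ‖ψ x‖ ^ 2) ^ 2) := rfl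
      change ∑ i, rip (pd (v n).1 i x) (W i x) + 1 / 2 * (kk ((v n).1 x) * K x) - e x ≤
        1 / 2 * ∑ i, ‖pd (v n).1 i x‖ ^ 2 + 1 / 4 * kk ((v n).1 x) ^ 2
      rw [g4]
      linarith
    refine le_trans (le_of_eq ?_) (le_of_tendsto key.2 (Eventually.of_forall hle))
    have e2 : ∫ x, (-rip (u x) (Z x) + 1 / 2 * (kk (u x) * K x) - e x) =
        ∫ x, (∑ i, -rip (ψ x - 1) (pd (W i) i x) +
          (η x * (1 / 4 * (1 - ‖ψ x‖ ^ 2) ^ 2) - η x * (1 / 2 * ∑ i, ‖pd ψ i x‖ ^ 2))) := by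
      refine integral_congr_ae ?_
      filter_upwards [hu] with x hx
      by_cases hxs : x ∈ tsupport η
      · have hux : u x = ψ x - 1 := by rw [hx (hsub hxs)]; ring
        have hkk : kk (u x) = ‖ψ x‖ ^ 2 - 1 := by
          have := kk_eq (u x)
          rw [← hx (hsub hxs)] at this
          linarith
        rw [hkk, hux]
        have e4 : rip (ψ x - 1) (Z x) = ∑ i, rip (ψ x - 1) (pd (W i) i x) := by
          simp only [rip_inner, hZ, inner_sum]
        simp only [e4, Finset.sum_neg_distrib, hKdef, he, eDen, gradSq]
        ring
      · have z1 := image_eq_zero_of_notMem_tsupport hxs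
        have z2 : ∀ i, pd (W i) i x = 0 := fun i => pd_zero_off i fun h => hxs (hWη i h)
        simp [hZ0 x hxs, z2, hKdef, he, z1, rip]
    have jp := fun i => parts_inside hψ hη hs hsub i
    have ig : ∀ i, Integrable fun x => η x * ‖pd ψ i x‖ ^ 2 := fun i => by
      have h := cutoff_smul hη hs hsub ((pd_contDiffOn hψ i).norm_sq ℝ)
      exact h.1.continuous.integrable_of_hasCompactSupport h.2
    have igs : Integrable fun x => ∑ i, η x * ‖pd ψ i x‖ ^ 2 :=
      integrable_finsetSum _ fun i _ => ig i
    have jps : Integrable fun x => ∑ i, -rip (ψ x - 1) (pd (W i) i x) :=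
      integrable_finsetSum _ fun i _ => (jp i).1
    have iR : Integrable fun x => η x * (1 / 4 * (1 - ‖ψ x‖ ^ 2) ^ 2) -
        η x * (1 / 2 * ∑ i, ‖pd ψ i x‖ ^ 2) := by
      refine (ie.sub igs).congr (Eventually.of_forall fun x => ?_)
      simp only [Pi.sub_apply, he, eDen, gradSq, ← Finset.mul_sum]
      ring
    rw [e2, integral_add jps iR, integral_finsetSum _ fun i _ => (jp i).1]
    have e5 : ∀ i, ∫ x, -rip (ψ x - 1) (pd (W i) i x) = ∫ x, η x * ‖pd ψ i x‖ ^ 2 :=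
      fun i => (jp i).2
    rw [Finset.sum_congr rfl fun i _ => e5 i, ← integral_finsetSum _ fun i _ => ig i, ← integral_add igs iR]
    refine integral_congr_ae (Eventually.of_forall fun x => ?_)
    simp only [eDen, gradSq, ← Finset.mul_sum]
    ring
  · intro z w x
    have h1 := abs_kk_diff w (z - w)
    rw [add_sub_cancel] at h1
    have h2 := abs_rip_le (z - w) (Z x)
    have nz := norm_nonneg z
    have nw := norm_nonneg w
    have nd := norm_nonneg (z - w)
    have nt := sq_nonneg (wt x)
    have e1 : -rip z (Z x) + 1 / 2 * (kk z * K x) - e x - (-rip w (Z x) + 1 / 2 * (kk w * K x) - e x)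
        = -rip (z - w) (Z x) + 1 / 2 * ((kk z - kk w) * K x) := by
      rw [rip_sub_left]; ring
    have h3 := mul_le_mul_of_nonneg_left (b₁ x) nd
    have b₂' := b₂ x
    rw [Real.norm_eq_abs] at b₂'
    have h4 : 2 + 2 * ‖w‖ + ‖z - w‖ ≤ 8 * (1 + ‖z‖ ^ 2 + ‖w‖ ^ 2) := by
      nlinarith [sq_nonneg (‖z‖ - 1), sq_nonneg (‖w‖ - 1), norm_sub_le z w]
    have h5 := mul_le_mul (h1.trans (mul_le_mul_of_nonneg_left h4 nd)) b₂' (abs_nonneg _)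
      (by positivity)
    have h6 : 0 ≤ C₁ * wt x ^ 2 * ‖z - w‖ * (‖z‖ ^ 2 + ‖w‖ ^ 2) := by positivity
    rw [e1]
    refine (abs_add_le _ _).trans ?_
    rw [abs_neg, abs_mul (1 / 2), abs_mul (kk z - kk w), abs_of_pos (by norm_num : (0 : ℝ) < 1 / 2)]
    linarith

end Energy

/-! ### The solutions -/

section Final
variable {d : ℕ} [NeZero d] {N : ℕ} {c M B κ : ℝ} {v : ℕ → slabV d N} {u ψ : Ed d → ℂ}

/-- Smooth cutoffs exhausting the slab. -/
def slabCut (d N : ℕ) [NeZero d] (k : ℕ) (x : Ed d) : ℝ :=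
  cut N (k + 1) (x 0) * plateau k (‖x‖ ^ 2)

lemma slabCut_smooth (k : ℕ) : ContDiff ℝ (⊤ : ℕ∞) (slabCut d N k) :=
  ((cut_smooth N _).comp (EuclideanSpace.proj (0 : Fin d) : Ed d →L[ℝ] ℝ).contDiff).mul
    ((plateau_smooth _).comp (contDiff_norm_sq ℝ))

lemma slabCut_nonneg (k : ℕ) (x : Ed d) : 0 ≤ slabCut d N k x :=
  mul_nonneg (plateau_nonneg _ _) (plateau_nonneg _ _)

lemma slabCut_le_one (k : ℕ) (x : Ed d) : slabCut d N k x ≤ 1 :=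
  mul_le_one₀ (plateau_le_one _ _) (plateau_nonneg _ _) (plateau_le_one _ _)

lemma slabCut_supp (k : ℕ) : HasCompactSupport (slabCut d N k) := by
  refine HasCompactSupport.intro (isCompact_closedBall (0 : Ed d) (k + 2)) fun x hx => ?_
  rw [slabCut, plateau_zero, mul_zero]
  intro h
  refine hx (mem_closedBall_zero_iff.2 ?_)
  have h1 := h.2
  have hk : (0 : ℝ) ≤ k := k.cast_nonneg
  by_contra hcon
  push Not at hcon
  nlinarith

lemma slabCut_tsupport (k : ℕ) : tsupport (slabCut d N k) ⊆ slab d N := by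
  have hk : (0 : ℝ) < k + 1 := by positivity
  have hcl : IsClosed {x : Ed d | |x 0| ≤ N - 1 / ((k : ℝ) + 1)} :=
    isClosed_le (by fun_prop) continuous_const
  have h1 : tsupport (slabCut d N k) ⊆ {x : Ed d | |x 0| ≤ N - 1 / ((k : ℝ) + 1)} := by
    refine closure_minimal (fun x hx => ?_) hcl
    rw [Set.mem_ofPred_eq]
    by_contra hcon
    refine hx ?_
    rw [slabCut, cut_zero hk (not_le.1 hcon), zero_mul]
  refine h1.trans fun x hx => ?_
  rw [Set.mem_ofPred_eq] at hx
  have h2 : 0 < 1 / ((k : ℝ) + 1) := by positivity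
  have h3 : |x 0| < N := by linarith
  exact ⟨(abs_lt.1 h3).1, (abs_lt.1 h3).2⟩

lemma slabCut_eventually {x : Ed d} (hx : x ∈ slab d N) :
    ∀ᶠ k : ℕ in atTop, slabCut d N k x = 1 := by
  have h1 : |x 0| < N := abs_lt.2 hx
  have h2 : Tendsto (fun k : ℕ => (2 : ℝ) * (1 / ((k : ℝ) + 1))) atTop (𝓝 0) := by
    simpa using (tendsto_one_div_add_atTop_nhds_zero_nat (𝕜 := ℝ)).const_mul 2
  filter_upwards [h2.eventually_lt_const (sub_pos.2 h1),
    (tendsto_natCast_atTop_atTop (R := ℝ)).eventually_ge_atTop (‖x‖ ^ 2)] with k hk1 hk2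
  have hk : (0 : ℝ) < k + 1 := by positivity
  rw [slabCut, cut_one hk (by rw [div_eq_mul_one_div]; linarith),
    plateau_one ⟨by linarith [sq_nonneg ‖x‖, k.cast_nonneg (α := ℝ)], hk2⟩, one_mul]

omit [NeZero d] in
lemma eDen_nonneg (x : Ed d) : 0 ≤ eDen ψ x := by
  unfold eDen gradSq
  positivity

/-- The limit inherits the energy bound of the sequence, by Fatou's lemma. -/
lemma PSeq.energy (hd : d = 2 ∨ d = 3) (h : PSeq d N c M B κ v) (hL : Lim N v u)
    (hψ : ContDiffOn ℝ (⊤ : ℕ∞) ψ (slab d N)) (hu : ∀ᵐ x, x ∈ slab d N → ψ x = 1 + u x) :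
    IntegrableOn (eDen ψ) (slab d N) ∧ ∫ x in slab d N, eDen ψ x ≤ M := by
  have hM : 0 ≤ M := (EE_nonneg _).trans (h.EE_le 0)
  have hms : MeasurableSet (slab d N) := slab_isOpen.measurableSet
  have hsm := fun k => cutoff_smul (slabCut_smooth k) (slabCut_supp k) (slabCut_tsupport k)
    (eDen_contDiffOn hψ)
  have hmeas : AEStronglyMeasurable (eDen ψ) (volume.restrict (slab d N)) :=
    (eDen_contDiffOn hψ).continuousOn.aestronglyMeasurable hms
  have hk : ∀ k : ℕ, ∫⁻ x in slab d N, ENNReal.ofReal (slabCut d N k x * eDen ψ x)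
      ≤ ENNReal.ofReal M := by
    intro k
    have i1 : Integrable fun x => slabCut d N k x * eDen ψ x :=
      (hsm k).1.continuous.integrable_of_hasCompactSupport (hsm k).2
    refine (setLIntegral_le_lintegral _ _).trans ?_
    rw [← ofReal_integral_eq_lintegral_ofReal i1
      (Eventually.of_forall fun x => mul_nonneg (slabCut_nonneg k x) (eDen_nonneg x))]
    exact ENNReal.ofReal_le_ofReal (h.cut_energy hd hL hψ hu (slabCut_smooth k) (slabCut_supp k)
      (slabCut_tsupport k) (slabCut_nonneg k) (slabCut_le_one k))
  have hF : ∫⁻ x in slab d N, ENNReal.ofReal (eDen ψ x) ≤ ENNReal.ofReal M := by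
    have e1 : ∫⁻ x in slab d N, ENNReal.ofReal (eDen ψ x) = ∫⁻ x in slab d N,
        liminf (fun k : ℕ => ENNReal.ofReal (slabCut d N k x * eDen ψ x)) atTop := by
      refine setLIntegral_congr_fun hms fun x hx => ?_
      refine (Tendsto.liminf_eq ?_).symm
      refine tendsto_const_nhds.congr' ?_
      filter_upwards [slabCut_eventually hx] with k hk
      rw [hk, one_mul]
    rw [e1]
    refine (lintegral_liminf_le fun k =>
      (hsm k).1.continuous.measurable.ennreal_ofReal).trans ?_
    exact liminf_le_of_le (by isBoundedDefault) fun b hb => by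
      obtain ⟨k, hk'⟩ := hb.exists
      exact hk'.trans (hk k)
  have hI : IntegrableOn (eDen ψ) (slab d N) := by
    refine ⟨hmeas, ?_⟩
    rw [hasFiniteIntegral_iff_ofReal (Eventually.of_forall fun x => eDen_nonneg x)]
    exact hF.trans_lt ENNReal.ofReal_lt_top
  refine ⟨hI, ?_⟩
  rw [integral_eq_lintegral_of_nonneg_ae (Eventually.of_forall fun x => eDen_nonneg x) hmeas]
  exact ENNReal.toReal_le_of_le_ofReal hM hF

/-- The local mass of the sequence survives in the limit, which is therefore not constant. -/
lemma PSeq.nontriv (hN : 0 < N) (h : PSeq d N c M B κ v) (hκ : 0 < κ) (hL : Lim N v u)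
    (hψ : ContDiffOn ℝ (⊤ : ℕ∞) ψ (slabCl d N)) (hb : ∀ x ∈ slabBdry d N, ψ x = 1)
    (hu : ∀ᵐ x, x ∈ slab d N → ψ x = 1 + u x) : SlabNontriv d N ψ := by
  rintro ⟨z, -, hz⟩
  have h1 : Set.EqOn ψ (fun _ => z) (slabCl d N) :=
    Set.EqOn.of_subset_closure (s := slab d N) hz hψ.continuousOn continuousOn_const
      slab_sub_cl (slab_closure hN).ge
  have h2 : z = 1 := by
    have hp : EuclideanSpace.single (0 : Fin d) (N : ℝ) ∈ slabBdry d N := Or.inr (by simp)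
    have hq : EuclideanSpace.single (0 : Fin d) (N : ℝ) ∈ slabCl d N := by
      have : (0 : ℝ) ≤ N := N.cast_nonneg
      exact ⟨by simp, by simp⟩
    rw [← hb _ hp, h1 hq]
  have h3 : ∀ᵐ x, u x = 0 := by
    filter_upwards [hu] with x hx
    by_cases hxs : x ∈ slab d N
    · have h4 := hx hxs
      rw [hz x hxs, h2] at h4
      linear_combination -h4
    · exact hL.zero x hxs
  have h5 : ∀ n, κ ≤ ((N : ℝ) + 3) ^ 2 * n2 (fun x => wt x • ((v n).1 x - u x)) := by
    intro n
    have e1 : n2 (fun x => wt x • ((v n).1 x - u x)) = n2 (fun x => wt x • (v n).1 x) := by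
      unfold n2
      congr 1
      refine integral_congr_ae ?_
      filter_upwards [h3] with x hx
      rw [hx, sub_zero]
    have hP : (0 : ℝ) ≤ ((N : ℝ) + 3) ^ 2 := by positivity
    have e2 := n2_smul (((N : ℝ) + 3) ^ 2) (fun x => wt x • (v n).1 x)
    rw [abs_of_nonneg hP] at e2
    rw [e1, ← e2]
    refine (h.low n).trans (n2_mono ((wt_smul_memLp ((v n).2.1.memLp 2)).const_smul _) fun x => ?_)
    by_cases hx : x ∈ closedBall (0 : Ed d) (N + 2)
    · rw [Set.indicator_of_mem hx, Pi.smul_apply, smul_smul, norm_smul, Real.norm_eq_abs]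
      refine le_mul_of_one_le_left (norm_nonneg _) (le_trans ?_ (le_abs_self _))
      have hx' := mem_closedBall_zero_iff.1 hx
      rw [wt, ← div_eq_mul_inv, one_le_div (by positivity)]
      exact pow_le_pow_left₀ (by positivity) (by linarith) 2
    · rw [Set.indicator_of_notMem hx, norm_zero]
      exact norm_nonneg _
  have h6 := hL.tends.const_mul (((N : ℝ) + 3) ^ 2)
  rw [mul_zero] at h6
  exact absurd (ge_of_tendsto h6 (Eventually.of_forall h5)) (not_le.2 hκ)

/-- A slab carrying a bounded Palais-Smale sequence with index information carries a solution. -/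
lemma HasPS.solution (hd : d = 2 ∨ d = 3) (hN : 0 < N) (H : HasPS d N c M) :
    ∃ ψ : Ed d → ℂ, SlabSolution d N c ψ ∧ SlabNontriv d N ψ ∧
      (∫ x in slab d N, eDen ψ x) ≤ M ∧ SlabMorseIndexLE d N c ψ 1 := by
  obtain ⟨B, κ, -, hκ, w, hw⟩ := H.seq hd
  obtain ⟨v, u, h, hL⟩ := hw.limit hd
  obtain ⟨ψ, hψ, heq, hb, hu⟩ :=
    gauge_regularity hd hN hL.zero hL.mem hL.mem2 hL.mem3 (h.weakGP hd hL)
  obtain ⟨hI, hM⟩ := h.energy hd hL (hψ.mono slab_sub_cl) hu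
  exact ⟨ψ, ⟨hψ, heq, hb, hI⟩, h.nontriv hN hκ hL hψ hb hu, hM, h.morse hd hL hu⟩

end Final

/-- for almost every subsonic speed `c` there is a subsequence of slabs
`Ω_{k(N)}` carrying nontrivial solutions with uniformly bounded energy and Morse index
at most 1. -/
theorem statement18 (d : ℕ) [NeZero d] (hd : d = 2 ∨ d = 3) :
    ∃ E : Set ℝ, MeasurableSet E ∧ E ⊆ Set.Ioo 0 (Real.sqrt 2) ∧
      volume (Set.Ioo 0 (Real.sqrt 2) \ E) = 0 ∧
      ∀ c ∈ E, ∃ M > (0 : ℝ), ∃ k : ℕ → ℕ, StrictMono k ∧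
        ∃ ψ : ℕ → Ed d → ℂ, ∀ N : ℕ,
          SlabSolution d (k N) c (ψ N) ∧ SlabNontriv d (k N) (ψ N) ∧
          (∫ x in slab d (k N), eDen (ψ N) x) ≤ M ∧
          SlabMorseIndexLE d (k N) c (ψ N) 1 := by
  obtain ⟨E, hE, hsub, hvol, H⟩ := exists_speeds d hd
  refine ⟨E, hE, hsub, hvol, fun c hc => ?_⟩
  obtain ⟨M, hM, hf⟩ := H c hc
  obtain ⟨k, hk, hP⟩ := extraction_of_frequently_atTop
    (hf.and_eventually (eventually_ge_atTop 1))
  choose ψ hψ using fun n => (hP n).1.solution hd (hP n).2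
  exact ⟨M, hM, k, hk, ψ, hψ⟩
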